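/- Let α ∈ (0,1), T > 0, ℓ > 0. Assume a, f ∈ C²([0,T]×[−ℓ,ℓ]×ℝ×ℝ) with a > 0, and assume b(·,±ℓ,·) and g(·,±ℓ,·) are of class C² on [0,T]×ℝ, do not depend on the gradient variable, and satisfy b(t,±ℓ,z) > 0. Let u⁰ ∈ C^{2+α}([−ℓ,ℓ]) satisfy the compatibility condition ∓b(0,±ℓ,u⁰(±ℓ))u⁰ₓ(±ℓ) + g(0,±ℓ,u⁰(±ℓ)) = a(0,±ℓ,u⁰(±ℓ),u⁰ₓ(±ℓ))u⁰ₓₓ(±ℓ) + f(0,±ℓ,u⁰(±ℓ),u⁰ₓ(±ℓ)), and let u be the unique maximal solution of (1),(2a) with u(0,·) = u⁰ on [0,τ_∞) ⊆ [0,T], with u ∈ C^{1+α/2,2+α}(Ω_τ) for every τ < τ_∞. Then either lim_{τ↗τ_∞} ( sup_{Ω_τ}|u| + sup_{Ω_τ}|u_x| + ⟨u_x⟩^{(α/2,α)}_{Ω_τ} ) = ∞ or u ∈ C^{1+α/2,2+α}(Ω_T). -/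

import Mathlib

/-! The Schauder theory of the linear problem is built from scratch and gives both an a priori
estimate up to the maximal time and a short time existence theorem; the dichotomy is their
combination.

*If the functional does not blow up.* The functional is monotone in `τ`, so unless it tends to
infinity it is bounded (`apriori`); then `u` and `u_x` are bounded and parabolically Hölder
continuous up to `τinf`. Hence `a(t,x,u,u_x)` and `f(t,x,u,u_x)` are Hölder continuous, and `u`
solves a *linear* equation with Hölder coefficients. Since the dynamical boundary condition does not
involve derivatives beyond `u_x`, it gives `u_t` on the lateral boundary as a Hölder function of
time: the boundary condition acts like Dirichlet data with Hölder time derivative. The linear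
Schauder estimate therefore bounds `u_t` and `u_xx` in the Hölder norm up to `τinf`
(`LinData.apriori`, `qsol_uniform`), and the solution extends to the closed time interval
(`QSol.to_Icc`).

*Linear theory.* For the heat equation on an interval with zero initial value and zero lateral
data, reflect the right-hand side oddly and periodically (`odd_extension`) and take the Duhamel
integral against the heat kernel; the Schauder estimate is a singular integral estimate
(`duhamel_strip`). Lateral data with Hölder time derivative are lifted by an explicit boundary
layer, an average of the data over a parabolic scale (`boundary_layer`). This gives `heat_exists`;
the change of variable `y = ∫ c` gives `linear_exists` for the operator `(c⁻¹ ∂)²` with smooth `c`,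
with a constant that depends only on bounds for `c`. A Hölder coefficient is approximated uniformly by such
`c⁻²`, and freezing it at one time reduces the general case to this one on short time intervals.
Uniqueness comes from the maximum principle (`HeatRel.unique`), which turns an existence theorem
with a bound into an a priori estimate (`LinSolv.est`).

*Continuation.* If `τinf < T`, the nonlinear problem is solved on a short interval beyond `τinf`
starting from the limit `u(τinf,·)`: the coefficients are frozen at the initial state, and the
resulting map is iterated on the remaining right-hand side and the lateral velocities, where it is
a contraction for short times (`Setup.fixed_point`, `local_exists`). The concatenated solution
(`QSol.continue`) contradicts maximality. So `τinf = T`, and the extension to `[0,T]` is the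
required element of the space.

In the function space the derivatives at `±ℓ` are two-sided, whereas the estimates above use
derivatives relative to `[-ℓ,ℓ]`. The solution is therefore extended beyond `[-ℓ,ℓ]` by its Taylor
polynomials at `±ℓ` (`tay`, `tayT_sol`). -/

open Set Filter MeasureTheory
open scoped Topology

noncomputable section

/-- The time derivative `u_t` of a function `u = u(t,x)`. -/
def timeDeriv (u : ℝ → ℝ → ℝ) (t x : ℝ) : ℝ := deriv (fun s => u s x) t

/-- The spatial derivative `u_x` of a function `u = u(t,x)`. -/
def spaceDeriv (u : ℝ → ℝ → ℝ) (t x : ℝ) : ℝ := deriv (fun y => u t y) x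

/-- The second spatial derivative `u_{xx}` of a function `u = u(t,x)`. -/
def spaceDeriv2 (u : ℝ → ℝ → ℝ) (t x : ℝ) : ℝ := deriv (fun y => spaceDeriv u t y) x

/-- `v` is uniformly `β`-Hölder continuous on `I` with constant `C`. -/
def HolderBnd (β : ℝ) (I : Set ℝ) (v : ℝ → ℝ) (C : ℝ) : Prop :=
  ∀ s ∈ I, ∀ s' ∈ I, |v s - v s'| ≤ C * |s - s'| ^ β

/-- The `β`-Hölder seminorm `[v]^{(β)}_I`. -/
def hSemi (β : ℝ) (I : Set ℝ) (v : ℝ → ℝ) : ℝ :=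
  sSup ((fun p : ℝ × ℝ => |v p.1 - v p.2| / |p.1 - p.2| ^ β) ''
    {p : ℝ × ℝ | p.1 ∈ I ∧ p.2 ∈ I ∧ p.1 ≠ p.2})

/-- The sup-norm of `v` on `I`. -/
def supI (I : Set ℝ) (v : ℝ → ℝ) : ℝ := sSup ((fun s => |v s|) '' I)

/-- The `C^β` norm `|v|^{(β)}_I`. -/
def hNorm (β : ℝ) (I : Set ℝ) (v : ℝ → ℝ) : ℝ := supI I v + hSemi β I v

/-- The sup-norm of `w` on `(0,τ) × Q`. -/
def supN (τ : ℝ) (Q : Set ℝ) (w : ℝ → ℝ → ℝ) : ℝ :=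
  sSup ((fun p : ℝ × ℝ => |w p.1 p.2|) '' (Ioo 0 τ ×ˢ Q))

/-- The parabolic Hölder seminorm `⟨w⟩^{(β/2,β)}_{(0,τ)×Q}`. -/
def pSemi (β τ : ℝ) (Q : Set ℝ) (w : ℝ → ℝ → ℝ) : ℝ :=
  sSup ((fun x => hSemi (β / 2) (Ioo 0 τ) (fun t => w t x)) '' Q) +
    sSup ((fun t => hSemi β Q (fun x => w t x)) '' (Ioo 0 τ))

/-- Componentwise bound `C` for the parabolic Hölder seminorm `⟨w⟩^{(β/2,β)}_{(0,τ)×Q}`. -/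
def PHolderBnd (β τ : ℝ) (Q : Set ℝ) (w : ℝ → ℝ → ℝ) (C : ℝ) : Prop :=
  (∀ x ∈ Q, HolderBnd (β / 2) (Ioo 0 τ) (fun t => w t x) C) ∧
    ∀ t ∈ Ioo (0 : ℝ) τ, HolderBnd β Q (fun x => w t x) C

/-- The norm `|w|^{(β/2,β)}_{(0,τ)×Q}`. -/
def pNorm0 (β τ : ℝ) (Q : Set ℝ) (w : ℝ → ℝ → ℝ) : ℝ := supN τ Q w + pSemi β τ Q w

/-- The leading parabolic seminorm `⟨u⟩^{(1+α/2,2+α)}_{(0,τ)×Q}`. -/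
def pSemi2 (α τ : ℝ) (Q : Set ℝ) (u : ℝ → ℝ → ℝ) : ℝ :=
  pSemi α τ Q (timeDeriv u) + pSemi α τ Q (spaceDeriv2 u) +
    sSup ((fun x => hSemi ((1 + α) / 2) (Ioo 0 τ) (fun t => spaceDeriv u t x)) '' Q)

/-- The parabolic Hölder norm `|u|^{(1+α/2,2+α)}_{(0,τ)×Q}`. -/
def pNorm2 (α τ : ℝ) (Q : Set ℝ) (u : ℝ → ℝ → ℝ) : ℝ :=
  supN τ Q u + supN τ Q (timeDeriv u) + supN τ Q (spaceDeriv u) +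
    supN τ Q (spaceDeriv2 u) + pSemi2 α τ Q u

/-- `C^{1,2}`-regularity (existence of `u_t`, `u_x`, `u_{xx}`) on `(0,τ) × Q`. -/
def Reg12 (τ : ℝ) (Q : Set ℝ) (u : ℝ → ℝ → ℝ) : Prop :=
  ∀ t ∈ Ioo (0 : ℝ) τ, ∀ x ∈ Q,
    DifferentiableAt ℝ (fun s => u s x) t ∧
      DifferentiableAt ℝ (fun y => u t y) x ∧
        DifferentiableAt ℝ (fun y => spaceDeriv u t y) x

/-- Membership in the parabolic Hölder space `C^{1+α/2,2+α}((0,τ)×Q)`. -/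
def MemP (α τ : ℝ) (Q : Set ℝ) (u : ℝ → ℝ → ℝ) : Prop :=
  ContinuousOn (fun p : ℝ × ℝ => u p.1 p.2) (Icc 0 τ ×ˢ closure Q) ∧
    Reg12 τ (closure Q) u ∧
      ∃ C : ℝ,
        (∀ t ∈ Ioo (0 : ℝ) τ, ∀ x ∈ Q,
          |u t x| ≤ C ∧ |timeDeriv u t x| ≤ C ∧ |spaceDeriv u t x| ≤ C ∧
            |spaceDeriv2 u t x| ≤ C) ∧
          PHolderBnd α τ Q (timeDeriv u) C ∧ PHolderBnd α τ Q (spaceDeriv2 u) C ∧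
            ∀ x ∈ Q, HolderBnd ((1 + α) / 2) (Ioo 0 τ) (fun t => spaceDeriv u t x) C

/-- Membership in `C^{2+α}([-ℓ,ℓ])`. -/
def MemC2 (α ℓ : ℝ) (v : ℝ → ℝ) : Prop :=
  ContinuousOn v (Icc (-ℓ) ℓ) ∧
    (∀ x ∈ Icc (-ℓ) ℓ, DifferentiableAt ℝ v x ∧ DifferentiableAt ℝ (deriv v) x) ∧
      ContinuousOn (deriv (deriv v)) (Icc (-ℓ) ℓ) ∧
        ∃ C : ℝ, HolderBnd α (Icc (-ℓ) ℓ) (deriv (deriv v)) C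

/-- The `C^{2+α}([-ℓ,ℓ])` norm. -/
def c2Norm (α ℓ : ℝ) (v : ℝ → ℝ) : ℝ :=
  supI (Icc (-ℓ) ℓ) v + supI (Icc (-ℓ) ℓ) (deriv v) + supI (Icc (-ℓ) ℓ) (deriv (deriv v)) +
    hSemi α (Icc (-ℓ) ℓ) (deriv (deriv v))

/-- Regularity of a classical solution on `(0,τ) × (-ℓ,ℓ)` for a problem with dynamical
boundary conditions at `x = ±ℓ`: continuity on the closed cylinder, interior `C^{1,2}`
regularity and existence of `u_t` and `u_x` at the lateral boundary. -/
def ClassicalReg (τ ℓ : ℝ) (u : ℝ → ℝ → ℝ) : Prop :=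
  ContinuousOn (fun p : ℝ × ℝ => u p.1 p.2) (Icc 0 τ ×ˢ Icc (-ℓ) ℓ) ∧
    Reg12 τ (Ioo (-ℓ) ℓ) u ∧
      ∀ t ∈ Ioo (0 : ℝ) τ,
        DifferentiableAt ℝ (fun s => u s ℓ) t ∧ DifferentiableAt ℝ (fun y => u t y) ℓ ∧
          DifferentiableAt ℝ (fun s => u s (-ℓ)) t ∧ DifferentiableAt ℝ (fun y => u t y) (-ℓ)

/-- `u` is a classical solution on `(0,τ) × (-ℓ,ℓ)` of the quasilinear equation (1) with the
gradient-dependent dynamical boundary conditions (2) and initial value `u0`. -/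
def SolQ (τ ℓ : ℝ) (a f b g : ℝ → ℝ → ℝ → ℝ → ℝ) (u0 : ℝ → ℝ) (u : ℝ → ℝ → ℝ) : Prop :=
  ClassicalReg τ ℓ u ∧
    (∀ t ∈ Ioo (0 : ℝ) τ, ∀ x ∈ Ioo (-ℓ) ℓ,
      timeDeriv u t x - a t x (u t x) (spaceDeriv u t x) * spaceDeriv2 u t x
        = f t x (u t x) (spaceDeriv u t x)) ∧
      (∀ t ∈ Ioo (0 : ℝ) τ,
        timeDeriv u t ℓ + b t ℓ (u t ℓ) (spaceDeriv u t ℓ) * spaceDeriv u t ℓ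
            = g t ℓ (u t ℓ) (spaceDeriv u t ℓ) ∧
          timeDeriv u t (-ℓ) - b t (-ℓ) (u t (-ℓ)) (spaceDeriv u t (-ℓ)) * spaceDeriv u t (-ℓ)
            = g t (-ℓ) (u t (-ℓ)) (spaceDeriv u t (-ℓ))) ∧
        ∀ x ∈ Icc (-ℓ) ℓ, u 0 x = u0 x

/-- `u` is a classical solution on `(0,τ) × (-ℓ,ℓ)` of the quasilinear equation (1) with the
gradient-independent dynamical boundary conditions (2a) and initial value `u0`. -/
def SolQ2a (τ ℓ : ℝ) (a f : ℝ → ℝ → ℝ → ℝ → ℝ) (b g : ℝ → ℝ → ℝ → ℝ) (u0 : ℝ → ℝ)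
    (u : ℝ → ℝ → ℝ) : Prop :=
  ClassicalReg τ ℓ u ∧
    (∀ t ∈ Ioo (0 : ℝ) τ, ∀ x ∈ Ioo (-ℓ) ℓ,
      timeDeriv u t x - a t x (u t x) (spaceDeriv u t x) * spaceDeriv2 u t x
        = f t x (u t x) (spaceDeriv u t x)) ∧
      (∀ t ∈ Ioo (0 : ℝ) τ,
        timeDeriv u t ℓ + b t ℓ (u t ℓ) * spaceDeriv u t ℓ = g t ℓ (u t ℓ) ∧
          timeDeriv u t (-ℓ) - b t (-ℓ) (u t (-ℓ)) * spaceDeriv u t (-ℓ) = g t (-ℓ) (u t (-ℓ))) ∧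
        ∀ x ∈ Icc (-ℓ) ℓ, u 0 x = u0 x

/-! ### Kernel profiles and averaging operators -/

/-- A kernel profile: continuous with decay `O((1 + z²)⁻²)`, which makes second moments finite. -/
def Nice (g : ℝ → ℝ) : Prop := Continuous g ∧ ∃ M, ∀ z, |g z| * (1 + z ^ 2) ^ 2 ≤ M

/-- The averaging operator `∫ g(z) φ(y - c z) dz` with profile `g` at scale `c`. -/
def Kop (g φ : ℝ → ℝ) (y c : ℝ) : ℝ := ∫ z, g z * φ (y - c * z)

lemma Nice.bound {g : ℝ → ℝ} (hg : Nice g) : ∃ M, 0 ≤ M ∧ ∀ z, |g z| ≤ M * (1 + z ^ 2)⁻¹ := by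
  obtain ⟨M, hM⟩ := hg.2
  refine ⟨|M|, abs_nonneg _, fun z => ?_⟩
  have h1 : 0 < 1 + z ^ 2 := by positivity
  rw [← div_eq_mul_inv, le_div_iff₀ h1]
  have : |g z| * (1 + z ^ 2) ≤ |g z| * (1 + z ^ 2) ^ 2 := by
    apply mul_le_mul_of_nonneg_left _ (abs_nonneg _)
    nlinarith [sq_nonneg z]
  exact this.trans ((hM z).trans (le_abs_self M))

lemma Nice.integrable {g : ℝ → ℝ} (hg : Nice g) : Integrable g := by
  obtain ⟨M, hM0, hM⟩ := hg.bound
  exact (integrable_inv_one_add_sq.const_mul M).mono' hg.1.aestronglyMeasurable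
    (Eventually.of_forall fun z => by simpa using hM z)

lemma abs_rpow_le_one_add_sq {α : ℝ} (hα : α ∈ Ioo (0:ℝ) 1) (z : ℝ) : |z| ^ α ≤ 1 + z ^ 2 := by
  rcases le_total |z| 1 with h | h
  · have := Real.rpow_le_one (abs_nonneg z) h hα.1.le
    nlinarith [sq_nonneg z]
  · calc |z| ^ α ≤ |z| ^ (2:ℝ) := Real.rpow_le_rpow_of_exponent_le h (by linarith [hα.2])
      _ = z ^ 2 := by rw [Real.rpow_two, sq_abs]
      _ ≤ _ := by linarith

lemma Nice.moment {g : ℝ → ℝ} (hg : Nice g) {α : ℝ} (hα : α ∈ Ioo (0:ℝ) 1) :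
    Integrable fun z => |g z| * |z| ^ α := by
  obtain ⟨M, hM⟩ := hg.2
  refine (integrable_inv_one_add_sq.const_mul M).mono' ?_ (Eventually.of_forall fun z => ?_)
  · exact (hg.1.abs.mul (continuous_abs.rpow_const fun x => Or.inr hα.1.le)).aestronglyMeasurable
  · have h1 : 0 < 1 + z ^ 2 := by positivity
    have h2 : 0 ≤ |z| ^ α := by positivity
    rw [Real.norm_eq_abs, abs_of_nonneg (by positivity), ← div_eq_mul_inv, le_div_iff₀ h1]
    refine le_trans ?_ (hM z)
    have := mul_le_mul_of_nonneg_left (abs_rpow_le_one_add_sq hα z) (abs_nonneg (g z))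
    nlinarith

/-- The `L¹` norm of a profile. -/
def m0 (g : ℝ → ℝ) : ℝ := ∫ z, |g z|

/-- The absolute moment of order `α` of a profile. -/
def mom (α : ℝ) (g : ℝ → ℝ) : ℝ := ∫ z, |g z| * |z| ^ α

lemma m0_nonneg (g : ℝ → ℝ) : 0 ≤ m0 g := integral_nonneg fun z => abs_nonneg _

lemma mom_nonneg (α : ℝ) (g : ℝ → ℝ) : 0 ≤ mom α g :=
  integral_nonneg fun z => by positivity

lemma Nice.integrable_mul {g φ : ℝ → ℝ} (hg : Nice g) (hφ : Continuous φ) {B : ℝ}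
    (hB : ∀ y, |φ y| ≤ B) (y c : ℝ) : Integrable fun z => g z * φ (y - c * z) := by
  refine hg.integrable.mul_bdd (c := B) ?_ ?_
  · exact (hφ.comp (by fun_prop)).aestronglyMeasurable
  · exact Eventually.of_forall fun z => by simpa using hB _

lemma Kop_le {g φ : ℝ → ℝ} (hg : Nice g) {B : ℝ} (hB : ∀ y, |φ y| ≤ B) (y c : ℝ) :
    |Kop g φ y c| ≤ B * m0 g := by
  unfold Kop m0
  rw [← integral_const_mul, ← Real.norm_eq_abs]
  refine norm_integral_le_of_norm_le (hg.integrable.abs.const_mul B)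
    (Eventually.of_forall fun z => ?_)
  rw [norm_mul, mul_comm]
  exact mul_le_mul_of_nonneg_right (hB _) (abs_nonneg _)

/-- Averaging a Hölder function at scale `c` reproduces its value up to an error of order `c^α`. -/
lemma Kop_sub_le {g φ : ℝ → ℝ} (hg : Nice g) (hφ : Continuous φ) {B : ℝ} (hB : ∀ y, |φ y| ≤ B)
    {α H : ℝ} (hα : α ∈ Ioo (0:ℝ) 1) (hH : ∀ y y', |φ y - φ y'| ≤ H * |y - y'| ^ α)
    (y : ℝ) {c : ℝ} (hc : 0 ≤ c) :
    |Kop g φ y c - φ y * ∫ z, g z| ≤ H * c ^ α * mom α g := by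
  unfold Kop mom
  rw [← integral_const_mul, ← integral_const_mul, ← integral_sub (hg.integrable_mul hφ hB y c)
    (hg.integrable.const_mul _), ← Real.norm_eq_abs]
  refine norm_integral_le_of_norm_le ((hg.moment hα).const_mul _)
    (Eventually.of_forall fun z => ?_)
  have : g z * φ (y - c * z) - φ y * g z = g z * (φ (y - c * z) - φ y) := by ring
  rw [this, norm_mul, Real.norm_eq_abs, Real.norm_eq_abs]
  have h2 := hH (y - c * z) y
  have h3 : |y - c * z - y| ^ α = c ^ α * |z| ^ α := by
    rw [show y - c * z - y = -(c * z) by ring, abs_neg, abs_mul, abs_of_nonneg hc,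
      Real.mul_rpow hc (abs_nonneg _)]
  rw [h3] at h2
  calc |g z| * |φ (y - c * z) - φ y| ≤ |g z| * (H * (c ^ α * |z| ^ α)) :=
        mul_le_mul_of_nonneg_left h2 (abs_nonneg _)
    _ = _ := by ring

/-- For a profile with zero integral the average gains the full Hölder power `c^α`. -/
lemma Kop_le_of_zero {g φ : ℝ → ℝ} (hg : Nice g) (h0 : ∫ z, g z = 0) (hφ : Continuous φ) {B : ℝ}
    (hB : ∀ y, |φ y| ≤ B)
    {α H : ℝ} (hα : α ∈ Ioo (0:ℝ) 1) (hH : ∀ y y', |φ y - φ y'| ≤ H * |y - y'| ^ α)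
    (y : ℝ) {c : ℝ} (hc : 0 ≤ c) :
    |Kop g φ y c| ≤ H * c ^ α * mom α g := by
  have := Kop_sub_le hg hφ hB hα hH y hc
  rwa [h0, mul_zero, sub_zero] at this

lemma Kop_eq {g φ : ℝ → ℝ} (y : ℝ) {c : ℝ} (hc : 0 < c) :
    Kop g φ y c = c⁻¹ * ∫ η, g ((y - η) / c) * φ η := by
  unfold Kop
  have h1 := Measure.integral_comp_mul_left (fun w => g (w / c) * φ (y - w)) c
  have h2 := integral_sub_left_eq_self (fun η => g ((y - η) / c) * φ η) volume y
  simp only [sub_sub_cancel] at h2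
  rw [← h2, show c⁻¹ = |c⁻¹| from (abs_of_pos (inv_pos.2 hc)).symm, ← smul_eq_mul, ← h1]
  congr 1
  ext z
  rw [mul_div_cancel_left₀ _ hc.ne']

lemma integrable_scaled (y : ℝ) {c : ℝ} (hc : 0 < c) :
    Integrable fun η : ℝ => (1 + ((y - η) / c) ^ 2)⁻¹ := by
  have h := (integrable_inv_one_add_sq.comp_div hc.ne').comp_sub_left y
  exact h

/-- Differentiation in the centre moves onto the profile. -/
lemma Kop_hasDerivAt {g g' φ : ℝ → ℝ} (hg : Nice g) (hg' : Nice g')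
    (hd : ∀ z, HasDerivAt g (g' z) z) (hφ : Continuous φ) {B : ℝ} (hB : ∀ y, |φ y| ≤ B)
    (y : ℝ) {c : ℝ} (hc : 0 < c) :
    HasDerivAt (fun y => Kop g φ y c) (c⁻¹ * Kop g' φ y c) y := by
  obtain ⟨M, hM0, hM⟩ := hg'.bound
  have hB0 : 0 ≤ B := (abs_nonneg _).trans (hB 0)
  have key : HasDerivAt (fun y => ∫ η, g ((y - η) / c) * φ η)
      (∫ η, g' ((y - η) / c) * c⁻¹ * φ η) y := by
    refine (hasDerivAt_integral_of_dominated_loc_of_deriv_le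
      (F := fun y η => g ((y - η) / c) * φ η)
      (F' := fun y η => g' ((y - η) / c) * c⁻¹ * φ η)
      (bound := fun η => c⁻¹ * B * (3 * M) * (1 + ((y - η) / c) ^ 2)⁻¹)
      (Metric.ball_mem_nhds y hc) ?_ ?_ ?_ ?_ ?_ ?_).2
    · refine Eventually.of_forall fun x => ?_
      exact ((hg.1.comp (by fun_prop)).mul hφ).aestronglyMeasurable
    · obtain ⟨M', hM0', hM'⟩ := hg.bound
      refine ((integrable_scaled y hc).const_mul (M' * B)).mono'
        ((hg.1.comp (by fun_prop)).mul hφ).aestronglyMeasurable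
        (Eventually.of_forall fun η => ?_)
      rw [norm_mul, Real.norm_eq_abs, Real.norm_eq_abs]
      calc _ ≤ (M' * (1 + ((y - η) / c) ^ 2)⁻¹) * B :=
            mul_le_mul (hM' _) (hB _) (abs_nonneg _) (by positivity)
        _ = _ := by ring
    · exact (((hg'.1.comp (by fun_prop)).mul continuous_const).mul hφ).aestronglyMeasurable
    · refine Eventually.of_forall fun η x hx => ?_
      rw [norm_mul, norm_mul, Real.norm_eq_abs, Real.norm_eq_abs, Real.norm_eq_abs,
        abs_of_pos (inv_pos.2 hc)]
      have h1 : (1 + ((x - η) / c) ^ 2)⁻¹ ≤ 3 * (1 + ((y - η) / c) ^ 2)⁻¹ := by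
        have hx' : |x - y| < c := by simpa [Real.dist_eq] using hx
        have h2 : |(x - y) / c| ≤ 1 := by
          rw [abs_div, abs_of_pos hc, div_le_one hc]; exact hx'.le
        have h4 := abs_le.1 h2
        rw [← div_eq_mul_inv, inv_eq_one_div, div_le_div_iff₀ (by positivity) (by positivity)]
        have h3 : (y - η) / c = (x - η) / c - (x - y) / c := by ring
        rw [h3]
        generalize (x - η) / c = a at *
        generalize (x - y) / c = b at *
        nlinarith [sq_nonneg (a + b), sq_nonneg (a-b)]
      calc |g' ((x - η) / c)| * c⁻¹ * |φ η|
          ≤ (M * (3 * (1 + ((y - η) / c) ^ 2)⁻¹)) * c⁻¹ * B := by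
            gcongr
            · exact (hM _).trans (by gcongr)
            · exact hB _
        _ = _ := by ring
    · exact (integrable_scaled y hc).const_mul _
    · refine Eventually.of_forall fun η x _ => ?_
      have h1 : HasDerivAt (fun x : ℝ => (x - η) / c) c⁻¹ x := by
        simpa using ((hasDerivAt_id x).sub_const η).div_const c
      exact ((hd _).comp x h1).mul_const _
  have h2 := key.const_mul c⁻¹
  have e : (fun y => Kop g φ y c) = fun y => c⁻¹ * ∫ η, g ((y - η) / c) * φ η := by
    ext x; exact Kop_eq x hc
  rw [e, Kop_eq y hc]
  refine h2.congr_deriv ?_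
  congr 1
  rw [← integral_const_mul]
  congr 1; ext η; ring

/-- Differentiation in the scale; `k` is the profile `(z g)'`. -/
lemma Kop_hasDerivAt_scale {g g' k φ : ℝ → ℝ} (hg : Nice g) (hk : Nice k)
    (hd : ∀ z, HasDerivAt g (g' z) z) (hkg : ∀ z, k z = g z + z * g' z)
    (hφ : Continuous φ) {B : ℝ} (hB : ∀ y, |φ y| ≤ B) (y : ℝ) {c : ℝ} (hc : 0 < c) :
    HasDerivAt (fun c => Kop g φ y c) (-(c⁻¹ * Kop k φ y c)) c := by
  obtain ⟨M, hM0, hM⟩ := hk.bound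
  have hB0 : 0 ≤ B := (abs_nonneg _).trans (hB 0)
  have key : HasDerivAt (fun c => ∫ η, c⁻¹ * g ((y - η) / c) * φ η)
      (∫ η, -(c ^ 2)⁻¹ * k ((y - η) / c) * φ η) c := by
    refine (hasDerivAt_integral_of_dominated_loc_of_deriv_le
      (F := fun c η => c⁻¹ * g ((y - η) / c) * φ η)
      (F' := fun c η => -(c ^ 2)⁻¹ * k ((y - η) / c) * φ η)
      (bound := fun η => ((c / 2) ^ 2)⁻¹ * B * (4 * M) * (1 + ((y - η) / c) ^ 2)⁻¹)
      (Metric.ball_mem_nhds c (half_pos hc)) ?_ ?_ ?_ ?_ ?_ ?_).2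
    · refine Eventually.of_forall fun x => ?_
      exact ((continuous_const.mul (hg.1.comp (by fun_prop))).mul hφ).aestronglyMeasurable
    · obtain ⟨M', hM0', hM'⟩ := hg.bound
      refine ((integrable_scaled y hc).const_mul (c⁻¹ * M' * B)).mono'
        ((continuous_const.mul (hg.1.comp (by fun_prop))).mul hφ).aestronglyMeasurable
        (Eventually.of_forall fun η => ?_)
      rw [norm_mul, norm_mul, Real.norm_eq_abs, Real.norm_eq_abs, Real.norm_eq_abs,
        abs_of_pos (inv_pos.2 hc)]
      calc _ ≤ (c⁻¹ * (M' * (1 + ((y - η) / c) ^ 2)⁻¹)) * B := by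
            gcongr
            · exact hM' _
            · exact hB _
        _ = _ := by ring
    · exact ((continuous_const.mul (hk.1.comp (by fun_prop))).mul hφ).aestronglyMeasurable
    · refine Eventually.of_forall fun η x hx => ?_
      have hx' : |x - c| < c / 2 := by simpa [Real.dist_eq] using hx
      have hx1 := abs_lt.1 hx'
      have hx0 : 0 < x := by linarith
      rw [norm_mul, norm_mul, norm_neg, Real.norm_eq_abs, Real.norm_eq_abs, Real.norm_eq_abs,
        abs_of_pos (inv_pos.2 (by positivity : 0 < x ^ 2))]
      have h1 : (1 + ((y - η) / x) ^ 2)⁻¹ ≤ 4 * (1 + ((y - η) / c) ^ 2)⁻¹ := by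
        rw [← div_eq_mul_inv, inv_eq_one_div, div_le_div_iff₀ (by positivity) (by positivity)]
        have h3 : ((y - η) / c) ^ 2 = ((y - η) / x) ^ 2 * (x / c) ^ 2 := by
          field_simp
        have h4 : (x / c) ^ 2 ≤ 4 := by
          have : x / c ≤ 2 := by rw [div_le_iff₀ hc]; linarith
          have : 0 ≤ x / c := by positivity
          nlinarith
        rw [h3]
        nlinarith [mul_le_mul_of_nonneg_left h4 (sq_nonneg ((y - η) / x))]
      have h5 : (x ^ 2)⁻¹ ≤ ((c / 2) ^ 2)⁻¹ := by
        apply inv_anti₀ (by positivity)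
        nlinarith
      calc (x ^ 2)⁻¹ * |k ((y - η) / x)| * |φ η|
          ≤ ((c / 2) ^ 2)⁻¹ * (M * (4 * (1 + ((y - η) / c) ^ 2)⁻¹)) * B := by
            gcongr
            · exact (hM _).trans (by gcongr)
            · exact hB _
        _ = _ := by ring
    · exact (integrable_scaled y hc).const_mul _
    · refine Eventually.of_forall fun η x hx => ?_
      have hx' : |x - c| < c / 2 := by simpa [Real.dist_eq] using hx
      have hx1 := abs_lt.1 hx'
      have hx0 : x ≠ 0 := by intro h; rw [h] at hx1; linarith
      have h1 : HasDerivAt (fun x : ℝ => (y - η) / x) (-(y - η) / x ^ 2) x := by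
        have := (hasDerivAt_inv hx0).const_mul (y - η)
        refine (this.congr_deriv ?_).congr_of_eventuallyEq ?_
        · field_simp
        · exact Eventually.of_forall fun z => div_eq_mul_inv _ _
      have h2 := ((hasDerivAt_inv hx0).mul ((hd _).comp x h1)).mul_const (φ η)
      refine h2.congr_deriv ?_
      rw [hkg]
      simp only [Function.comp]
      field_simp
      ring
  have e : (fun c => Kop g φ y c) =ᶠ[𝓝 c] fun c => ∫ η, c⁻¹ * g ((y - η) / c) * φ η := by
    filter_upwards [lt_mem_nhds hc] with x hx
    rw [Kop_eq y hx, ← integral_const_mul]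
    congr 1; ext η; ring
  refine (key.congr_of_eventuallyEq e).congr_deriv ?_
  rw [Kop_eq y hc, ← integral_const_mul, ← integral_const_mul, ← integral_neg]
  congr 1; ext η; field_simp

lemma Kop_continuous {X : Type*} [TopologicalSpace X] [FirstCountableTopology X] {g : ℝ → ℝ}
    (hg : Nice g) {Φ : X → ℝ → ℝ} (hΦ : Continuous fun p : X × ℝ => Φ p.1 p.2)
    {B : ℝ} (hB : ∀ x y, |Φ x y| ≤ B) {y c : X → ℝ} (hy : Continuous y) (hc : Continuous c) :
    Continuous fun x => Kop g (Φ x) (y x) (c x) := by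
  unfold Kop
  refine continuous_of_dominated (bound := fun z => |g z| * B) ?_ ?_ ?_ ?_
  · intro x
    have : Continuous (Φ x) := hΦ.comp (by fun_prop : Continuous fun y => (x, y))
    exact (hg.1.mul (this.comp (by fun_prop))).aestronglyMeasurable
  · intro x
    refine Eventually.of_forall fun z => ?_
    rw [norm_mul]
    exact mul_le_mul_of_nonneg_left (hB _ _) (abs_nonneg _)
  · exact hg.integrable.abs.mul_const B
  · refine Eventually.of_forall fun z => ?_
    exact continuous_const.mul (hΦ.comp (continuous_id.prodMk (hy.sub (hc.mul continuous_const))))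

lemma Nice.integral_deriv {g g' : ℝ → ℝ} (hg : Nice g) (hg' : Nice g')
    (hd : ∀ z, HasDerivAt g (g' z) z) : ∫ z, g' z = 0 :=
  integral_eq_zero_of_hasDerivAt_of_integrable hd hg'.integrable hg.integrable

/-! ### The heat kernel -/

lemma Nice.add {g h : ℝ → ℝ} (hg : Nice g) (hh : Nice h) : Nice fun z => g z + h z := by
  obtain ⟨M, hM⟩ := hg.2
  obtain ⟨M', hM'⟩ := hh.2
  refine ⟨hg.1.add hh.1, M + M', fun z => ?_⟩
  calc |g z + h z| * (1 + z ^ 2) ^ 2 ≤ (|g z| + |h z|) * (1 + z ^ 2) ^ 2 := by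
        gcongr; exact abs_add_le _ _
    _ = |g z| * (1 + z ^ 2) ^ 2 + |h z| * (1 + z ^ 2) ^ 2 := by ring
    _ ≤ _ := add_le_add (hM z) (hM' z)

lemma Nice.const_mul {g : ℝ → ℝ} (hg : Nice g) (c : ℝ) : Nice fun z => c * g z := by
  obtain ⟨M, hM⟩ := hg.2
  refine ⟨hg.1.const_mul c, |c| * M, fun z => ?_⟩
  rw [abs_mul, mul_assoc]
  exact mul_le_mul_of_nonneg_left (hM z) (abs_nonneg c)

lemma nice_pow_gauss (n : ℕ) : Nice fun z : ℝ => z ^ n * Real.exp (-z ^ 2 / 4) := by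
  refine ⟨by fun_prop, 4 ^ (n + 2) * (n + 2).factorial * Real.exp 1, fun z => ?_⟩
  have h1 : 1 + z ^ 2 ≤ 4 * (1 + z ^ 2 / 4) := by nlinarith [sq_nonneg z]
  have h2 : |z| ≤ 1 + z ^ 2 := by
    have := sq_abs z
    nlinarith [sq_nonneg (|z| - 1)]
  have h3 := Real.pow_div_factorial_le_exp (1 + z ^ 2 / 4) (by positivity) (n + 2)
  rw [div_le_iff₀ (by positivity)] at h3
  have h4 : Real.exp (1 + z ^ 2 / 4) * Real.exp (-z ^ 2 / 4) = Real.exp 1 := by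
    rw [← Real.exp_add]; congr 1; ring
  rw [abs_mul, abs_pow, abs_of_pos (Real.exp_pos _)]
  calc |z| ^ n * Real.exp (-z ^ 2 / 4) * (1 + z ^ 2) ^ 2
      ≤ (1 + z ^ 2) ^ n * Real.exp (-z ^ 2 / 4) * (1 + z ^ 2) ^ 2 := by gcongr
    _ = (1 + z ^ 2) ^ (n + 2) * Real.exp (-z ^ 2 / 4) := by ring
    _ ≤ (4 * (1 + z ^ 2 / 4)) ^ (n + 2) * Real.exp (-z ^ 2 / 4) := by gcongr
    _ = 4 ^ (n + 2) * ((1 + z ^ 2 / 4) ^ (n + 2)) * Real.exp (-z ^ 2 / 4) := by rw [mul_pow]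
    _ ≤ 4 ^ (n + 2) * (Real.exp (1 + z ^ 2 / 4) * (n + 2).factorial) * Real.exp (-z ^ 2 / 4) := by
        gcongr
    _ = 4 ^ (n + 2) * (n + 2).factorial * (Real.exp (1 + z ^ 2 / 4) * Real.exp (-z ^ 2 / 4)) := by
        ring
    _ = _ := by rw [h4]

/-- The heat kernel at time one. -/
def G0 (z : ℝ) : ℝ := (√(4 * Real.pi))⁻¹ * Real.exp (-z ^ 2 / 4)
/-- The profile of the first space derivative of the heat kernel, `G1 = G0'`; similarly for
`G2`, `G3`, `G4`. -/
def G1 (z : ℝ) : ℝ := (-z / 2) * G0 z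
def G2 (z : ℝ) : ℝ := (z ^ 2 / 4 - 1 / 2) * G0 z
def G3 (z : ℝ) : ℝ := (3 * z / 4 - z ^ 3 / 8) * G0 z
def G4 (z : ℝ) : ℝ := (z ^ 4 / 16 - 3 * z ^ 2 / 4 + 3 / 4) * G0 z

lemma nice_G (n : ℕ) (a : ℝ) : Nice fun z : ℝ => a * z ^ n * G0 z := by
  have := (nice_pow_gauss n).const_mul (a * (√(4 * Real.pi))⁻¹)
  refine (congrArg Nice ?_).mp this
  ext z; unfold G0; ring

lemma nice_G0 : Nice G0 := by
  refine (congrArg Nice ?_).mp (nice_G 0 1)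
  ext z; ring
lemma nice_G1 : Nice G1 := by
  refine (congrArg Nice ?_).mp (nice_G 1 (-1/2))
  ext z; unfold G1; ring
lemma nice_G2 : Nice G2 := by
  refine (congrArg Nice ?_).mp ((nice_G 2 (1/4)).add (nice_G 0 (-1/2)))
  ext z; unfold G2; ring
lemma nice_G3 : Nice G3 := by
  refine (congrArg Nice ?_).mp ((nice_G 1 (3/4)).add (nice_G 3 (-1/8)))
  ext z; unfold G3; ring
lemma nice_G4 : Nice G4 := by
  refine (congrArg Nice ?_).mp (((nice_G 4 (1/16)).add (nice_G 2 (-3/4))).add (nice_G 0 (3/4)))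
  ext z; unfold G4; ring

lemma G0_deriv (z : ℝ) : HasDerivAt G0 (G1 z) z := by
  have h : HasDerivAt (fun z : ℝ => -z ^ 2 / 4) (-z / 2) z := by
    refine (((hasDerivAt_pow 2 z).neg).div_const 4).congr_deriv ?_
    norm_num; ring
  refine (h.exp.const_mul _).congr_deriv ?_
  unfold G1 G0; ring
lemma G1_deriv (z : ℝ) : HasDerivAt G1 (G2 z) z := by
  refine ((((hasDerivAt_id z).neg).div_const 2).mul (G0_deriv z)).congr_deriv ?_
  unfold G2 G1; simp; ring
lemma G2_deriv (z : ℝ) : HasDerivAt G2 (G3 z) z := by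
  refine (((((hasDerivAt_pow 2 z)).div_const 4).sub_const (1/2)).mul (G0_deriv z)).congr_deriv ?_
  unfold G3 G1; simp; ring
lemma G3_deriv (z : ℝ) : HasDerivAt G3 (G4 z) z := by
  refine (((((hasDerivAt_id z).const_mul 3).div_const 4).sub
    ((hasDerivAt_pow 3 z).div_const 8)).mul (G0_deriv z)).congr_deriv ?_
  unfold G4 G1; simp; ring

lemma G0_int : ∫ z, G0 z = 1 := by
  unfold G0
  rw [integral_const_mul]
  have h := integral_gaussian (1 / 4)
  have e : (fun z : ℝ => Real.exp (-z ^ 2 / 4)) = fun z => Real.exp (-(1 / 4) * z ^ 2) := by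
    ext z; congr 1; ring
  rw [e, h, show Real.pi / (1 / 4) = 4 * Real.pi by ring]
  exact inv_mul_cancel₀ (by positivity)
lemma G1_int : ∫ z, G1 z = 0 := nice_G0.integral_deriv nice_G1 G0_deriv
lemma G2_int : ∫ z, G2 z = 0 := nice_G1.integral_deriv nice_G2 G1_deriv
lemma G3_int : ∫ z, G3 z = 0 := nice_G2.integral_deriv nice_G3 G2_deriv
lemma G4_int : ∫ z, G4 z = 0 := nice_G3.integral_deriv nice_G4 G3_deriv

/-- The heat flow of `φ` at time `s` and its derivatives: `hp1`, `hp2`, `hp3` are its first three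
spatial derivatives, `hp4` is the time derivative of `hp2`. -/
def hp0 (φ : ℝ → ℝ) (s y : ℝ) : ℝ := Kop G0 φ y (√s)
def hp1 (φ : ℝ → ℝ) (s y : ℝ) : ℝ := (√s)⁻¹ * Kop G1 φ y (√s)
def hp2 (φ : ℝ → ℝ) (s y : ℝ) : ℝ := s⁻¹ * Kop G2 φ y (√s)
def hp3 (φ : ℝ → ℝ) (s y : ℝ) : ℝ := (s * √s)⁻¹ * Kop G3 φ y (√s)
def hp4 (φ : ℝ → ℝ) (s y : ℝ) : ℝ := (s ^ 2)⁻¹ * Kop G4 φ y (√s)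

lemma sqrt_inv_sq {s : ℝ} (hs : 0 < s) : (√s)⁻¹ * (√s)⁻¹ = s⁻¹ := by
  rw [← mul_inv, Real.mul_self_sqrt hs.le]

section
variable {φ : ℝ → ℝ} (hφ : Continuous φ) {B : ℝ} (hB : ∀ y, |φ y| ≤ B) {s : ℝ} (hs : 0 < s) (y : ℝ)
include hφ hB hs

lemma hp0_deriv : HasDerivAt (fun y => hp0 φ s y) (hp1 φ s y) y :=
  Kop_hasDerivAt nice_G0 nice_G1 G0_deriv hφ hB y (Real.sqrt_pos.2 hs)

lemma hp1_deriv : HasDerivAt (fun y => hp1 φ s y) (hp2 φ s y) y := by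
  refine ((Kop_hasDerivAt nice_G1 nice_G2 G1_deriv hφ hB y
    (Real.sqrt_pos.2 hs)).const_mul _).congr_deriv ?_
  rw [← mul_assoc, sqrt_inv_sq hs]; rfl

lemma hp2_deriv : HasDerivAt (fun y => hp2 φ s y) (hp3 φ s y) y := by
  refine ((Kop_hasDerivAt nice_G2 nice_G3 G2_deriv hφ hB y
    (Real.sqrt_pos.2 hs)).const_mul _).congr_deriv ?_
  rw [← mul_assoc, ← mul_inv]; rfl

lemma hp0_deriv_time : HasDerivAt (fun s => hp0 φ s y) (hp2 φ s y) s := by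
  have h := Kop_hasDerivAt_scale nice_G0 (k := fun z => -2 * G2 z) (nice_G2.const_mul _) G0_deriv
    (fun z => by unfold G2 G1; ring) hφ hB y (Real.sqrt_pos.2 hs)
  refine (h.comp s (Real.hasDerivAt_sqrt hs.ne')).congr_deriv ?_
  have e : Kop (fun z => -2 * G2 z) φ y (√s) = -2 * Kop G2 φ y (√s) := by
    unfold Kop; rw [← integral_const_mul]; congr 1; ext z; ring
  rw [e]; unfold hp2; rw [← sqrt_inv_sq hs]
  have : √s ≠ 0 := (Real.sqrt_pos.2 hs).ne'
  field_simp

/-- Since heat evolution satisfies `∂_s = ∂_y²`, the time derivative of `hp2` is the fourth space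
derivative. -/
lemma hp2_deriv_time : HasDerivAt (fun s => hp2 φ s y) (hp4 φ s y) s := by
  have h := Kop_hasDerivAt_scale nice_G2 (k := fun z => (-2) * G4 z + (-2) * G2 z)
    ((nice_G4.const_mul _).add (nice_G2.const_mul _)) G2_deriv
    (fun z => by unfold G4 G2 G3; ring) hφ hB y (Real.sqrt_pos.2 hs)
  refine ((hasDerivAt_inv hs.ne').mul (h.comp s (Real.hasDerivAt_sqrt hs.ne'))).congr_deriv ?_
  have e : Kop (fun z => (-2) * G4 z + (-2) * G2 z) φ y (√s)
      = -2 * Kop G4 φ y (√s) + -2 * Kop G2 φ y (√s) := by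
    unfold Kop; rw [← integral_const_mul, ← integral_const_mul, ← integral_add]
    · congr 1; ext z; ring
    · exact (nice_G4.integrable_mul hφ hB _ _).const_mul _
    · exact (nice_G2.integrable_mul hφ hB _ _).const_mul _
  rw [e]; unfold hp4
  have h2 : √s ≠ 0 := (Real.sqrt_pos.2 hs).ne'
  have h3 : √s ^ 2 = s := Real.sq_sqrt hs.le
  simp only [Function.comp]
  field_simp
  rw [h3]; ring

end

/-- A constant dominating all moments used for the heat kernel. -/
def CK (α : ℝ) : ℝ := mom α G1 + mom α G2 + mom α G3 + mom α G4

lemma CK_nonneg (α : ℝ) : 0 ≤ CK α := by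
  unfold CK
  have := mom_nonneg α G1; have := mom_nonneg α G2
  have := mom_nonneg α G3; have := mom_nonneg α G4
  linarith

section
variable {φ : ℝ → ℝ} (hφ : Continuous φ) {B : ℝ} (hB : ∀ y, |φ y| ≤ B)
  {α H : ℝ} (hα : α ∈ Ioo (0:ℝ) 1) (hH0 : 0 ≤ H) (hH : ∀ y y', |φ y - φ y'| ≤ H * |y - y'| ^ α)
  {s : ℝ} (hs : 0 < s) (y : ℝ)
include hφ hB hα hH0 hH hs

lemma Kop_heat_le {g : ℝ → ℝ} (hg : Nice g) (h0 : ∫ z, g z = 0) (hm : mom α g ≤ CK α) :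
    |Kop g φ y (√s)| ≤ H * CK α * s ^ (α / 2) := by
  refine (Kop_le_of_zero hg h0 hφ hB hα hH y (Real.sqrt_nonneg s)).trans ?_
  have : (√s) ^ α = s ^ (α / 2) := by
    rw [Real.sqrt_eq_rpow, ← Real.rpow_mul hs.le]; congr 1; ring
  rw [this]
  have h1 : 0 ≤ s ^ (α / 2) := by positivity
  nlinarith [mul_le_mul_of_nonneg_left hm (mul_nonneg hH0 h1)]

lemma hp1_le : |hp1 φ s y| ≤ H * CK α * s ^ (α / 2 - 1 / 2) := by
  have h := Kop_heat_le hφ hB hα hH0 hH hs y nice_G1 G1_int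
    (by have := mom_nonneg α G1; have := mom_nonneg α G2
        have := mom_nonneg α G3; have := mom_nonneg α G4; unfold CK; linarith)
  unfold hp1
  have e : (√s)⁻¹ = s ^ (-(1 / 2) : ℝ) := by rw [Real.sqrt_eq_rpow, Real.rpow_neg hs.le]
  rw [abs_mul, abs_of_pos (inv_pos.2 (Real.sqrt_pos.2 hs)), e, sub_eq_add_neg, Real.rpow_add hs]
  nlinarith [mul_le_mul_of_nonneg_left h (by positivity : 0 ≤ s ^ (-(1 / 2) : ℝ))]

lemma hp2_le : |hp2 φ s y| ≤ H * CK α * s ^ (α / 2 - 1) := by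
  have h := Kop_heat_le hφ hB hα hH0 hH hs y nice_G2 G2_int
    (by have := mom_nonneg α G1; have := mom_nonneg α G2
        have := mom_nonneg α G3; have := mom_nonneg α G4; unfold CK; linarith)
  unfold hp2
  have e : s⁻¹ = s ^ (-1 : ℝ) := by rw [Real.rpow_neg hs.le, Real.rpow_one]
  rw [abs_mul, abs_of_pos (inv_pos.2 hs), e, sub_eq_add_neg, Real.rpow_add hs]
  nlinarith [mul_le_mul_of_nonneg_left h (by positivity : 0 ≤ s ^ (-1 : ℝ))]

lemma hp3_le : |hp3 φ s y| ≤ H * CK α * s ^ (α / 2 - 1 - 1 / 2) := by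
  have h := Kop_heat_le hφ hB hα hH0 hH hs y nice_G3 G3_int
    (by have := mom_nonneg α G1; have := mom_nonneg α G2
        have := mom_nonneg α G3; have := mom_nonneg α G4; unfold CK; linarith)
  unfold hp3
  have e : (s * √s)⁻¹ = s ^ (-1 - 1 / 2 : ℝ) := by
    rw [mul_inv, Real.sqrt_eq_rpow, sub_eq_add_neg, Real.rpow_add hs, Real.rpow_neg hs.le,
      Real.rpow_one, Real.rpow_neg hs.le]
  rw [abs_mul, abs_of_pos (inv_pos.2 (mul_pos hs (Real.sqrt_pos.2 hs))), e,
    show α / 2 - 1 - 1 / 2 = α / 2 + (-1 - 1 / 2) by ring, Real.rpow_add hs]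
  nlinarith [mul_le_mul_of_nonneg_left h (by positivity : 0 ≤ s ^ (-1 - 1 / 2 : ℝ))]

lemma hp4_le : |hp4 φ s y| ≤ H * CK α * s ^ (α / 2 - 1 - 1) := by
  have h := Kop_heat_le hφ hB hα hH0 hH hs y nice_G4 G4_int
    (by have := mom_nonneg α G1; have := mom_nonneg α G2
        have := mom_nonneg α G3; have := mom_nonneg α G4; unfold CK; linarith)
  unfold hp4
  have e : (s ^ 2)⁻¹ = s ^ (-2 : ℝ) := by
    rw [Real.rpow_neg hs.le, Real.rpow_two]
  rw [abs_mul, abs_of_pos (inv_pos.2 (by positivity)), e,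
    show α / 2 - 1 - 1 = α / 2 + (-2) by ring, Real.rpow_add hs]
  nlinarith [mul_le_mul_of_nonneg_left h (by positivity : 0 ≤ s ^ (-2 : ℝ))]

end

/-! ### The Duhamel integral -/

/-- The singular-integral estimate behind Hölder bounds: an integrand bounded both by `s^(β-1)` and
by `h^γ s^(β-1-γ)`, with `β < γ`, has an integral of order `h^β`. -/
lemma split_int {k : ℝ → ℝ} {A h β γ t : ℝ} (hβ : 0 < β) (hβγ : β < γ) (hA : 0 ≤ A) (hh : 0 ≤ h)
    (ht : 0 ≤ t) (hk : IntervalIntegrable k volume 0 t)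
    (h1 : ∀ s ∈ Ioo 0 t, |k s| ≤ A * s ^ (β - 1))
    (h2 : ∀ s ∈ Ioo 0 t, |k s| ≤ A * h ^ γ * s ^ (β - 1 - γ)) :
    |∫ s in (0:ℝ)..t, k s| ≤ A * (1 / β + 1 / (γ - β)) * h ^ β := by
  have hγ : 0 < γ - β := by linarith
  have piece1 : ∀ c, 0 ≤ c → c ≤ t → |∫ s in (0:ℝ)..c, k s| ≤ A * (1 / β) * c ^ β := by
    intro c hc hct
    have hi : IntervalIntegrable (fun s : ℝ => A * s ^ (β - 1)) volume 0 c :=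
      (intervalIntegral.intervalIntegrable_rpow' (by linarith)).const_mul A
    have := intervalIntegral.norm_integral_le_of_norm_le (f := k) hc (μ := volume)
      (g := fun s : ℝ => A * s ^ (β - 1)) ?_ hi
    · rw [Real.norm_eq_abs, intervalIntegral.integral_const_mul, integral_rpow (Or.inl (by linarith)),
        sub_add_cancel, Real.zero_rpow hβ.ne', sub_zero] at this
      refine this.trans (le_of_eq (by ring))
    · have hne : ∀ᵐ s : ℝ, s ≠ c := by simp [ae_iff]
      filter_upwards [hne] with s hs hs'
      exact h1 s ⟨hs'.1, lt_of_lt_of_le (lt_of_le_of_ne hs'.2 hs) hct⟩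
  have hAβ : 0 ≤ A * (1 / (γ - β)) * h ^ β := by positivity
  rcases le_or_gt t h with hth | hth
  · refine (piece1 t ht le_rfl).trans ?_
    have : t ^ β ≤ h ^ β := Real.rpow_le_rpow ht hth hβ.le
    have := mul_le_mul_of_nonneg_left this (by positivity : 0 ≤ A * (1 / β))
    nlinarith
  · rcases hh.eq_or_lt with rfl | hh0
    · have : ∫ s in (0:ℝ)..t, k s = ∫ s in (0:ℝ)..t, (0:ℝ) := by
        apply intervalIntegral.integral_congr_ae
        have hne : ∀ᵐ s : ℝ, s ≠ t := by simp [ae_iff]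
        filter_upwards [hne] with s hs hs'
        rw [uIoc_of_le ht] at hs'
        have := h2 s ⟨hs'.1, lt_of_le_of_ne hs'.2 hs⟩
        rw [Real.zero_rpow (by linarith), mul_zero, zero_mul] at this
        exact abs_eq_zero.1 (le_antisymm this (abs_nonneg _))
      rw [this]; simp; positivity
    have p2 : |∫ s in h..t, k s| ≤ A * (1 / (γ - β)) * h ^ β := by
      have h0 : (0:ℝ) ∉ uIcc h t := by rw [uIcc_of_le hth.le]; intro h'; linarith [h'.1]
      have hi : IntervalIntegrable (fun s : ℝ => A * h ^ γ * s ^ (β - 1 - γ)) volume h t :=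
        (intervalIntegral.intervalIntegrable_rpow (Or.inr h0)).const_mul _
      have := intervalIntegral.norm_integral_le_of_norm_le (f := k) hth.le (μ := volume)
        (g := fun s : ℝ => A * h ^ γ * s ^ (β - 1 - γ)) ?_ hi
      · rw [Real.norm_eq_abs, intervalIntegral.integral_const_mul,
          integral_rpow (Or.inr ⟨by linarith, h0⟩)] at this
        refine this.trans ?_
        have e1 : β - 1 - γ + 1 = -(γ - β) := by ring
        rw [e1]
        have e2 : (t ^ (-(γ - β)) - h ^ (-(γ - β))) / (-(γ - β))
            = (1 / (γ - β)) * (h ^ (-(γ - β)) - t ^ (-(γ - β))) := by field_simp; ring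
        have e3 : h ^ β = h ^ γ * h ^ (-(γ - β)) := by
          rw [← Real.rpow_add hh0]; congr 1; ring
        rw [e2, e3]
        have : 0 ≤ t ^ (-(γ - β)) := by positivity
        have h5 : 0 ≤ A * h ^ γ * (1 / (γ - β)) := by positivity
        nlinarith [mul_nonneg h5 this]
      · have hne : ∀ᵐ s : ℝ, s ≠ t := by simp [ae_iff]
        filter_upwards [hne] with s hs hs'
        exact h2 s ⟨hh0.trans hs'.1, lt_of_le_of_ne hs'.2 hs⟩
    have hk1 : IntervalIntegrable k volume 0 h :=
      hk.mono_set (by rw [uIcc_of_le hh, uIcc_of_le ht]; exact Icc_subset_Icc_right hth.le)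
    have hk2 : IntervalIntegrable k volume h t :=
      hk.mono_set (by rw [uIcc_of_le hth.le, uIcc_of_le ht]; exact Icc_subset_Icc_left hh)
    rw [← intervalIntegral.integral_add_adjacent_intervals hk1 hk2]
    refine (abs_add_le _ _).trans ((add_le_add (piece1 h hh hth.le) p2).trans (le_of_eq (by ring)))

/-- The singular-integral estimate with the singularity at the upper end point. -/
lemma split_int' {k : ℝ → ℝ} {A h β γ t : ℝ} (hβ : 0 < β) (hβγ : β < γ) (hA : 0 ≤ A) (hh : 0 ≤ h)
    (ht : 0 ≤ t) (hk : IntervalIntegrable k volume 0 t)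
    (h1 : ∀ r ∈ Ioo 0 t, |k r| ≤ A * (t - r) ^ (β - 1))
    (h2 : ∀ r ∈ Ioo 0 t, |k r| ≤ A * h ^ γ * (t - r) ^ (β - 1 - γ)) :
    |∫ r in (0:ℝ)..t, k r| ≤ A * (1 / β + 1 / (γ - β)) * h ^ β := by
  have e := intervalIntegral.integral_comp_sub_left (a := 0) (b := t) k t
  simp only [sub_self, sub_zero] at e
  rw [← e]
  have hi := hk.comp_sub_left t
  simp only [sub_self, sub_zero] at hi
  refine split_int hβ hβγ hA hh ht hi.symm ?_ ?_
  · intro s hs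
    have := h1 (t - s) ⟨by linarith [hs.2], by linarith [hs.1]⟩
    rwa [sub_sub_cancel] at this
  · intro s hs
    have := h2 (t - s) ⟨by linarith [hs.2], by linarith [hs.1]⟩
    rwa [sub_sub_cancel] at this

lemma int_sub_rpow (a b t : ℝ) {γ : ℝ} (h : -1 < γ) :
    IntervalIntegrable (fun r : ℝ => (t - r) ^ γ) volume a b := by
  have := (intervalIntegral.intervalIntegrable_rpow' (a := t - a) (b := t - b) h).comp_sub_left t
  simpa using this

lemma intervalIntegrable_of_le {k b : ℝ → ℝ} {s t : ℝ} (hst : s ≤ t)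
    (hk : AEStronglyMeasurable k volume) (hb : IntervalIntegrable b volume s t)
    (h : ∀ r ∈ Ioo s t, |k r| ≤ b r) : IntervalIntegrable k volume s t := by
  refine hb.mono_fun' hk.restrict ?_
  have hne : ∀ᵐ s : ℝ, s ≠ t := by simp [ae_iff]
  rw [EventuallyLE, ae_restrict_iff' measurableSet_uIoc]
  filter_upwards [hne] with r hr hr'
  rw [uIoc_of_le hst] at hr'
  exact h r ⟨hr'.1, lt_of_le_of_ne hr'.2 hr⟩

lemma hp0_zero (φ : ℝ → ℝ) (y : ℝ) : hp0 φ 0 y = φ y := by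
  unfold hp0 Kop
  simp [integral_mul_const, G0_int]

lemma hp2_nonpos (φ : ℝ → ℝ) {s : ℝ} (hs : s ≤ 0) (y : ℝ) : hp2 φ s y = 0 := by
  unfold hp2 Kop
  simp [Real.sqrt_eq_zero_of_nonpos hs, integral_mul_const, G2_int]

/-- The Duhamel integral of a source `F` and its first two spatial derivatives. -/
def W0 (F : ℝ → ℝ → ℝ) (t y : ℝ) : ℝ := ∫ r in (0:ℝ)..t, hp0 (F r) (t - r) y
def W1 (F : ℝ → ℝ → ℝ) (t y : ℝ) : ℝ := ∫ r in (0:ℝ)..t, hp1 (F r) (t - r) y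
def W2 (F : ℝ → ℝ → ℝ) (t y : ℝ) : ℝ := ∫ r in (0:ℝ)..t, hp2 (F r) (t - r) y

section duhamel
variable {F : ℝ → ℝ → ℝ} (hF : Continuous fun p : ℝ × ℝ => F p.1 p.2) {B : ℝ}
  (hB : ∀ t y, |F t y| ≤ B)
include hF

lemma slice_cont (r : ℝ) : Continuous (F r) := hF.comp (by fun_prop : Continuous fun y => (r, y))

include hB
lemma Kop_cont3 {g : ℝ → ℝ} (hg : Nice g) :
    Continuous fun p : ℝ × ℝ × ℝ => Kop g (F p.1) p.2.2 (√p.2.1) :=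
  Kop_continuous hg (Φ := fun p : ℝ × ℝ × ℝ => F p.1)
    (hF.comp (by fun_prop : Continuous fun p : (ℝ × ℝ × ℝ) × ℝ => (p.1.1, p.2)))
    (fun x y => hB _ y) (by fun_prop) (by fun_prop)

lemma Kop_cont_r {g : ℝ → ℝ} (hg : Nice g) (t y : ℝ) :
    Continuous fun r => Kop g (F r) y (√(t - r)) :=
  (Kop_cont3 hF hB hg).comp (by fun_prop : Continuous fun r : ℝ => (r, t - r, y))

lemma hp0_meas (t y : ℝ) : AEStronglyMeasurable (fun r => hp0 (F r) (t - r) y) volume :=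
  (Kop_cont_r hF hB nice_G0 t y).aestronglyMeasurable

lemma hp1_meas (t y : ℝ) : AEStronglyMeasurable (fun r => hp1 (F r) (t - r) y) volume := by
  refine Measurable.aestronglyMeasurable ?_
  have := (Kop_cont_r hF hB nice_G1 t y).measurable
  unfold hp1
  exact Measurable.mul (by fun_prop) this

lemma hp2_meas (t y : ℝ) : AEStronglyMeasurable (fun r => hp2 (F r) (t - r) y) volume := by
  refine Measurable.aestronglyMeasurable ?_
  have := (Kop_cont_r hF hB nice_G2 t y).measurable
  unfold hp2
  exact Measurable.mul (by fun_prop) this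

variable {α H : ℝ} (hα : α ∈ Ioo (0:ℝ) 1) (hH0 : 0 ≤ H)
  (hH : ∀ t y y', |F t y - F t y'| ≤ H * |y - y'| ^ α)
include hα hH0 hH

lemma hp2_int {s t : ℝ} (hst : s ≤ t) (t' : ℝ) (htt : t ≤ t') (y : ℝ) :
    IntervalIntegrable (fun r => hp2 (F r) (t' - r) y) volume s t := by
  refine intervalIntegrable_of_le hst (hp2_meas hF hB t' y)
    ((int_sub_rpow s t t' (by linarith [hα.1] : -1 < α / 2 - 1)).const_mul (H * CK α)) ?_
  intro r hr
  exact hp2_le (slice_cont hF r) (hB r) hα hH0 (hH r) (by linarith [hr.2]) y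

lemma W0_deriv {t : ℝ} (ht : 0 ≤ t) (y : ℝ) : HasDerivAt (fun y => W0 F t y) (W1 F t y) y := by
  have hne : ∀ᵐ s : ℝ, s ≠ t := by simp [ae_iff]
  refine (intervalIntegral.hasDerivAt_integral_of_dominated_loc_of_deriv_le
    (F := fun y r => hp0 (F r) (t - r) y) (F' := fun y r => hp1 (F r) (t - r) y)
    (bound := fun r => H * CK α * (t - r) ^ (α / 2 - 1 / 2)) univ_mem ?_ ?_ ?_ ?_ ?_ ?_).2
  · exact Eventually.of_forall fun x => (hp0_meas hF hB t x).restrict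
  · exact (Kop_cont_r hF hB nice_G0 t y).intervalIntegrable _ _
  · exact (hp1_meas hF hB t y).restrict
  · filter_upwards [hne] with r hr hr' x _
    rw [uIoc_of_le ht] at hr'
    have : r < t := lt_of_le_of_ne hr'.2 hr
    exact hp1_le (slice_cont hF r) (hB r) hα hH0 (hH r) (by linarith) x
  · exact (int_sub_rpow 0 t t (by linarith [hα.1])).const_mul _
  · filter_upwards [hne] with r hr hr' x _
    rw [uIoc_of_le ht] at hr'
    have : r < t := lt_of_le_of_ne hr'.2 hr
    exact hp0_deriv (slice_cont hF r) (hB r) (by linarith) x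

lemma W1_deriv {t : ℝ} (ht : 0 ≤ t) (y : ℝ) : HasDerivAt (fun y => W1 F t y) (W2 F t y) y := by
  have hne : ∀ᵐ s : ℝ, s ≠ t := by simp [ae_iff]
  refine (intervalIntegral.hasDerivAt_integral_of_dominated_loc_of_deriv_le
    (F := fun y r => hp1 (F r) (t - r) y) (F' := fun y r => hp2 (F r) (t - r) y)
    (bound := fun r => H * CK α * (t - r) ^ (α / 2 - 1)) univ_mem ?_ ?_ ?_ ?_ ?_ ?_).2
  · exact Eventually.of_forall fun x => (hp1_meas hF hB t x).restrict
  · refine intervalIntegrable_of_le ht (hp1_meas hF hB t y)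
      ((int_sub_rpow 0 t t (by linarith [hα.1] : -1 < α / 2 - 1 / 2)).const_mul (H * CK α)) ?_
    intro r hr
    exact hp1_le (slice_cont hF r) (hB r) hα hH0 (hH r) (by linarith [hr.2]) y
  · exact (hp2_meas hF hB t y).restrict
  · filter_upwards [hne] with r hr hr' x _
    rw [uIoc_of_le ht] at hr'
    have : r < t := lt_of_le_of_ne hr'.2 hr
    exact hp2_le (slice_cont hF r) (hB r) hα hH0 (hH r) (by linarith) x
  · exact (int_sub_rpow 0 t t (by linarith [hα.1])).const_mul _
  · filter_upwards [hne] with r hr hr' x _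
    rw [uIoc_of_le ht] at hr'
    have : r < t := lt_of_le_of_ne hr'.2 hr
    exact hp1_deriv (slice_cont hF r) (hB r) (by linarith) x

/-- The Duhamel integral solves the heat equation, in integrated form. -/
lemma W0_eq {t : ℝ} (ht : 0 ≤ t) (y : ℝ) :
    W0 F t y = ∫ s in (0:ℝ)..t, (∫ r in (0:ℝ)..t, hp2 (F r) (s - r) y) + F s y := by
  have e1 : ∀ r ∈ Icc 0 t, hp0 (F r) (t - r) y = (∫ s in (0:ℝ)..t, hp2 (F r) (s - r) y) + F r y := by
    intro r hr
    have hi : IntervalIntegrable (fun s => hp2 (F r) s y) volume 0 (t - r) := by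
      refine intervalIntegrable_of_le (by linarith [hr.2]) ?_
        ((intervalIntegral.intervalIntegrable_rpow' (by linarith [hα.1] : -1 < α / 2 - 1)).const_mul
          (H * CK α)) ?_
      · refine Measurable.aestronglyMeasurable ?_
        unfold hp2
        exact measurable_inv.mul ((Kop_cont3 hF hB nice_G2).comp
          (by fun_prop : Continuous fun s : ℝ => (r, s, y))).measurable
      · intro s hs
        exact hp2_le (slice_cont hF r) (hB r) hα hH0 (hH r) hs.1 y
    have h1 := intervalIntegral.integral_eq_sub_of_hasDerivAt_of_le (a := 0) (b := t - r)
      (f := fun s => hp0 (F r) s y) (f' := fun s => hp2 (F r) s y) (by linarith [hr.2])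
      ((Kop_cont3 hF hB nice_G0).comp
          (by fun_prop : Continuous fun s : ℝ => (r, s, y))).continuousOn
      (fun s hs => hp0_deriv_time (slice_cont hF r) (hB r) hs.1 y) hi
    rw [hp0_zero] at h1
    have h2 : (∫ s in (0:ℝ)..t, hp2 (F r) (s - r) y) = ∫ s in (0:ℝ)..(t - r), hp2 (F r) s y := by
      rw [intervalIntegral.integral_comp_sub_right (fun s => hp2 (F r) s y) r]
      have hz : ∀ s ∈ uIcc (0 - r) 0, hp2 (F r) s y = 0 := by
        intro s hs
        rw [uIcc_of_le (by linarith [hr.1])] at hs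
        exact hp2_nonpos _ hs.2 y
      have h3 : IntervalIntegrable (fun s => hp2 (F r) s y) volume (0 - r) 0 :=
        (intervalIntegrable_const (c := (0:ℝ))).congr (fun s hs => (hz s (uIoc_subset_uIcc hs)).symm)
      rw [← intervalIntegral.integral_add_adjacent_intervals h3 hi,
        intervalIntegral.integral_congr hz]
      simp
    rw [h2, h1]; ring
  unfold W0
  rw [intervalIntegral.integral_congr (fun r hr => e1 r (by rwa [uIcc_of_le ht] at hr))]
  have hintg : Integrable (Function.uncurry fun r s => hp2 (F r) (s - r) y)
      ((volume.restrict (Ioc 0 t)).prod (volume.restrict (Ioc 0 t))) := by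
    have hc := Integrable.convolution_integrand (ContinuousLinearMap.mul ℝ ℝ) (μ := volume)
      (ν := volume) (f := indicator (Ioc 0 t) fun _ => (1:ℝ))
      (g := indicator (Ioc 0 t) fun s => H * CK α * s ^ (α / 2 - 1))
      ((integrable_indicator_iff measurableSet_Ioc).2 (by simp))
      ((integrable_indicator_iff measurableSet_Ioc).2
        ((intervalIntegrable_iff_integrableOn_Ioc_of_le ht).1
        ((intervalIntegral.intervalIntegrable_rpow' (by linarith [hα.1])).const_mul _)))
    rw [Measure.prod_restrict]
    have hc' := hc.swap.restrict (s := Ioc 0 t ×ˢ Ioc 0 t)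
    refine hc'.mono' ?_ ?_
    · refine Measurable.aestronglyMeasurable ?_
      unfold Function.uncurry hp2
      exact Measurable.mul (by fun_prop) ((Kop_cont3 hF hB nice_G2).comp
          (by fun_prop : Continuous fun p : ℝ × ℝ => (p.1, p.2 - p.1, y))).measurable
    · rw [ae_restrict_iff' (measurableSet_Ioc.prod measurableSet_Ioc)]
      refine Eventually.of_forall ?_
      rintro ⟨r, s⟩ ⟨hr, hs⟩
      simp only [Function.uncurry, Function.comp, Prod.swap, ContinuousLinearMap.mul_apply',
        indicator_of_mem hr, one_mul] at hr hs ⊢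
      rcases le_or_gt s r with h | h
      · rw [hp2_nonpos _ (by linarith) y, norm_zero]
        exact indicator_nonneg (fun x hx => mul_nonneg (mul_nonneg hH0 (CK_nonneg α))
          (Real.rpow_nonneg hx.1.le _)) _
      · rw [indicator_of_mem (show s - r ∈ Ioc 0 t from ⟨by linarith, by linarith [hr.1, hs.2]⟩)]
        exact hp2_le (slice_cont hF r) (hB r) hα hH0 (hH r) (by linarith) y
  have hFi : IntervalIntegrable (fun s => F s y) volume 0 t :=
    (hF.comp (by fun_prop : Continuous fun s : ℝ => (s, y))).intervalIntegrable _ _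
  have swap := integral_integral_swap hintg
  have i1 := hintg.integral_prod_left
  have i2 := hintg.integral_prod_right
  simp only [Function.uncurry] at i1 i2
  rw [intervalIntegral.integral_add _ hFi, intervalIntegral.integral_add _ hFi]
  · simp only [intervalIntegral.integral_of_le ht]
    rw [swap]
  · rw [intervalIntegrable_iff_integrableOn_Ioc_of_le ht]
    simp only [intervalIntegral.integral_of_le ht]
    exact i2
  · rw [intervalIntegrable_iff_integrableOn_Ioc_of_le ht]
    simp only [intervalIntegral.integral_of_le ht]
    exact i1

/-- The Duhamel integral solves `∂_t W = ∂_y² W + F`, in integrated form. -/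
lemma W0_eq' {t : ℝ} (ht : 0 ≤ t) (y : ℝ) :
    W0 F t y = ∫ s in (0:ℝ)..t, (W2 F s y + F s y) := by
  rw [W0_eq hF hB hα hH0 hH ht]
  refine intervalIntegral.integral_congr fun s hs => ?_
  rw [uIcc_of_le ht] at hs
  have hz : ∀ r ∈ uIcc s t, hp2 (F r) (s - r) y = 0 := by
    intro r hr
    rw [uIcc_of_le hs.2] at hr
    exact hp2_nonpos _ (by linarith [hr.1]) y
  have h3 : IntervalIntegrable (fun r => hp2 (F r) (s - r) y) volume s t :=
    (intervalIntegrable_const (c := (0:ℝ))).congr (fun s hs => (hz s (uIoc_subset_uIcc hs)).symm)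
  have := intervalIntegral.integral_add_adjacent_intervals
    (hp2_int hF hB hα hH0 hH hs.1 s le_rfl y) h3
  rw [intervalIntegral.integral_congr hz] at this
  simp only [intervalIntegral.integral_zero, add_zero] at this
  simp only [W2, this]

/-- Hölder constant of the second derivative of the Duhamel integral. -/
lemma W2_space {t : ℝ} (ht : 0 ≤ t) (y y' : ℝ) :
    |W2 F t y - W2 F t y'| ≤
      (2 * H * CK α) * (1 / (α / 2) + 1 / (1 / 2 - α / 2)) * |y - y'| ^ α := by
  unfold W2
  have i1 := hp2_int hF hB hα hH0 hH ht t le_rfl y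
  have i2 := hp2_int hF hB hα hH0 hH ht t le_rfl y'
  rw [← intervalIntegral.integral_sub i1 i2]
  have hHC := mul_nonneg hH0 (CK_nonneg α)
  have e : |y - y'| ^ α = ((y - y') ^ 2) ^ (α / 2) := by
    rw [← sq_abs, ← Real.rpow_natCast, ← Real.rpow_mul (abs_nonneg _)]; congr 1; push_cast; ring
  rw [e]
  refine split_int' (by linarith [hα.1]) (by linarith [hα.2]) (by linarith) (sq_nonneg _) ht
    (i1.sub i2) ?_ ?_
  · intro r hr
    have hs : 0 < t - r := by linarith [hr.2]
    have a1 := hp2_le (slice_cont hF r) (hB r) hα hH0 (hH r) hs y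
    have a2 := hp2_le (slice_cont hF r) (hB r) hα hH0 (hH r) hs y'
    have := abs_sub (hp2 (F r) (t - r) y) (hp2 (F r) (t - r) y')
    linarith
  · intro r hr
    have hs : 0 < t - r := by linarith [hr.2]
    have := Convex.norm_image_sub_le_of_norm_hasDerivWithin_le (f := fun y => hp2 (F r) (t - r) y)
      (f' := fun y => hp3 (F r) (t - r) y) (s := univ) (x := y') (y := y)
      (C := H * CK α * (t - r) ^ (α / 2 - 1 - 1 / 2))
      (fun x _ => (hp2_deriv (slice_cont hF r) (hB r) hs x).hasDerivWithinAt)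
      (fun x _ => hp3_le (slice_cont hF r) (hB r) hα hH0 (hH r) hs x) convex_univ
      (mem_univ _) (mem_univ _)
    rw [Real.norm_eq_abs, Real.norm_eq_abs] at this
    refine this.trans ?_
    have e2 : ((y - y') ^ 2) ^ (1 / 2 : ℝ) = |y - y'| := by
      rw [← Real.sqrt_eq_rpow, Real.sqrt_sq_eq_abs]
    rw [e2]
    have h0 : 0 ≤ H * CK α * |y - y'| * (t - r) ^ (α / 2 - 1 - 1 / 2) := by positivity
    nlinarith

/-- Hölder continuity in time of `W2`: the part of the integral over `[t', t]` is small by the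
pointwise bound on `hp2`, and the rest is a singular integral with kernel derivative `hp4`. -/
lemma W2_time_aux {t t' : ℝ} (ht' : 0 ≤ t') (htt : t' ≤ t) (y : ℝ) :
    |W2 F t y - W2 F t' y| ≤
      (2 * H * CK α) * (2 / (α / 2) + 1 / (1 - α / 2)) * |t - t'| ^ (α / 2) := by
  have hβ : 0 < α / 2 := by linarith [hα.1]
  have hβ1 : 0 < 1 - α / 2 := by linarith [hα.2]
  have hHC := mul_nonneg hH0 (CK_nonneg α)
  have i1 := hp2_int hF hB hα hH0 hH ht' t htt y
  have i2 := hp2_int hF hB hα hH0 hH ht' t' le_rfl y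
  have i3 := hp2_int hF hB hα hH0 hH htt t le_rfl y
  have e : W2 F t y - W2 F t' y = (∫ r in (0:ℝ)..t', hp2 (F r) (t - r) y - hp2 (F r) (t' - r) y)
      + ∫ r in t'..t, hp2 (F r) (t - r) y := by
    unfold W2
    rw [← intervalIntegral.integral_add_adjacent_intervals i1 i3, intervalIntegral.integral_sub i1 i2]
    ring
  rw [e, abs_of_nonneg (sub_nonneg.2 htt)]
  have p1 := split_int' (h := t - t') (A := 2 * H * CK α) (γ := 1) hβ (by linarith) (by linarith)
    (by linarith) ht' (i1.sub i2) ?_ ?_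
  rotate_left
  · intro r hr
    have hs : 0 < t' - r := by linarith [hr.2]
    have hs2 : 0 < t - r := by linarith [hr.2]
    have a1 := hp2_le (slice_cont hF r) (hB r) hα hH0 (hH r) hs y
    have a2 := hp2_le (slice_cont hF r) (hB r) hα hH0 (hH r) hs2 y
    have := abs_sub (hp2 (F r) (t - r) y) (hp2 (F r) (t' - r) y)
    have a3 : (t - r) ^ (α / 2 - 1) ≤ (t' - r) ^ (α / 2 - 1) :=
      Real.rpow_le_rpow_of_nonpos hs (by linarith) (by linarith)
    nlinarith [mul_le_mul_of_nonneg_left a3 hHC]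
  · intro r hr
    have hs : 0 < t' - r := by linarith [hr.2]
    have := Convex.norm_image_sub_le_of_norm_hasDerivWithin_le (f := fun s => hp2 (F r) s y)
      (f' := fun s => hp4 (F r) s y) (s := Ici (t' - r)) (x := t' - r) (y := t - r)
      (C := H * CK α * (t' - r) ^ (α / 2 - 1 - 1))
      (fun x hx => (hp2_deriv_time (slice_cont hF r) (hB r)
        (hs.trans_le hx) y).hasDerivWithinAt)
      (fun x hx => (hp4_le (slice_cont hF r) (hB r) hα hH0 (hH r) (hs.trans_le hx) y).trans
        (mul_le_mul_of_nonneg_left (Real.rpow_le_rpow_of_nonpos hs hx (by linarith)) hHC))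
      (convex_Ici _) self_mem_Ici (by simpa using htt)
    rw [Real.norm_eq_abs, Real.norm_eq_abs] at this
    refine this.trans ?_
    rw [Real.rpow_one, show t - r - (t' - r) = t - t' by ring, abs_of_nonneg (sub_nonneg.2 htt)]
    have h0 : 0 ≤ H * CK α * (t - t') * (t' - r) ^ (α / 2 - 1 - 1) :=
      mul_nonneg (mul_nonneg hHC (sub_nonneg.2 htt)) (Real.rpow_nonneg hs.le _)
    nlinarith
  have p2 : |∫ r in t'..t, hp2 (F r) (t - r) y| ≤ H * CK α * (1 / (α / 2)) * (t - t') ^ (α / 2) := by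
    have hi := (int_sub_rpow t' t t (by linarith : -1 < α / 2 - 1)).const_mul (H * CK α)
    have := intervalIntegral.norm_integral_le_of_norm_le (f := fun r => hp2 (F r) (t - r) y) htt
      (μ := volume) (g := fun r => H * CK α * (t - r) ^ (α / 2 - 1)) ?_ hi
    · rw [Real.norm_eq_abs, intervalIntegral.integral_const_mul,
        intervalIntegral.integral_comp_sub_left (fun r => r ^ (α / 2 - 1)) t, sub_self,
        integral_rpow (Or.inl (by linarith)), sub_add_cancel, Real.zero_rpow hβ.ne', sub_zero] at this
      exact this.trans (le_of_eq (by ring))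
    · have hne : ∀ᵐ s : ℝ, s ≠ t := by simp [ae_iff]
      filter_upwards [hne] with s hs hs'
      exact hp2_le (slice_cont hF s) (hB s) hα hH0 (hH s)
        (by linarith [lt_of_le_of_ne hs'.2 hs]) y
  refine (abs_add_le _ _).trans ((add_le_add p1 p2).trans ?_)
  have h0 : 0 ≤ H * CK α * (1 / (α / 2)) * (t - t') ^ (α / 2) := by
    have : 0 ≤ (t - t') ^ (α / 2) := Real.rpow_nonneg (by linarith) _
    positivity
  have e3 : 2 * H * CK α * (2 / (α / 2) + 1 / (1 - α / 2)) * (t - t') ^ (α / 2)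
      = 2 * H * CK α * (1 / (α / 2) + 1 / (1 - α / 2)) * (t - t') ^ (α / 2)
      + 2 * (H * CK α * (1 / (α / 2)) * (t - t') ^ (α / 2)) := by ring
  linarith

lemma W2_time {t t' : ℝ} (ht : 0 ≤ t) (ht' : 0 ≤ t') (y : ℝ) :
    |W2 F t y - W2 F t' y| ≤
      (2 * H * CK α) * (2 / (α / 2) + 1 / (1 - α / 2)) * |t - t'| ^ (α / 2) := by
  rcases le_total t' t with h | h
  · exact W2_time_aux hF hB hα hH0 hH ht' h y
  · have := W2_time_aux hF hB hα hH0 hH ht h y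
    rwa [abs_sub_comm, abs_sub_comm t t']

end duhamel

/-- The Duhamel integral vanishes at a centre of odd symmetry of the source. -/
lemma W0_odd {F : ℝ → ℝ → ℝ} {c : ℝ} (h : ∀ r y, F r (c + y) = -F r (c - y)) (t : ℝ) :
    W0 F t c = 0 := by
  unfold W0
  have : ∀ r, hp0 (F r) (t - r) c = 0 := by
    intro r
    unfold hp0 Kop
    have h1 := integral_neg_eq_self (fun z => G0 z * F r (c - √(t - r) * z)) volume
    have h2 : ∀ z, G0 (-z) * F r (c - √(t - r) * -z) = -(G0 z * F r (c - √(t - r) * z)) := by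
      intro z
      rw [show c - √(t - r) * -z = c + √(t - r) * z by ring, h]
      unfold G0; rw [neg_sq]; ring
    simp only [h2] at h1
    rw [integral_neg] at h1
    linarith
  simp [this]

/-! ### Parabolic Hölder functions, clamping and odd periodic extension -/

/-- The parabolic Hölder modulus. -/
def rho (α t x t' x' : ℝ) : ℝ := |x - x'| ^ α + |t - t'| ^ (α / 2)

lemma rho_nonneg (α t x t' x' : ℝ) : 0 ≤ rho α t x t' x' := by unfold rho; positivity

/-- Joint parabolic Hölder continuity of `w` on `J × I` with constant `H`. -/
def PH (α : ℝ) (J I : Set ℝ) (w : ℝ → ℝ → ℝ) (H : ℝ) : Prop :=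
  ∀ t ∈ J, ∀ t' ∈ J, ∀ x ∈ I, ∀ x' ∈ I, |w t x - w t' x'| ≤ H * rho α t x t' x'

lemma PH.mono {α : ℝ} {J I : Set ℝ} {w : ℝ → ℝ → ℝ} {H H' : ℝ} (h : PH α J I w H) (hH : H ≤ H') :
    PH α J I w H' := fun t ht t' ht' x hx x' hx' =>
  (h t ht t' ht' x hx x' hx').trans (mul_le_mul_of_nonneg_right hH (rho_nonneg _ _ _ _ _))

lemma PH.subset {α : ℝ} {J I J' I' : Set ℝ} {w : ℝ → ℝ → ℝ} {H : ℝ} (h : PH α J I w H)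
    (hJ : J' ⊆ J) (hI : I' ⊆ I) : PH α J' I' w H := fun t ht t' ht' x hx x' hx' =>
  h t (hJ ht) t' (hJ ht') x (hI hx) x' (hI hx')

lemma rho_space {α : ℝ} (hα : α ∈ Ioo (0:ℝ) 1) (t x x' : ℝ) : rho α t x t x' = |x - x'| ^ α := by
  unfold rho; rw [sub_self, abs_zero, Real.zero_rpow (by linarith [hα.1]), add_zero]

lemma rho_time {α : ℝ} (hα : α ∈ Ioo (0:ℝ) 1) (t t' x : ℝ) :
    rho α t x t' x = |t - t'| ^ (α / 2) := by
  unfold rho; rw [sub_self, abs_zero, Real.zero_rpow (by linarith [hα.1]), zero_add]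

lemma PH.of_sep {α : ℝ} {J I : Set ℝ} {w : ℝ → ℝ → ℝ} {H : ℝ}
    (hs : ∀ t ∈ J, ∀ x ∈ I, ∀ x' ∈ I, |w t x - w t x'| ≤ H * |x - x'| ^ α)
    (ht : ∀ t ∈ J, ∀ t' ∈ J, ∀ x ∈ I, |w t x - w t' x| ≤ H * |t - t'| ^ (α / 2)) :
    PH α J I w H := by
  intro t h1 t' h2 x h3 x' h4
  have a := hs t h1 x h3 x' h4
  have b := ht t h1 t' h2 x' h4
  have := abs_sub_le (w t x) (w t x') (w t' x')
  unfold rho; linarith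

lemma PH.continuousOn {α : ℝ} (hα : α ∈ Ioo (0:ℝ) 1) {J I : Set ℝ} {w : ℝ → ℝ → ℝ} {H : ℝ}
    (h : PH α J I w H) : ContinuousOn (fun p : ℝ × ℝ => w p.1 p.2) (J ×ˢ I) := by
  rintro ⟨t, x⟩ ⟨ht, hx⟩
  unfold ContinuousWithinAt
  rw [tendsto_iff_dist_tendsto_zero]
  have hc : Continuous fun p : ℝ × ℝ => H * rho α p.1 p.2 t x := by
    unfold rho
    have h1 : Continuous fun p : ℝ × ℝ => |p.2 - x| ^ α :=
      (by fun_prop : Continuous fun p : ℝ × ℝ => |p.2 - x|).rpow_const fun _ => Or.inr hα.1.le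
    have h2 : Continuous fun p : ℝ × ℝ => |p.1 - t| ^ (α / 2) :=
      (by fun_prop : Continuous fun p : ℝ × ℝ => |p.1 - t|).rpow_const
        fun _ => Or.inr (by linarith [hα.1])
    exact continuous_const.mul (h1.add h2)
  have h0 := hc.tendsto (t, x)
  simp only [rho_space hα, sub_self, abs_zero, Real.zero_rpow hα.1.ne', mul_zero] at h0
  refine squeeze_zero' (Eventually.of_forall fun _ => dist_nonneg) ?_ (h0.mono_left inf_le_left)
  filter_upwards [self_mem_nhdsWithin] with p hp
  exact h p.1 hp.1 t ht p.2 hp.2 x hx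

/-- Clamping to an interval. -/
def clamp (l r x : ℝ) : ℝ := max l (min r x)

lemma clamp_mem {l r : ℝ} (h : l ≤ r) (x : ℝ) : clamp l r x ∈ Icc l r :=
  ⟨le_max_left _ _, max_le h (min_le_left _ _)⟩

lemma clamp_of_mem {l r x : ℝ} (h : x ∈ Icc l r) : clamp l r x = x := by
  unfold clamp; rw [min_eq_right h.2, max_eq_right h.1]

lemma clamp_sub_le (l r x y : ℝ) : |clamp l r x - clamp l r y| ≤ |x - y| := by
  unfold clamp
  have h1 := abs_max_sub_max_le_abs (min r x) (min r y) l
  have h2 := abs_min_sub_min_le_max r x r y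
  rw [max_comm l, max_comm l]
  refine h1.trans (h2.trans ?_)
  simp

/-- Distance to the lattice `2Lℤ`: the fold of the line onto `[0, L]`. -/
def foldT (L y : ℝ) : ℝ := Metric.infDist y (range fun n : ℤ => 2 * L * (n : ℝ))

section fold
variable {L : ℝ}

lemma foldT_le (n : ℤ) (y : ℝ) : foldT L y ≤ |y - 2 * L * n| := by
  have := Metric.infDist_le_dist_of_mem (x := y) (mem_range_self (f := fun n : ℤ => 2 * L * (n : ℝ)) n)
  rwa [Real.dist_eq] at this

lemma le_foldT {y d : ℝ} (h : ∀ n : ℤ, d ≤ |y - 2 * L * n|) : d ≤ foldT L y := by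
  refine (Metric.le_infDist (range_nonempty _)).2 ?_
  rintro _ ⟨n, rfl⟩
  rw [Real.dist_eq]; exact h n

lemma foldT_nonneg (y : ℝ) : 0 ≤ foldT L y := Metric.infDist_nonneg

lemma foldT_lip (y y' : ℝ) : |foldT L y - foldT L y'| ≤ |y - y'| := by
  have := (Metric.lipschitz_infDist_pt (range fun n : ℤ => 2 * L * (n : ℝ))).dist_le_mul y y'
  rw [Real.dist_eq, Real.dist_eq, NNReal.coe_one, one_mul] at this
  exact this

lemma foldT_eq (hL : 0 < L) {y : ℝ} (hy : y ∈ Icc 0 L) : foldT L y = y := by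
  apply le_antisymm
  · have := foldT_le (L := L) 0 y
    simpa [abs_of_nonneg hy.1] using this
  · refine le_foldT fun n => ?_
    rcases lt_trichotomy n 0 with h | h | h
    · have : (n:ℝ) ≤ -1 := by exact_mod_cast Int.le_sub_one_of_lt h
      refine le_trans ?_ (le_abs_self _)
      nlinarith [hy.1]
    · subst h; simp [abs_of_nonneg hy.1]
    · have : (1:ℝ) ≤ n := by exact_mod_cast h
      refine le_trans ?_ (neg_le_abs _)
      nlinarith [hy.1, hy.2]

/-- The folded coordinate is symmetric about each multiple of `L`, which makes the odd periodic
extension well behaved under all the reflections. -/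
lemma foldT_refl (m : ℤ) (y : ℝ) : foldT L (2 * L * m - y) = foldT L y := by
  have key : ∀ y, foldT L y ≤ foldT L (2 * L * m - y) := by
    intro y
    refine le_foldT fun n => (foldT_le (m - n) y).trans (le_of_eq ?_)
    rw [← abs_neg]; congr 1; push_cast; ring
  refine le_antisymm ?_ (key y)
  have := key (2 * L * m - y)
  rwa [sub_sub_cancel] at this

lemma foldT_mem (hL : 0 < L) (y : ℝ) : foldT L y ∈ Icc 0 L := by
  refine ⟨foldT_nonneg _, (foldT_le (round (y / (2 * L))) y).trans ?_⟩
  have h := abs_sub_round (y / (2 * L))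
  have e : y - 2 * L * round (y / (2 * L)) = (2 * L) * (y / (2 * L) - round (y / (2 * L))) := by
    field_simp
  rw [e, abs_mul, abs_of_pos (by positivity)]
  nlinarith

lemma foldT_mul (hL : 0 < L) (n : ℤ) : foldT L (n * L) = 0 ∨ foldT L (n * L) = L := by
  rcases Int.even_or_odd' n with ⟨k, rfl | rfl⟩
  · left
    refine le_antisymm ((foldT_le k _).trans (le_of_eq ?_)) (foldT_nonneg _)
    rw [abs_eq_zero]; push_cast; ring
  · right
    rw [show ((2 * k + 1 : ℤ) : ℝ) * L = 2 * L * ((2 * k + 1 : ℤ) : ℝ) - (2 * L * k + L) by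
      push_cast; ring, foldT_refl, show 2 * L * (k:ℝ) + L = 2 * L * k - (-L) by ring, foldT_refl,
      show -L = 2 * L * ((0:ℤ):ℝ) - L by simp, foldT_refl, foldT_eq hL ⟨hL.le, le_rfl⟩]

/-- A zero of `sin(π y / L)` separates points where it has different signs. -/
lemma exists_zero_between (hL : 0 < L) {y y' : ℝ}
    (h : Real.sign (Real.sin (Real.pi * y / L)) ≠ Real.sign (Real.sin (Real.pi * y' / L))) :
    ∃ n : ℤ, (n:ℝ) * L ∈ uIcc y y' := by
  have hc : ContinuousOn (fun y => Real.sin (Real.pi * y / L)) (uIcc y y') := by fun_prop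
  have h0 : (0:ℝ) ∈ uIcc (Real.sin (Real.pi * y / L)) (Real.sin (Real.pi * y' / L)) := by
    generalize Real.sin (Real.pi * y / L) = a at *
    generalize Real.sin (Real.pi * y' / L) = b at *
    rcases lt_trichotomy a 0 with h1 | h1 | h1 <;> rcases lt_trichotomy b 0 with h2 | h2 | h2
    · rw [Real.sign_of_neg h1, Real.sign_of_neg h2] at h; exact absurd rfl h
    · exact mem_uIcc.2 (Or.inl ⟨h1.le, h2.ge⟩)
    · exact mem_uIcc.2 (Or.inl ⟨h1.le, h2.le⟩)
    · exact mem_uIcc.2 (Or.inr ⟨h2.le, h1.ge⟩)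
    · rw [h1, h2] at h; exact absurd rfl h
    · exact mem_uIcc.2 (Or.inl ⟨h1.le, h2.le⟩)
    · exact mem_uIcc.2 (Or.inr ⟨h2.le, h1.le⟩)
    · exact mem_uIcc.2 (Or.inr ⟨h2.le, h1.le⟩)
    · rw [Real.sign_of_pos h1, Real.sign_of_pos h2] at h; exact absurd rfl h
  obtain ⟨z, hz, hz0⟩ := intermediate_value_uIcc hc h0
  obtain ⟨n, hn⟩ := Real.sin_eq_zero_iff.1 hz0
  refine ⟨n, ?_⟩
  have hpi := Real.pi_pos
  have : (n:ℝ) * L = z := by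
    field_simp at hn
    exact hn
  rwa [this]

lemma Real.abs_sign_le (r : ℝ) : |Real.sign r| ≤ 1 := by
  rcases Real.sign_apply_eq r with h | h | h <;> rw [h] <;> simp

/-- Odd, `2L`-periodic extension. -/
lemma odd_extension {α : ℝ} (hα : α ∈ Ioo (0:ℝ) 1) (hL : 0 < L) {δ : ℝ} (hδ : 0 ≤ δ)
    {F : ℝ → ℝ → ℝ} {H : ℝ} (hH0 : 0 ≤ H) (hF : PH α (Icc 0 δ) (Icc 0 L) F H)
    (h0 : ∀ t ∈ Icc 0 δ, F t 0 = 0) (h1 : ∀ t ∈ Icc 0 δ, F t L = 0) :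
    ∃ E : ℝ → ℝ → ℝ, (Continuous fun p : ℝ × ℝ => E p.1 p.2) ∧ (∃ B, ∀ t y, |E t y| ≤ B) ∧
      (∀ t y y', |E t y - E t y'| ≤ 2 * H * |y - y'| ^ α) ∧
      (∀ t ∈ Icc 0 δ, ∀ y ∈ Icc 0 L, E t y = F t y) ∧
      (∀ t y, E t (0 + y) = -E t (0 - y)) ∧ (∀ t y, E t (L + y) = -E t (L - y)) := by
  set sg : ℝ → ℝ := fun y => Real.sign (Real.sin (Real.pi * y / L)) with hsg
  set E : ℝ → ℝ → ℝ := fun t y => sg y * F (clamp 0 δ t) (foldT L y) with hE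
  have hpi := Real.pi_pos
  have hsg1 : ∀ y, |sg y| ≤ 1 := fun y => Real.abs_sign_le _
  have hz : ∀ t, ∀ n : ℤ, F (clamp 0 δ t) (foldT L (n * L)) = 0 := by
    intro t n
    rcases foldT_mul hL n with h | h <;> rw [h]
    · exact h0 _ (clamp_mem hδ t)
    · exact h1 _ (clamp_mem hδ t)
  have hsp : ∀ t y y', |E t y - E t y'| ≤ 2 * H * |y - y'| ^ α := by
    intro t y y'
    have hFT : ∀ z z', |F (clamp 0 δ t) (foldT L z) - F (clamp 0 δ t) (foldT L z')|
        ≤ H * |z - z'| ^ α := by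
      intro z z'
      have := hF _ (clamp_mem hδ t) _ (clamp_mem hδ t) _ (foldT_mem hL z) _ (foldT_mem hL z')
      rw [rho_space hα] at this
      refine this.trans (mul_le_mul_of_nonneg_left ?_ hH0)
      exact Real.rpow_le_rpow (abs_nonneg _) (foldT_lip z z') hα.1.le
    by_cases h : sg y = sg y'
    · have e : E t y - E t y' = sg y *
          (F (clamp 0 δ t) (foldT L y) - F (clamp 0 δ t) (foldT L y')) := by
        simp only [hE, ← h]; ring
      rw [e, abs_mul]
      have a := hFT y y'
      have b := hsg1 y
      have c := abs_nonneg (F (clamp 0 δ t) (foldT L y) - F (clamp 0 δ t) (foldT L y'))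
      have d : 0 ≤ H * |y - y'| ^ α := by positivity
      nlinarith
    · obtain ⟨n, hn⟩ := exists_zero_between hL h
      have b1 : ∀ z, |z - n * L| ≤ |y - y'| → |E t z| ≤ H * |y - y'| ^ α := by
        intro z hzz
        have a := hFT z (n * L)
        rw [hz, sub_zero] at a
        have a2 : H * |z - n * L| ^ α ≤ H * |y - y'| ^ α :=
          mul_le_mul_of_nonneg_left (Real.rpow_le_rpow (abs_nonneg _) hzz hα.1.le) hH0
        simp only [hE, abs_mul]
        have b := hsg1 z
        have := abs_nonneg (F (clamp 0 δ t) (foldT L z))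
        nlinarith
      have c1 := b1 y (by
        rw [abs_sub_comm]
        have h2 := abs_sub_left_of_mem_uIcc hn
        rw [abs_sub_comm y y']; exact h2)
      have c2 := b1 y' (by
        have := abs_sub_right_of_mem_uIcc hn
        rw [abs_sub_comm y y']; exact this)
      have := abs_sub (E t y) (E t y')
      linarith
  have htm : ∀ t t' y, |E t y - E t' y| ≤ 2 * H * |t - t'| ^ (α / 2) := by
    intro t t' y
    have := hF _ (clamp_mem hδ t) _ (clamp_mem hδ t') _ (foldT_mem hL y) _ (foldT_mem hL y)
    rw [rho_time hα] at this
    have a2 : H * |clamp 0 δ t - clamp 0 δ t'| ^ (α / 2) ≤ H * |t - t'| ^ (α / 2) :=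
      mul_le_mul_of_nonneg_left (Real.rpow_le_rpow (abs_nonneg _) (clamp_sub_le _ _ _ _)
        (by linarith [hα.1])) hH0
    have e : E t y - E t' y = sg y *
          (F (clamp 0 δ t) (foldT L y) - F (clamp 0 δ t') (foldT L y)) := by
        simp only [hE]; ring
    rw [e, abs_mul]
    have b := hsg1 y
    have c := abs_nonneg (F (clamp 0 δ t) (foldT L y) - F (clamp 0 δ t') (foldT L y))
    have d : 0 ≤ H * |t - t'| ^ (α / 2) := by positivity
    nlinarith
  have hPH : PH α univ univ E (2 * H) :=
    PH.of_sep (fun t _ x _ x' _ => hsp t x x') (fun t _ t' _ x _ => htm t t' x)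
  refine ⟨E, ?_, ?_, hsp, ?_, ?_, ?_⟩
  · have := hPH.continuousOn hα
    rwa [univ_prod_univ, continuousOn_univ] at this
  · refine ⟨H * L ^ α, fun t y => ?_⟩
    have := hF _ (clamp_mem hδ t) _ (clamp_mem hδ t) _ (foldT_mem hL y) 0 ⟨le_rfl, hL.le⟩
    rw [rho_space hα, h0 _ (clamp_mem hδ t), sub_zero, sub_zero] at this
    have h3 : H * |foldT L y| ^ α ≤ H * L ^ α :=
      mul_le_mul_of_nonneg_left (Real.rpow_le_rpow (abs_nonneg _)
        (by rw [abs_of_nonneg (foldT_nonneg y)]; exact (foldT_mem hL y).2) hα.1.le) hH0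
    simp only [hE, abs_mul]
    have b := hsg1 y
    have c := abs_nonneg (F (clamp 0 δ t) (foldT L y))
    nlinarith
  · intro t ht y hy
    simp only [hE, clamp_of_mem ht, foldT_eq hL hy]
    rcases hy.1.eq_or_lt with h | h
    · rw [← h, h0 t ht, mul_zero]
    rcases hy.2.eq_or_lt with h' | h'
    · rw [h', h1 t ht, mul_zero]
    have : 0 < Real.sin (Real.pi * y / L) := by
      apply Real.sin_pos_of_pos_of_lt_pi (by positivity)
      rw [div_lt_iff₀ hL]; nlinarith
    simp only [hsg, Real.sign_of_pos this, one_mul]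
  · intro t y
    have h2 := foldT_refl (L := L) 0 y
    simp only [Int.cast_zero, mul_zero] at h2
    simp only [hE, hsg, zero_add, h2]
    rw [show Real.pi * (0 - y) / L = -(Real.pi * y / L) by ring, Real.sin_neg, Real.sign_neg]
    ring
  · intro t y
    have h2 := foldT_refl (L := L) 1 (L + y)
    rw [show 2 * L * ((1:ℤ):ℝ) - (L + y) = L - y by push_cast; ring] at h2
    simp only [hE, hsg, h2]
    rw [show Real.pi * (L + y) / L = Real.pi * y / L + Real.pi by field_simp; ring,
      show Real.pi * (L - y) / L = Real.pi - Real.pi * y / L by field_simp, Real.sin_add_pi,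
      Real.sin_pi_sub, Real.sign_neg]
    ring

end fold

/-! ### Time averages -/

/-- `D`, `P`, `Q` are the time derivative and the first two space derivatives of `V` on `J × I`,
one-sided at the boundary. -/
def HeatRel (J I : Set ℝ) (V D P Q : ℝ → ℝ → ℝ) : Prop :=
  ∀ t ∈ J, ∀ x ∈ I, HasDerivWithinAt (V t) (P t x) I x ∧ HasDerivWithinAt (P t) (Q t x) I x ∧
    HasDerivWithinAt (fun s => V s x) (D t x) J t

/-- Smooth profiles supported in `[1, 2]`. -/
def Bump (ψ : ℝ → ℝ) : Prop := ContDiff ℝ (⊤ : ℕ∞) ψ ∧ ∀ z ∉ Icc (1:ℝ) 2, ψ z = 0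

lemma Bump.nice {ψ : ℝ → ℝ} (h : Bump ψ) : Nice ψ := by
  have hc := h.1.continuous
  refine ⟨hc, ?_⟩
  obtain ⟨M, hM⟩ := (isCompact_Icc (a := (1:ℝ)) (b := 2)).exists_bound_of_continuousOn
    (f := fun z => |ψ z| * (1 + z ^ 2) ^ 2) (by fun_prop)
  refine ⟨max M 0, fun z => ?_⟩
  by_cases hz : z ∈ Icc (1:ℝ) 2
  · exact (le_abs_self _).trans ((hM z hz).trans (le_max_left _ _))
  · rw [h.2 z hz]; simp

lemma Bump.deriv {ψ : ℝ → ℝ} (h : Bump ψ) : Bump (deriv ψ) := by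
  refine ⟨(contDiff_infty_iff_deriv.1 h.1).2, fun z hz => ?_⟩
  have : ψ =ᶠ[𝓝 z] fun _ => 0 := by
    filter_upwards [isClosed_Icc.isOpen_compl.mem_nhds hz] with w hw
    exact h.2 w hw
  rw [this.deriv_eq]; simp

lemma Bump.id_mul {ψ : ℝ → ℝ} (h : Bump ψ) : Bump (fun z => z * ψ z) :=
  ⟨contDiff_id.mul h.1, fun z hz => by simp [h.2 z hz]⟩

lemma Bump.add {ψ χ : ℝ → ℝ} (h : Bump ψ) (h' : Bump χ) : Bump (fun z => ψ z + χ z) :=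
  ⟨h.1.add h'.1, fun z hz => by simp [h.2 z hz, h'.2 z hz]⟩

lemma Bump.const_mul {ψ : ℝ → ℝ} (h : Bump ψ) (c : ℝ) : Bump (fun z => c * ψ z) :=
  ⟨contDiff_const.mul h.1, fun z hz => by simp [h.2 z hz]⟩

lemma Bump.hasDerivAt {ψ : ℝ → ℝ} (h : Bump ψ) (z : ℝ) : HasDerivAt ψ (_root_.deriv ψ z) z :=
  (h.1.differentiable (by simp)).differentiableAt.hasDerivAt

lemma exists_bump : ∃ ψ, Bump ψ ∧ ∫ z, ψ z = 1 := by
  let f : ContDiffBump (3 / 2 : ℝ) := ⟨1 / 4, 1 / 2, by norm_num, by norm_num⟩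
  refine ⟨f.normed volume, ⟨f.contDiff_normed, fun z hz => ?_⟩, f.integral_normed⟩
  by_contra hne
  have h1 : z ∈ Function.support (f.normed volume) := hne
  rw [f.support_normed_eq] at h1
  have : |z - 3 / 2| < 1 / 2 := by
    have h2 := h1
    rw [Metric.mem_ball, Real.dist_eq] at h2
    exact h2
  have := abs_lt.1 this
  exact hz ⟨by linarith, by linarith⟩

/-- Average of `m` over the past at time scale `η²`. -/
def Iop (ψ m : ℝ → ℝ) (t η : ℝ) : ℝ := Kop ψ m t (η ^ 2)

lemma Iop_time {ψ m : ℝ → ℝ} (h : Bump ψ) (hm : Continuous m) {B : ℝ} (hB : ∀ y, |m y| ≤ B)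
    {β H : ℝ} (hH : ∀ y y', |m y - m y'| ≤ H * |y - y'| ^ β) (t t' η : ℝ) :
    |Iop ψ m t η - Iop ψ m t' η| ≤ H * |t - t'| ^ β * m0 ψ := by
  have e : Iop ψ m t η - Iop ψ m t' η = Kop ψ (fun y => m y - m (y + (t' - t))) t (η ^ 2) := by
    unfold Iop Kop
    rw [← integral_sub (h.nice.integrable_mul hm hB _ _) (h.nice.integrable_mul hm hB _ _)]
    congr 1; ext z
    show _ = ψ z * (m (t - η ^ 2 * z) - m (t - η ^ 2 * z + (t' - t)))
    rw [show t - η ^ 2 * z + (t' - t) = t' - η ^ 2 * z by ring]; ring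
  rw [e]
  refine Kop_le h.nice (fun y => ?_) _ _
  refine (hH _ _).trans (le_of_eq ?_)
  rw [show y - (y + (t' - t)) = t - t' by ring]

lemma sq_rpow_half {α η : ℝ} (hη : 0 ≤ η) : (η ^ 2) ^ (α / 2) = η ^ α := by
  rw [← Real.rpow_natCast, ← Real.rpow_mul hη]; congr 1; push_cast; ring

/-- The constant in the parabolic Hölder estimate of `Iop ψ`. -/
def IC (α : ℝ) (ψ : ℝ → ℝ) : ℝ :=
  m0 ψ + 3 * mom (α / 2) ψ + 2 * mom (α / 2) (deriv fun z => z * ψ z)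

lemma IC_nonneg (α : ℝ) (ψ : ℝ → ℝ) : 0 ≤ IC α ψ := by
  unfold IC
  have := m0_nonneg ψ; have := mom_nonneg (α / 2) ψ
  have := mom_nonneg (α / 2) (deriv fun z => z * ψ z)
  linarith

section
variable {ψ m : ℝ → ℝ} (h : Bump ψ) (hm : Continuous m) {B : ℝ} (hB : ∀ y, |m y| ≤ B)
include h hm hB

lemma Iop_deriv_time (t : ℝ) {η : ℝ} (hη : 0 < η) :
    HasDerivAt (fun t => Iop ψ m t η) ((η ^ 2)⁻¹ * Iop (deriv ψ) m t η) t :=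
  Kop_hasDerivAt h.nice h.deriv.nice h.hasDerivAt hm hB t (by positivity)

lemma Iop_deriv_space (t : ℝ) {η : ℝ} (hη : 0 < η) :
    HasDerivAt (fun η => Iop ψ m t η) (-(2 / η * Iop (deriv fun z => z * ψ z) m t η)) η := by
  have h1 := Kop_hasDerivAt_scale h.nice (k := deriv fun z => z * ψ z) h.id_mul.deriv.nice
    h.hasDerivAt (fun z => by
      have hh : HasDerivAt (fun z => z * ψ z) (1 * ψ z + z * deriv ψ z) z :=
        (hasDerivAt_id z).mul (h.hasDerivAt z)
      rw [hh.deriv, one_mul]) hm hB t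
      (by positivity : 0 < η ^ 2)
  refine (HasDerivAt.comp (h₂ := fun c => Kop ψ m t c) (h := fun η : ℝ => η ^ 2) η h1
    (hasDerivAt_pow 2 η)).congr_deriv ?_
  unfold Iop; field_simp; simp; ring

variable {α H : ℝ} (hα : α ∈ Ioo (0:ℝ) 1) (hH0 : 0 ≤ H)
  (hH : ∀ y y', |m y - m y'| ≤ H * |y - y'| ^ (α / 2))
include hα hH0 hH

/-- Near the boundary `η = 0` the average converges to the data at the rate `η^α`. -/
lemma Iop_near (t : ℝ) {η : ℝ} (hη : 0 ≤ η) :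
    |Iop ψ m t η - m t * ∫ z, ψ z| ≤ H * η ^ α * mom (α / 2) ψ := by
  have := Kop_sub_le h.nice hm hB (⟨by linarith [hα.1], by linarith [hα.2]⟩ : α / 2 ∈ Ioo (0:ℝ) 1)
    hH t (sq_nonneg η)
  rwa [sq_rpow_half hη] at this

/-- Hölder continuity of the average in the scale: the data are Hölder, which suffices when
`η'` is at most `η - η'`; otherwise the derivative in the scale is bounded. -/
lemma Iop_space_aux (t : ℝ) {η η' : ℝ} (hη : 0 ≤ η') (hle : η' ≤ η) :
    |Iop ψ m t η - Iop ψ m t η'| ≤ H * IC α ψ * |η - η'| ^ α := by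
  have hα' : α / 2 ∈ Ioo (0:ℝ) 1 := ⟨by linarith [hα.1], by linarith [hα.2]⟩
  have n1 := m0_nonneg ψ
  have n2 := mom_nonneg (α / 2) ψ
  have n3 := mom_nonneg (α / 2) (deriv fun z => z * ψ z)
  set r := η - η' with hr
  have hr0 : 0 ≤ r := sub_nonneg.2 hle
  rw [abs_of_nonneg hr0]
  have hra : 0 ≤ r ^ α := by positivity
  rcases le_or_gt η' r with hc | hc
  · have e : |Iop ψ m t η - Iop ψ m t η'| ≤ H * (3 * r ^ α) * mom (α / 2) ψ := by
      unfold Iop Kop mom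
      rw [← integral_const_mul, ← integral_sub (h.nice.integrable_mul hm hB _ _)
        (h.nice.integrable_mul hm hB _ _), ← Real.norm_eq_abs]
      refine norm_integral_le_of_norm_le ((h.nice.moment hα').const_mul _)
        (Eventually.of_forall fun z => ?_)
      rw [← mul_sub, norm_mul, Real.norm_eq_abs, Real.norm_eq_abs]
      have h1 := hH (t - η ^ 2 * z) (t - η' ^ 2 * z)
      have h2 : |t - η ^ 2 * z - (t - η' ^ 2 * z)| ≤ 3 * r ^ 2 * |z| := by
        rw [show t - η ^ 2 * z - (t - η' ^ 2 * z) = -((η ^ 2 - η' ^ 2) * z) by ring, abs_neg, abs_mul]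
        refine mul_le_mul_of_nonneg_right ?_ (abs_nonneg z)
        have : η = η' + r := by rw [hr]; ring
        rw [this, abs_of_nonneg (by nlinarith)]
        nlinarith
      have h3 : |t - η ^ 2 * z - (t - η' ^ 2 * z)| ^ (α / 2) ≤ 3 * r ^ α * |z| ^ (α / 2) := by
        refine (Real.rpow_le_rpow (abs_nonneg _) h2 hα'.1.le).trans ?_
        rw [Real.mul_rpow (by positivity) (abs_nonneg z), Real.mul_rpow (by norm_num) (sq_nonneg r),
          sq_rpow_half hr0]
        have : (3:ℝ) ^ (α / 2) ≤ 3 := by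
          calc (3:ℝ) ^ (α / 2) ≤ 3 ^ (1:ℝ) :=
                Real.rpow_le_rpow_of_exponent_le (by norm_num) hα'.2.le
            _ = 3 := Real.rpow_one 3
        gcongr
      calc |ψ z| * |m (t - η ^ 2 * z) - m (t - η' ^ 2 * z)|
          ≤ |ψ z| * (H * (3 * r ^ α * |z| ^ (α / 2))) :=
            mul_le_mul_of_nonneg_left (h1.trans (mul_le_mul_of_nonneg_left h3 hH0)) (abs_nonneg _)
        _ = _ := by ring
    refine e.trans ?_
    unfold IC
    have := mul_nonneg (mul_nonneg hH0 hra) n1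
    have := mul_nonneg (mul_nonneg hH0 hra) n3
    nlinarith
  · rcases hr0.eq_or_lt with hz | hr1
    · have : η = η' := by linarith
      rw [this, sub_self, abs_zero]
      exact mul_nonneg (mul_nonneg hH0 (IC_nonneg _ _)) hra
    have hmv := Convex.norm_image_sub_le_of_norm_hasDerivWithin_le (f := fun η => Iop ψ m t η)
      (f' := fun η => -(2 / η * Iop (deriv fun z => z * ψ z) m t η)) (s := Icc η' η) (x := η')
      (y := η) (C := 2 * H * r ^ (α - 1) * mom (α / 2) (deriv fun z => z * ψ z))
      (fun x hx => (Iop_deriv_space h hm hB t (by linarith [hx.1])).hasDerivWithinAt)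
      (fun x hx => ?_) (convex_Icc _ _) ⟨le_rfl, hle⟩ ⟨hle, le_rfl⟩
    · rw [Real.norm_eq_abs, Real.norm_eq_abs, ← hr, abs_of_nonneg hr0] at hmv
      refine hmv.trans ?_
      have e : r ^ α = r ^ (α - 1) * r := by
        rw [← Real.rpow_add_one hr1.ne']; congr 1; ring
      unfold IC
      rw [e]
      have h5 : 0 ≤ H * (r ^ (α - 1) * r) := by positivity
      have := mul_nonneg h5 n1
      have := mul_nonneg h5 n2
      nlinarith
    · have hx0 : 0 < x := by linarith [hx.1]
      have hb := h.id_mul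
      have := Iop_near hb.deriv hm hB hα hH0 hH t hx0.le
      rw [hb.nice.integral_deriv hb.deriv.nice hb.hasDerivAt, mul_zero, sub_zero] at this
      rw [norm_neg, norm_mul, Real.norm_eq_abs, Real.norm_eq_abs, abs_of_pos (by positivity)]
      calc 2 / x * |Iop (deriv fun z => z * ψ z) m t x|
          ≤ 2 / x * (H * x ^ α * mom (α / 2) (deriv fun z => z * ψ z)) := by gcongr
        _ = 2 * H * x ^ (α - 1) * mom (α / 2) (deriv fun z => z * ψ z) := by
            rw [Real.rpow_sub_one hx0.ne']; ring
        _ ≤ _ := by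
            have : x ^ (α - 1) ≤ r ^ (α - 1) :=
              Real.rpow_le_rpow_of_nonpos hr1 (by linarith [hx.1]) (by linarith [hα.2])
            gcongr

/-- Averages of `α/2`-Hölder data over times of order `η²` are parabolically `α`-Hölder. -/
lemma Iop_PH : PH α univ (Ici 0) (Iop ψ m) (H * IC α ψ) := by
  refine PH.of_sep (fun t _ x hx x' hx' => ?_) (fun t _ t' _ x _ => ?_)
  · rcases le_total x' x with hh | hh
    · exact Iop_space_aux h hm hB hα hH0 hH t hx' hh
    · rw [abs_sub_comm, abs_sub_comm x x']
      exact Iop_space_aux h hm hB hα hH0 hH t hx hh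
  · refine (Iop_time h hm hB hH t t' x).trans ?_
    have n2 := mom_nonneg (α / 2) ψ
    have n3 := mom_nonneg (α / 2) (deriv fun z => z * ψ z)
    have n4 : 0 ≤ H * |t - t'| ^ (α / 2) := by positivity
    unfold IC
    nlinarith [mul_nonneg n4 n2, mul_nonneg n4 n3]

end

/-- The averages only see the past. -/
lemma Iop_zero {ψ m : ℝ → ℝ} (h : Bump ψ) (h0 : ∀ t ≤ 0, m t = 0) {t : ℝ} (ht : t ≤ 0) (η : ℝ) :
    Iop ψ m t η = 0 := by
  unfold Iop Kop
  have : ∀ z, ψ z * m (t - η ^ 2 * z) = 0 := by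
    intro z
    by_cases hz : z ∈ Icc (1:ℝ) 2
    · rw [h0 _ (by nlinarith [hz.1, sq_nonneg η]), mul_zero]
    · rw [h.2 z hz, zero_mul]
  simp [this]

lemma Iop_eta_zero (ψ m : ℝ → ℝ) (t : ℝ) : Iop ψ m t 0 = m t * ∫ z, ψ z := by
  unfold Iop Kop
  simp only [ne_eq, OfNat.ofNat_ne_zero, not_false_eq_true, zero_pow, zero_mul, sub_zero]
  rw [integral_mul_const, mul_comm]

/-! ### Boundary layers -/

lemma HeatRel.subset {J I J' I' : Set ℝ} {V D P Q : ℝ → ℝ → ℝ} (h : HeatRel J I V D P Q)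
    (hJ : J' ⊆ J) (hI : I' ⊆ I) : HeatRel J' I' V D P Q := fun t ht x hx =>
  have := h t (hJ ht) x (hI hx)
  ⟨this.1.mono hI, this.2.1.mono hI, this.2.2.mono hJ⟩

lemma HeatRel.add {J I : Set ℝ} {V D P Q V' D' P' Q' : ℝ → ℝ → ℝ} (h : HeatRel J I V D P Q)
    (h' : HeatRel J I V' D' P' Q') :
    HeatRel J I (fun t x => V t x + V' t x) (fun t x => D t x + D' t x)
      (fun t x => P t x + P' t x) (fun t x => Q t x + Q' t x) := fun t ht x hx =>
  have a := h t ht x hx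
  have b := h' t ht x hx
  ⟨a.1.add b.1, a.2.1.add b.2.1, a.2.2.add b.2.2⟩

/-- The reflection `x ↦ L - x` exchanges the end points; the first space derivative changes sign. -/
lemma HeatRel.reflect {J : Set ℝ} {L : ℝ} {V D P Q : ℝ → ℝ → ℝ}
    (h : HeatRel J (Icc 0 L) V D P Q) :
    HeatRel J (Icc 0 L) (fun t x => V t (L - x)) (fun t x => D t (L - x))
      (fun t x => -P t (L - x)) (fun t x => Q t (L - x)) := by
  intro t ht x hx
  have hm : MapsTo (fun x => L - x) (Icc 0 L) (Icc 0 L) :=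
    fun y hy => ⟨by linarith [hy.2], by linarith [hy.1]⟩
  have a := h t ht (L - x) (hm hx)
  have hd : HasDerivWithinAt (fun x : ℝ => L - x) (-1) (Icc 0 L) x :=
    ((hasDerivAt_id x).const_sub L).hasDerivWithinAt
  refine ⟨?_, ?_, a.2.2⟩
  · exact (HasDerivWithinAt.comp (h₂ := V t) (h := fun x => L - x) x a.1 hd hm).congr_deriv (by ring)
  · exact (HasDerivWithinAt.comp (h₂ := P t) (h := fun x => L - x) x a.2.1 hd hm).neg.congr_deriv
      (by ring)

lemma PH.reflect {α L H : ℝ} {J : Set ℝ} {w : ℝ → ℝ → ℝ} (h : PH α J (Icc 0 L) w H) :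
    PH α J (Icc 0 L) (fun t x => w t (L - x)) H := by
  intro t ht t' ht' x hx x' hx'
  have := h t ht t' ht' (L - x) ⟨by linarith [hx.2], by linarith [hx.1]⟩ (L - x')
    ⟨by linarith [hx'.2], by linarith [hx'.1]⟩
  refine this.trans (le_of_eq ?_)
  unfold rho
  rw [show L - x - (L - x') = -(x - x') by ring, abs_neg]

lemma PH.add {α H H' : ℝ} {J I : Set ℝ} {w w' : ℝ → ℝ → ℝ} (h : PH α J I w H)
    (h' : PH α J I w' H') : PH α J I (fun t x => w t x + w' t x) (H + H') := by
  intro t ht t' ht' x hx x' hx'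
  have a := h t ht t' ht' x hx x' hx'
  have b := h' t ht t' ht' x hx x' hx'
  rw [add_mul, show w t x + w' t x - (w t' x' + w' t' x') = w t x - w t' x' + (w' t x - w' t' x')
    by ring]
  exact (abs_add_le _ _).trans (add_le_add a b)

lemma PH.neg {α H : ℝ} {J I : Set ℝ} {w : ℝ → ℝ → ℝ} (h : PH α J I w H) :
    PH α J I (fun t x => -w t x) H := by
  intro t ht t' ht' x hx x' hx'
  have a := h t ht t' ht' x hx x' hx'
  rwa [show -w t x - -w t' x' = -(w t x - w t' x') by ring, abs_neg]

lemma PH.sub {α H H' : ℝ} {J I : Set ℝ} {w w' : ℝ → ℝ → ℝ} (h : PH α J I w H)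
    (h' : PH α J I w' H') : PH α J I (fun t x => w t x - w' t x) (H + H') := by
  simpa [sub_eq_add_neg] using h.add h'.neg

lemma PH.congr {α H : ℝ} {J I : Set ℝ} {w w' : ℝ → ℝ → ℝ} (h : PH α J I w H)
    (h' : ∀ t ∈ J, ∀ x ∈ I, w' t x = w t x) : PH α J I w' H := by
  intro t ht t' ht' x hx x' hx'
  rw [h' t ht x hx, h' t' ht' x' hx']
  exact h t ht t' ht' x hx x' hx'

/-- Lipschitz functions on a bounded set are Hölder. -/
lemma abs_le_rpow_of_le {α R r : ℝ} (hα : α ∈ Ioo (0:ℝ) 1) (hr : 0 ≤ r) (h : r ≤ R) :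
    r ≤ R ^ (1 - α) * r ^ α := by
  rcases hr.eq_or_lt with h0 | h0
  · rw [← h0, Real.zero_rpow hα.1.ne', mul_zero]
  · calc r = r ^ (1 - α) * r ^ α := by
          rw [← Real.rpow_add h0]; simp
      _ ≤ _ := by
          have : r ^ (1 - α) ≤ R ^ (1 - α) := Real.rpow_le_rpow hr h (by linarith [hα.2])
          gcongr

lemma holder_of_contDiff {α l r : ℝ} (hα : α ∈ Ioo (0:ℝ) 1) (hlr : l ≤ r) {c : ℝ → ℝ}
    (hc : ContDiff ℝ 1 c) :
    ∃ K, 0 ≤ K ∧ (∀ x ∈ Icc l r, |c x| ≤ K) ∧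
      ∀ x ∈ Icc l r, ∀ x' ∈ Icc l r, |c x - c x'| ≤ K * |x - x'| ^ α := by
  obtain ⟨A, hA⟩ := (isCompact_Icc (a := l) (b := r)).exists_bound_of_continuousOn
    hc.continuous.continuousOn
  obtain ⟨B, hB⟩ := (isCompact_Icc (a := l) (b := r)).exists_bound_of_continuousOn
    (hc.continuous_deriv le_rfl).continuousOn
  have hB0 : 0 ≤ B := (norm_nonneg _).trans (hB l ⟨le_rfl, hlr⟩)
  have hA0 : 0 ≤ A := (norm_nonneg _).trans (hA l ⟨le_rfl, hlr⟩)
  have hR : 0 ≤ (r - l) ^ (1 - α) := Real.rpow_nonneg (by linarith) _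
  refine ⟨A + B * (r - l) ^ (1 - α), by positivity, fun x hx => (hA x hx).trans
    (by nlinarith [mul_nonneg hB0 hR]), fun x hx x' hx' => ?_⟩
  have h1 := (convex_Icc l r).norm_image_sub_le_of_norm_hasDerivWithin_le (C := B)
    (fun y hy => ((hc.differentiable one_ne_zero).differentiableAt (x := y)).hasDerivAt.hasDerivWithinAt) hB hx' hx
  rw [Real.norm_eq_abs, Real.norm_eq_abs] at h1
  have h2 : |x - x'| ≤ (r - l) ^ (1 - α) * |x - x'| ^ α :=
    abs_le_rpow_of_le hα (abs_nonneg _) (abs_sub_le_iff.2 ⟨by linarith [hx.2, hx'.1],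
      by linarith [hx.1, hx'.2]⟩)
  have h3 : 0 ≤ |x - x'| ^ α := by positivity
  calc |c x - c x'| ≤ B * |x - x'| := h1
    _ ≤ B * ((r - l) ^ (1 - α) * |x - x'| ^ α) := by gcongr
    _ ≤ _ := by nlinarith [mul_nonneg hA0 h3]

/-- Multiplication by a Hölder coefficient depending on `x` only. -/
lemma PH.coef_mul {α H B K : ℝ} {J I : Set ℝ} {w : ℝ → ℝ → ℝ} {c : ℝ → ℝ} (h : PH α J I w H)
    (hw : ∀ t ∈ J, ∀ x ∈ I, |w t x| ≤ B) (hK : 0 ≤ K) (hH : 0 ≤ H) (hB : 0 ≤ B)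
    (hc : ∀ x ∈ I, |c x| ≤ K) (hc' : ∀ x ∈ I, ∀ x' ∈ I, |c x - c x'| ≤ K * |x - x'| ^ α) :
    PH α J I (fun t x => c x * w t x) (K * (H + B)) := by
  intro t ht t' ht' x hx x' hx'
  have h1 := h t ht t' ht' x hx x' hx'
  have h2 := hc' x hx x' hx'
  have h3 : |x - x'| ^ α ≤ rho α t x t' x' := by
    unfold rho; linarith [(by positivity : 0 ≤ |t - t'| ^ (α / 2))]
  have e : c x * w t x - c x' * w t' x' = c x * (w t x - w t' x') + (c x - c x') * w t' x' := by ring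
  rw [e]
  refine (abs_add_le _ _).trans ?_
  rw [abs_mul, abs_mul]
  have := rho_nonneg α t x t' x'
  calc |c x| * |w t x - w t' x'| + |c x - c x'| * |w t' x'|
      ≤ K * (H * rho α t x t' x') + K * rho α t x t' x' * B := by
        gcongr
        · exact hc x hx
        · exact h2.trans (by gcongr)
        · exact hw t' ht' x' hx'
    _ = _ := by ring

/-- The product of `y` with a merely continuous function is differentiable at `0`. -/
lemma hasDerivWithinAt_mul_zero {w : ℝ → ℝ} {s : Set ℝ} (h : ContinuousWithinAt w s 0) :
    HasDerivWithinAt (fun y => y * w y) (w 0) s 0 := by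
  rw [hasDerivWithinAt_iff_tendsto_slope]
  have : Tendsto w (𝓝[s \ {0}] 0) (𝓝 (w 0)) := h.tendsto.mono_left (nhdsWithin_mono _ diff_subset)
  refine this.congr' ?_
  filter_upwards [self_mem_nhdsWithin] with y hy
  have hy0 : y ≠ 0 := hy.2
  rw [slope_def_field]; field_simp; ring

section bl
variable {α L : ℝ} (hα : α ∈ Ioo (0:ℝ) 1)
include hα

/-- A function vanishing initially whose second space derivative is `m` at `0` while its time
derivative vanishes there; it corrects the incompatibility of `F` with the lateral data. -/
lemma boundary_layer (hL : 0 < L) : ∃ K, 0 ≤ K ∧ ∀ (H : ℝ) (m : ℝ → ℝ), 0 ≤ H → Continuous m →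
    (∀ t, |m t| ≤ H) → (∀ t t', |m t - m t'| ≤ H * |t - t'| ^ (α / 2)) → (∀ t ≤ 0, m t = 0) →
    ∃ Z D P Q : ℝ → ℝ → ℝ, HeatRel univ (Icc 0 L) Z D P Q ∧ PH α univ (Icc 0 L) D (K * H) ∧
      PH α univ (Icc 0 L) Q (K * H) ∧
      (∀ t, D t 0 = 0 ∧ D t L = 0 ∧ Q t 0 = m t ∧ Q t L = 0) ∧ ∀ x, Z 0 x = 0 ∧ Q 0 x = 0 := by
  obtain ⟨φ, hφ, hintg⟩ := exists_bump
  let d1 : ℝ → ℝ := deriv fun z => z * φ z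
  have hd1 : Bump d1 := hφ.id_mul.deriv
  let ψ : ℝ → ℝ := fun z => d1 z + (-1) * φ z
  have hψ : Bump ψ := hd1.add (hφ.const_mul (-1))
  let d2 : ℝ → ℝ := deriv fun z => z * ψ z
  have hd2 : Bump d2 := hψ.id_mul.deriv
  let χ2 : ℝ → ℝ := fun z => 2 * d2 z + (-1) * ψ z
  have hχ2 : Bump χ2 := (hd2.const_mul 2).add (hψ.const_mul (-1))
  have id1 : ∫ z, d1 z = 0 := hφ.id_mul.nice.integral_deriv hd1.nice hφ.id_mul.hasDerivAt
  have id2 : ∫ z, d2 z = 0 := hψ.id_mul.nice.integral_deriv hd2.nice hψ.id_mul.hasDerivAt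
  have iφ' : ∫ z, deriv φ z = 0 := hφ.nice.integral_deriv hφ.deriv.nice hφ.hasDerivAt
  have iψ : ∫ z, ψ z = -1 := by
    show ∫ z, (d1 z + (-1) * φ z) = -1
    rw [integral_add hd1.nice.integrable (hφ.nice.integrable.const_mul _), integral_const_mul, id1,
      hintg]; norm_num
  have iχ2 : ∫ z, χ2 z = 1 := by
    show ∫ z, (2 * d2 z + (-1) * ψ z) = 1
    rw [integral_add (hd2.nice.integrable.const_mul _) (hψ.nice.integrable.const_mul _),
      integral_const_mul, integral_const_mul, id2, iψ]; norm_num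
  -- coefficients
  let c0 : ℝ → ℝ := fun x => (1 - x / L) ^ 3
  let c1 : ℝ → ℝ := fun x => -(3 / L) * (1 - x / L) ^ 2
  let c2 : ℝ → ℝ := fun x => 6 / L ^ 2 * (1 - x / L)
  have hin : ∀ x, HasDerivAt (fun x : ℝ => 1 - x / L) (-(1 / L)) x := fun x => by
    simpa using ((hasDerivAt_id x).div_const L).const_sub 1
  have hc0 : ∀ x, HasDerivAt c0 (c1 x) x := fun x =>
    ((hin x).pow 3).congr_deriv (by simp only [c1]; push_cast; ring)
  have hc1 : ∀ x, HasDerivAt c1 (c2 x) x := fun x =>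
    (((hin x).pow 2).const_mul (-(3 / L))).congr_deriv (by simp only [c2]; push_cast; field_simp; ring)
  obtain ⟨K0, hK0, a0, b0⟩ := holder_of_contDiff (α := α) hα hL.le (c := c0) (by fun_prop)
  obtain ⟨K1, hK1, a1, b1⟩ := holder_of_contDiff (α := α) hα hL.le (c := fun x => x * c1 x)
    (by fun_prop)
  obtain ⟨K2, hK2, a2, b2⟩ := holder_of_contDiff (α := α) hα hL.le (c := fun x => x ^ 2 * c2 x)
    (by fun_prop)
  let N : (ℝ → ℝ) → ℝ := fun ψ => IC α ψ + m0 ψ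
  have hN : ∀ ψ, 0 ≤ N ψ := fun ψ => add_nonneg (IC_nonneg _ _) (m0_nonneg _)
  have hKK : 0 ≤ K0 * N (deriv φ) + (K2 * N φ + 2 * K1 * N ψ + K0 * N χ2) := by
    have := hN (deriv φ); have := hN φ; have := hN ψ; have := hN χ2
    positivity
  refine ⟨_, hKK, fun H m hH0 hm hB hH hz => ?_⟩
  have key : ∀ {ψ : ℝ → ℝ}, Bump ψ → ∀ {c : ℝ → ℝ} {K : ℝ}, 0 ≤ K → (∀ x ∈ Icc 0 L, |c x| ≤ K) →
      (∀ x ∈ Icc 0 L, ∀ x' ∈ Icc 0 L, |c x - c x'| ≤ K * |x - x'| ^ α) →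
      PH α univ (Icc 0 L) (fun t x => c x * Iop ψ m t x) (K * N ψ * H) := by
    intro ψ hψ c K hK h1 h2
    have := PH.coef_mul (α := α) (J := univ) (I := Icc 0 L) (w := Iop ψ m) (H := H * IC α ψ)
      (B := H * m0 ψ) (K := K) (c := c)
      ((Iop_PH hψ hm hB hα hH0 hH).subset le_rfl (fun x hx => hx.1))
      (fun t _ x _ => Kop_le hψ.nice hB _ _) hK (mul_nonneg hH0 (IC_nonneg _ _))
      (mul_nonneg hH0 (m0_nonneg _)) h1 h2
    refine this.mono (le_of_eq ?_)
    simp only [N]; ring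
  have lin1 : ∀ t x, Iop ψ m t x = Iop d1 m t x - Iop φ m t x := by
    intro t x
    unfold Iop Kop
    rw [← integral_sub (hd1.nice.integrable_mul hm hB _ _) (hφ.nice.integrable_mul hm hB _ _)]
    congr 1; ext z; simp only [ψ]; ring
  have lin2 : ∀ t x, Iop χ2 m t x = 2 * Iop d2 m t x - Iop ψ m t x := by
    intro t x
    unfold Iop Kop
    rw [← integral_const_mul, ← integral_sub ((hd2.nice.integrable_mul hm hB _ _).const_mul 2)
      (hψ.nice.integrable_mul hm hB _ _)]
    congr 1; ext z; simp only [χ2]; ring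
  have cont : ∀ {ψ : ℝ → ℝ}, Bump ψ → ∀ t, ContinuousWithinAt (Iop ψ m t) (Icc 0 L) 0 := by
    intro ψ hψ t
    have h1 := ((Iop_PH hψ hm hB hα hH0 hH).continuousOn hα) (t, 0) ⟨mem_univ _, le_refl (0:ℝ)⟩
    exact ContinuousWithinAt.comp (f := fun x : ℝ => (t, x)) (t := univ ×ˢ Ici 0) (x := 0) h1
      (by fun_prop) (fun x hx => ⟨mem_univ _, hx.1⟩)
  let J : ℝ → ℝ → ℝ := fun t x => x ^ 2 / 2 * Iop φ m t x
  let PJ : ℝ → ℝ → ℝ := fun t x => -(x * Iop ψ m t x)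
  have dJ : ∀ t, ∀ x ∈ Icc 0 L, HasDerivWithinAt (J t) (PJ t x) (Icc 0 L) x := by
    intro t x hx
    rcases hx.1.eq_or_lt with h0 | h0
    · subst h0
      have h1 : ContinuousWithinAt (fun x => x / 2 * Iop φ m t x) (Icc 0 L) 0 :=
        ContinuousWithinAt.mul (by fun_prop) (cont hφ t)
      have h2 := hasDerivWithinAt_mul_zero h1
      refine (h2.congr_deriv (by simp [PJ])).congr (fun y _ => ?_) ?_
      · simp only [J]; ring
      · simp [J]
    · have h1 := (((hasDerivAt_pow 2 x).div_const 2).mul (Iop_deriv_space hφ hm hB t h0))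
      refine (h1.congr_deriv ?_).hasDerivWithinAt
      simp only [PJ, lin1]
      show _ = -(x * (Iop (deriv fun z => z * φ z) m t x - Iop φ m t x))
      field_simp; simp; ring
  have dPJ : ∀ t, ∀ x ∈ Icc 0 L, HasDerivWithinAt (PJ t) (Iop χ2 m t x) (Icc 0 L) x := by
    intro t x hx
    rcases hx.1.eq_or_lt with h0 | h0
    · subst h0
      refine ((hasDerivWithinAt_mul_zero (cont hψ t)).neg.congr_deriv ?_)
      rw [Iop_eta_zero, Iop_eta_zero, iψ, iχ2]; ring
    · have h1 := ((hasDerivAt_id x).mul (Iop_deriv_space hψ hm hB t h0)).neg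
      refine (h1.congr_deriv ?_).hasDerivWithinAt
      rw [lin2]
      show _ = (2 * Iop (deriv fun z => z * ψ z) m t x - Iop ψ m t x)
      simp only [id]; field_simp; ring
  have tJ : ∀ x ∈ Icc 0 L, ∀ t, HasDerivAt (fun t => J t x) (1 / 2 * Iop (deriv φ) m t x) t := by
    intro x hx t
    rcases hx.1.eq_or_lt with h0 | h0
    · subst h0
      rw [Iop_eta_zero, iφ']
      simpa [J] using hasDerivAt_const t (0:ℝ)
    · refine ((Iop_deriv_time hφ hm hB t h0).const_mul (x ^ 2 / 2)).congr_deriv ?_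
      field_simp
  refine ⟨fun t x => c0 x * J t x, fun t x => 1 / 2 * (c0 x * Iop (deriv φ) m t x),
    fun t x => c1 x * J t x + c0 x * PJ t x,
    fun t x => 1 / 2 * (x ^ 2 * c2 x * Iop φ m t x) - 2 * (x * c1 x * Iop ψ m t x)
      + c0 x * Iop χ2 m t x, ?_, ?_, ?_, ?_, ?_⟩
  · intro t _ x hx
    refine ⟨?_, ?_, ?_⟩
    · exact (hc0 x).hasDerivWithinAt.mul (dJ t x hx)
    · refine (((hc1 x).hasDerivWithinAt.mul (dJ t x hx)).add
        ((hc0 x).hasDerivWithinAt.mul (dPJ t x hx))).congr_deriv ?_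
      simp only [J, PJ]; ring
    · exact (((tJ x hx t).const_mul (c0 x)).congr_deriv (by ring)).hasDerivWithinAt
  · have h1 := key hφ.deriv hK0 a0 b0
    intro t ht t' ht' x hx x' hx'
    have := h1 t ht t' ht' x hx x' hx'
    have r0 := rho_nonneg α t x t' x'
    have e1 : 0 ≤ (K2 * N φ + 2 * K1 * N ψ + K0 * N χ2) * H * rho α t x t' x' := by
      have := hN φ; have := hN ψ; have := hN χ2
      positivity
    have e2 := abs_nonneg (c0 x * Iop (deriv φ) m t x - c0 x' * Iop (deriv φ) m t' x')
    rw [← mul_sub, abs_mul, abs_of_pos (by norm_num : (0:ℝ) < 1 / 2)]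
    nlinarith
  · have h1 := key hφ hK2 a2 b2
    have h2 := key hψ hK1 a1 b1
    have h3 := key hχ2 hK0 a0 b0
    intro t ht t' ht' x hx x' hx'
    have r0 := rho_nonneg α t x t' x'
    have e1 : 0 ≤ K0 * N (deriv φ) * H * rho α t x t' x' := by
      have := hN (deriv φ)
      positivity
    have g1 := abs_le.1 (h1 t ht t' ht' x hx x' hx')
    have g2 := abs_le.1 (h2 t ht t' ht' x hx x' hx')
    have g3 := abs_le.1 (h3 t ht t' ht' x hx x' hx')
    have e2 : 0 ≤ K2 * N φ * H * rho α t x t' x' := by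
      have := hN φ
      positivity
    rw [abs_le]
    constructor <;> nlinarith [g1.1, g1.2, g2.1, g2.2, g3.1, g3.2]
  · intro t
    refine ⟨?_, ?_, ?_, ?_⟩
    · simp only [Iop_eta_zero, iφ']; ring
    · simp only [c0, div_self hL.ne']; ring
    · simp only [Iop_eta_zero, iχ2, c0]; simp
    · simp only [c0, c1, c2, div_self hL.ne']; ring
  · intro x
    simp only [J, Iop_zero hφ hz le_rfl, Iop_zero hψ hz le_rfl, Iop_zero hχ2 hz le_rfl]
    simp

end bl

/-! ### The heat equation on a strip -/

/-- The constant of the Schauder estimate for the Duhamel integral. -/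
def KW (α : ℝ) : ℝ :=
  4 * CK α * (1 / (α / 2) + 1 / (1 / 2 - α / 2)) + 4 * CK α * (2 / (α / 2) + 1 / (1 - α / 2))

lemma KW_nonneg {α : ℝ} (hα : α ∈ Ioo (0:ℝ) 1) : 0 ≤ KW α := by
  have := CK_nonneg α
  have h1 : 0 < α / 2 := by linarith [hα.1]
  have h2 : 0 < 1 / 2 - α / 2 := by linarith [hα.2]
  have h3 : 0 < 1 - α / 2 := by linarith [hα.2]
  unfold KW
  positivity

/-- The heat equation with a right-hand side vanishing on the lateral boundary and zero initial
and lateral data. -/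
lemma duhamel_strip {α : ℝ} (hα : α ∈ Ioo (0:ℝ) 1) {L : ℝ} (hL : 0 < L) {δ : ℝ} (hδ : 0 < δ)
    {F : ℝ → ℝ → ℝ} {H : ℝ} (hH0 : 0 ≤ H) (hF : PH α (Icc 0 δ) (Icc 0 L) F H)
    (h0 : ∀ t ∈ Icc 0 δ, F t 0 = 0) (h1 : ∀ t ∈ Icc 0 δ, F t L = 0) :
    ∃ V D P Q : ℝ → ℝ → ℝ, HeatRel (Icc 0 δ) (Icc 0 L) V D P Q ∧
      PH α (Icc 0 δ) (Icc 0 L) Q (KW α * H) ∧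
      (∀ t ∈ Icc 0 δ, ∀ x ∈ Icc 0 L, D t x = Q t x + F t x) ∧
      (∀ t ∈ Icc 0 δ, D t 0 = 0 ∧ D t L = 0) ∧ ∀ x, V 0 x = 0 := by
  obtain ⟨E, hE, ⟨B, hB⟩, hEH, hEF, ho0, hoL⟩ := odd_extension hα hL hδ.le hH0 hF h0 h1
  have h2H : 0 ≤ 2 * H := by linarith
  have hd : ∀ t ∈ Icc 0 δ, ∀ x, HasDerivWithinAt (fun s => W0 E s x) (W2 E t x + E t x)
      (Icc 0 δ) t := by
    intro t ht x
    have hc : Continuous fun s => W2 E (max s 0) x + E s x := by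
      refine Continuous.add ?_ (hE.comp (by fun_prop : Continuous fun s : ℝ => (s, x)))
      have hco : ContinuousOn (fun s => W2 E s x) (Ici 0) := by
        intro s hs
        unfold ContinuousWithinAt
        rw [tendsto_iff_dist_tendsto_zero]
        set C := (2 * (2 * H) * CK α) * (2 / (α / 2) + 1 / (1 - α / 2))
        have hcc : Continuous fun r : ℝ => C * |r - s| ^ (α / 2) :=
          continuous_const.mul ((by fun_prop : Continuous fun r : ℝ => |r - s|).rpow_const
            fun _ => Or.inr (by linarith [hα.1]))
        have hz := hcc.tendsto s
        simp only [sub_self, abs_zero, Real.zero_rpow (by linarith [hα.1] : α / 2 ≠ 0), mul_zero]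
          at hz
        refine squeeze_zero' (Eventually.of_forall fun _ => dist_nonneg) ?_
          (hz.mono_left inf_le_left)
        filter_upwards [self_mem_nhdsWithin] with r hr
        exact W2_time hE hB hα h2H hEH hr hs x
      exact hco.comp_continuous (by fun_prop) (fun s => mem_Ici.2 (le_max_right _ _))
    have h2 := (intervalIntegral.integral_hasDerivAt_right (hc.intervalIntegrable 0 t)
      hc.aestronglyMeasurable.stronglyMeasurableAtFilter hc.continuousAt).hasDerivWithinAt
      (s := Icc 0 δ)
    rw [max_eq_left ht.1] at h2
    refine h2.congr (fun s hs => ?_) ?_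
    · rw [W0_eq' hE hB hα h2H hEH hs.1]
      refine intervalIntegral.integral_congr fun r hr => ?_
      rw [uIcc_of_le hs.1] at hr
      simp only [max_eq_left hr.1]
    · rw [W0_eq' hE hB hα h2H hEH ht.1]
      refine intervalIntegral.integral_congr fun r hr => ?_
      rw [uIcc_of_le ht.1] at hr
      simp only [max_eq_left hr.1]
  have hz : ∀ y, (∀ r z, E r (y + z) = -E r (y - z)) → ∀ t ∈ Icc 0 δ, W2 E t y + E t y = 0 := by
    intro y hy t ht
    refine (uniqueDiffOn_Icc hδ t ht).eq_deriv _ (hd t ht y) ?_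
    refine (hasDerivWithinAt_const t (Icc 0 δ) (0:ℝ)).congr (fun s _ => W0_odd hy s)
      (W0_odd hy t)
  refine ⟨W0 E, fun t x => W2 E t x + E t x, W1 E, W2 E, ?_, ?_, ?_, ?_, ?_⟩
  · intro t ht x hx
    exact ⟨(W0_deriv hE hB hα h2H hEH ht.1 x).hasDerivWithinAt,
      (W1_deriv hE hB hα h2H hEH ht.1 x).hasDerivWithinAt, hd t ht x⟩
  · have hC := CK_nonneg α
    have hb1 : 0 < α / 2 := by linarith [hα.1]
    have hb2 : 0 < 1 / 2 - α / 2 := by linarith [hα.2]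
    have hb3 : 0 < 1 - α / 2 := by linarith [hα.2]
    have n1 : 0 ≤ 4 * CK α * (1 / (α / 2) + 1 / (1 / 2 - α / 2)) * H := by positivity
    have n2 : 0 ≤ 4 * CK α * (2 / (α / 2) + 1 / (1 - α / 2)) * H := by positivity
    refine PH.of_sep (fun t ht x _ x' _ => ?_) (fun t ht t' ht' x _ => ?_)
    · refine (W2_space hE hB hα h2H hEH ht.1 x x').trans ?_
      have : 0 ≤ |x - x'| ^ α := by positivity
      refine mul_le_mul_of_nonneg_right ?_ this
      unfold KW; linarith
    · refine (W2_time hE hB hα h2H hEH ht.1 ht'.1 x).trans ?_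
      have : 0 ≤ |t - t'| ^ (α / 2) := by positivity
      refine mul_le_mul_of_nonneg_right ?_ this
      unfold KW; linarith
  · intro t ht x hx
    simp only [hEF t ht x hx]
  · intro t ht
    exact ⟨hz 0 ho0 t ht, hz L hoL t ht⟩
  · intro x
    rw [W0_eq' hE hB hα h2H hEH le_rfl]; simp

lemma abs_rpow_le_one {δ s β : ℝ} (hδ : δ ≤ 1) (hβ : 0 ≤ β) (hs : |s| ≤ δ) : |s| ^ β ≤ 1 :=
  Real.rpow_le_one (abs_nonneg _) (hs.trans hδ) hβ

/-- Existence with Schauder bound for the heat equation on `[0, δ] × [0, L]` where the time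
derivative is prescribed on the lateral boundary; the constant does not depend on `δ ≤ 1`. -/
lemma heat_exists {α : ℝ} (hα : α ∈ Ioo (0:ℝ) 1) {L : ℝ} (hL : 0 < L) :
    ∃ K, 0 ≤ K ∧ ∀ (δ H : ℝ) (F : ℝ → ℝ → ℝ) (k0 k1 : ℝ → ℝ), 0 < δ → δ ≤ 1 → 0 ≤ H →
      PH α (Icc 0 δ) (Icc 0 L) F H →
      (∀ t ∈ Icc 0 δ, ∀ t' ∈ Icc 0 δ, |k0 t - k0 t'| ≤ H * |t - t'| ^ (α / 2)) →
      (∀ t ∈ Icc 0 δ, ∀ t' ∈ Icc 0 δ, |k1 t - k1 t'| ≤ H * |t - t'| ^ (α / 2)) →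
      k0 0 = F 0 0 → k1 0 = F 0 L →
      ∃ V D P Q : ℝ → ℝ → ℝ, HeatRel (Icc 0 δ) (Icc 0 L) V D P Q ∧
        PH α (Icc 0 δ) (Icc 0 L) D (K * H) ∧ PH α (Icc 0 δ) (Icc 0 L) Q (K * H) ∧
        (∀ t ∈ Icc 0 δ, ∀ x ∈ Icc 0 L, D t x = Q t x + F t x) ∧
        (∀ t ∈ Icc 0 δ, D t 0 = k0 t ∧ D t L = k1 t) ∧ ∀ x ∈ Icc 0 L, V 0 x = 0 := by
  obtain ⟨K, hK, hbl⟩ := boundary_layer hα hL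
  set K1 : ℝ := 2 + (2 + L ^ α) * (L ^ (1 - α) / L) with hK1
  have hK10 : 0 ≤ K1 := by positivity
  set K2 : ℝ := 1 + K1 + 8 * K with hK2
  have hK20 : 0 ≤ K2 := by positivity
  have hKW := KW_nonneg hα
  set K3 : ℝ := 1 + 4 * K + KW α * K2 with hK3
  have hK30 : 0 ≤ K3 := by positivity
  refine ⟨K3, hK30, fun δ H F k0 k1 hδ hδ1 hH hF hk0 hk1 hc0 hc1 => ?_⟩
  have hβ : 0 < α / 2 := by linarith [hα.1]
  have m00 : (0:ℝ) ∈ Icc 0 δ := ⟨le_rfl, hδ.le⟩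
  have x00 : (0:ℝ) ∈ Icc 0 L := ⟨le_rfl, hL.le⟩
  have xLL : L ∈ Icc 0 L := ⟨hL.le, le_rfl⟩
  -- boundary layers
  have hm : ∀ (k : ℝ → ℝ) (x : ℝ), x ∈ Icc 0 L →
      (∀ t ∈ Icc 0 δ, ∀ t' ∈ Icc 0 δ, |k t - k t'| ≤ H * |t - t'| ^ (α / 2)) → k 0 = F 0 x →
      ∃ m : ℝ → ℝ, Continuous m ∧ (∀ t, |m t| ≤ 2 * H) ∧
        (∀ t t', |m t - m t'| ≤ 2 * H * |t - t'| ^ (α / 2)) ∧ (∀ t ≤ 0, m t = 0) ∧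
        ∀ t ∈ Icc 0 δ, m t = k t - F t x := by
    intro k x hx hk hc
    have hh : ∀ t t', |k (clamp 0 δ t) - F (clamp 0 δ t) x - (k (clamp 0 δ t') - F (clamp 0 δ t') x)|
        ≤ 2 * H * |t - t'| ^ (α / 2) := by
      intro t t'
      have q1 := clamp_mem hδ.le t
      have q2 := clamp_mem hδ.le t'
      have e1 := hk _ q1 _ q2
      have e2 := hF _ q1 _ q2 x hx x hx
      rw [rho_time hα] at e2
      have e3 : |clamp 0 δ t - clamp 0 δ t'| ^ (α / 2) ≤ |t - t'| ^ (α / 2) :=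
        Real.rpow_le_rpow (abs_nonneg _) (clamp_sub_le _ _ _ _) hβ.le
      have e4 := mul_le_mul_of_nonneg_left e3 hH
      rw [abs_le] at *
      constructor <;> linarith [e1.1, e1.2, e2.1, e2.2]
    have hz : ∀ t ≤ 0, k (clamp 0 δ t) - F (clamp 0 δ t) x = 0 := by
      intro t ht
      have : clamp 0 δ t = 0 := by
        unfold clamp; rw [max_eq_left]; exact (min_le_right _ _).trans ht
      rw [this, hc, sub_self]
    refine ⟨fun t => k (clamp 0 δ t) - F (clamp 0 δ t) x, ?_, ?_, hh, hz, ?_⟩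
    · rw [continuous_iff_continuousAt]
      intro s
      unfold ContinuousAt
      rw [tendsto_iff_dist_tendsto_zero]
      have hcc : Continuous fun r : ℝ => 2 * H * |r - s| ^ (α / 2) :=
        continuous_const.mul ((by fun_prop : Continuous fun r : ℝ => |r - s|).rpow_const
          fun _ => Or.inr hβ.le)
      have hz := hcc.tendsto s
      simp only [sub_self, abs_zero, Real.zero_rpow hβ.ne', mul_zero] at hz
      exact squeeze_zero (fun _ => dist_nonneg) (fun r => hh r s) hz
    · intro t
      have hq := clamp_mem hδ.le t
      have e := hh (clamp 0 δ t) 0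
      rw [clamp_of_mem hq, hz 0 le_rfl, sub_zero, sub_zero] at e
      refine e.trans ?_
      have : |clamp 0 δ t| ^ (α / 2) ≤ 1 :=
        abs_rpow_le_one hδ1 hβ.le (by rw [abs_of_nonneg hq.1]; exact hq.2)
      nlinarith
    · intro t ht
      simp only [clamp_of_mem ht]
  obtain ⟨m, mc, mb, mh, mz, me⟩ := hm k0 0 x00 hk0 hc0
  obtain ⟨m', mc', mb', mh', mz', me'⟩ := hm k1 L xLL hk1 hc1
  obtain ⟨Z2, D2, P2, Q2, r2, pd2, pq2, bd2, in2⟩ := hbl (2 * H) m (by linarith) mc mb mh mz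
  obtain ⟨Z3', D3', P3', Q3', r3', pd3', pq3', bd3, in3⟩ :=
    hbl (2 * H) m' (by linarith) mc' mb' mh' mz'
  have r3 := r3'.reflect
  have pd3 := pd3'.reflect
  have pq3 := pq3'.reflect
  -- interpolation of the lateral data
  let κ0 : ℝ → ℝ := fun t => k0 (clamp 0 δ t)
  let κ1 : ℝ → ℝ := fun t => k1 (clamp 0 δ t)
  have hκ : ∀ k : ℝ → ℝ, (∀ t ∈ Icc 0 δ, ∀ t' ∈ Icc 0 δ, |k t - k t'| ≤ H * |t - t'| ^ (α / 2)) →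
      Continuous fun t => k (clamp 0 δ t) := by
    intro k hk
    rw [continuous_iff_continuousAt]
    intro s
    unfold ContinuousAt
    rw [tendsto_iff_dist_tendsto_zero]
    have hcc : Continuous fun r : ℝ => H * |r - s| ^ (α / 2) :=
      continuous_const.mul ((by fun_prop : Continuous fun r : ℝ => |r - s|).rpow_const
        fun _ => Or.inr hβ.le)
    have hz := hcc.tendsto s
    simp only [sub_self, abs_zero, Real.zero_rpow hβ.ne', mul_zero] at hz
    refine squeeze_zero (fun _ => dist_nonneg) (fun r => ?_) hz
    refine (hk _ (clamp_mem hδ.le _) _ (clamp_mem hδ.le _)).trans ?_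
    have e3 : |clamp 0 δ r - clamp 0 δ s| ^ (α / 2) ≤ |r - s| ^ (α / 2) :=
      Real.rpow_le_rpow (abs_nonneg _) (clamp_sub_le _ _ _ _) hβ.le
    gcongr
  have cκ0 : Continuous κ0 := hκ k0 hk0
  have cκ1 : Continuous κ1 := hκ k1 hk1
  let A0 : ℝ → ℝ := fun t => ∫ s in (0:ℝ)..t, κ0 s
  let A1 : ℝ → ℝ := fun t => ∫ s in (0:ℝ)..t, κ1 s
  have dA0 : ∀ t, HasDerivAt A0 (κ0 t) t := fun t =>
    intervalIntegral.integral_hasDerivAt_right (cκ0.intervalIntegrable _ _)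
      cκ0.aestronglyMeasurable.stronglyMeasurableAtFilter cκ0.continuousAt
  have dA1 : ∀ t, HasDerivAt A1 (κ1 t) t := fun t =>
    intervalIntegral.integral_hasDerivAt_right (cκ1.intervalIntegrable _ _)
      cκ1.aestronglyMeasurable.stronglyMeasurableAtFilter cκ1.continuousAt
  let Z1 : ℝ → ℝ → ℝ := fun t x => A0 t + (A1 t - A0 t) * (x / L)
  let D1 : ℝ → ℝ → ℝ := fun t x => κ0 t + (κ1 t - κ0 t) * (x / L)
  let P1 : ℝ → ℝ → ℝ := fun t x => (A1 t - A0 t) * (1 / L)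
  have r1 : HeatRel (Icc 0 δ) (Icc 0 L) Z1 D1 P1 (fun _ _ => 0) := by
    intro t ht x hx
    refine ⟨?_, hasDerivWithinAt_const _ _ _, ?_⟩
    · exact ((((hasDerivAt_id x).div_const L).const_mul _).const_add _).hasDerivWithinAt
    · exact ((dA0 t).add (((dA1 t).sub (dA0 t)).mul_const _)).hasDerivWithinAt
  have pd1 : PH α (Icc 0 δ) (Icc 0 L) D1 (K1 * H) := by
    have e0 : ∀ t ∈ Icc 0 δ, ∀ t' ∈ Icc 0 δ, |κ0 t - κ0 t'| ≤ H * |t - t'| ^ (α / 2) := by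
      intro t ht t' ht'
      simp only [κ0, clamp_of_mem ht, clamp_of_mem ht']
      exact hk0 t ht t' ht'
    have e1 : ∀ t ∈ Icc 0 δ, ∀ t' ∈ Icc 0 δ, |κ1 t - κ1 t'| ≤ H * |t - t'| ^ (α / 2) := by
      intro t ht t' ht'
      simp only [κ1, clamp_of_mem ht, clamp_of_mem ht']
      exact hk1 t ht t' ht'
    have e2 : |κ1 0 - κ0 0| ≤ H * L ^ α := by
      simp only [κ1, κ0, clamp_of_mem m00]
      rw [hc0, hc1]
      have := hF 0 m00 0 m00 L xLL 0 x00
      rwa [rho_space hα, sub_zero, abs_of_pos hL] at this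
    have e3 : ∀ t ∈ Icc 0 δ, |κ1 t - κ0 t| ≤ H * (2 + L ^ α) := by
      intro t ht
      have f0 := e0 t ht 0 m00
      have f1 := e1 t ht 0 m00
      have f2 : |t - 0| ^ (α / 2) ≤ 1 :=
        abs_rpow_le_one hδ1 hβ.le (by rw [sub_zero, abs_of_nonneg ht.1]; exact ht.2)
      have f3 := mul_le_mul_of_nonneg_left f2 hH
      rw [abs_le] at *
      constructor <;> linarith [f0.1, f0.2, f1.1, f1.2]
    have hn : 0 ≤ (2 + L ^ α) * (L ^ (1 - α) / L) * H := by positivity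
    refine PH.of_sep (fun t ht x hx x' hx' => ?_) (fun t ht t' ht' x hx => ?_)
    · have : D1 t x - D1 t x' = (κ1 t - κ0 t) * ((x - x') / L) := by simp only [D1]; ring
      rw [this, abs_mul, abs_div, abs_of_pos hL]
      have g1 : |x - x'| ≤ L ^ (1 - α) * |x - x'| ^ α := abs_le_rpow_of_le hα (abs_nonneg _)
        (abs_sub_le_iff.2 ⟨by linarith [hx.2, hx'.1], by linarith [hx.1, hx'.2]⟩)
      calc |κ1 t - κ0 t| * (|x - x'| / L)
          ≤ (H * (2 + L ^ α)) * (L ^ (1 - α) * |x - x'| ^ α / L) := by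
            gcongr
            exact e3 t ht
        _ = (2 + L ^ α) * (L ^ (1 - α) / L) * H * |x - x'| ^ α := by ring
        _ ≤ _ := by
            refine mul_le_mul_of_nonneg_right ?_ (by positivity)
            rw [hK1, add_mul]; linarith
    · have : D1 t x - D1 t' x = (κ0 t - κ0 t') * (1 - x / L) + (κ1 t - κ1 t') * (x / L) := by
        simp only [D1]; ring
      have hx1 : 0 ≤ x / L := div_nonneg hx.1 hL.le
      have hx2 : x / L ≤ 1 := (div_le_one hL).2 hx.2
      rw [this]
      refine (abs_add_le _ _).trans ?_
      rw [abs_mul, abs_mul, abs_of_nonneg hx1, abs_of_nonneg (sub_nonneg.2 hx2)]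
      have g0 := e0 t ht t' ht'
      have g1 := e1 t ht t' ht'
      have : 0 ≤ |t - t'| ^ (α / 2) := by positivity
      calc |κ0 t - κ0 t'| * (1 - x / L) + |κ1 t - κ1 t'| * (x / L)
          ≤ H * |t - t'| ^ (α / 2) * (1 - x / L) + H * |t - t'| ^ (α / 2) * (x / L) := by
            have := sub_nonneg.2 hx2
            gcongr
        _ = H * |t - t'| ^ (α / 2) := by ring
        _ ≤ _ := by
            refine mul_le_mul_of_nonneg_right ?_ this
            rw [hK1, add_mul]; linarith
  -- remaining right-hand side
  let F' : ℝ → ℝ → ℝ := fun t x =>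
    F t x - D1 t x - D2 t x - D3' t (L - x) + Q2 t x + Q3' t (L - x)
  have sub : Icc 0 δ ⊆ univ := subset_univ _
  have pF' : PH α (Icc 0 δ) (Icc 0 L) F' (K2 * H) := by
    refine (((((hF.sub pd1).sub (pd2.subset sub le_rfl)).sub (pd3.subset sub le_rfl)).add
      (pq2.subset sub le_rfl)).add (pq3.subset sub le_rfl)).mono (le_of_eq ?_)
    rw [hK2]; ring
  have z0 : ∀ t ∈ Icc 0 δ, F' t 0 = 0 := by
    intro t ht
    simp only [F', D1, sub_zero, (bd2 t).1, (bd2 t).2.2.1, (bd3 t).2.1, (bd3 t).2.2.2, me t ht,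
      κ0, clamp_of_mem ht]
    ring
  have zL : ∀ t ∈ Icc 0 δ, F' t L = 0 := by
    intro t ht
    simp only [F', D1, sub_self, (bd3 t).1, (bd3 t).2.2.1, (bd2 t).2.1, (bd2 t).2.2.2, me' t ht,
      κ0, κ1, clamp_of_mem ht, div_self hL.ne']
    ring
  obtain ⟨W, DW, PW, QW, rW, pqW, eqW, bdW, inW⟩ :=
    duhamel_strip hα hL hδ (mul_nonneg hK20 hH) pF' z0 zL
  have pQ : PH α (Icc 0 δ) (Icc 0 L) (fun t x => 0 + Q2 t x + Q3' t (L - x) + QW t x)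
      ((4 * K + KW α * K2) * H) := by
    refine (((pq2.subset sub le_rfl).add (pq3.subset sub le_rfl)).add pqW |>.mono
      (le_of_eq (by ring))).congr (fun t _ x _ => ?_)
    simp only [zero_add]
  have eqn : ∀ t ∈ Icc 0 δ, ∀ x ∈ Icc 0 L, D1 t x + D2 t x + D3' t (L - x) + DW t x
      = 0 + Q2 t x + Q3' t (L - x) + QW t x + F t x := by
    intro t ht x hx
    rw [eqW t ht x hx]; simp only [F']; ring
  refine ⟨_, _, _, _, ((r1.add (r2.subset sub le_rfl)).add (r3.subset sub le_rfl)).add rW, ?_, ?_,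
    eqn, ?_, ?_⟩
  · exact ((pQ.add hF).mono (le_of_eq (by rw [hK3]; ring))).congr eqn
  · exact pQ.mono (mul_le_mul_of_nonneg_right (by rw [hK3]; linarith) hH)
  · intro t ht
    constructor
    · simp only [sub_zero, (bd2 t).1, (bd3 t).2.1, (bdW t ht).1, D1, κ0, clamp_of_mem ht]
      ring
    · simp only [sub_self, (bd2 t).2.1, (bd3 t).1, (bdW t ht).2, D1, κ0, κ1, clamp_of_mem ht,
        div_self hL.ne']
      ring
  · intro x hx
    simp only [(in2 x).1, (in3 (L - x)).1, inW x, Z1, A0, A1]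
    simp

/-! ### Lower order estimates -/

/-- Mean value inequality on an interval, one-sided at the endpoints. -/
lemma mvt_le {f f' : ℝ → ℝ} {s : Set ℝ} (hs : Convex ℝ s) {C : ℝ}
    (hf : ∀ x ∈ s, HasDerivWithinAt f (f' x) s x) (hb : ∀ x ∈ s, |f' x| ≤ C) {x y : ℝ} (hx : x ∈ s)
    (hy : y ∈ s) : |f y - f x| ≤ C * |y - x| :=
  hs.norm_image_sub_le_of_norm_hasDerivWithin_le hf hb hx hy

section lo
variable {α l r δ N : ℝ} {v d p q : ℝ → ℝ → ℝ} (hα : α ∈ Ioo (0:ℝ) 1)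
  (hlr : l < r) (hN : 0 ≤ N) (hR : HeatRel (Icc 0 δ) (Icc l r) v d p q)
  (hd : PH α (Icc 0 δ) (Icc l r) d N) (hq : PH α (Icc 0 δ) (Icc l r) q N)
include hα hlr hN hR hd hq

/-- Interpolation: Hölder bounds on `v_t` and `v_xx` give the time regularity of `v_x`. -/
lemma lower_order {t s : ℝ} (ht : t ∈ Icc 0 δ) (hs : s ∈ Icc 0 δ)
    (hts : |t - s| ≤ ((r - l) / 2) ^ 2) {x : ℝ} (hx : x ∈ Icc l r) :
    |p t x - p s x| ≤ 2 * N * |t - s| ^ ((1 + α) / 2) := by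
  rcases eq_or_ne t s with rfl | hne
  · simp only [sub_self, abs_zero]; positivity
  set h := √|t - s| with hh
  have hts0 : 0 < |t - s| := abs_pos.2 (sub_ne_zero.2 hne)
  have hpos : 0 < h := Real.sqrt_pos.2 hts0
  have hsq : h ^ 2 = |t - s| := Real.sq_sqrt (abs_nonneg _)
  have hle : h ≤ (r - l) / 2 := by
    refine Real.sqrt_le_iff.2 ⟨by linarith, hts⟩
  obtain ⟨x', hx', hxx⟩ : ∃ x' ∈ Icc l r, |x' - x| = h := by
    rcases le_total x ((l + r) / 2) with hc | hc
    · exact ⟨x + h, ⟨by linarith [hx.1], by linarith⟩, by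
        rw [add_sub_cancel_left, abs_of_pos hpos]⟩
    · exact ⟨x - h, ⟨by linarith, by linarith [hx.2]⟩, by
        rw [sub_sub_cancel_left, abs_neg, abs_of_pos hpos]⟩
  have hβ : |t - s| ^ (α / 2) = h ^ α := by rw [← hsq, sq_rpow_half hpos.le]
  have e1 : |(v t x' - v t x) - (v s x' - v s x)| ≤ N * h ^ α * |t - s| := by
    refine mvt_le (f := fun τ => v τ x' - v τ x) (f' := fun τ => d τ x' - d τ x) (convex_Icc 0 δ)
      (fun τ hτ => (hR τ hτ x' hx').2.2.sub (hR τ hτ x hx).2.2) (fun τ hτ => ?_) hs ht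
    have := hd τ hτ τ hτ x' hx' x hx
    rwa [rho_space hα, hxx] at this
  have hsub : ∀ z ∈ uIcc x x', z ∈ Icc l r ∧ |z - x| ≤ h := fun z hz =>
    ⟨⟨(le_inf hx.1 hx'.1).trans hz.1, hz.2.trans (sup_le hx.2 hx'.2)⟩, by
      rw [← hxx]; exact abs_sub_left_of_mem_uIcc hz⟩
  have hsub' : uIcc x x' ⊆ Icc l r := fun z hz => (hsub z hz).1
  have e2 : ∀ z ∈ uIcc x x', |(p t z - p s z) - (p t x - p s x)| ≤ N * h ^ α * h := by
    intro z hz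
    have := mvt_le (f := fun z => p t z - p s z) (f' := fun z => q t z - q s z) (C := N * h ^ α)
      (convex_Icc l r) (fun y hy => (hR t ht y hy).2.1.sub (hR s hs y hy).2.1) (fun y hy => ?_)
      hx (hsub z hz).1
    · exact this.trans (mul_le_mul_of_nonneg_left (hsub z hz).2 (by positivity))
    · have := hq t ht s hs y hy y hy
      rwa [rho_time hα, hβ] at this
  have e3 := mvt_le (f := fun z => v t z - v s z - (p t x - p s x) * z)
    (f' := fun z => p t z - p s z - (p t x - p s x)) (C := N * h ^ α * h) (s := uIcc x x')
    (convex_uIcc x x')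
    (fun z hz => (((hR t ht z (hsub' hz)).1.sub (hR s hs z (hsub' hz)).1).sub
      (((hasDerivAt_id z).const_mul _).hasDerivWithinAt)).mono hsub' |>.congr_deriv (by simp))
    e2 left_mem_uIcc right_mem_uIcc
  rw [hxx] at e3
  have e4 : |p t x - p s x| * h ≤ 2 * N * h ^ α * h ^ 2 := by
    rw [← hxx, ← abs_mul, hxx]
    rw [hxx, ← hsq] at *
    have e : (p t x - p s x) * (x' - x) = (v t x' - v t x - (v s x' - v s x))
      - (v t x' - v s x' - (p t x - p s x) * x' - (v t x - v s x - (p t x - p s x) * x)) := by ring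
    rw [e]
    refine (abs_sub _ _).trans ((add_le_add e1 e3).trans (le_of_eq (by ring)))
  have e5 : |t - s| ^ ((1 + α) / 2) = h * h ^ α := by
    rw [add_div, Real.rpow_add hts0, hβ, hh, Real.sqrt_eq_rpow]
  rw [e5]
  have : |p t x - p s x| * h ≤ (2 * N * (h * h ^ α)) * h := e4.trans (le_of_eq (by ring))
  exact le_of_mul_le_mul_right this hpos

lemma lower_order_zero (hv : ∀ x ∈ Icc l r, v 0 x = 0) (hδ : 0 ≤ δ) {x : ℝ} (hx : x ∈ Icc l r) :
    p 0 x = 0 ∧ q 0 x = 0 := by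
  have m0 : (0:ℝ) ∈ Icc 0 δ := ⟨le_rfl, hδ⟩
  have hp : ∀ x ∈ Icc l r, p 0 x = 0 := fun x hx =>
    (uniqueDiffOn_Icc hlr x hx).eq_deriv _ (hR 0 m0 x hx).1
      ((hasDerivWithinAt_const x (Icc l r) (0:ℝ)).congr hv (hv x hx))
  exact ⟨hp x hx, (uniqueDiffOn_Icc hlr x hx).eq_deriv _ (hR 0 m0 x hx).2.1
      ((hasDerivWithinAt_const x (Icc l r) (0:ℝ)).congr hp (hp x hx))⟩

/-- On a short time interval all lower order quantities of a function with zero initial value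
are small compared with the top order Hölder constant. -/
lemma small_time (hv : ∀ x ∈ Icc l r, v 0 x = 0) (hδ : 0 < δ) (hδ1 : δ ≤ 1)
    (hδ2 : δ ≤ ((r - l) / 2) ^ 2) :
    (∀ t ∈ Icc 0 δ, ∀ x ∈ Icc l r, |q t x| ≤ N * δ ^ (α / 2)) ∧
    (∀ t ∈ Icc 0 δ, ∀ x ∈ Icc l r, |p t x| ≤ 2 * N * δ ^ (α / 2)) ∧
    PH α (Icc 0 δ) (Icc l r) p ((2 + (r - l) ^ (1 - α)) * N * δ ^ (α / 2)) ∧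
    ((∀ x ∈ Icc l r, |d 0 x| ≤ N) →
      (∀ t ∈ Icc 0 δ, ∀ x ∈ Icc l r, |v t x| ≤ 2 * N * δ ^ (α / 2)) ∧
      PH α (Icc 0 δ) (Icc l r) v ((2 + 2 * (r - l) ^ (1 - α)) * N * δ ^ (α / 2))) := by
  have m0 : (0:ℝ) ∈ Icc 0 δ := ⟨le_rfl, hδ.le⟩
  have hz := fun x hx => lower_order_zero hα hlr hN hR hd hq hv hδ.le (x := x) hx
  have hβ : 0 < α / 2 := by linarith [hα.1]
  have hβ2 : α / 2 < 1 / 2 := by linarith [hα.2]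
  have hw : 0 ≤ (r - l) ^ (1 - α) := Real.rpow_nonneg (by linarith) _
  set θ := δ ^ (α / 2) with hθ
  have hθ0 : 0 ≤ θ := Real.rpow_nonneg hδ.le _
  have hθ1 : θ ≤ 1 := Real.rpow_le_one hδ.le hδ1 hβ.le
  have habs : ∀ t ∈ Icc 0 δ, ∀ s ∈ Icc 0 δ, |t - s| ≤ δ := fun t ht s hs =>
    abs_sub_le_iff.2 ⟨by linarith [ht.2, hs.1], by linarith [hs.2, ht.1]⟩
  have hx2 : ∀ x ∈ Icc l r, ∀ x' ∈ Icc l r, |x - x'| ≤ (r - l) ^ (1 - α) * |x - x'| ^ α :=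
    fun x hx x' hx' => abs_le_rpow_of_le hα (abs_nonneg _)
      (abs_sub_le_iff.2 ⟨by linarith [hx.2, hx'.1], by linarith [hx.1, hx'.2]⟩)
  -- surplus time regularity becomes smallness
  have hsur : ∀ t ∈ Icc 0 δ, ∀ s ∈ Icc 0 δ, ∀ γ : ℝ, α ≤ γ → |t - s| ^ γ ≤ θ * |t - s| ^ (α / 2) := by
    intro t ht s hs γ hγ
    rcases (abs_nonneg (t - s)).eq_or_lt with h0 | h0
    · rw [← h0, Real.zero_rpow (by linarith [hα.1]), Real.zero_rpow hβ.ne', mul_zero]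
    · have h1 : |t - s| ≤ 1 := (habs t ht s hs).trans hδ1
      calc |t - s| ^ γ ≤ |t - s| ^ (α / 2 + α / 2) :=
            Real.rpow_le_rpow_of_exponent_ge h0 h1 (by linarith)
        _ = |t - s| ^ (α / 2) * |t - s| ^ (α / 2) := Real.rpow_add h0 _ _
        _ ≤ _ := by
            have : |t - s| ^ (α / 2) ≤ θ := Real.rpow_le_rpow (abs_nonneg _) (habs t ht s hs) hβ.le
            gcongr
  have hpw : ∀ t ∈ Icc 0 δ, |t - 0| ^ (α / 2) ≤ θ := fun t ht =>
    Real.rpow_le_rpow (abs_nonneg _) (habs t ht 0 m0) hβ.le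
  have bq : ∀ t ∈ Icc 0 δ, ∀ x ∈ Icc l r, |q t x| ≤ N * θ := by
    intro t ht x hx
    have := hq t ht 0 m0 x hx x hx
    rw [rho_time hα, (hz x hx).2, sub_zero] at this
    exact this.trans (mul_le_mul_of_nonneg_left (hpw t ht) hN)
  have tp : ∀ t ∈ Icc 0 δ, ∀ s ∈ Icc 0 δ, ∀ x ∈ Icc l r,
      |p t x - p s x| ≤ 2 * N * θ * |t - s| ^ (α / 2) := by
    intro t ht s hs x hx
    refine (lower_order hα hlr hN hR hd hq ht hs ((habs t ht s hs).trans hδ2) hx).trans ?_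
    have := hsur t ht s hs ((1 + α) / 2) (by linarith [hα.2])
    calc _ ≤ 2 * N * (θ * |t - s| ^ (α / 2)) := by gcongr
      _ = _ := by ring
  have bp : ∀ t ∈ Icc 0 δ, ∀ x ∈ Icc l r, |p t x| ≤ 2 * N * θ := by
    intro t ht x hx
    have := tp t ht 0 m0 x hx
    rw [(hz x hx).1, sub_zero] at this
    refine this.trans ?_
    have h1 := (hpw t ht).trans hθ1
    exact mul_le_of_le_one_right (by positivity) h1
  refine ⟨bq, bp, PH.of_sep (fun t ht x hx x' hx' => ?_) (fun t ht s hs x hx => ?_),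
    fun hd0 => ?_⟩
  · refine (mvt_le (convex_Icc l r) (fun y hy => (hR t ht y hy).2.1) (bq t ht) hx' hx).trans ?_
    have := hx2 x hx x' hx'
    calc N * θ * |x - x'| ≤ N * θ * ((r - l) ^ (1 - α) * |x - x'| ^ α) := by gcongr
      _ = (r - l) ^ (1 - α) * N * θ * |x - x'| ^ α := by ring
      _ ≤ _ := by gcongr; linarith
  · refine (tp t ht s hs x hx).trans ?_
    gcongr; linarith
  · have bd : ∀ t ∈ Icc 0 δ, ∀ x ∈ Icc l r, |d t x| ≤ 2 * N := by
      intro t ht x hx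
      have h1 := hd t ht 0 m0 x hx x hx
      rw [rho_time hα] at h1
      have h2 := hd0 x hx
      have h3 := mul_le_mul_of_nonneg_left ((hpw t ht).trans hθ1) hN
      rw [abs_le] at *
      constructor <;> linarith [h1.1, h1.2, h2.1, h2.2]
    have tv : ∀ t ∈ Icc 0 δ, ∀ s ∈ Icc 0 δ, ∀ x ∈ Icc l r,
        |v t x - v s x| ≤ 2 * N * θ * |t - s| ^ (α / 2) := by
      intro t ht s hs x hx
      refine (mvt_le (f := fun t => v t x) (convex_Icc 0 δ) (fun y hy => (hR y hy x hx).2.2)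
        (fun t ht => bd t ht x hx) hs ht).trans ?_
      have := hsur t ht s hs 1 hα.2.le
      rw [Real.rpow_one] at this
      calc _ ≤ 2 * N * (θ * |t - s| ^ (α / 2)) := by gcongr
        _ = _ := by ring
    refine ⟨fun t ht x hx => ?_, PH.of_sep (fun t ht x hx x' hx' => ?_)
      (fun t ht s hs x hx => ?_)⟩
    · have := tv t ht 0 m0 x hx
      rw [hv x hx, sub_zero] at this
      refine this.trans ?_
      exact mul_le_of_le_one_right (by positivity) ((hpw t ht).trans hθ1)
    · refine (mvt_le (convex_Icc l r) (fun y hy => (hR t ht y hy).1) (bp t ht) hx' hx).trans ?_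
      have := hx2 x hx x' hx'
      calc 2 * N * θ * |x - x'| ≤ 2 * N * θ * ((r - l) ^ (1 - α) * |x - x'| ^ α) := by gcongr
        _ = (2 * (r - l) ^ (1 - α)) * N * θ * |x - x'| ^ α := by ring
        _ ≤ _ := by gcongr; linarith
    · refine (tv t ht s hs x hx).trans ?_
      gcongr; linarith

end lo

/-! ### Maximum principle and uniqueness -/

lemma HeatRel.sub {J I : Set ℝ} {V D P Q V' D' P' Q' : ℝ → ℝ → ℝ} (h : HeatRel J I V D P Q)
    (h' : HeatRel J I V' D' P' Q') :
    HeatRel J I (fun t x => V t x - V' t x) (fun t x => D t x - D' t x)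
      (fun t x => P t x - P' t x) (fun t x => Q t x - Q' t x) := fun t ht x hx =>
  have a := h t ht x hx
  have b := h' t ht x hx
  ⟨a.1.sub b.1, a.2.1.sub b.2.1, a.2.2.sub b.2.2⟩

lemma HeatRel.continuousOn {J I : Set ℝ} {v d p q : ℝ → ℝ → ℝ} (h : HeatRel J I v d p q)
    (hJ : Convex ℝ J) {C : ℝ} (hd : ∀ t ∈ J, ∀ x ∈ I, |d t x| ≤ C) :
    ContinuousOn (fun z : ℝ × ℝ => v z.1 z.2) (J ×ˢ I) := by
  rintro ⟨s, y⟩ ⟨hs, hy⟩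
  have h1 : ContinuousWithinAt (fun z : ℝ × ℝ => v s z.2) (J ×ˢ I) (s, y) :=
    ContinuousWithinAt.comp (g := v s) (f := fun z : ℝ × ℝ => z.2) (t := I)
      ((h s hs y hy).1.continuousWithinAt) continuous_snd.continuousWithinAt (fun z hz => hz.2)
  have h2 : Tendsto (fun z : ℝ × ℝ => v z.1 z.2 - v s z.2) (𝓝[J ×ˢ I] (s, y)) (𝓝 0) := by
    have hc : Continuous fun z : ℝ × ℝ => C * |z.1 - s| := by fun_prop
    have h0 := hc.tendsto (s, y)
    simp only [sub_self, abs_zero, mul_zero] at h0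
    refine squeeze_zero_norm' ?_ (h0.mono_left inf_le_left)
    filter_upwards [self_mem_nhdsWithin] with z hz
    exact mvt_le (f := fun t => v t z.2) hJ (fun t ht => (h t ht z.2 hz.2).2.2)
      (fun t ht => hd t ht z.2 hz.2) hs hz.1
  have h3 := h2.add h1.tendsto
  simp only [sub_add_cancel, zero_add] at h3
  exact h3

/-- Second derivative test at an interior maximum. -/
lemma second_deriv_nonpos {w p : ℝ → ℝ} {l r x q : ℝ} (hx : x ∈ Ioo l r)
    (hw : ∀ y ∈ Icc l r, HasDerivWithinAt w (p y) (Icc l r) y)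
    (hp : HasDerivWithinAt p q (Icc l r) x) (hmax : ∀ y ∈ Icc l r, w y ≤ w x) :
    p x = 0 ∧ q ≤ 0 := by
  have hnh : Icc l r ∈ 𝓝 x := Icc_mem_nhds hx.1 hx.2
  have hp0 : p x = 0 := by
    have hm : IsLocalMax w x := by filter_upwards [hnh] with y hy using hmax y hy
    exact hm.hasDerivAt_eq_zero ((hw x ⟨hx.1.le, hx.2.le⟩).hasDerivAt hnh)
  refine ⟨hp0, ?_⟩
  by_contra! hq
  have h1 := (hasDerivAt_iff_tendsto_slope.1 (hp.hasDerivAt hnh)).eventually (lt_mem_nhds hq)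
  have h2 : ∀ᶠ y in 𝓝[>] x, 0 < slope p x y :=
    h1.filter_mono (nhdsWithin_mono _ fun y (hy : x < y) => hy.ne')
  obtain ⟨z, hz, hz2⟩ := (mem_nhdsGT_iff_exists_Ioo_subset).1 h2
  set e := min ((x + z) / 2) r with he
  have hxe : x < e := lt_min (by linarith [mem_Ioi.1 hz]) hx.2
  have hez : e < z := (min_le_left _ _).trans_lt (by linarith [mem_Ioi.1 hz])
  have her : e ≤ r := min_le_right _ _
  obtain ⟨c, hc, hce⟩ := exists_hasDerivAt_eq_slope w p hxe
    (fun y hy => ((hw y ⟨hx.1.le.trans hy.1, hy.2.trans her⟩).continuousWithinAt).mono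
      (Icc_subset_Icc hx.1.le her))
    (fun y hy => (hw y ⟨by linarith [hx.1, hy.1], by linarith [hy.2]⟩).hasDerivAt
      (Icc_mem_nhds (by linarith [hx.1, hy.1]) (by linarith [hy.2])))
  have h3 : 0 < slope p x c := hz2 ⟨hc.1, hc.2.trans hez⟩
  rw [slope_def_field, hp0, sub_zero] at h3
  have h4 : 0 < p c := by
    have : 0 < c - x := by linarith [hc.1]
    have := mul_pos h3 this
    rwa [div_mul_cancel₀ _ (by linarith [hc.1])] at this
  have h5 : p c ≤ 0 := by
    rw [hce]
    exact div_nonpos_of_nonpos_of_nonneg (by linarith [hmax e ⟨by linarith [hx.1], her⟩])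
      (by linarith)
  linarith

/-- Weak maximum principle with zero initial and lateral data. -/
lemma max_principle {δ l r : ℝ} {w d p q : ℝ → ℝ → ℝ} {A B : ℝ → ℝ} (hδ : 0 < δ)
    (hR : HeatRel (Icc 0 δ) (Icc l r) w d p q)
    (hc : ContinuousOn (fun z : ℝ × ℝ => w z.1 z.2) (Icc 0 δ ×ˢ Icc l r))
    (hA : ∀ x ∈ Icc l r, 0 ≤ A x)
    (heq : ∀ t ∈ Icc 0 δ, ∀ x ∈ Icc l r, d t x = A x * q t x + B x * p t x)
    (h0 : ∀ x ∈ Icc l r, w 0 x = 0) (hl : ∀ t ∈ Icc 0 δ, w t l = 0)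
    (hr : ∀ t ∈ Icc 0 δ, w t r = 0) : ∀ t ∈ Icc 0 δ, ∀ x ∈ Icc l r, w t x ≤ 0 := by
  by_contra! hcon
  obtain ⟨t1, ht1, x1, hx1, hpos⟩ := hcon
  set ε := w t1 x1 / (2 * δ) with hε
  have hε0 : 0 < ε := by positivity
  obtain ⟨⟨t, x⟩, ⟨ht, hx⟩, hmax⟩ := (isCompact_Icc.prod isCompact_Icc).exists_isMaxOn
    ⟨(t1, x1), ht1, hx1⟩ (f := fun z : ℝ × ℝ => w z.1 z.2 - ε * z.1)
    (hc.sub (by fun_prop))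
  have hm : ∀ s ∈ Icc 0 δ, ∀ y ∈ Icc l r, w s y - ε * s ≤ w t x - ε * t :=
    fun s hs y hy => hmax (show (s, y) ∈ _ from ⟨hs, hy⟩)
  have hp : 0 < w t x - ε * t := by
    have h1 := hm t1 ht1 x1 hx1
    have h2 : ε * t1 ≤ w t1 x1 / 2 := by
      calc ε * t1 ≤ ε * δ := mul_le_mul_of_nonneg_left ht1.2 hε0.le
        _ = _ := by rw [hε]; field_simp
    linarith
  simp only at ht hx
  have ht0 : 0 < t := by
    rcases ht.1.eq_or_lt with h | h
    · rw [← h, h0 x hx] at hp; simp at hp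
    · exact h
  have hεt : 0 < ε * t := mul_pos hε0 ht0
  have hxl : l < x := by
    rcases hx.1.eq_or_lt with h | h
    · rw [← h, hl t ht] at hp; linarith
    · exact h
  have hxr : x < r := by
    rcases hx.2.eq_or_lt with h | h
    · rw [h, hr t ht] at hp; linarith
    · exact h
  obtain ⟨e1, e2⟩ := second_deriv_nonpos (w := w t) (p := p t) ⟨hxl, hxr⟩
    (fun y hy => (hR t ht y hy).1) (hR t ht x hx).2.1 (fun y hy => by linarith [hm t ht y hy])
  have e3 : d t x ≤ 0 := by
    rw [heq t ht x hx, e1, mul_zero, add_zero]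
    exact mul_nonpos_of_nonneg_of_nonpos (hA x hx) e2
  have e4 : ε ≤ d t x := by
    have h1 : HasDerivWithinAt (fun s => w s x) (d t x) (Iio t) t :=
      ((hR t ht x hx).2.2.mono_of_mem_nhdsWithin (by
        filter_upwards [Ioo_mem_nhdsLT ht0] with s hs
        exact ⟨hs.1.le, hs.2.le.trans ht.2⟩))
    have h2 := (hasDerivWithinAt_iff_tendsto_slope' (by simp)).1 h1
    refine ge_of_tendsto h2 ?_
    filter_upwards [Ioo_mem_nhdsLT ht0] with s hs
    rw [slope_def_field, le_div_iff_of_neg (by linarith [hs.2])]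
    have := hm s ⟨hs.1.le, hs.2.le.trans ht.2⟩ x hx
    linarith
  linarith

/-- Two functions with the same initial values, the same lateral time derivatives and solving the
same linear equation coincide together with their derivatives. -/
lemma HeatRel.unique {δ l r C : ℝ} {v d p q v' d' p' q' : ℝ → ℝ → ℝ} {A B : ℝ → ℝ} (hδ : 0 < δ)
    (hlr : l < r) (hR : HeatRel (Icc 0 δ) (Icc l r) v d p q)
    (hR' : HeatRel (Icc 0 δ) (Icc l r) v' d' p' q')
    (hC : ∀ t ∈ Icc 0 δ, ∀ x ∈ Icc l r, |d t x - d' t x| ≤ C)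
    (hA : ∀ x ∈ Icc l r, 0 ≤ A x)
    (heq : ∀ t ∈ Icc 0 δ, ∀ x ∈ Icc l r,
      d t x - A x * q t x - B x * p t x = d' t x - A x * q' t x - B x * p' t x)
    (h0 : ∀ x ∈ Icc l r, v 0 x = v' 0 x) (hl : ∀ t ∈ Icc 0 δ, d t l = d' t l)
    (hr : ∀ t ∈ Icc 0 δ, d t r = d' t r) :
    ∀ t ∈ Icc 0 δ, ∀ x ∈ Icc l r, v t x = v' t x ∧ d t x = d' t x ∧ p t x = p' t x ∧
      q t x = q' t x := by
  have m0 : (0:ℝ) ∈ Icc 0 δ := ⟨le_rfl, hδ.le⟩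
  have hS := hR.sub hR'
  have hz : ∀ x ∈ Icc l r, (∀ t ∈ Icc 0 δ, d t x = d' t x) → ∀ t ∈ Icc 0 δ, v t x = v' t x := by
    intro x hx hd t ht
    have := mvt_le (f := fun t => v t x - v' t x) (C := 0) (convex_Icc 0 δ)
      (fun y hy => (hS y hy x hx).2.2) (fun t ht => by
        show |d t x - d' t x| ≤ 0
        rw [hd t ht, sub_self, abs_zero]) m0 ht
    rw [zero_mul, h0 x hx, sub_self, sub_zero] at this
    exact sub_eq_zero.1 (abs_nonpos_iff.1 this)
  have hll : l ∈ Icc l r := ⟨le_rfl, hlr.le⟩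
  have hrr : r ∈ Icc l r := ⟨hlr.le, le_rfl⟩
  have u1 := max_principle hδ hS (hS.continuousOn (convex_Icc _ _) hC) hA (B := B)
    (fun t ht x hx => by linarith [heq t ht x hx]) (fun x hx => by rw [h0 x hx, sub_self])
    (fun t ht => by rw [hz l hll hl t ht, sub_self])
    (fun t ht => by rw [hz r hrr hr t ht, sub_self])
  have hS' := hR'.sub hR
  have u2 := max_principle hδ hS' (hS'.continuousOn (convex_Icc _ _) (C := C)
    (fun t ht x hx => by rw [abs_sub_comm]; exact hC t ht x hx)) hA (B := B)
    (fun t ht x hx => by linarith [heq t ht x hx]) (fun x hx => by rw [h0 x hx, sub_self])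
    (fun t ht => by rw [hz l hll hl t ht, sub_self])
    (fun t ht => by rw [hz r hrr hr t ht, sub_self])
  have ev : ∀ t ∈ Icc 0 δ, ∀ x ∈ Icc l r, v t x = v' t x := fun t ht x hx =>
    le_antisymm (by linarith [u1 t ht x hx]) (by linarith [u2 t ht x hx])
  have ep : ∀ t ∈ Icc 0 δ, ∀ x ∈ Icc l r, p t x = p' t x := fun t ht x hx =>
    (uniqueDiffOn_Icc hlr x hx).eq_deriv _ (hR t ht x hx).1
      ((hR' t ht x hx).1.congr (ev t ht) (ev t ht x hx))
  refine fun t ht x hx => ⟨ev t ht x hx, ?_, ep t ht x hx, ?_⟩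
  · exact (uniqueDiffOn_Icc hδ t ht).eq_deriv _ (hR t ht x hx).2.2
      ((hR' t ht x hx).2.2.congr (fun s hs => ev s hs x hx) (ev t ht x hx))
  · exact (uniqueDiffOn_Icc hlr x hx).eq_deriv _ (hR t ht x hx).2.1
      ((hR' t ht x hx).2.1.congr (ep t ht) (ep t ht x hx))

/-! ### Linear equations with smooth coefficient -/

lemma PH.coef_mul' {α H B A K : ℝ} {J I : Set ℝ} {w : ℝ → ℝ → ℝ} {c : ℝ → ℝ} (h : PH α J I w H)
    (hw : ∀ t ∈ J, ∀ x ∈ I, |w t x| ≤ B) (hA : 0 ≤ A) (hK : 0 ≤ K)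
    (hc : ∀ x ∈ I, |c x| ≤ A) (hc' : ∀ x ∈ I, ∀ x' ∈ I, |c x - c x'| ≤ K * |x - x'| ^ α) :
    PH α J I (fun t x => c x * w t x) (A * H + K * B) := by
  intro t ht t' ht' x hx x' hx'
  have h1 := h t ht t' ht' x hx x' hx'
  have h2 := hc' x hx x' hx'
  have h3 : |x - x'| ^ α ≤ rho α t x t' x' := by
    unfold rho; linarith [(by positivity : 0 ≤ |t - t'| ^ (α / 2))]
  have e : c x * w t x - c x' * w t' x' = c x * (w t x - w t' x') + (c x - c x') * w t' x' := by ring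
  rw [e]
  refine (abs_add_le _ _).trans ?_
  rw [abs_mul, abs_mul]
  have := rho_nonneg α t x t' x'
  calc |c x| * |w t x - w t' x'| + |c x - c x'| * |w t' x'|
      ≤ A * (H * rho α t x t' x') + K * rho α t x t' x' * B := by
        gcongr
        · exact hc x hx
        · exact h2.trans (by gcongr)
        · exact hw t' ht' x' hx'
    _ = _ := by ring

/-- Composition with a Lipschitz change of the space variable. -/
lemma PH.comp_lip {α H Λ : ℝ} {J I I' : Set ℝ} {w : ℝ → ℝ → ℝ} {y : ℝ → ℝ}
    (hα : α ∈ Ioo (0:ℝ) 1) (hΛ : 0 ≤ Λ) (hH : 0 ≤ H) (h : PH α J I w H) (hy : ∀ x ∈ I', y x ∈ I)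
    (hl : ∀ x ∈ I', ∀ x' ∈ I', |y x - y x'| ≤ Λ * |x - x'|) :
    PH α J I' (fun t x => w t (y x)) ((1 + Λ ^ α) * H) := by
  intro t ht t' ht' x hx x' hx'
  have h1 := h t ht t' ht' (y x) (hy x hx) (y x') (hy x' hx')
  refine h1.trans ?_
  have h2 : |y x - y x'| ^ α ≤ Λ ^ α * |x - x'| ^ α := by
    rw [← Real.mul_rpow hΛ (abs_nonneg _)]
    exact Real.rpow_le_rpow (abs_nonneg _) (hl x hx x' hx') hα.1.le
  unfold rho
  have h3 : 0 ≤ Λ ^ α := by positivity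
  have h4 : 0 ≤ |x - x'| ^ α := by positivity
  have h5 : 0 ≤ |t - t'| ^ (α / 2) := by positivity
  have h6 : |y x - y x'| ^ α + |t - t'| ^ (α / 2)
      ≤ (1 + Λ ^ α) * (|x - x'| ^ α + |t - t'| ^ (α / 2)) := by
    nlinarith [mul_nonneg h3 h5]
  calc _ ≤ H * ((1 + Λ ^ α) * (|x - x'| ^ α + |t - t'| ^ (α / 2))) := by gcongr
    _ = _ := by ring

/-- A function of the form `C δ^β` is small for small `δ`. -/
lemma exists_small {β : ℝ} (hβ : 0 < β) {C ε : ℝ} (hε : 0 < ε) :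
    ∃ δ1, 0 < δ1 ∧ ∀ δ, 0 ≤ δ → δ ≤ δ1 → C * δ ^ β ≤ ε := by
  refine ⟨(ε / (|C| + 1)) ^ (1 / β), by positivity, fun δ h0 h1 => ?_⟩
  have h2 : δ ^ β ≤ ε / (|C| + 1) := by
    calc δ ^ β ≤ ((ε / (|C| + 1)) ^ (1 / β)) ^ β := Real.rpow_le_rpow h0 h1 hβ.le
      _ = ε / (|C| + 1) := by
        rw [← Real.rpow_mul (by positivity), one_div_mul_cancel hβ.ne', Real.rpow_one]
  have h3 : 0 ≤ δ ^ β := Real.rpow_nonneg h0 _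
  calc C * δ ^ β ≤ (|C| + 1) * δ ^ β := by gcongr; linarith [le_abs_self C]
    _ ≤ (|C| + 1) * (ε / (|C| + 1)) := by gcongr
    _ = ε := by field_simp

/-- Existence with Schauder bound for `v_t = c⁻² v_xx - c' c⁻³ v_x + F` on `[0, δ] × [l, r]`, the
time derivative being prescribed on the lateral boundary. The constant depends on `c` only through
`lam ≤ c ≤ Lam` and `∫ c = L`; the admissible length `δ` may depend on `c`. -/
lemma linear_exists {α l r L lam Lam : ℝ} (hα : α ∈ Ioo (0:ℝ) 1) (hlr : l < r) (hL : 0 < L)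
    (hlam : 0 < lam) (hLam : lam ≤ Lam) :
    ∃ K, 0 ≤ K ∧ ∀ c : ℝ → ℝ, ContDiff ℝ 2 c → (∀ x ∈ Icc l r, lam ≤ c x ∧ c x ≤ Lam) →
      ∫ x in l..r, c x = L → ∃ δ1, 0 < δ1 ∧ ∀ δ, 0 < δ → δ ≤ δ1 →
      ∀ (H : ℝ) (F : ℝ → ℝ → ℝ) (k0 k1 : ℝ → ℝ), 0 ≤ H →
      PH α (Icc 0 δ) (Icc l r) F H →
      (∀ t ∈ Icc 0 δ, ∀ t' ∈ Icc 0 δ, |k0 t - k0 t'| ≤ H * |t - t'| ^ (α / 2)) →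
      (∀ t ∈ Icc 0 δ, ∀ t' ∈ Icc 0 δ, |k1 t - k1 t'| ≤ H * |t - t'| ^ (α / 2)) →
      k0 0 = F 0 l → k1 0 = F 0 r →
      ∃ v d p q : ℝ → ℝ → ℝ, HeatRel (Icc 0 δ) (Icc l r) v d p q ∧
        PH α (Icc 0 δ) (Icc l r) d (K * H) ∧ PH α (Icc 0 δ) (Icc l r) q (K * H) ∧
        (∀ t ∈ Icc 0 δ, ∀ x ∈ Icc l r,
          d t x = (c x)⁻¹ ^ 2 * q t x - deriv c x * (c x)⁻¹ ^ 3 * p t x + F t x) ∧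
        (∀ t ∈ Icc 0 δ, d t l = k0 t ∧ d t r = k1 t) ∧ ∀ x ∈ Icc l r, v 0 x = 0 := by
  obtain ⟨K0, hK0, hex⟩ := heat_exists hα hL
  have hLam0 : 0 < Lam := hlam.trans_le hLam
  set M : ℝ := 1 + (1 / lam) ^ α with hM
  have hM0 : 0 ≤ M := by positivity
  set S : ℝ := 1 + Lam ^ α with hS
  have hS0 : 0 ≤ S := by positivity
  have hKK : 0 ≤ K0 * M * (Lam ^ 2 * S + 1 + S) := by positivity
  refine ⟨_, hKK, fun c hc hcb hintg => ?_⟩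
  have hcc : Continuous c := hc.continuous
  have hc1 : ContDiff ℝ 1 (deriv c) :=
    (contDiff_succ_iff_deriv.1 (one_add_one_eq_two (R := WithTop ℕ∞) ▸ hc : ContDiff ℝ (1 + 1) c)).2.2
  obtain ⟨A1, hA1, a1, b1⟩ := holder_of_contDiff (α := α) hα hlr.le (c := fun x => c x ^ 2)
    ((hc.of_le (by norm_num)).pow 2)
  obtain ⟨A2, hA2, a2, b2⟩ := holder_of_contDiff (α := α) hα hlr.le hc1
  obtain ⟨δ0, hδ0, hsm⟩ := exists_small (β := α / 2) (by linarith [hα.1])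
    (C := A1 + A2 * (S * (2 + L ^ (1 - α))) + A2 * 2) one_pos
  set y : ℝ → ℝ := fun x => ∫ z in l..x, c z with hy
  have dy : ∀ x, HasDerivAt y (c x) x := fun x =>
    intervalIntegral.integral_hasDerivAt_right (hcc.intervalIntegrable _ _)
      hcc.aestronglyMeasurable.stronglyMeasurableAtFilter hcc.continuousAt
  have cy : Continuous y := continuous_iff_continuousAt.2 fun x => (dy x).continuousAt
  have yl : y l = 0 := by simp [hy]
  have yr : y r = L := hintg
  have hmvt : ∀ x ∈ Icc l r, ∀ x' ∈ Icc l r, x ≤ x' →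
      lam * (x' - x) ≤ y x' - y x ∧ y x' - y x ≤ Lam * (x' - x) := by
    intro x hx x' hx' hle
    have hi : y x' - y x = ∫ z in x..x', c z := by
      simp only [hy]
      rw [intervalIntegral.integral_interval_sub_left (hcc.intervalIntegrable _ _)
        (hcc.intervalIntegrable _ _)]
    rw [hi]
    constructor
    · have := intervalIntegral.integral_mono_on (μ := volume) hle (f := fun _ => lam) (g := c)
        (continuous_const.intervalIntegrable _ _) (hcc.intervalIntegrable _ _)
        (fun z hz => (hcb z ⟨hx.1.trans hz.1, hz.2.trans hx'.2⟩).1)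
      rw [intervalIntegral.integral_const, smul_eq_mul] at this
      linarith
    · have := intervalIntegral.integral_mono_on (μ := volume) hle (f := c) (g := fun _ => Lam)
        (hcc.intervalIntegrable _ _) (continuous_const.intervalIntegrable _ _)
        (fun z hz => (hcb z ⟨hx.1.trans hz.1, hz.2.trans hx'.2⟩).2)
      rw [intervalIntegral.integral_const, smul_eq_mul] at this
      linarith
  have ylip : ∀ x ∈ Icc l r, ∀ x' ∈ Icc l r, |y x - y x'| ≤ Lam * |x - x'| := by
    intro x hx x' hx'
    rcases le_total x' x with h | h
    · have := hmvt x' hx' x hx h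
      rw [abs_of_nonneg (by nlinarith), abs_of_nonneg (by linarith)]; linarith
    · have := hmvt x hx x' hx' h
      rw [abs_sub_comm, abs_sub_comm x, abs_of_nonneg (by nlinarith), abs_of_nonneg (by linarith)]
      linarith
  have ylip' : ∀ x ∈ Icc l r, ∀ x' ∈ Icc l r, |x - x'| ≤ 1 / lam * |y x - y x'| := by
    intro x hx x' hx'
    rw [one_div, inv_mul_eq_div, le_div_iff₀ hlam]
    rcases le_total x' x with h | h
    · have := hmvt x' hx' x hx h
      rw [abs_of_nonneg (a := y x - y x') (by nlinarith), abs_of_nonneg (by linarith)]; linarith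
    · have := hmvt x hx x' hx' h
      rw [abs_sub_comm, abs_sub_comm (y x), abs_of_nonneg (a := y x' - y x) (by nlinarith),
        abs_of_nonneg (by linarith)]
      linarith
  have ll : l ∈ Icc l r := ⟨le_rfl, hlr.le⟩
  have rr : r ∈ Icc l r := ⟨hlr.le, le_rfl⟩
  have ymem : ∀ x ∈ Icc l r, y x ∈ Icc 0 L := by
    intro x hx
    have h1 := (hmvt l ll x hx hx.1).1
    have h2 := (hmvt x hx r rr hx.2).1
    rw [yl] at h1; rw [yr] at h2
    have h3 := mul_nonneg hlam.le (sub_nonneg.2 hx.1)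
    have h4 := mul_nonneg hlam.le (sub_nonneg.2 hx.2)
    exact ⟨by linarith, by linarith⟩
  have ysurj : ∀ η, ∃ x, η ∈ Icc 0 L → x ∈ Icc l r ∧ y x = η := by
    intro η
    by_cases hη : η ∈ Icc 0 L
    · have := intermediate_value_Icc hlr.le cy.continuousOn
      rw [yl, yr] at this
      obtain ⟨x, hx, he⟩ := this hη
      exact ⟨x, fun _ => ⟨hx, he⟩⟩
    · exact ⟨0, fun h => absurd h hη⟩
  choose X hX using ysurj
  have hXy : ∀ x ∈ Icc l r, X (y x) = x := by
    intro x hx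
    obtain ⟨h1, h2⟩ := hX (y x) (ymem x hx)
    have := ylip' _ h1 x hx
    rw [h2, sub_self, abs_zero, mul_zero] at this
    exact sub_eq_zero.1 (abs_nonpos_iff.1 this)
  refine ⟨min δ0 (min 1 ((L / 2) ^ 2)), by positivity, fun δ hδ hδ1 H F k0 k1 hH hF hk0 hk1 hc0 hc1' => ?_⟩
  have d1 : δ ≤ δ0 := hδ1.trans (min_le_left _ _)
  have d2 : δ ≤ 1 := hδ1.trans ((min_le_right _ _).trans (min_le_left _ _))
  have d3 : δ ≤ ((L - 0) / 2) ^ 2 := by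
    rw [sub_zero]; exact hδ1.trans ((min_le_right _ _).trans (min_le_right _ _))
  have hF' : PH α (Icc 0 δ) (Icc 0 L) (fun t η => F t (X η)) (M * H) := by
    refine PH.comp_lip hα (by positivity) hH hF (fun η hη => (hX η hη).1) (fun η hη η' hη' => ?_)
    have := ylip' _ (hX η hη).1 _ (hX η' hη').1
    rwa [(hX η hη).2, (hX η' hη').2] at this
  have hHM : H ≤ M * H := by
    rw [hM]; nlinarith [(by positivity : 0 ≤ (1 / lam) ^ α)]
  have X0 : X 0 = l := by rw [← yl]; exact hXy l ll
  have XL : X L = r := by rw [← yr]; exact hXy r rr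
  obtain ⟨V, D, P, Q, hR, pD, pQ, heq, hbd, hin⟩ := hex δ (M * H) (fun t η => F t (X η)) k0 k1 hδ d2
    (by positivity) hF'
    (fun t ht t' ht' => (hk0 t ht t' ht').trans (by gcongr))
    (fun t ht t' ht' => (hk1 t ht t' ht').trans (by gcongr))
    (by simp only [X0]; exact hc0) (by simp only [XL]; exact hc1')
  set N : ℝ := K0 * (M * H) with hN
  have hN0 : 0 ≤ N := by positivity
  obtain ⟨bQ, bP, pP, -⟩ := small_time hα hL hN0 hR pD pQ hin hδ d2 d3
  rw [sub_zero] at pP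
  have hθ0 : 0 ≤ δ ^ (α / 2) := Real.rpow_nonneg hδ.le _
  have hsm' := hsm δ hδ.le d1
  set θ := δ ^ (α / 2) with hθ
  have qD := pD.comp_lip hα hLam0.le hN0 ymem ylip
  have qQ := pQ.comp_lip hα hLam0.le hN0 ymem ylip
  have qP := pP.comp_lip hα hLam0.le (by positivity) ymem ylip
  have dcomp : ∀ x, HasDerivWithinAt y (c x) (Icc l r) x := fun x => (dy x).hasDerivWithinAt
  have dc : ∀ x, HasDerivAt c (deriv c x) x := fun x =>
    ((hc.differentiable (by norm_num)).differentiableAt).hasDerivAt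
  have hcA : ∀ x ∈ Icc l r, |c x ^ 2| ≤ Lam ^ 2 := by
    intro x hx
    rw [abs_of_nonneg (sq_nonneg _)]
    have := hcb x hx
    exact pow_le_pow_left₀ (by linarith) this.2 2
  refine ⟨fun t x => V t (y x), fun t x => D t (y x), fun t x => P t (y x) * c x,
    fun t x => c x ^ 2 * Q t (y x) + deriv c x * P t (y x), ?_, ?_, ?_, ?_, ?_, ?_⟩
  · intro t ht x hx
    have h := hR t ht (y x) (ymem x hx)
    refine ⟨?_, ?_, h.2.2⟩
    · exact HasDerivWithinAt.comp (h₂ := V t) x h.1 (dcomp x) ymem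
    · refine ((HasDerivWithinAt.comp (h₂ := P t) x h.2.1 (dcomp x) ymem).mul
        (dc x).hasDerivWithinAt).congr_deriv ?_
      simp only [Function.comp]; ring
  · refine qD.mono ?_
    rw [hN, ← hS]
    have e1 : 0 ≤ K0 * M * H := by positivity
    have e2 : 0 ≤ Lam ^ 2 * S := by positivity
    nlinarith [mul_nonneg e1 e2]
  · have g1 := PH.coef_mul' qQ (fun t ht x hx => bQ t ht _ (ymem x hx)) (sq_nonneg Lam) hA1 hcA b1
    have g2 := PH.coef_mul' qP (fun t ht x hx => bP t ht _ (ymem x hx)) hA2 hA2 a2 b2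
    refine (g1.add g2).mono ?_
    rw [← hS]
    have e3 := mul_le_mul_of_nonneg_left hsm' hN0
    have e4 : 0 ≤ N * S := by positivity
    calc _ = N * (Lam ^ 2 * S)
          + N * ((A1 + A2 * (S * (2 + L ^ (1 - α))) + A2 * 2) * θ) := by ring
      _ ≤ N * (Lam ^ 2 * S) + N * 1 + N * S := by linarith
      _ = _ := by rw [hN]; ring
  · intro t ht x hx
    have h1 := heq t ht (y x) (ymem x hx)
    rw [hXy x hx] at h1
    have hcx : c x ≠ 0 := (hlam.trans_le (hcb x hx).1).ne'
    simp only [h1]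
    field_simp
    ring
  · intro t ht
    simp only [yl, yr]
    exact hbd t ht
  · intro x hx
    exact hin _ (ymem x hx)

/-! ### Fixed points and approximation of coefficients -/

/-- The bounded, closed set of Hölder data with prescribed initial trace `z` on which the fixed
point iteration acts. -/
def Good {ι : Type} (α δ : ℝ) (I : Set ℝ) (R : ℝ) (z : ι → ℝ → ℝ) (ω : ι → ℝ → ℝ → ℝ) : Prop :=
  ∀ i, PH α (Icc 0 δ) I (ω i) R ∧ ∀ x ∈ I, ω i 0 x = z i x

lemma PH.abs_le_of_zero {α δ H : ℝ} {I : Set ℝ} {w : ℝ → ℝ → ℝ} (hα : α ∈ Ioo (0:ℝ) 1)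
    (hH : 0 ≤ H) (h : PH α (Icc 0 δ) I w H) (h0 : ∀ x ∈ I, w 0 x = 0) {t x : ℝ}
    (ht : t ∈ Icc 0 δ) (hx : x ∈ I) : |w t x| ≤ H * δ ^ (α / 2) := by
  have := h t ht 0 ⟨le_rfl, ht.1.trans ht.2⟩ x hx x hx
  rw [h0 x hx, sub_zero, rho_time hα, sub_zero, abs_of_nonneg ht.1] at this
  exact this.trans (mul_le_mul_of_nonneg_left
    (Real.rpow_le_rpow ht.1 ht.2 (by linarith [hα.1])) hH)

/-- Banach fixed point theorem, with contraction measured in the parabolic Hölder seminorm. -/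
lemma picard {ι : Type} {α δ R : ℝ} {I : Set ℝ} (hα : α ∈ Ioo (0:ℝ) 1) (hδ : 0 < δ) (hδ1 : δ ≤ 1)
    (hR : 0 ≤ R) (z : ι → ℝ → ℝ) (hz : ∀ i, PH α (Icc 0 δ) I (fun _ x => z i x) R)
    (S : (ι → ℝ → ℝ → ℝ) → ι → ℝ → ℝ → ℝ)
    (hS1 : ∀ ω, Good α δ I R z ω → Good α δ I R z (S ω))
    (hS2 : ∀ ω ω' h, Good α δ I R z ω → Good α δ I R z ω' → 0 ≤ h →
      (∀ i, PH α (Icc 0 δ) I (fun t x => ω i t x - ω' i t x) h) →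
      ∀ i, PH α (Icc 0 δ) I (fun t x => S ω i t x - S ω' i t x) (h / 2)) :
    ∃ ω, Good α δ I R z ω ∧ ∀ i, ∀ t ∈ Icc 0 δ, ∀ x ∈ I, S ω i t x = ω i t x := by
  set W : ℕ → ι → ℝ → ℝ → ℝ := fun n => S^[n] (fun i _ x => z i x) with hW
  have Wsucc : ∀ n, W (n + 1) = S (W n) := fun n => Function.iterate_succ_apply' S n _
  have hg : ∀ n, Good α δ I R z (W n) := by
    intro n
    induction n with
    | zero => exact fun i => ⟨hz i, fun x _ => rfl⟩
    | succ n ih => rw [Wsucc]; exact hS1 _ ih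
  have hstep : ∀ n i, PH α (Icc 0 δ) I (fun t x => W (n + 1) i t x - W n i t x) (4 * R / 2 / 2 ^ n) := by
    intro n
    induction n with
    | zero =>
      intro i
      exact ((hg 1 i).1.sub (hg 0 i).1).mono (by norm_num; linarith)
    | succ n ih =>
      intro i
      have := hS2 (W (n + 1)) (W n) _ (hg _) (hg _) (by positivity) ih i
      rw [← Wsucc, ← Wsucc] at this
      refine this.mono (le_of_eq ?_)
      rw [pow_succ]; field_simp
  have θ1 : δ ^ (α / 2) ≤ 1 := Real.rpow_le_one hδ.le hδ1 (by linarith [hα.1])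
  have hlim : ∀ i t x, ∃ y, t ∈ Icc 0 δ → x ∈ I → Tendsto (fun n => W n i t x) atTop (𝓝 y) := by
    intro i t x
    by_cases htx : t ∈ Icc 0 δ ∧ x ∈ I
    · have hc : CauchySeq fun n => W n i t x := by
        refine cauchySeq_of_le_geometric_two (C := 4 * R) fun n => ?_
        rw [dist_comm, Real.dist_eq]
        refine ((hstep n i).abs_le_of_zero hα (by positivity) (fun x hx => ?_) htx.1 htx.2).trans ?_
        · rw [(hg (n + 1) i).2 x hx, (hg n i).2 x hx, sub_self]
        · exact mul_le_of_le_one_right (by positivity) θ1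
      obtain ⟨y, hy⟩ := cauchySeq_tendsto_of_complete hc
      exact ⟨y, fun _ _ => hy⟩
    · exact ⟨0, fun h1 h2 => absurd ⟨h1, h2⟩ htx⟩
  choose ω hω using hlim
  have hgω : Good α δ I R z ω := by
    intro i
    constructor
    · intro t ht t' ht' x hx x' hx'
      exact le_of_tendsto (((hω i t x ht hx).sub (hω i t' x' ht' hx')).abs)
        (Eventually.of_forall fun n => (hg n i).1 t ht t' ht' x hx x' hx')
    · intro x hx
      refine tendsto_nhds_unique (hω i 0 x ⟨le_rfl, hδ.le⟩ hx) ?_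
      simp only [fun n => (hg n i).2 x hx]
      exact tendsto_const_nhds
  have hd : ∀ n i, PH α (Icc 0 δ) I (fun t x => ω i t x - W n i t x) (4 * R / 2 ^ n) := by
    intro n i t ht t' ht' x hx x' hx'
    have := dist_le_of_le_geometric_two_of_tendsto (f := fun n => W n i t x - W n i t' x')
      (C := 4 * R * rho α t x t' x') (fun n => by
        rw [dist_comm, Real.dist_eq]
        have := hstep n i t ht t' ht' x hx x' hx'
        rw [show W (n + 1) i t x - W (n + 1) i t' x' - (W n i t x - W n i t' x')
          = W (n + 1) i t x - W n i t x - (W (n + 1) i t' x' - W n i t' x') by ring]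
        refine this.trans (le_of_eq ?_)
        field_simp) ((hω i t x ht hx).sub (hω i t' x' ht' hx')) n
    rw [dist_comm, Real.dist_eq] at this
    rw [show ω i t x - W n i t x - (ω i t' x' - W n i t' x')
      = ω i t x - ω i t' x' - (W n i t x - W n i t' x') by ring]
    refine this.trans (le_of_eq ?_)
    field_simp
  refine ⟨ω, hgω, fun i t ht x hx => ?_⟩
  refine tendsto_nhds_unique ?_ ((hω i t x ht hx).comp (tendsto_add_atTop_nat 1))
  rw [tendsto_iff_dist_tendsto_zero]
  have h0 : Tendsto (fun n : ℕ => 4 * R * (1 / 2) ^ n) atTop (𝓝 0) := by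
    simpa using (tendsto_pow_atTop_nhds_zero_of_lt_one (by norm_num : (0:ℝ) ≤ 1 / 2)
      (by norm_num)).const_mul (4 * R)
  refine squeeze_zero (fun _ => dist_nonneg) (fun n => ?_) h0
  rw [dist_comm, Real.dist_eq]
  simp only [Function.comp]
  have h1 := hS2 ω (W n) _ hgω (hg n) (by positivity) (hd n) i
  rw [← Wsucc] at h1
  refine (h1.abs_le_of_zero hα (by positivity) (fun x hx => ?_) ht hx).trans ?_
  · rw [(hS1 _ hgω i).2 x hx, (hg (n + 1) i).2 x hx, sub_self]
  · refine (mul_le_of_le_one_right (by positivity) θ1).trans ?_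
    rw [one_div, inv_pow, ← div_eq_mul_inv]
    have : 0 ≤ 4 * R / 2 ^ n := by positivity
    linarith

/-- A continuous positive coefficient `A` is uniformly approximated by `c⁻²` with `c` a polynomial
having the same integral as `A^{-1/2}`. -/
lemma approx_coeff {l r : ℝ} (hlr : l < r) {A : ℝ → ℝ} (hA : ContinuousOn A (Icc l r))
    (hpos : ∀ x ∈ Icc l r, 0 < A x) :
    ∃ lam Lam L, 0 < lam ∧ lam ≤ Lam ∧ 0 < L ∧ ∀ ε > 0, ∃ c : ℝ → ℝ, ContDiff ℝ 2 c ∧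
      (∀ x ∈ Icc l r, lam ≤ c x ∧ c x ≤ Lam) ∧ ∫ x in l..r, c x = L ∧
      ∀ x ∈ Icc l r, |A x - (c x)⁻¹ ^ 2| ≤ ε := by
  have hne : (Icc l r).Nonempty := nonempty_Icc.2 hlr.le
  set s : ℝ → ℝ := fun x => (√(A x))⁻¹ with hs
  have sc : ContinuousOn s (Icc l r) :=
    (hA.sqrt).inv₀ fun x hx => (Real.sqrt_pos.2 (hpos x hx)).ne'
  have spos : ∀ x ∈ Icc l r, 0 < s x := fun x hx => inv_pos.2 (Real.sqrt_pos.2 (hpos x hx))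
  have sA : ∀ x ∈ Icc l r, A x = (s x)⁻¹ ^ 2 := fun x hx => by
    simp only [hs, inv_inv]; rw [Real.sq_sqrt (hpos x hx).le]
  obtain ⟨x0, hx0, hmin⟩ := isCompact_Icc.exists_isMinOn hne sc
  obtain ⟨x1, hx1, hmax⟩ := isCompact_Icc.exists_isMaxOn hne sc
  set m := s x0 with hm
  set M := s x1 with hM
  have m0 : 0 < m := spos x0 hx0
  have hsm : ∀ x ∈ Icc l r, m ≤ s x := fun x hx => hmin hx
  have hsM : ∀ x ∈ Icc l r, s x ≤ M := fun x hx => hmax hx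
  have hmM : m ≤ M := hsm x1 hx1
  have M0 : 0 < M := m0.trans_le hmM
  have si : IntervalIntegrable s volume l r :=
    ContinuousOn.intervalIntegrable (by rwa [uIcc_of_le hlr.le])
  have hrl : 0 < r - l := sub_pos.2 hlr
  have L0 : 0 < ∫ x in l..r, s x := by
    have := intervalIntegral.integral_mono_on (μ := volume) hlr.le (f := fun _ => m) (g := s)
      (continuous_const.intervalIntegrable _ _) si hsm
    rw [intervalIntegral.integral_const, smul_eq_mul] at this
    nlinarith
  refine ⟨m / 2, 2 * M, ∫ x in l..r, s x, by positivity, by linarith, L0, fun ε hε => ?_⟩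
  -- `|s⁻² - c⁻²| = |c - s| (c + s) / (c s)²`, which fixes the size of `η`
  set η := min (m / 4) (ε * (m / 2 * m) ^ 2 / (2 * (2 * M + M))) with hη
  have η0 : 0 < η := by positivity
  obtain ⟨p, hp⟩ := exists_polynomial_near_of_continuousOn l r s sc η η0
  have pc : Continuous fun x => p.eval x := p.continuous
  have pi : IntervalIntegrable (fun x => p.eval x) volume l r := pc.intervalIntegrable _ _
  set k := ((∫ x in l..r, s x) - ∫ x in l..r, p.eval x) / (r - l) with hk
  have hkη : |k| ≤ η := by
    rw [hk, abs_div, abs_of_pos hrl, div_le_iff₀ hrl, ← intervalIntegral.integral_sub si pi,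
      ← Real.norm_eq_abs]
    refine (intervalIntegral.norm_integral_le_of_norm_le_const (C := η) fun x hx => ?_).trans
      (by rw [abs_of_pos hrl])
    rw [uIoc_of_le hlr.le] at hx
    rw [Real.norm_eq_abs, abs_sub_comm]
    exact (hp x ⟨hx.1.le, hx.2⟩).le
  have hcs : ∀ x ∈ Icc l r, |p.eval x + k - s x| ≤ 2 * η := by
    intro x hx
    have := abs_add_le (p.eval x - s x) k
    rw [show p.eval x - s x + k = p.eval x + k - s x by ring] at this
    linarith [hp x hx]
  have η1 : η ≤ m / 4 := min_le_left _ _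
  have hb : ∀ x ∈ Icc l r, m / 2 ≤ p.eval x + k ∧ p.eval x + k ≤ 2 * M := by
    intro x hx
    have h1 := abs_le.1 (hcs x hx)
    have h2 := hsm x hx
    have h3 := hsM x hx
    constructor <;> linarith [h1.1, h1.2]
  refine ⟨fun x => p.eval x + k, ?_, hb, ?_, ?_⟩
  · refine ContDiff.add ?_ contDiff_const
    simpa [Polynomial.coe_aeval_eq_eval] using Polynomial.contDiff_aeval (𝕜 := ℝ) p 2
  · rw [intervalIntegral.integral_add pi (continuous_const.intervalIntegrable _ _),
      intervalIntegral.integral_const, smul_eq_mul, hk]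
    field_simp; ring
  · intro x hx
    have h1 := hcs x hx
    obtain ⟨h2, h3⟩ := hb x hx
    have h4 := hsm x hx
    have h5 := hsM x hx
    set c := p.eval x + k
    have c0 : 0 < c := by linarith
    have s0 : 0 < s x := by linarith
    rw [sA x hx]
    have e : (s x)⁻¹ ^ 2 - c⁻¹ ^ 2 = (c - s x) * (c + s x) / (c * s x) ^ 2 := by
      field_simp; ring
    rw [e, abs_div, abs_mul, abs_of_pos (by positivity : 0 < c + s x),
      abs_of_pos (by positivity : 0 < (c * s x) ^ 2), div_le_iff₀ (by positivity)]
    have h6 : η ≤ ε * (m / 2 * m) ^ 2 / (2 * (2 * M + M)) := min_le_right _ _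
    rw [le_div_iff₀ (by positivity)] at h6
    calc |c - s x| * (c + s x) ≤ 2 * η * (2 * M + M) := by gcongr
      _ ≤ ε * (m / 2 * m) ^ 2 := by linarith
      _ ≤ ε * (c * s x) ^ 2 := by gcongr

/-! ### Superposition operators -/

/-- Values, increments and second-order increments of a `C²` function on a compact convex set. -/
lemma second_difference {E : Type*} [NormedAddCommGroup E] [NormedSpace ℝ E] {D K : Set E}
    {G : E → ℝ} (hD : UniqueDiffOn ℝ D) (hG : ContDiffOn ℝ 2 G D) (hKD : K ⊆ D) (hK : Convex ℝ K)
    (hKc : IsCompact K) : ∃ Λ, 0 ≤ Λ ∧ (∀ y ∈ K, |G y| ≤ Λ) ∧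
      (∀ y ∈ K, ∀ y' ∈ K, |G y - G y'| ≤ Λ * ‖y - y'‖) ∧
      ∀ y₁ ∈ K, ∀ y₁' ∈ K, ∀ y₂ ∈ K, ∀ y₂' ∈ K, |G y₁ - G y₁' - (G y₂ - G y₂')|
        ≤ Λ * ‖y₁ - y₁' - (y₂ - y₂')‖ + Λ * (‖y₁ - y₂‖ + ‖y₁' - y₂'‖) * ‖y₂ - y₂'‖ := by
  have hG' : ContDiffOn ℝ 1 (fderivWithin ℝ G D) D :=
    hG.fderivWithin hD (by rw [one_add_one_eq_two])
  have hder : ∀ y ∈ K, HasFDerivWithinAt G (fderivWithin ℝ G D y) K y := fun y hy =>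
    ((hG.differentiableOn (by norm_num) y (hKD hy)).hasFDerivWithinAt).mono hKD
  obtain ⟨A, hA⟩ := hKc.exists_bound_of_continuousOn (hG.continuousOn.mono hKD)
  obtain ⟨B, hB⟩ := hKc.exists_bound_of_continuousOn (hG'.continuousOn.mono hKD)
  obtain ⟨C, hC⟩ := (hG'.mono hKD).exists_lipschitzOnWith (by norm_num) hK hKc
  refine ⟨|A| + |B| + C, by positivity, fun y hy => ?_, fun y hy y' hy' => ?_,
    fun y₁ h₁ y₁' h₁' y₂ h₂ y₂' h₂' => ?_⟩
  · have := hA y hy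
    rw [Real.norm_eq_abs] at this
    linarith [le_abs_self A, abs_nonneg B, C.coe_nonneg]
  · have := hK.norm_image_sub_le_of_norm_hasFDerivWithin_le hder hB hy' hy
    rw [Real.norm_eq_abs] at this
    refine this.trans ?_
    gcongr
    linarith [le_abs_self B, abs_nonneg A, C.coe_nonneg]
  · set e₁ := y₁ - y₁'
    set e₂ := y₂ - y₂'
    have hm : ∀ {u u' : E}, u ∈ K → u' ∈ K → ∀ s ∈ Icc (0:ℝ) 1, u' + s • (u - u') ∈ K := by
      intro u u' hu hu' s hs
      exact hK.add_smul_sub_mem hu' hu hs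
    have hp : ∀ {u u' : E}, u ∈ K → u' ∈ K → ∀ s ∈ Icc (0:ℝ) 1,
        HasDerivWithinAt (fun s => G (u' + s • (u - u')))
          (fderivWithin ℝ G D (u' + s • (u - u')) (u - u')) (Icc 0 1) s := by
      intro u u' hu hu' s hs
      have h1 : HasDerivWithinAt (fun s : ℝ => u' + s • (u - u')) (u - u') (Icc 0 1) s := by
        simpa using (((hasDerivAt_id s).smul_const (u - u')).const_add u').hasDerivWithinAt
      exact HasFDerivWithinAt.comp_hasDerivWithinAt s (hder _ (hm hu hu' s hs)) h1
        (fun s hs => hm hu hu' s hs)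
    have key := (convex_Icc (0:ℝ) 1).norm_image_sub_le_of_norm_hasDerivWithin_le
      (f := fun s => G (y₁' + s • (y₁ - y₁')) - G (y₂' + s • (y₂ - y₂')))
      (C := (|A| + |B| + C) * ‖e₁ - e₂‖ + (|A| + |B| + C) * (‖y₁ - y₂‖ + ‖y₁' - y₂'‖) * ‖e₂‖)
      (fun s hs => (hp h₁ h₁' s hs).sub (hp h₂ h₂' s hs)) (fun s hs => ?_)
      (left_mem_Icc.2 zero_le_one) (right_mem_Icc.2 zero_le_one)
    · simp only [one_smul, zero_smul, add_zero, add_sub_cancel, sub_zero, norm_one, mul_one] at key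
      rw [Real.norm_eq_abs] at key
      rwa [show G y₁ - G y₁' - (G y₂ - G y₂') = G y₁ - G y₂ - (G y₁' - G y₂') by ring]
    · set z₁ := y₁' + s • (y₁ - y₁') with hz₁
      set z₂ := y₂' + s • (y₂ - y₂') with hz₂
      have e : fderivWithin ℝ G D z₁ (y₁ - y₁') - fderivWithin ℝ G D z₂ (y₂ - y₂')
          = fderivWithin ℝ G D z₁ (e₁ - e₂)
            + (fderivWithin ℝ G D z₁ - fderivWithin ℝ G D z₂) e₂ := by
        change _ = _ + (fderivWithin ℝ G D z₁ e₂ - fderivWithin ℝ G D z₂ e₂)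
        rw [map_sub (fderivWithin ℝ G D z₁) e₁ e₂]
        ring
      have hz : ‖z₁ - z₂‖ ≤ ‖y₁ - y₂‖ + ‖y₁' - y₂'‖ := by
        have : z₁ - z₂ = s • (y₁ - y₂) + (1 - s) • (y₁' - y₂') := by
          rw [hz₁, hz₂]; module
        rw [this]
        refine (norm_add_le _ _).trans ?_
        rw [norm_smul, norm_smul, Real.norm_of_nonneg hs.1, Real.norm_of_nonneg (sub_nonneg.2 hs.2)]
        have := norm_nonneg (y₁ - y₂)
        have := norm_nonneg (y₁' - y₂')
        nlinarith [hs.1, hs.2]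
      have hz₁K := hm h₁ h₁' s hs
      have hz₂K := hm h₂ h₂' s hs
      have hL := hC.dist_le_mul _ hz₁K _ hz₂K
      rw [dist_eq_norm, dist_eq_norm] at hL
      rw [e]
      refine (norm_add_le _ _).trans (add_le_add ?_ ?_)
      · refine (ContinuousLinearMap.le_opNorm _ _).trans ?_
        gcongr
        have := hB _ hz₁K
        linarith [le_abs_self B, abs_nonneg A, C.coe_nonneg]
      · refine (ContinuousLinearMap.le_opNorm _ _).trans ?_
        gcongr
        refine hL.trans ?_
        have : (C : ℝ) ≤ |A| + |B| + C := by linarith [abs_nonneg A, abs_nonneg B]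
        gcongr

/-- The domain `[0, T] × [l, r] × ℝ²` of the coefficients. -/
def Dom (T l r : ℝ) : Set (ℝ × ℝ × ℝ × ℝ) := Icc (0:ℝ) T ×ˢ Icc l r ×ˢ (univ : Set (ℝ × ℝ))

/-- The compact part of `Dom` with `|u|, |u_x| ≤ M`. -/
def Box (T l r M : ℝ) : Set (ℝ × ℝ × ℝ × ℝ) :=
  Icc (0:ℝ) T ×ˢ Icc l r ×ˢ Icc (-M) M ×ˢ Icc (-M) M

/-- Quantitative `C²` bounds for `G` on `K`, in the form used for superposition operators. -/
def NemBd (K : Set (ℝ × ℝ × ℝ × ℝ)) (Λ : ℝ) (G : ℝ × ℝ × ℝ × ℝ → ℝ) : Prop :=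
  (∀ y ∈ K, |G y| ≤ Λ) ∧ (∀ y ∈ K, ∀ y' ∈ K, |G y - G y'| ≤ Λ * ‖y - y'‖) ∧
    ∀ y₁ ∈ K, ∀ y₁' ∈ K, ∀ y₂ ∈ K, ∀ y₂' ∈ K, |G y₁ - G y₁' - (G y₂ - G y₂')|
      ≤ Λ * ‖y₁ - y₁' - (y₂ - y₂')‖ + Λ * (‖y₁ - y₂‖ + ‖y₁' - y₂'‖) * ‖y₂ - y₂'‖

lemma nem_exists {T l r : ℝ} (hT : 0 < T) (hlr : l < r) {G : ℝ × ℝ × ℝ × ℝ → ℝ}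
    (hG : ContDiffOn ℝ 2 G (Dom T l r)) (M : ℝ) : ∃ Λ, 0 ≤ Λ ∧ NemBd (Box T l r M) Λ G := by
  refine second_difference (D := Dom T l r) ?_ hG ?_ ?_ ?_
  · exact (uniqueDiffOn_Icc hT).prod ((uniqueDiffOn_Icc hlr).prod uniqueDiffOn_univ)
  · exact prod_mono le_rfl (prod_mono le_rfl (subset_univ _))
  · exact (convex_Icc _ _).prod ((convex_Icc _ _).prod ((convex_Icc _ _).prod (convex_Icc _ _)))
  · exact isCompact_Icc.prod (isCompact_Icc.prod (isCompact_Icc.prod isCompact_Icc))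

lemma NemBd.mono {K : Set (ℝ × ℝ × ℝ × ℝ)} {Λ Λ' : ℝ} {G : ℝ × ℝ × ℝ × ℝ → ℝ} (h : NemBd K Λ G)
    (hΛ : Λ ≤ Λ') : NemBd K Λ' G := by
  refine ⟨fun y hy => (h.1 y hy).trans hΛ, fun y hy y' hy' => (h.2.1 y hy y' hy').trans (by gcongr),
    fun y₁ h₁ y₁' h₁' y₂ h₂ y₂' h₂' => (h.2.2 y₁ h₁ y₁' h₁' y₂ h₂ y₂' h₂').trans (by gcongr)⟩

lemma norm4_le {a b c d C : ℝ} (ha : |a| ≤ C) (hb : |b| ≤ C) (hc : |c| ≤ C) (hd : |d| ≤ C) :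
    ‖((a, b, c, d) : ℝ × ℝ × ℝ × ℝ)‖ ≤ C :=
  max_le ha (max_le hb (max_le hc hd))

/-- The Hölder constant of the coordinates `(t, x)` on a cylinder of length at most one. -/
def kap (α l r : ℝ) : ℝ := 1 + (r - l) ^ (1 - α)

section comp
variable {α l r T M Λ h t0 : ℝ} {J : Set ℝ} {G : ℝ × ℝ × ℝ × ℝ → ℝ} {z p z' p' : ℝ → ℝ → ℝ}
  (hα : α ∈ Ioo (0:ℝ) 1) (hlr : l ≤ r) (hΛ : 0 ≤ Λ) (hG : NemBd (Box T l r M) Λ G)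
  (hJ1 : ∀ t ∈ J, ∀ t' ∈ J, |t - t'| ≤ 1) (hh : 0 ≤ h)
  (hW : ∀ t ∈ J, ∀ x ∈ Icc l r, (t0 + t, x, z t x, p t x) ∈ Box T l r M)
  (hz : PH α J (Icc l r) z h) (hp : PH α J (Icc l r) p h)
include hα hlr hJ1 hh hz hp

/-- The increments of the argument `(t, x, z, p)` are controlled by the parabolic modulus. -/
lemma comp_incr {t t' x x' : ℝ} (ht : t ∈ J) (ht' : t' ∈ J) (hx : x ∈ Icc l r) (hx' : x' ∈ Icc l r) :
    ‖((t0 + t, x, z t x, p t x) : ℝ × ℝ × ℝ × ℝ) - (t0 + t', x', z t' x', p t' x')‖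
      ≤ (kap α l r + h) * rho α t x t' x' := by
  have hR : 0 ≤ (r - l) ^ (1 - α) := Real.rpow_nonneg (sub_nonneg.2 hlr) _
  have hρ := rho_nonneg α t x t' x'
  have e1 : |t - t'| ≤ rho α t x t' x' := by
    have := Real.rpow_le_rpow_of_exponent_ge' (abs_nonneg (t - t')) (hJ1 t ht t' ht')
      (by linarith [hα.1] : 0 ≤ α / 2) (by linarith [hα.2] : α / 2 ≤ 1)
    rw [Real.rpow_one] at this
    unfold rho
    linarith [Real.rpow_nonneg (abs_nonneg (x - x')) α]
  have e2 : |x - x'| ≤ (r - l) ^ (1 - α) * rho α t x t' x' := by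
    refine (abs_le_rpow_of_le hα (abs_nonneg _) (R := r - l) ?_).trans ?_
    · rw [abs_le]; constructor <;> linarith [hx.1, hx.2, hx'.1, hx'.2]
    · gcongr
      unfold rho
      linarith [Real.rpow_nonneg (abs_nonneg (t - t')) (α / 2)]
  have e3 := hz t ht t' ht' x hx x' hx'
  have e4 := hp t ht t' ht' x hx x' hx'
  have e5 : 0 ≤ (r - l) ^ (1 - α) * rho α t x t' x' := by positivity
  have e6 : 0 ≤ h * rho α t x t' x' := by positivity
  have e7 : (kap α l r + h) * rho α t x t' x'
      = rho α t x t' x' + (r - l) ^ (1 - α) * rho α t x t' x' + h * rho α t x t' x' := by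
    unfold kap; ring
  rw [e7]
  simp only [Prod.mk_sub_mk]
  refine norm4_le ?_ ?_ ?_ ?_
  · rw [add_sub_add_left_eq_sub]; linarith
  all_goals linarith

include hΛ hG hW in
/-- Superposition with a `C²` function preserves parabolic Hölder continuity. -/
lemma NemBd.comp :
    PH α J (Icc l r) (fun t x => G (t0 + t, x, z t x, p t x)) (Λ * (kap α l r + h)) := by
  intro t ht t' ht' x hx x' hx'
  refine (hG.2.1 _ (hW t ht x hx) _ (hW t' ht' x' hx')).trans ?_
  rw [mul_assoc]
  exact mul_le_mul_of_nonneg_left (comp_incr hα hlr hJ1 hh hz hp ht ht' hx hx') hΛ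

include hΛ hG hW in
/-- Superposition with a `C²` function is Lipschitz in the parabolic Hölder norm. -/
lemma NemBd.comp_sub {e : ℝ} (he : 0 ≤ e)
    (hW' : ∀ t ∈ J, ∀ x ∈ Icc l r, (t0 + t, x, z' t x, p' t x) ∈ Box T l r M)
    (hz' : PH α J (Icc l r) z' h) (hp' : PH α J (Icc l r) p' h)
    (dz : PH α J (Icc l r) (fun t x => z t x - z' t x) e)
    (dp : PH α J (Icc l r) (fun t x => p t x - p' t x) e)
    (bz : ∀ t ∈ J, ∀ x ∈ Icc l r, |z t x - z' t x| ≤ e)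
    (bp : ∀ t ∈ J, ∀ x ∈ Icc l r, |p t x - p' t x| ≤ e) :
    PH α J (Icc l r) (fun t x => G (t0 + t, x, z t x, p t x) - G (t0 + t, x, z' t x, p' t x))
      (Λ * e * (1 + 2 * (kap α l r + h))) ∧
    ∀ t ∈ J, ∀ x ∈ Icc l r,
      |G (t0 + t, x, z t x, p t x) - G (t0 + t, x, z' t x, p' t x)| ≤ Λ * e := by
  have hb : ∀ t ∈ J, ∀ x ∈ Icc l r,
      ‖((t0 + t, x, z t x, p t x) : ℝ × ℝ × ℝ × ℝ) - (t0 + t, x, z' t x, p' t x)‖ ≤ e := by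
    intro t ht x hx
    simp only [Prod.mk_sub_mk]
    exact norm4_le (by simpa using he) (by simpa using he) (bz t ht x hx) (bp t ht x hx)
  constructor
  · intro t ht t' ht' x hx x' hx'
    have hρ := rho_nonneg α t x t' x'
    refine (hG.2.2 _ (hW t ht x hx) _ (hW' t ht x hx) _ (hW t' ht' x' hx') _
      (hW' t' ht' x' hx')).trans ?_
    have i1 := comp_incr (t0 := t0) hα hlr hJ1 hh hz hp ht ht' hx hx'
    have i2 := comp_incr (t0 := t0) hα hlr hJ1 hh hz' hp' ht ht' hx hx'
    have i3 := hb t' ht' x' hx'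
    have i4 : ‖((t0 + t, x, z t x, p t x) : ℝ × ℝ × ℝ × ℝ) - (t0 + t, x, z' t x, p' t x)
        - ((t0 + t', x', z t' x', p t' x') - (t0 + t', x', z' t' x', p' t' x'))‖
        ≤ e * rho α t x t' x' := by
      simp only [Prod.mk_sub_mk]
      have := mul_nonneg he hρ
      exact norm4_le (by simpa using this) (by simpa using this) (dz t ht t' ht' x hx x' hx')
        (dp t ht t' ht' x hx x' hx')
    have i5 := (norm_nonneg _).trans i1
    calc _ ≤ Λ * (e * rho α t x t' x') + Λ * ((kap α l r + h) * rho α t x t' x'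
          + (kap α l r + h) * rho α t x t' x') * e :=
          add_le_add (mul_le_mul_of_nonneg_left i4 hΛ)
            (mul_le_mul (mul_le_mul_of_nonneg_left (add_le_add i1 i2) hΛ) i3 (norm_nonneg _)
              (mul_nonneg hΛ (add_nonneg i5 i5)))
      _ = _ := by ring
  · intro t ht x hx
    exact (hG.2.1 _ (hW t ht x hx) _ (hW' t ht x hx)).trans
      (mul_le_mul_of_nonneg_left (hb t ht x hx) hΛ)

end comp

/-- Product rule for parabolic Hölder seminorms. -/
lemma PH.mul {α H H' B B' : ℝ} {J I : Set ℝ} {w w' : ℝ → ℝ → ℝ} (h : PH α J I w H)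
    (h' : PH α J I w' H') (hb : ∀ t ∈ J, ∀ x ∈ I, |w t x| ≤ B) (hb' : ∀ t ∈ J, ∀ x ∈ I, |w' t x| ≤ B') :
    PH α J I (fun t x => w t x * w' t x) (H * B' + B * H') := by
  intro t ht t' ht' x hx x' hx'
  have e1 := h t ht t' ht' x hx x' hx'
  have e2 := h' t ht t' ht' x hx x' hx'
  have e3 := hb t ht x hx
  have e4 := hb' t' ht' x' hx'
  have hρ := rho_nonneg α t x t' x'
  have h0 : 0 ≤ H * rho α t x t' x' := (abs_nonneg _).trans e1
  have h0' : 0 ≤ B := (abs_nonneg _).trans e3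
  rw [show w t x * w' t x - w t' x' * w' t' x'
    = (w t x - w t' x') * w' t' x' + w t x * (w' t x - w' t' x') by ring]
  refine (abs_add_le _ _).trans ?_
  rw [abs_mul, abs_mul]
  calc _ ≤ H * rho α t x t' x' * B' + B * (H' * rho α t x t' x') := by gcongr
    _ = _ := by ring

/-! ### Increments of the nonlinear terms -/

lemma holder_of_contDiffOn {α l r : ℝ} (hα : α ∈ Ioo (0:ℝ) 1) {c : ℝ → ℝ}
    (hc : ContDiffOn ℝ 1 c (Icc l r)) :
    ∃ K, 0 ≤ K ∧ (∀ x ∈ Icc l r, |c x| ≤ K) ∧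
      ∀ x ∈ Icc l r, ∀ x' ∈ Icc l r, |c x - c x'| ≤ K * |x - x'| ^ α := by
  obtain ⟨A, hA⟩ := (isCompact_Icc (a := l) (b := r)).exists_bound_of_continuousOn hc.continuousOn
  obtain ⟨B, hB⟩ := hc.exists_lipschitzOnWith (by norm_num) (convex_Icc l r) isCompact_Icc
  refine ⟨|A| + B * |r - l| ^ (1 - α), by positivity, fun x hx => ?_, fun x hx x' hx' => ?_⟩
  · have := hA x hx
    rw [Real.norm_eq_abs] at this
    have : 0 ≤ (B:ℝ) * |r - l| ^ (1 - α) := by positivity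
    linarith [le_abs_self A]
  · have h1 := hB.dist_le_mul _ hx _ hx'
    rw [Real.dist_eq, Real.dist_eq] at h1
    have h2 := abs_le_rpow_of_le hα (abs_nonneg (x - x')) (R := |r - l|)
      ((abs_le.2 ⟨by linarith [hx.1, hx'.2], by linarith [hx.2, hx'.1]⟩ : |x - x'| ≤ r - l).trans
        (le_abs_self _))
    calc _ ≤ (B:ℝ) * |x - x'| := h1
      _ ≤ B * (|r - l| ^ (1 - α) * |x - x'| ^ α) := by gcongr
      _ ≤ (|A| + B * |r - l| ^ (1 - α)) * |x - x'| ^ α := by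
        rw [add_mul, mul_assoc]
        have : 0 ≤ |A| * |x - x'| ^ α := by positivity
        linarith

/-- A profile independent of time. -/
lemma PH.of_space {α H : ℝ} {J I : Set ℝ} {c : ℝ → ℝ} (hH : 0 ≤ H)
    (hc : ∀ x ∈ I, ∀ x' ∈ I, |c x - c x'| ≤ H * |x - x'| ^ α) : PH α J I (fun _ x => c x) H := by
  intro t _ t' _ x hx x' hx'
  refine (hc x hx x' hx').trans (mul_le_mul_of_nonneg_left ?_ hH)
  unfold rho
  linarith [Real.rpow_nonneg (abs_nonneg (t - t')) (α / 2)]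

/-- The right-hand side left over when `A(·, z, p) z_xx + f(·, z, p)` is compared with the frozen
operator `a₀ ∂² - b₀ ∂`; here `z_xx = q + qs` and `p - ps` is the derivative of the increment. -/
def Fop (A f : ℝ × ℝ × ℝ × ℝ → ℝ) (a₀ b₀ ps qs : ℝ → ℝ) (t0 : ℝ) (z p q : ℝ → ℝ → ℝ) (t x : ℝ) : ℝ :=
  (A (t0 + t, x, z t x, p t x) - a₀ x) * q t x + A (t0 + t, x, z t x, p t x) * qs x
    + f (t0 + t, x, z t x, p t x) + b₀ x * (p t x - ps x)

section diff
variable {α l r T M Λ h t0 Kc Bq Hq : ℝ} {J : Set ℝ} {A f : ℝ × ℝ × ℝ × ℝ → ℝ}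
  {z p q z' p' q' : ℝ → ℝ → ℝ} {a₀ b₀ ps qs : ℝ → ℝ}
  (hα : α ∈ Ioo (0:ℝ) 1) (hlr : l ≤ r) (hΛ : 0 ≤ Λ) (hA : NemBd (Box T l r M) Λ A)
  (hf : NemBd (Box T l r M) Λ f)
  (hJ1 : ∀ t ∈ J, ∀ t' ∈ J, |t - t'| ≤ 1) (hh : 0 ≤ h)
  (hW : ∀ t ∈ J, ∀ x ∈ Icc l r, (t0 + t, x, z t x, p t x) ∈ Box T l r M)
  (hz : PH α J (Icc l r) z h) (hp : PH α J (Icc l r) p h)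
  (hKc : 0 ≤ Kc)
  (ha₀' : ∀ x ∈ Icc l r, ∀ x' ∈ Icc l r, |a₀ x - a₀ x'| ≤ Kc * |x - x'| ^ α)
  (hb₀ : ∀ x ∈ Icc l r, |b₀ x| ≤ Kc)
  (hb₀' : ∀ x ∈ Icc l r, ∀ x' ∈ Icc l r, |b₀ x - b₀ x'| ≤ Kc * |x - x'| ^ α)
  (hHq : 0 ≤ Hq) (hqs : ∀ x ∈ Icc l r, |qs x| ≤ Bq)
  (hqs' : ∀ x ∈ Icc l r, ∀ x' ∈ Icc l r, |qs x - qs x'| ≤ Hq * |x - x'| ^ α)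
include hα hlr hΛ hA hf hJ1 hh hW hz hp hKc ha₀' hb₀ hb₀' hHq hqs hqs'

/-- The difference of two remainders: the top order contribution carries the small factor `ε`, all
other ones involve norms that are small for short times. -/
lemma Fop_sub {e ε n s m : ℝ} (he : 0 ≤ e) (hm : 0 ≤ m)
    (hW' : ∀ t ∈ J, ∀ x ∈ Icc l r, (t0 + t, x, z' t x, p' t x) ∈ Box T l r M)
    (hz' : PH α J (Icc l r) z' h) (hp' : PH α J (Icc l r) p' h)
    (dz : PH α J (Icc l r) (fun t x => z t x - z' t x) e)
    (dp : PH α J (Icc l r) (fun t x => p t x - p' t x) e)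
    (bz : ∀ t ∈ J, ∀ x ∈ Icc l r, |z t x - z' t x| ≤ e)
    (bp : ∀ t ∈ J, ∀ x ∈ Icc l r, |p t x - p' t x| ≤ e)
    (hε : ∀ t ∈ J, ∀ x ∈ Icc l r, |A (t0 + t, x, z t x, p t x) - a₀ x| ≤ ε)
    (dq : PH α J (Icc l r) (fun t x => q t x - q' t x) n)
    (bq : ∀ t ∈ J, ∀ x ∈ Icc l r, |q t x - q' t x| ≤ s)
    (hq' : PH α J (Icc l r) q' m) (bq' : ∀ t ∈ J, ∀ x ∈ Icc l r, |q' t x| ≤ m) :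
    PH α J (Icc l r) (fun t x => Fop A f a₀ b₀ ps qs t0 z p q t x - Fop A f a₀ b₀ ps qs t0 z' p' q' t x)
      (ε * n + (Λ * (kap α l r + h) + Kc) * s
        + (Λ * ((1 + 2 * (kap α l r + h)) * (m + Bq + 1) + (m + Hq)) + 2 * Kc) * e) := by
  have hAW := NemBd.comp hα hlr hΛ hA hJ1 hh hW hz hp
  have hA1 := hAW.sub (PH.of_space (J := J) hKc ha₀')
  obtain ⟨hA2, hA2'⟩ := NemBd.comp_sub hα hlr hΛ hA hJ1 hh hW hz hp he hW' hz' hp' dz dp bz bp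
  obtain ⟨hf2, -⟩ := NemBd.comp_sub hα hlr hΛ hf hJ1 hh hW hz hp he hW' hz' hp' dz dp bz bp
  have h1 := PH.mul hA1 dq hε bq
  have h2 := PH.mul hA2 (hq'.add (PH.of_space (J := J) hHq hqs')) hA2'
    (B' := m + Bq) fun t ht x hx => (abs_add_le _ _).trans (add_le_add (bq' t ht x hx) (hqs x hx))
  have h4 := PH.coef_mul' dp bp hKc hKc hb₀ hb₀'
  refine (((h1.add h2).add (hf2.add h4)).congr fun t ht x hx => ?_).mono (le_of_eq ?_)
  · simp only [Fop]; ring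
  · ring

end diff

/-! ### The frozen fixed point problem -/

/-- A Hölder-regular solution of `u_t = A u_xx + f` on `J × [l, r]` with `u_t = Gl` and `u_t = Gr`
at the end points; all coefficients are functions of `(t, x, u, u_x)`. -/
structure QSol (α l r : ℝ) (A f Gl Gr : ℝ × ℝ × ℝ × ℝ → ℝ) (J : Set ℝ) (U D P Q : ℝ → ℝ → ℝ)
    (N : ℝ) : Prop where
  rel : HeatRel J (Icc l r) U D P Q
  hD : PH α J (Icc l r) D N
  hQ : PH α J (Icc l r) Q N
  pde : ∀ t ∈ J, ∀ x ∈ Icc l r, D t x = A (t, x, U t x, P t x) * Q t x + f (t, x, U t x, P t x)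
  bl : ∀ t ∈ J, D t l = Gl (t, l, U t l, P t l)
  br : ∀ t ∈ J, D t r = Gr (t, r, U t r, P t r)

lemma holder_of_deriv {α l r B : ℝ} (hα : α ∈ Ioo (0:ℝ) 1) {w w' : ℝ → ℝ}
    (hw : ∀ x ∈ Icc l r, HasDerivWithinAt w (w' x) (Icc l r) x) (hB : ∀ x ∈ Icc l r, |w' x| ≤ B) :
    ∀ x ∈ Icc l r, ∀ x' ∈ Icc l r, |w x - w x'| ≤ B * (r - l) ^ (1 - α) * |x - x'| ^ α := by
  intro x hx x' hx'
  have h0 : 0 ≤ B := (abs_nonneg _).trans (hB x hx)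
  rw [mul_assoc]
  refine (mvt_le (convex_Icc l r) hw hB hx' hx).trans (mul_le_mul_of_nonneg_left ?_ h0)
  exact abs_le_rpow_of_le hα (abs_nonneg _)
    (abs_le.2 ⟨by linarith [hx.1, hx'.2], by linarith [hx.2, hx'.1]⟩)

/-- Smallness of all lower order norms for short times, with one constant. -/
lemma small_time' {α l r δ N : ℝ} {v d p q : ℝ → ℝ → ℝ} (hα : α ∈ Ioo (0:ℝ) 1)
    (hlr : l < r) (hN : 0 ≤ N) (hR : HeatRel (Icc 0 δ) (Icc l r) v d p q)
    (hd : PH α (Icc 0 δ) (Icc l r) d N) (hq : PH α (Icc 0 δ) (Icc l r) q N)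
    (hv : ∀ x ∈ Icc l r, v 0 x = 0) (hδ : 0 < δ) (hδ1 : δ ≤ 1)
    (hδ2 : δ ≤ ((r - l) / 2) ^ 2) (hd0 : ∀ x ∈ Icc l r, |d 0 x| ≤ N) {C : ℝ}
    (hC : C = 2 + 2 * (r - l) ^ (1 - α)) :
    (∀ t ∈ Icc 0 δ, ∀ x ∈ Icc l r, |q t x| ≤ N * δ ^ (α / 2)) ∧
    (∀ t ∈ Icc 0 δ, ∀ x ∈ Icc l r, |p t x| ≤ C * N * δ ^ (α / 2)) ∧
    (∀ t ∈ Icc 0 δ, ∀ x ∈ Icc l r, |v t x| ≤ C * N * δ ^ (α / 2)) ∧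
    PH α (Icc 0 δ) (Icc l r) p (C * N * δ ^ (α / 2)) ∧
    PH α (Icc 0 δ) (Icc l r) v (C * N * δ ^ (α / 2)) := by
  obtain ⟨h1, h2, h3, h4⟩ := small_time hα hlr hN hR hd hq hv hδ hδ1 hδ2
  obtain ⟨h5, h6⟩ := h4 hd0
  have hw : 0 ≤ (r - l) ^ (1 - α) := Real.rpow_nonneg (by linarith) _
  have hθ : 0 ≤ δ ^ (α / 2) := Real.rpow_nonneg hδ.le _
  have c1 : 2 * N * δ ^ (α / 2) ≤ C * N * δ ^ (α / 2) := by gcongr; linarith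
  have c2 : (2 + (r - l) ^ (1 - α)) * N * δ ^ (α / 2) ≤ C * N * δ ^ (α / 2) := by
    gcongr; linarith
  exact ⟨h1, fun t ht x hx => (h2 t ht x hx).trans c1, fun t ht x hx => (h5 t ht x hx).trans c1,
    h3.mono c2, hC ▸ h6⟩

/-- The data of the frozen-coefficient iteration near the profile `us` (with derivatives `ps`,
`qs`) on a time interval of length `δ`: bounds `Λ` for the nonlinearities on a box, `ε` for the
distance of the frozen coefficient `a₀` to the true one at the initial time. -/
structure Setup (α l r T M t0 δ Λ h ε Kc Bq Hq : ℝ) (A f Gl Gr : ℝ × ℝ × ℝ × ℝ → ℝ)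
    (a₀ b₀ us ps qs : ℝ → ℝ) : Prop where
  hα : α ∈ Ioo (0:ℝ) 1
  hlr : l < r
  hΛ : 0 ≤ Λ
  hδ : 0 < δ
  hδ1 : δ ≤ 1
  hδ2 : δ ≤ ((r - l) / 2) ^ 2
  hh : 1 ≤ h
  hε : 0 ≤ ε
  nA : NemBd (Box T l r M) Λ A
  nf : NemBd (Box T l r M) Λ f
  nl : NemBd (Box T l r M) Λ Gl
  nr : NemBd (Box T l r M) Λ Gr
  box : ∀ t ∈ Icc 0 δ, ∀ x ∈ Icc l r, ∀ v p : ℝ, |v| ≤ 1 → |p| ≤ 1 →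
    (t0 + t, x, us x + v, ps x + p) ∈ Box T l r M
  Pu : PH α (Icc 0 δ) (Icc l r) (fun _ x => us x) (h - 1)
  Pp : PH α (Icc 0 δ) (Icc l r) (fun _ x => ps x) (h - 1)
  hKc : 0 ≤ Kc
  A0 : ∀ x ∈ Icc l r, ∀ x' ∈ Icc l r, |a₀ x - a₀ x'| ≤ Kc * |x - x'| ^ α
  B0 : ∀ x ∈ Icc l r, |b₀ x| ≤ Kc
  B1 : ∀ x ∈ Icc l r, ∀ x' ∈ Icc l r, |b₀ x - b₀ x'| ≤ Kc * |x - x'| ^ α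
  hHq : 0 ≤ Hq
  hqs : ∀ x ∈ Icc l r, |qs x| ≤ Bq
  hqs' : ∀ x ∈ Icc l r, ∀ x' ∈ Icc l r, |qs x - qs x'| ≤ Hq * |x - x'| ^ α
  capp : ∀ x ∈ Icc l r, |A (t0, x, us x, ps x) - a₀ x| ≤ ε

/-- An increment: a function with zero initial value whose top order Hölder constants are `N`. -/
structure Inc (α l r δ : ℝ) (v d p q : ℝ → ℝ → ℝ) (N : ℝ) : Prop where
  rel : HeatRel (Icc 0 δ) (Icc l r) v d p q
  hd : PH α (Icc 0 δ) (Icc l r) d N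
  hq : PH α (Icc 0 δ) (Icc l r) q N
  v0 : ∀ x ∈ Icc l r, v 0 x = 0
  d0 : ∀ x ∈ Icc l r, |d 0 x| ≤ N

/-- Right-hand side and the two boundary data produced by an increment `(v, p, q)`. -/
def qmap (A f Gl Gr : ℝ × ℝ × ℝ × ℝ → ℝ) (a₀ b₀ us ps qs : ℝ → ℝ) (l r t0 : ℝ)
    (v p q : ℝ → ℝ → ℝ) : Fin 3 → ℝ → ℝ → ℝ :=
  ![Fop A f a₀ b₀ ps qs t0 (fun t x => us x + v t x) (fun t x => ps x + p t x) q,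
    fun t _ => Gl (t0 + t, l, us l + v t l, ps l + p t l),
    fun t _ => Gr (t0 + t, r, us r + v t r, ps r + p t r)]

/-- The constant relating lower order norms of an increment to its top order norm. -/
def lowC (α l r : ℝ) : ℝ := 2 + 2 * (r - l) ^ (1 - α)

/-- The trace at a fixed point of space, as a function constant in space. -/
lemma PH.trace {α H : ℝ} (hα : α ∈ Ioo (0:ℝ) 1) (hH : 0 ≤ H) {J I I' : Set ℝ} {w : ℝ → ℝ → ℝ}
    (h : PH α J I w H) {y : ℝ} (hy : y ∈ I) : PH α J I' (fun t _ => w t y) H := by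
  intro t ht t' ht' x _ x' _
  refine (h t ht t' ht' y hy y hy).trans (mul_le_mul_of_nonneg_left ?_ hH)
  rw [rho_time hα]
  unfold rho
  linarith [Real.rpow_nonneg (abs_nonneg (x - x')) α]

section setup
variable {α l r T M t0 δ Λ h ε Kc Bq Hq m : ℝ} {A f Gl Gr : ℝ × ℝ × ℝ × ℝ → ℝ}
  {a₀ b₀ us ps qs : ℝ → ℝ} {v d p q v' d' p' q' : ℝ → ℝ → ℝ}
  (S : Setup α l r T M t0 δ Λ h ε Kc Bq Hq A f Gl Gr a₀ b₀ us ps qs)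
include S

/-- Lower order norms of an increment are small for short times. -/
lemma Setup.inc_low {N : ℝ} (hN : 0 ≤ N) (i : Inc α l r δ v d p q N) :
    (∀ t ∈ Icc 0 δ, ∀ x ∈ Icc l r, |q t x| ≤ N * δ ^ (α / 2)) ∧
    (∀ t ∈ Icc 0 δ, ∀ x ∈ Icc l r, |p t x| ≤ lowC α l r * N * δ ^ (α / 2)) ∧
    (∀ t ∈ Icc 0 δ, ∀ x ∈ Icc l r, |v t x| ≤ lowC α l r * N * δ ^ (α / 2)) ∧
    PH α (Icc 0 δ) (Icc l r) p (lowC α l r * N * δ ^ (α / 2)) ∧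
    PH α (Icc 0 δ) (Icc l r) v (lowC α l r * N * δ ^ (α / 2)) :=
  small_time' S.hα S.hlr hN i.rel i.hd i.hq i.v0 S.hδ S.hδ1 S.hδ2 i.d0 rfl

/-- The nonlinear data depend on the increment in a Lipschitz way, with small constant in the top
order and a factor `δ ^ (α / 2)` in the lower orders. -/
lemma Setup.qmap_sub {n : ℝ} (hm : 0 ≤ m) (hn : 0 ≤ n) (i : Inc α l r δ v d p q m)
    (i' : Inc α l r δ v' d' p' q' m)
    (hmθ : lowC α l r * m * δ ^ (α / 2) ≤ 1)
    (j : Inc α l r δ (fun t x => v t x - v' t x) (fun t x => d t x - d' t x)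
      (fun t x => p t x - p' t x) (fun t x => q t x - q' t x) n) :
    ∀ k, PH α (Icc 0 δ) (Icc l r) (fun t x => qmap A f Gl Gr a₀ b₀ us ps qs l r t0 v p q k t x
        - qmap A f Gl Gr a₀ b₀ us ps qs l r t0 v' p' q' k t x)
      ((ε + (Λ * (kap α l r + h) + (Λ * (kap α l r + h) + Kc) +
        (Λ * ((1 + 2 * (kap α l r + h)) * (m + Bq + 1) + (m + Hq)) + 2 * Kc) * lowC α l r) *
          δ ^ (α / 2)) * n) := by
  obtain ⟨q1, p1, v1, pp1, pv1⟩ := S.inc_low hm i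
  obtain ⟨q2, p2, v2, pp2, pv2⟩ := S.inc_low hm i'
  obtain ⟨q3, p3, v3, pp3, pv3⟩ := S.inc_low hn j
  have ll : l ∈ Icc l r := ⟨le_rfl, S.hlr.le⟩
  have rr : r ∈ Icc l r := ⟨S.hlr.le, le_rfl⟩
  have m0 : (0:ℝ) ∈ Icc 0 δ := ⟨le_rfl, S.hδ.le⟩
  have hθ0 : 0 ≤ δ ^ (α / 2) := Real.rpow_nonneg S.hδ.le _
  have hθ1 : δ ^ (α / 2) ≤ 1 := Real.rpow_le_one S.hδ.le S.hδ1 (by linarith [S.hα.1])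
  have hκ : 0 ≤ kap α l r := by
    unfold kap; linarith [Real.rpow_nonneg (sub_pos.2 S.hlr).le (1 - α)]
  have hC : 0 ≤ lowC α l r := by
    unfold lowC; linarith [Real.rpow_nonneg (sub_pos.2 S.hlr).le (1 - α)]
  have hΛ := S.hΛ
  have hKc := S.hKc
  have hh : 0 ≤ h := zero_le_one.trans S.hh
  have hBq : 0 ≤ Bq := (abs_nonneg _).trans (S.hqs l ll)
  have hHq := S.hHq
  have hε := S.hε
  have hJ1 : ∀ t ∈ Icc 0 δ, ∀ t' ∈ Icc 0 δ, |t - t'| ≤ 1 := fun t ht t' ht' =>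
    abs_le.2 ⟨by linarith [ht.1, ht'.2, S.hδ1], by linarith [ht.2, ht'.1, S.hδ1]⟩
  have hW : ∀ t ∈ Icc 0 δ, ∀ x ∈ Icc l r, (t0 + t, x, us x + v t x, ps x + p t x) ∈ Box T l r M :=
    fun t ht x hx => S.box t ht x hx _ _ ((v1 t ht x hx).trans hmθ) ((p1 t ht x hx).trans hmθ)
  have hW' : ∀ t ∈ Icc 0 δ, ∀ x ∈ Icc l r,
      (t0 + t, x, us x + v' t x, ps x + p' t x) ∈ Box T l r M :=
    fun t ht x hx => S.box t ht x hx _ _ ((v2 t ht x hx).trans hmθ) ((p2 t ht x hx).trans hmθ)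
  have hz := (S.Pu.add (pv1.mono hmθ)).mono (by linarith : h - 1 + 1 ≤ h)
  have hz' := (S.Pu.add (pv2.mono hmθ)).mono (by linarith : h - 1 + 1 ≤ h)
  have hp := (S.Pp.add (pp1.mono hmθ)).mono (by linarith : h - 1 + 1 ≤ h)
  have hp' := (S.Pp.add (pp2.mono hmθ)).mono (by linarith : h - 1 + 1 ≤ h)
  have he : 0 ≤ lowC α l r * n * δ ^ (α / 2) := by positivity
  have dz : PH α (Icc 0 δ) (Icc l r) (fun t x => us x + v t x - (us x + v' t x))
      (lowC α l r * n * δ ^ (α / 2)) := pv3.congr fun t _ x _ => by ring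
  have dp : PH α (Icc 0 δ) (Icc l r) (fun t x => ps x + p t x - (ps x + p' t x))
      (lowC α l r * n * δ ^ (α / 2)) := pp3.congr fun t _ x _ => by ring
  have bz : ∀ t ∈ Icc 0 δ, ∀ x ∈ Icc l r, |us x + v t x - (us x + v' t x)|
      ≤ lowC α l r * n * δ ^ (α / 2) := fun t ht x hx => by
    rw [add_sub_add_left_eq_sub]; exact v3 t ht x hx
  have bp : ∀ t ∈ Icc 0 δ, ∀ x ∈ Icc l r, |ps x + p t x - (ps x + p' t x)|
      ≤ lowC α l r * n * δ ^ (α / 2) := fun t ht x hx => by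
    rw [add_sub_add_left_eq_sub]; exact p3 t ht x hx
  -- at the initial time the increment vanishes and only the approximation error remains
  have happ : ∀ t ∈ Icc 0 δ, ∀ x ∈ Icc l r,
      |A (t0 + t, x, us x + v t x, ps x + p t x) - a₀ x|
        ≤ ε + Λ * (kap α l r + h) * δ ^ (α / 2) := by
    intro t ht x hx
    have c1 := NemBd.comp S.hα S.hlr.le hΛ S.nA hJ1 hh hW hz hp t ht 0 m0 x hx x hx
    have p0 := (lower_order_zero S.hα S.hlr hm i.rel i.hd i.hq i.v0 S.hδ.le hx).1
    rw [rho_time S.hα, sub_zero, abs_of_nonneg ht.1] at c1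
    simp only [p0, i.v0 x hx, add_zero] at c1
    have c2 := S.capp x hx
    have c3 : t ^ (α / 2) ≤ δ ^ (α / 2) :=
      Real.rpow_le_rpow ht.1 ht.2 (by linarith [S.hα.1])
    have c4 : Λ * (kap α l r + h) * t ^ (α / 2) ≤ Λ * (kap α l r + h) * δ ^ (α / 2) := by gcongr
    rw [abs_le] at *
    constructor <;> linarith [c1.1, c1.2, c2.1, c2.2]
  -- the boundary data are controlled by the lower order terms only
  have hbd : Λ * (lowC α l r * n * δ ^ (α / 2)) * (1 + 2 * (kap α l r + h)) ≤
      (ε + (Λ * (kap α l r + h) + (Λ * (kap α l r + h) + Kc) +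
        (Λ * ((1 + 2 * (kap α l r + h)) * (m + Bq + 1) + (m + Hq)) + 2 * Kc) * lowC α l r) *
          δ ^ (α / 2)) * n := by
    have e1 : Λ * (1 + 2 * (kap α l r + h)) ≤
        Λ * ((1 + 2 * (kap α l r + h)) * (m + Bq + 1) + (m + Hq)) + 2 * Kc := by
      have : Λ * (1 + 2 * (kap α l r + h)) ≤
        Λ * ((1 + 2 * (kap α l r + h)) * (m + Bq + 1) + (m + Hq)) := by
        apply mul_le_mul_of_nonneg_left _ hΛ
        have : 0 ≤ (1 + 2 * (kap α l r + h)) * (m + Bq) := by positivity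
        linarith
      linarith
    have e2 : Λ * (1 + 2 * (kap α l r + h)) * (lowC α l r * n * δ ^ (α / 2)) ≤
      (Λ * ((1 + 2 * (kap α l r + h)) * (m + Bq + 1) + (m + Hq)) + 2 * Kc) *
        (lowC α l r * n * δ ^ (α / 2)) := by gcongr
    have e3 : 0 ≤ (ε + (Λ * (kap α l r + h) + (Λ * (kap α l r + h) + Kc)) * δ ^ (α / 2)) * n := by
      positivity
    linarith
  intro k
  fin_cases k
  · have := Fop_sub (ps := ps) S.hα S.hlr.le hΛ S.nA S.nf hJ1 hh hW hz hp hKc S.A0 S.B0 S.B1 hHq S.hqs S.hqs'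
      he hm hW' hz' hp' dz dp bz bp happ j.hq q3 i'.hq
      (fun t ht x hx => (q2 t ht x hx).trans (mul_le_of_le_one_right hm hθ1))
    exact this.mono (le_of_eq (by ring))
  · exact PH.trace S.hα ((by positivity : 0 ≤ Λ * (lowC α l r * n * δ ^ (α / 2)) *
      (1 + 2 * (kap α l r + h))).trans hbd) ((NemBd.comp_sub S.hα S.hlr.le hΛ S.nl hJ1 hh hW hz hp he
        hW' hz' hp' dz dp bz bp).1.mono hbd) ll
  · exact PH.trace S.hα ((by positivity : 0 ≤ Λ * (lowC α l r * n * δ ^ (α / 2)) *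
      (1 + 2 * (kap α l r + h))).trans hbd) ((NemBd.comp_sub S.hα S.hlr.le hΛ S.nr hJ1 hh hW hz hp he
        hW' hz' hp' dz dp bz bp).1.mono hbd) rr

/-- The data generated by the zero increment are bounded independently of the time step. -/
lemma Setup.qmap_zero : (∀ k, PH α (Icc 0 δ) (Icc l r)
      (qmap A f Gl Gr a₀ b₀ us ps qs l r t0 (fun _ _ => 0) (fun _ _ => 0) (fun _ _ => 0) k)
      (Λ * (kap α l r + h) * Bq + Λ * Hq + Λ * (kap α l r + h))) ∧
    ∀ k, ∀ x ∈ Icc l r, |qmap A f Gl Gr a₀ b₀ us ps qs l r t0 (fun _ _ => 0) (fun _ _ => 0)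
      (fun _ _ => 0) k 0 x| ≤ Λ * Bq + Λ := by
  have ll : l ∈ Icc l r := ⟨le_rfl, S.hlr.le⟩
  have rr : r ∈ Icc l r := ⟨S.hlr.le, le_rfl⟩
  have m0 : (0:ℝ) ∈ Icc 0 δ := ⟨le_rfl, S.hδ.le⟩
  have hκ : 0 ≤ kap α l r := by
    unfold kap; linarith [Real.rpow_nonneg (sub_pos.2 S.hlr).le (1 - α)]
  have hΛ := S.hΛ
  have hh : 0 ≤ h := zero_le_one.trans S.hh
  have hBq : 0 ≤ Bq := (abs_nonneg _).trans (S.hqs l ll)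
  have hHq := S.hHq
  have hJ1 : ∀ t ∈ Icc 0 δ, ∀ t' ∈ Icc 0 δ, |t - t'| ≤ 1 := fun t ht t' ht' =>
    abs_le.2 ⟨by linarith [ht.1, ht'.2, S.hδ1], by linarith [ht.2, ht'.1, S.hδ1]⟩
  have hW : ∀ t ∈ Icc 0 δ, ∀ x ∈ Icc l r, (t0 + t, x, us x, ps x) ∈ Box T l r M :=
    fun t ht x hx => by simpa using S.box t ht x hx 0 0 (by simp) (by simp)
  have hz := S.Pu.mono (by linarith : h - 1 ≤ h)
  have hp := S.Pp.mono (by linarith : h - 1 ≤ h)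
  have cA := NemBd.comp S.hα S.hlr.le hΛ S.nA hJ1 hh hW hz hp
  have cf := NemBd.comp S.hα S.hlr.le hΛ S.nf hJ1 hh hW hz hp
  have cl := NemBd.comp S.hα S.hlr.le hΛ S.nl hJ1 hh hW hz hp
  have cr := NemBd.comp S.hα S.hlr.le hΛ S.nr hJ1 hh hW hz hp
  have cF := (cA.mul (PH.of_space (J := Icc 0 δ) hHq S.hqs') (fun t ht x hx => S.nA.1 _ (hW t ht x hx))
    (fun _ _ x hx => S.hqs x hx)).add cf
  have hb : Λ * (kap α l r + h) ≤ Λ * (kap α l r + h) * Bq + Λ * Hq + Λ * (kap α l r + h) :=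
    le_add_of_nonneg_left (by positivity)
  have hb0 : 0 ≤ Λ * (kap α l r + h) := by positivity
  constructor
  · intro k
    fin_cases k
    · exact cF.congr fun t ht x hx => by simp [qmap, Fop]
    · refine (PH.trace S.hα hb0 cl ll).mono hb |>.congr fun t ht x hx => by simp [qmap]
    · refine (PH.trace S.hα hb0 cr rr).mono hb |>.congr fun t ht x hx => by simp [qmap]
  · intro k x hx
    have hΛBq : 0 ≤ Λ * Bq := by positivity
    fin_cases k
    · have : qmap A f Gl Gr a₀ b₀ us ps qs l r t0 (fun _ _ => 0) (fun _ _ => 0) (fun _ _ => 0) 0 0 x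
        = A (t0 + 0, x, us x, ps x) * qs x + f (t0 + 0, x, us x, ps x) := by simp [qmap, Fop]
      refine (congrArg abs this).le.trans ((abs_add_le _ _).trans ?_)
      rw [abs_mul]
      have a1 := S.nA.1 _ (hW 0 m0 x hx)
      have a2 := S.nf.1 _ (hW 0 m0 x hx)
      have a3 := S.hqs x hx
      gcongr
    · have : qmap A f Gl Gr a₀ b₀ us ps qs l r t0 (fun _ _ => 0) (fun _ _ => 0) (fun _ _ => 0) 1 0 x
        = Gl (t0 + 0, l, us l, ps l) := by simp [qmap]
      refine (congrArg abs this).le.trans ((S.nl.1 _ (hW 0 m0 l ll)).trans (by linarith))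
    · have : qmap A f Gl Gr a₀ b₀ us ps qs l r t0 (fun _ _ => 0) (fun _ _ => 0) (fun _ _ => 0) 2 0 x
        = Gr (t0 + 0, r, us r, ps r) := by simp [qmap]
      refine (congrArg abs this).le.trans ((S.nr.1 _ (hW 0 m0 r rr)).trans (by linarith))

end setup

/-! ### Solving the frozen fixed point problem -/

/-- Solvability of the linear problem with frozen coefficients, on a fixed time interval. -/
def LinSolv (α l r δ K : ℝ) (a₀ b₀ : ℝ → ℝ) : Prop :=
  ∀ (H : ℝ) (F : ℝ → ℝ → ℝ) (k0 k1 : ℝ → ℝ), 0 ≤ H →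
      PH α (Icc 0 δ) (Icc l r) F H →
      (∀ t ∈ Icc 0 δ, ∀ t' ∈ Icc 0 δ, |k0 t - k0 t'| ≤ H * |t - t'| ^ (α / 2)) →
      (∀ t ∈ Icc 0 δ, ∀ t' ∈ Icc 0 δ, |k1 t - k1 t'| ≤ H * |t - t'| ^ (α / 2)) →
      k0 0 = F 0 l → k1 0 = F 0 r →
      ∃ v d p q : ℝ → ℝ → ℝ, HeatRel (Icc 0 δ) (Icc l r) v d p q ∧
        PH α (Icc 0 δ) (Icc l r) d (K * H) ∧ PH α (Icc 0 δ) (Icc l r) q (K * H) ∧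
        (∀ t ∈ Icc 0 δ, ∀ x ∈ Icc l r, d t x = a₀ x * q t x - b₀ x * p t x + F t x) ∧
        (∀ t ∈ Icc 0 δ, d t l = k0 t ∧ d t r = k1 t) ∧ ∀ x ∈ Icc l r, v 0 x = 0

/-- A solution of the frozen problem inherits the Hölder constant of its data. -/
lemma LinSolv.est {α l r δ K N H : ℝ} {a₀ b₀ : ℝ → ℝ} (hex : LinSolv α l r δ K a₀ b₀)
    (hα : α ∈ Ioo (0:ℝ) 1) (hlr : l < r) (hδ : 0 < δ) (hK : 0 ≤ K) (hH : 0 ≤ H) (hN : 0 ≤ N)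
    (ha : ∀ x ∈ Icc l r, 0 ≤ a₀ x) {v d p q F : ℝ → ℝ → ℝ}
    (hR : HeatRel (Icc 0 δ) (Icc l r) v d p q) (hd : PH α (Icc 0 δ) (Icc l r) d N)
    (hq : PH α (Icc 0 δ) (Icc l r) q N) (hv : ∀ x ∈ Icc l r, v 0 x = 0)
    (hF : PH α (Icc 0 δ) (Icc l r) F H)
    (heq : ∀ t ∈ Icc 0 δ, ∀ x ∈ Icc l r, d t x = a₀ x * q t x - b₀ x * p t x + F t x)
    (hl : ∀ t ∈ Icc 0 δ, ∀ t' ∈ Icc 0 δ, |d t l - d t' l| ≤ H * |t - t'| ^ (α / 2))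
    (hr : ∀ t ∈ Icc 0 δ, ∀ t' ∈ Icc 0 δ, |d t r - d t' r| ≤ H * |t - t'| ^ (α / 2)) :
    PH α (Icc 0 δ) (Icc l r) d (K * H) ∧ PH α (Icc 0 δ) (Icc l r) q (K * H) := by
  have ll : l ∈ Icc l r := ⟨le_rfl, hlr.le⟩
  have rr : r ∈ Icc l r := ⟨hlr.le, le_rfl⟩
  have m0 : (0:ℝ) ∈ Icc 0 δ := ⟨le_rfl, hδ.le⟩
  have hd0 : ∀ x ∈ Icc l r, d 0 x = F 0 x := fun x hx => by
    obtain ⟨e1, e2⟩ := lower_order_zero hα hlr hN hR hd hq hv hδ.le hx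
    rw [heq 0 m0 x hx, e1, e2]; ring
  obtain ⟨v', d', p', q', hR', hd', hq', heq', hk', hv'⟩ :=
    hex H F (fun t => d t l) (fun t => d t r) hH hF hl hr (hd0 l ll) (hd0 r rr)
  have hd0' : ∀ x ∈ Icc l r, d' 0 x = F 0 x := fun x hx => by
    obtain ⟨e1, e2⟩ := lower_order_zero hα hlr (mul_nonneg hK hH) hR' hd' hq' hv' hδ.le hx
    rw [heq' 0 m0 x hx, e1, e2]; ring
  have hC := fun t ht x hx => (hd.sub hd').abs_le_of_zero hα (by positivity)
    (fun x hx => by rw [hd0 x hx, hd0' x hx, sub_self]) (t := t) (x := x) ht hx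
  have hU := HeatRel.unique (B := fun x => - b₀ x) hδ hlr hR hR' hC ha
    (fun t ht x hx => by rw [heq t ht x hx, heq' t ht x hx]; ring)
    (fun x hx => by rw [hv x hx, hv' x hx]) (fun t ht => (hk' t ht).1.symm)
    (fun t ht => (hk' t ht).2.symm)
  exact ⟨hd'.congr fun t ht x hx => (hU t ht x hx).2.1, hq'.congr fun t ht x hx => (hU t ht x hx).2.2.2⟩

section setup
variable {α l r T M t0 δ Λ h ε Kc Bq Hq m : ℝ} {A f Gl Gr : ℝ × ℝ × ℝ × ℝ → ℝ}
  {a₀ b₀ us ps qs : ℝ → ℝ}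
  (S : Setup α l r T M t0 δ Λ h ε Kc Bq Hq A f Gl Gr a₀ b₀ us ps qs)
include S

/-- The fixed point of the frozen-coefficient iteration. -/
lemma Setup.fixed_point {K R m C1 Z : ℝ} (hK : 0 ≤ K) (ha : ∀ x ∈ Icc l r, 0 ≤ a₀ x)
    (hex : LinSolv α l r δ K a₀ b₀)
    (hC1 : C1 = Λ * (kap α l r + h) * Bq + Λ * Hq + Λ * (kap α l r + h))
    (hZ : Z = Λ * Bq + Λ) (hR : R = 2 * C1 + Z) (hm : m = K * R + Z)
    (hmθ : lowC α l r * m * δ ^ (α / 2) ≤ 1)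
    (hC3 : (Λ * (kap α l r + h) + (Λ * (kap α l r + h) + Kc) +
        (Λ * ((1 + 2 * (kap α l r + h)) * (m + Bq + 1) + (m + Hq)) + 2 * Kc) * lowC α l r) *
          δ ^ (α / 2) ≤ ε) (hε : 16 * (K + 1) * ε ≤ 1)
    (hcl : A (t0, l, us l, ps l) * qs l + f (t0, l, us l, ps l) = Gl (t0, l, us l, ps l))
    (hcr : A (t0, r, us r, ps r) * qs r + f (t0, r, us r, ps r) = Gr (t0, r, us r, ps r)) :
    ∃ v d p q, Inc α l r δ v d p q m ∧
      (∀ t ∈ Icc 0 δ, ∀ x ∈ Icc l r, d t x = a₀ x * q t x - b₀ x * p t x +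
        qmap A f Gl Gr a₀ b₀ us ps qs l r t0 v p q 0 t x) ∧
      (∀ t ∈ Icc 0 δ, d t l = qmap A f Gl Gr a₀ b₀ us ps qs l r t0 v p q 1 t l) ∧
      ∀ t ∈ Icc 0 δ, d t r = qmap A f Gl Gr a₀ b₀ us ps qs l r t0 v p q 2 t r := by
  have hα := S.hα
  have hlr := S.hlr
  have hδ := S.hδ
  have ll : l ∈ Icc l r := ⟨le_rfl, hlr.le⟩
  have rr : r ∈ Icc l r := ⟨hlr.le, le_rfl⟩
  have m0 : (0:ℝ) ∈ Icc 0 δ := ⟨le_rfl, hδ.le⟩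
  have hκ : 0 ≤ kap α l r := by
    unfold kap; linarith [Real.rpow_nonneg (sub_pos.2 hlr).le (1 - α)]
  have hΛ := S.hΛ
  have hh : 0 ≤ h := zero_le_one.trans S.hh
  have hBq : 0 ≤ Bq := (abs_nonneg _).trans (S.hqs l ll)
  have hHq := S.hHq
  have hε0 := S.hε
  have hC10 : 0 ≤ C1 := by rw [hC1]; positivity
  have hZ0 : 0 ≤ Z := by rw [hZ]; positivity
  have hR0 : 0 ≤ R := by rw [hR]; positivity
  have hKR : 0 ≤ K * R := by positivity
  have hm0 : 0 ≤ m := by rw [hm]; positivity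
  obtain ⟨hN0, hz0⟩ := S.qmap_zero
  set N : (ℝ → ℝ → ℝ) → (ℝ → ℝ → ℝ) → (ℝ → ℝ → ℝ) → Fin 3 → ℝ → ℝ → ℝ :=
    qmap A f Gl Gr a₀ b₀ us ps qs l r t0 with hN
  set z : Fin 3 → ℝ → ℝ := fun k x => N (fun _ _ => 0) (fun _ _ => 0) (fun _ _ => 0) k 0 x with hz
  have hzl : z 1 l = z 0 l := by simp [hz, hN, qmap, Fop, hcl]
  have hzr : z 2 r = z 0 r := by simp [hz, hN, qmap, Fop, hcr]
  -- a single linear step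
  have step : ∀ ω : Fin 3 → ℝ → ℝ → ℝ, ∃ v d p q : ℝ → ℝ → ℝ, Good α δ (Icc l r) R z ω →
      Inc α l r δ v d p q m ∧
      (∀ t ∈ Icc 0 δ, ∀ x ∈ Icc l r, d t x = a₀ x * q t x - b₀ x * p t x + ω 0 t x) ∧
      (∀ t ∈ Icc 0 δ, d t l = ω 1 t l) ∧ (∀ t ∈ Icc 0 δ, d t r = ω 2 t r) ∧
      ∀ x ∈ Icc l r, p 0 x = 0 ∧ q 0 x = 0 := by
    intro ω
    by_cases hω : Good α δ (Icc l r) R z ω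
    · obtain ⟨v, d, p, q, h1, h2, h3, h4, h5, h6⟩ := hex R (ω 0) (fun t => ω 1 t l)
        (fun t => ω 2 t r) hR0 (hω 0).1
        (fun t ht t' ht' => by simpa [rho_time hα] using (hω 1).1 t ht t' ht' l ll l ll)
        (fun t ht t' ht' => by simpa [rho_time hα] using (hω 2).1 t ht t' ht' r rr r rr)
        (by rw [(hω 1).2 l ll, (hω 0).2 l ll, hzl]) (by rw [(hω 2).2 r rr, (hω 0).2 r rr, hzr])
      have h7 := fun x hx => lower_order_zero hα hlr hKR h1 h2 h3 h6 hδ.le (x := x) hx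
      refine ⟨v, d, p, q, fun _ => ⟨⟨h1, h2.mono (by linarith), h3.mono (by linarith), h6, ?_⟩, h4,
        fun t ht => (h5 t ht).1, fun t ht => (h5 t ht).2, h7⟩⟩
      intro x hx
      rw [h4 0 m0 x hx, (h7 x hx).1, (h7 x hx).2, (hω 0).2 x hx]
      have := hz0 0 x hx
      simp only [mul_zero, sub_self, zero_add]
      linarith
    · exact ⟨0, 0, 0, 0, fun h => absurd h hω⟩
  choose v d p q hs using step
  have e2 : 2 * ε ≤ 1 / 8 := by nlinarith
  have e3 : 2 * ε * K ≤ 1 / 8 := by nlinarith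
  have hzero : ∀ n, 0 ≤ n → Inc α l r δ (fun _ _ => 0) (fun _ _ => 0) (fun _ _ => 0)
      (fun _ _ => 0) n := by
    intro n hn
    have : PH α (Icc 0 δ) (Icc l r) (fun _ _ => 0) n := by
      intro t _ t' _ x _ x' _
      simpa using mul_nonneg hn (rho_nonneg α t x t' x')
    exact ⟨fun t _ x _ => ⟨hasDerivWithinAt_const _ _ _, hasDerivWithinAt_const _ _ _,
      hasDerivWithinAt_const _ _ _⟩, this, this, fun _ _ => rfl,
      fun _ _ => by simpa using hn⟩
  obtain ⟨ω, hω, hfix⟩ : ∃ ω, Good α δ (Icc l r) R z ω ∧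
      ∀ k, ∀ t ∈ Icc 0 δ, ∀ x ∈ Icc l r, N (v ω) (p ω) (q ω) k t x = ω k t x := by
    refine picard hα hδ S.hδ1 hR0 z (I := Icc l r)
      (fun k => by
        intro t ht t' ht' x hx x' hx'
        have h1 := hN0 k 0 m0 0 m0 x hx x' hx'
        refine h1.trans ((mul_le_mul_of_nonneg_right (?_ : _ ≤ R) (rho_nonneg _ _ _ _ _)).trans
          (mul_le_mul_of_nonneg_left ?_ hR0))
        · rw [← hC1]; linarith
        · unfold rho
          rw [sub_zero, abs_zero, Real.zero_rpow (by linarith [hα.1])]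
          linarith [Real.rpow_nonneg (abs_nonneg (t - t')) (α / 2)])
      (fun ω => N (v ω) (p ω) (q ω)) ?_ ?_
    · intro ω hω k
      obtain ⟨h1, h2, h3, h4, h5⟩ := hs ω hω
      constructor
      · have j : Inc α l r δ (fun t x => v ω t x - 0) (fun t x => d ω t x - 0)
          (fun t x => p ω t x - 0) (fun t x => q ω t x - 0) m := by simpa using h1
        have := (S.qmap_sub hm0 hm0 h1 (hzero m hm0) hmθ j k).add (hN0 k)
        refine (this.congr fun t _ x _ => by simp [hN]).mono ?_
        rw [← hC1]
        calc _ ≤ (ε + ε) * m + C1 := by gcongr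
          _ = 2 * ε * K * R + 2 * ε * Z + C1 := by rw [hm]; ring
          _ ≤ 1 / 8 * R + 1 / 8 * Z + C1 := by gcongr
          _ ≤ R := by linarith
      · intro x hx
        rw [hz, hN]
        fin_cases k
        · simp [qmap, Fop, h1.v0 x hx, h5 x hx]
        · simp [qmap, h1.v0 l ll, h5 l ll]
        · simp [qmap, h1.v0 r rr, h5 r rr]
    · intro ω ω' h' hω hω' hh' hdiff k
      obtain ⟨h1, h2, h3, h4, h5⟩ := hs ω hω
      obtain ⟨g1, g2, g3, g4, g5⟩ := hs ω' hω'
      have hKh : 0 ≤ K * h' := by positivity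
      have hest := hex.est (F := fun t x => ω 0 t x - ω' 0 t x) hα hlr hδ hK hh' (add_nonneg hm0 hm0) ha
        (h1.rel.sub g1.rel) (h1.hd.sub g1.hd) (h1.hq.sub g1.hq)
        (fun x hx => by rw [h1.v0 x hx, g1.v0 x hx, sub_self]) (hdiff 0)
        (fun t ht x hx => by rw [h2 t ht x hx, g2 t ht x hx]; ring)
        (fun t ht t' ht' => by
          rw [h3 t ht, g3 t ht, h3 t' ht', g3 t' ht']
          simpa [rho_time hα] using hdiff 1 t ht t' ht' l ll l ll)
        (fun t ht t' ht' => by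
          rw [h4 t ht, g4 t ht, h4 t' ht', g4 t' ht']
          simpa [rho_time hα] using hdiff 2 t ht t' ht' r rr r rr)
      have j : Inc α l r δ (fun t x => v ω t x - v ω' t x) (fun t x => d ω t x - d ω' t x)
          (fun t x => p ω t x - p ω' t x) (fun t x => q ω t x - q ω' t x) (K * h') :=
        ⟨h1.rel.sub g1.rel, hest.1, hest.2, fun x hx => by rw [h1.v0 x hx, g1.v0 x hx, sub_self],
          fun x hx => by
            rw [h2 0 m0 x hx, g2 0 m0 x hx, (h5 x hx).1, (h5 x hx).2, (g5 x hx).1, (g5 x hx).2,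
              (hω 0).2 x hx, (hω' 0).2 x hx]
            simpa using hKh⟩
      refine (S.qmap_sub hm0 hKh h1 g1 hmθ j k).mono ?_
      calc _ ≤ (ε + ε) * (K * h') := by gcongr
        _ = 2 * ε * K * h' := by ring
        _ ≤ 1 / 8 * h' := by gcongr
        _ ≤ h' / 2 := by linarith

  obtain ⟨h1, h2, h3, h4, h5⟩ := hs ω hω
  refine ⟨v ω, d ω, p ω, q ω, h1, fun t ht x hx => ?_, fun t ht => ?_, fun t ht => ?_⟩
  · rw [h2 t ht x hx, hfix 0 t ht x hx]
  · rw [h3 t ht, hfix 1 t ht l ll]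
  · rw [h4 t ht, hfix 2 t ht r rr]

end setup

/-! ### Short time existence -/

/-- Hölder bounds for the coefficients of `(c⁻¹ ∂)² = c⁻² ∂² - c' c⁻³ ∂`. -/
lemma frozen_coeff {α l r : ℝ} (hα : α ∈ Ioo (0:ℝ) 1) {c : ℝ → ℝ} (cc : ContDiff ℝ 2 c)
    (c0 : ∀ x ∈ Icc l r, c x ≠ 0) : ∃ Kc, 0 ≤ Kc ∧
      (∀ x ∈ Icc l r, ∀ x' ∈ Icc l r, |(c x)⁻¹ ^ 2 - (c x')⁻¹ ^ 2| ≤ Kc * |x - x'| ^ α) ∧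
      (∀ x ∈ Icc l r, |deriv c x * (c x)⁻¹ ^ 3| ≤ Kc) ∧
      ∀ x ∈ Icc l r, ∀ x' ∈ Icc l r,
        |deriv c x * (c x)⁻¹ ^ 3 - deriv c x' * (c x')⁻¹ ^ 3| ≤ Kc * |x - x'| ^ α := by
  have cinv : ContDiffOn ℝ 1 (fun x => (c x)⁻¹) (Icc l r) :=
    (cc.of_le (by norm_num)).contDiffOn.inv c0
  have cder : ContDiffOn ℝ 1 (deriv c) (Icc l r) :=
    (contDiff_succ_iff_deriv.1
      (one_add_one_eq_two (R := WithTop ℕ∞) ▸ cc : ContDiff ℝ (1 + 1) c)).2.2.contDiffOn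
  obtain ⟨k1, hk1, -, a1⟩ := holder_of_contDiffOn hα (cinv.pow 2)
  obtain ⟨k2, hk2, b1, b2⟩ := holder_of_contDiffOn hα (cder.mul (cinv.pow 3))
  exact ⟨k1 + k2, by positivity, fun x hx x' hx' => (a1 x hx x' hx').trans (by gcongr; linarith),
    fun x hx => (b1 x hx).trans (by linarith),
    fun x hx x' hx' => (b2 x hx x' hx').trans (by gcongr; linarith)⟩

/-- The parameters of the frozen-coefficient iteration can be chosen consistently. -/
lemma setup_exists {α l r T t0 Hq : ℝ} (hα : α ∈ Ioo (0:ℝ) 1) (hlr : l < r)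
    {A f Gl Gr : ℝ × ℝ × ℝ × ℝ → ℝ} (hA : ContDiffOn ℝ 2 A (Dom T l r))
    (hf : ContDiffOn ℝ 2 f (Dom T l r)) (hGl : ContDiffOn ℝ 2 Gl (Dom T l r))
    (hGr : ContDiffOn ℝ 2 Gr (Dom T l r)) (hpos : ∀ y ∈ Dom T l r, 0 < A y)
    (h0 : 0 ≤ t0) (hT : t0 < T) {us ps qs : ℝ → ℝ}
    (hus : ∀ x ∈ Icc l r, HasDerivWithinAt us (ps x) (Icc l r) x)
    (hps : ∀ x ∈ Icc l r, HasDerivWithinAt ps (qs x) (Icc l r) x)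
    (hHq : 0 ≤ Hq) (hqs : ∀ x ∈ Icc l r, ∀ x' ∈ Icc l r, |qs x - qs x'| ≤ Hq * |x - x'| ^ α) :
    ∃ M Λ h ε Kc Bq K a₀ b₀ δ1, 0 < δ1 ∧ 0 ≤ K ∧ 0 < ε ∧ 16 * (K + 1) * ε ≤ 1 ∧
      (∀ x ∈ Icc l r, 0 ≤ a₀ x) ∧ ∀ δ, 0 < δ → δ ≤ δ1 → LinSolv α l r δ K a₀ b₀ ∧
      Setup α l r T M t0 δ Λ h ε Kc Bq Hq A f Gl Gr a₀ b₀ us ps qs := by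
  have ll : l ∈ Icc l r := ⟨le_rfl, hlr.le⟩
  have hT0 : 0 < T := h0.trans_lt hT
  have cus : ContinuousOn us (Icc l r) := fun x hx => (hus x hx).continuousWithinAt
  have cps : ContinuousOn ps (Icc l r) := fun x hx => (hps x hx).continuousWithinAt
  have cqs : ContinuousOn qs (Icc l r) := by
    have := (PH.of_space (J := {(0:ℝ)}) hHq hqs).continuousOn hα
    exact this.comp (f := fun x => ((0:ℝ), x)) (by fun_prop) fun x hx => ⟨rfl, hx⟩
  obtain ⟨Bu, hBu⟩ := isCompact_Icc.exists_bound_of_continuousOn cus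
  obtain ⟨Bp, hBp⟩ := isCompact_Icc.exists_bound_of_continuousOn cps
  obtain ⟨Bq, hBq⟩ := isCompact_Icc.exists_bound_of_continuousOn cqs
  simp only [Real.norm_eq_abs] at hBu hBp hBq
  have hBq0 : 0 ≤ Bq := (abs_nonneg _).trans (hBq l ll)
  have hBp0 : 0 ≤ Bp := (abs_nonneg _).trans (hBp l ll)
  have hBu0 : 0 ≤ Bu := (abs_nonneg _).trans (hBu l ll)
  have Hus := holder_of_deriv hα hus hBp
  have Hps := holder_of_deriv hα hps hBq
  have hw0 : 0 ≤ (r - l) ^ (1 - α) := Real.rpow_nonneg (by linarith) _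
  obtain ⟨Λ1, hΛ1, n1⟩ := nem_exists hT0 hlr hA (Bu + Bp + 1)
  obtain ⟨Λ2, hΛ2, n2⟩ := nem_exists hT0 hlr hf (Bu + Bp + 1)
  obtain ⟨Λ3, hΛ3, n3⟩ := nem_exists hT0 hlr hGl (Bu + Bp + 1)
  obtain ⟨Λ4, hΛ4, n4⟩ := nem_exists hT0 hlr hGr (Bu + Bp + 1)
  have hDom : ∀ x ∈ Icc l r, (t0, x, us x, ps x) ∈ Dom T l r := fun x hx =>
    ⟨⟨h0, hT.le⟩, hx, trivial⟩
  have cA : ContinuousOn (fun x => A (t0, x, us x, ps x)) (Icc l r) :=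
    hA.continuousOn.comp (continuousOn_const.prodMk (continuousOn_id.prodMk (cus.prodMk cps))) hDom
  obtain ⟨lam, Lam, L, hlam, hLam, hL, happ⟩ :=
    approx_coeff hlr cA fun x hx => hpos _ (hDom x hx)
  obtain ⟨K, hK, hlin⟩ := linear_exists hα hlr hL hlam hLam
  have hε : 0 < 1 / (16 * (K + 1)) := by positivity
  obtain ⟨c, cc, cb, cint, capp⟩ := happ _ hε
  obtain ⟨δ1, hδ1, hex⟩ := hlin c cc cb cint
  obtain ⟨Kc, hKc, A0, B0, B1⟩ := frozen_coeff hα cc fun x hx => (hlam.trans_le (cb x hx).1).ne'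
  have hrl : 0 < r - l := sub_pos.2 hlr
  have hTt : 0 < T - t0 := sub_pos.2 hT
  refine ⟨Bu + Bp + 1, Λ1 + Λ2 + Λ3 + Λ4, (Bp + Bq) * (r - l) ^ (1 - α) + 1, 1 / (16 * (K + 1)), Kc,
    Bq, K, fun x => (c x)⁻¹ ^ 2, fun x => deriv c x * (c x)⁻¹ ^ 3,
    min δ1 (min 1 (min (T - t0) (((r - l) / 2) ^ 2))), by positivity, hK, hε,
    by rw [mul_one_div, div_self (by positivity)], fun x _ => by positivity, fun δ hδ hle => ?_⟩
  have e1 : δ ≤ δ1 := hle.trans (min_le_left _ _)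
  have e4 : δ ≤ 1 := hle.trans ((min_le_right _ _).trans (min_le_left _ _))
  have e5 : δ ≤ T - t0 :=
    hle.trans ((min_le_right _ _).trans ((min_le_right _ _).trans (min_le_left _ _)))
  have e6 : δ ≤ ((r - l) / 2) ^ 2 :=
    hle.trans ((min_le_right _ _).trans ((min_le_right _ _).trans (min_le_right _ _)))
  refine ⟨hex δ hδ e1, ⟨hα, hlr, by positivity, hδ, e4, e6,
    le_add_of_nonneg_left (by positivity), hε.le, n1.mono (by linarith), n2.mono (by linarith),
    n3.mono (by linarith), n4.mono (by linarith), ?_, ?_, ?_, hKc, A0, B0, B1, hHq, hBq, hqs, capp⟩⟩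
  · intro t ht x hx v p hv hp
    have i1 := abs_le.1 hv
    have i2 := abs_le.1 hp
    have i3 := abs_le.1 (hBu x hx)
    have i4 := abs_le.1 (hBp x hx)
    exact ⟨⟨by linarith [ht.1], by linarith [ht.2]⟩, hx,
      ⟨by linarith [i1.1, i3.1], by linarith [i1.2, i3.2]⟩,
      ⟨by linarith [i2.1, i4.1], by linarith [i2.2, i4.2]⟩⟩
  · rw [add_sub_cancel_right]
    refine (PH.of_space (by positivity) Hus).mono ?_
    gcongr; linarith
  · rw [add_sub_cancel_right]
    refine (PH.of_space (by positivity) Hps).mono ?_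
    gcongr; linarith

/-- Short time existence for the nonlinear problem with compatible initial data. -/
lemma local_exists {α l r T t0 Hq : ℝ} (hα : α ∈ Ioo (0:ℝ) 1) (hlr : l < r)
    {A f Gl Gr : ℝ × ℝ × ℝ × ℝ → ℝ} (hA : ContDiffOn ℝ 2 A (Dom T l r))
    (hf : ContDiffOn ℝ 2 f (Dom T l r)) (hGl : ContDiffOn ℝ 2 Gl (Dom T l r))
    (hGr : ContDiffOn ℝ 2 Gr (Dom T l r)) (hpos : ∀ y ∈ Dom T l r, 0 < A y)
    (h0 : 0 ≤ t0) (hT : t0 < T) {us ps qs : ℝ → ℝ}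
    (hus : ∀ x ∈ Icc l r, HasDerivWithinAt us (ps x) (Icc l r) x)
    (hps : ∀ x ∈ Icc l r, HasDerivWithinAt ps (qs x) (Icc l r) x)
    (hHq : 0 ≤ Hq) (hqs : ∀ x ∈ Icc l r, ∀ x' ∈ Icc l r, |qs x - qs x'| ≤ Hq * |x - x'| ^ α)
    (hcl : A (t0, l, us l, ps l) * qs l + f (t0, l, us l, ps l) = Gl (t0, l, us l, ps l))
    (hcr : A (t0, r, us r, ps r) * qs r + f (t0, r, us r, ps r) = Gr (t0, r, us r, ps r)) :
    ∃ δ, 0 < δ ∧ t0 + δ ≤ T ∧ ∃ N U D P Q, QSol α l r A f Gl Gr (Icc t0 (t0 + δ)) U D P Q N ∧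
      ∀ x ∈ Icc l r, U t0 x = us x := by
  have ll : l ∈ Icc l r := ⟨le_rfl, hlr.le⟩
  have rr : r ∈ Icc l r := ⟨hlr.le, le_rfl⟩
  have hβ : 0 < α / 2 := by linarith [hα.1]
  obtain ⟨M, Λ, h, ε, Kc, Bq, K, a₀, b₀, δ1, hδ1, hK, hε, hKε, ha, hS⟩ :=
    setup_exists hα hlr hA hf hGl hGr hpos h0 hT hus hps hHq hqs
  obtain ⟨C1, hC1⟩ : ∃ C1, C1 = Λ * (kap α l r + h) * Bq + Λ * Hq + Λ * (kap α l r + h) := ⟨_, rfl⟩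
  obtain ⟨Z, hZ⟩ : ∃ Z, Z = Λ * Bq + Λ := ⟨_, rfl⟩
  obtain ⟨R, hR⟩ : ∃ R, R = 2 * C1 + Z := ⟨_, rfl⟩
  obtain ⟨m, hm⟩ : ∃ m, m = K * R + Z := ⟨_, rfl⟩
  obtain ⟨δ2, hδ2, hs2⟩ := exists_small hβ (C := lowC α l r * m) one_pos
  obtain ⟨δ3, hδ3, hs3⟩ := exists_small hβ
    (C := Λ * (kap α l r + h) + (Λ * (kap α l r + h) + Kc) +
        (Λ * ((1 + 2 * (kap α l r + h)) * (m + Bq + 1) + (m + Hq)) + 2 * Kc) * lowC α l r) hε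
  have hTt : 0 < T - t0 := sub_pos.2 hT
  obtain ⟨δ, hδ, e1, e2, e3, e4⟩ : ∃ δ, 0 < δ ∧ δ ≤ δ1 ∧ δ ≤ δ2 ∧ δ ≤ δ3 ∧ δ ≤ T - t0 :=
    ⟨min (min δ1 δ2) (min δ3 (T - t0)), by positivity,
      (min_le_left _ _).trans (min_le_left _ _), (min_le_left _ _).trans (min_le_right _ _),
      (min_le_right _ _).trans (min_le_left _ _), (min_le_right _ _).trans (min_le_right _ _)⟩
  obtain ⟨hex, S⟩ := hS δ hδ e1
  obtain ⟨v, d, p, q, hi, heq, hdl, hdr⟩ := S.fixed_point hK ha hex hC1 hZ hR hm (hs2 δ hδ.le e2)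
    (hs3 δ hδ.le e3) hKε hcl hcr
  have hsh : ∀ {t}, t ∈ Icc t0 (t0 + δ) → t - t0 ∈ Icc 0 δ := fun ht =>
    ⟨by linarith [ht.1], by linarith [ht.2]⟩
  have hPH : ∀ {w : ℝ → ℝ → ℝ} {N : ℝ}, PH α (Icc 0 δ) (Icc l r) w N →
      PH α (Icc t0 (t0 + δ)) (Icc l r) (fun t x => w (t - t0) x) N := by
    intro w N hw t ht t' ht' x hx x' hx'
    have := hw _ (hsh ht) _ (hsh ht') x hx x' hx'
    unfold rho at this ⊢
    rwa [sub_sub_sub_cancel_right] at this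
  refine ⟨δ, hδ, by linarith, max m (m + Hq), fun t x => us x + v (t - t0) x,
    fun t x => d (t - t0) x, fun t x => ps x + p (t - t0) x, fun t x => qs x + q (t - t0) x,
    ⟨?_, ?_, ?_, ?_, ?_, ?_⟩, ?_⟩
  · intro t ht x hx
    obtain ⟨h1, h2, h3⟩ := hi.rel _ (hsh ht) x hx
    refine ⟨(hus x hx).add h1, (hps x hx).add h2, ?_⟩
    have h4 : HasDerivWithinAt (fun s => v (s - t0) x) (d (t - t0) x * 1) (Icc t0 (t0 + δ)) t :=
      HasDerivWithinAt.comp (h₂ := fun s => v s x) (h := fun s => s - t0) t h3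
        ((hasDerivWithinAt_id t _).sub_const t0) fun s hs => hsh hs
    rw [mul_one] at h4
    exact h4.const_add (us x)
  · exact (hPH hi.hd).mono (le_max_left _ _)
  · refine ((hPH hi.hq).add (PH.of_space hHq hqs)).congr (fun t _ x _ => ?_) |>.mono
      (le_max_right _ _)
    ring
  · intro t ht x hx
    have := heq _ (hsh ht) x hx
    simp only [qmap, Fop, Matrix.cons_val_zero, add_sub_cancel] at this
    rw [this]; ring
  · intro t ht
    have := hdl _ (hsh ht)
    simpa [qmap] using this
  · intro t ht
    have := hdr _ (hsh ht)
    simpa [qmap] using this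
  · intro x hx
    simp [hi.v0 x hx]

/-! ### Extension to closed time intervals -/

/-- First order Taylor expansion of a function with Hölder continuous derivative. -/
lemma taylor_holder {I : Set ℝ} (hI : Convex ℝ I) {C γ : ℝ} (hC : 0 ≤ C) (hγ : 0 < γ) {f f' : ℝ → ℝ}
    (hf : ∀ x ∈ I, HasDerivWithinAt f (f' x) I x)
    (hh : ∀ x ∈ I, ∀ y ∈ I, |f' x - f' y| ≤ C * |x - y| ^ γ) :
    ∀ x ∈ I, ∀ y ∈ I, |f y - f x - f' x * (y - x)| ≤ C * |y - x| ^ γ * |y - x| := by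
  intro x hx y hy
  have hsub : uIcc x y ⊆ I := by
    rw [← segment_eq_uIcc]; exact hI.segment_subset hx hy
  have := mvt_le (s := uIcc x y) (f := fun z => f z - f' x * z) (f' := fun z => f' z - f' x * 1)
    (C := C * |y - x| ^ γ) (x := x) (y := y) (convex_uIcc x y)
    (fun z hz => ((hf z (hsub hz)).mono hsub).sub
      ((hasDerivWithinAt_id z _).const_mul (f' x)))
    (fun z hz => by
      rw [mul_one]
      refine (hh z (hsub hz) x hx).trans (mul_le_mul_of_nonneg_left
        (Real.rpow_le_rpow (abs_nonneg _) ?_ hγ.le) hC)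
      exact abs_sub_left_of_mem_uIcc hz)
    left_mem_uIcc right_mem_uIcc
  rw [show f y - f x - f' x * (y - x) = (f y - f' x * y) - (f x - f' x * x) by ring]
  exact this

/-- A first order expansion with superlinear remainder yields the derivative. -/
lemma hasDeriv_of_taylor {I : Set ℝ} {C γ : ℝ} (hγ : 0 < γ) {f : ℝ → ℝ} {d x : ℝ}
    (h : ∀ y ∈ I, |f y - f x - d * (y - x)| ≤ C * |y - x| ^ γ * |y - x|) :
    HasDerivWithinAt f d I x := by
  rw [hasDerivWithinAt_iff_isLittleO, Asymptotics.isLittleO_iff]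
  intro ε hε
  obtain ⟨δ, hδ, hs⟩ := exists_small hγ (C := C) hε
  filter_upwards [self_mem_nhdsWithin, mem_nhdsWithin_of_mem_nhds (Metric.closedBall_mem_nhds x hδ)]
    with y hy hyb
  rw [Metric.mem_closedBall, Real.dist_eq] at hyb
  have := h y hy
  rw [Real.norm_eq_abs, Real.norm_eq_abs, smul_eq_mul, mul_comm (y - x)]
  exact this.trans (mul_le_mul_of_nonneg_right (hs _ (abs_nonneg _) hyb) (abs_nonneg _))

/-- Hölder functions have limits at boundary points. -/
lemma holder_limit {I : Set ℝ} {C γ : ℝ} (hγ : 0 < γ) {f : ℝ → ℝ}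
    (hh : ∀ x ∈ I, ∀ y ∈ I, |f x - f y| ≤ C * |x - y| ^ γ) {x : ℝ} (hx : x ∈ closure I) :
    ∃ L, Tendsto f (𝓝[I] x) (𝓝 L) := by
  have hu : UniformContinuousOn f I := by
    rw [Metric.uniformContinuousOn_iff_le]
    intro ε hε
    obtain ⟨δ, hδ, hs⟩ := exists_small hγ (C := C) hε
    refine ⟨δ, hδ, fun a ha b hb hab => ?_⟩
    rw [Real.dist_eq] at hab ⊢
    exact (hh a ha b hb).trans (hs _ (abs_nonneg _) hab)
  haveI : (𝓝[I] x).NeBot := mem_closure_iff_nhdsWithin_neBot.1 hx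
  have hc : Cauchy (map f (𝓝[I] x)) :=
    Cauchy.map_of_le (cauchy_nhds.mono nhdsWithin_le_nhds) hu inf_le_right
  exact CompleteSpace.complete hc

/-- Extension of `w` by its limits in the time variable. -/
def extT (J : Set ℝ) (w : ℝ → ℝ → ℝ) (t x : ℝ) : ℝ := limUnder (𝓝[J] t) (fun s => w s x)

section ext
variable {α H : ℝ} {J J' I : Set ℝ} {w : ℝ → ℝ → ℝ} (hα : α ∈ Ioo (0:ℝ) 1) (h : PH α J I w H)
  (hJ : J' ⊆ closure J)
include hα h hJ

lemma PH.tendsto_ext {t x : ℝ} (ht : t ∈ J') (hx : x ∈ I) :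
    Tendsto (fun s => w s x) (𝓝[J] t) (𝓝 (extT J w t x)) := by
  apply tendsto_nhds_limUnder
  exact holder_limit (by linarith [hα.1] : 0 < α / 2)
    (fun s hs s' hs' => by simpa [rho_time hα] using h s hs s' hs' x hx x hx) (hJ ht)

omit hJ in
lemma PH.ext_eq {t x : ℝ} (ht : t ∈ J) (hx : x ∈ I) : extT J w t x = w t x := by
  haveI : (𝓝[J] t).NeBot := mem_closure_iff_nhdsWithin_neBot.1 (subset_closure ht)
  refine tendsto_nhds_unique (h.tendsto_ext hα subset_closure ht hx) ?_
  have := h.continuousOn hα (t, x) ⟨ht, hx⟩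
  exact this.tendsto.comp (f := fun s => (s, x)) (tendsto_nhdsWithin_iff.2
    ⟨(Continuous.prodMk_left x).continuousAt.tendsto.mono_left nhdsWithin_le_nhds,
      by filter_upwards [self_mem_nhdsWithin] with s hs using ⟨hs, hx⟩⟩)

lemma PH.ext : PH α J' I (extT J w) H := by
  have step : ∀ t ∈ J, ∀ t' ∈ J', ∀ x ∈ I, ∀ x' ∈ I,
      |w t x - extT J w t' x'| ≤ H * rho α t x t' x' := by
    intro t ht t' ht' x hx x' hx'
    haveI : (𝓝[J] t').NeBot := mem_closure_iff_nhdsWithin_neBot.1 (hJ ht')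
    have hr : Tendsto (fun s => H * rho α t x s x') (𝓝[J] t') (𝓝 (H * rho α t x t' x')) := by
      refine Tendsto.mono_left (Continuous.tendsto ?_ _) nhdsWithin_le_nhds
      unfold rho
      exact continuous_const.mul (continuous_const.add
        ((continuous_const.sub continuous_id).abs.rpow_const fun _ => Or.inr (by linarith [hα.1])))
    refine le_of_tendsto_of_tendsto
      ((tendsto_const_nhds.sub (h.tendsto_ext hα hJ ht' hx')).abs) hr ?_
    filter_upwards [self_mem_nhdsWithin] with s hs using h t ht s hs x hx x' hx'
  intro t ht t' ht' x hx x' hx'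
  haveI : (𝓝[J] t).NeBot := mem_closure_iff_nhdsWithin_neBot.1 (hJ ht)
  have hr : Tendsto (fun s => H * rho α s x t' x') (𝓝[J] t) (𝓝 (H * rho α t x t' x')) := by
    refine Tendsto.mono_left (Continuous.tendsto ?_ _) nhdsWithin_le_nhds
    unfold rho
    exact continuous_const.mul (continuous_const.add
      ((continuous_id.sub continuous_const).abs.rpow_const fun _ => Or.inr (by linarith [hα.1])))
  refine le_of_tendsto_of_tendsto
    (((h.tendsto_ext hα hJ ht hx).sub tendsto_const_nhds).abs) hr ?_
  filter_upwards [self_mem_nhdsWithin] with s hs using step s hs t' ht' x hx x' hx'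

end ext

/-- A Taylor estimate survives pointwise limits. -/
lemma taylor_limit {ι : Type*} {l : Filter ι} [l.NeBot] {f g d : ι → ℝ} {F G D C a : ℝ}
    (hf : Tendsto f l (𝓝 F)) (hg : Tendsto g l (𝓝 G)) (hd : Tendsto d l (𝓝 D))
    (h : ∀ᶠ s in l, |f s - g s - d s * a| ≤ C) : |F - G - D * a| ≤ C :=
  le_of_tendsto ((hf.sub hg).sub (hd.mul_const a)).abs h

/-- The derivative relations survive the passage to closed time intervals, because the Taylor
expansions have uniform remainders. -/
lemma HeatRel.closure {α N B Hu Hp : ℝ} {J J' I : Set ℝ} {U D P Q : ℝ → ℝ → ℝ}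
    (hα : α ∈ Ioo (0:ℝ) 1)
    (hJc : Convex ℝ J) (hIc : Convex ℝ I) (hJ : J' ⊆ closure J) (h : HeatRel J I U D P Q)
    (hN : 0 ≤ N) (hB : 0 ≤ B)
    (hU : PH α J I U Hu) (hP : PH α J I P Hp) (hD : PH α J I D N) (hQ : PH α J I Q N)
    (hb : ∀ t ∈ J, ∀ x ∈ I, |Q t x| ≤ B) :
    HeatRel J' I (extT J U) (extT J D) (extT J P) (extT J Q) := by
  intro t ht x hx
  haveI : (𝓝[J] t).NeBot := mem_closure_iff_nhdsWithin_neBot.1 (hJ ht)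
  refine ⟨hasDeriv_of_taylor (C := B) one_pos fun y hy => ?_,
    hasDeriv_of_taylor (C := N) hα.1 fun y hy => ?_,
    hasDeriv_of_taylor (C := N) (by linarith [hα.1] : 0 < α / 2) fun s hs => ?_⟩
  · refine taylor_limit (hU.tendsto_ext hα hJ ht hy) (hU.tendsto_ext hα hJ ht hx)
      (hP.tendsto_ext hα hJ ht hx) ?_
    filter_upwards [self_mem_nhdsWithin] with s hs
    refine taylor_holder hIc hB one_pos (fun x hx => (h s hs x hx).1) (fun x hx y hy => ?_) x hx y hy
    rw [Real.rpow_one]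
    exact mvt_le hIc (fun x hx => (h s hs x hx).2.1) (hb s hs) hy hx
  · refine taylor_limit (hP.tendsto_ext hα hJ ht hy) (hP.tendsto_ext hα hJ ht hx)
      (hQ.tendsto_ext hα hJ ht hx) ?_
    filter_upwards [self_mem_nhdsWithin] with s hs
    refine taylor_holder hIc hN hα.1 (fun x hx => (h s hs x hx).2.1) (fun x hx y hy => ?_) x hx y hy
    simpa [rho_space hα] using hQ s hs s hs x hx y hy
  · have hβ : 0 < α / 2 := by linarith [hα.1]
    have key : ∀ a ∈ J, ∀ b ∈ J, |U b x - U a x - D a x * (b - a)|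
        ≤ N * |b - a| ^ (α / 2) * |b - a| :=
      taylor_holder hJc hN hβ (fun a ha => (h a ha x hx).2.2) fun a ha b hb => by
        simpa [rho_time hα] using hD a ha b hb x hx x hx
    have cc : Continuous fun c : ℝ => N * |c| ^ (α / 2) * |c| :=
      (continuous_const.mul (continuous_abs.rpow_const fun _ => Or.inr hβ.le)).mul continuous_abs
    have tid : ∀ t, Tendsto (fun s : ℝ => s) (𝓝[J] t) (𝓝 t) := fun t => nhdsWithin_le_nhds
    have step : ∀ a ∈ J, |extT J U s x - U a x - D a x * (s - a)|
        ≤ N * |s - a| ^ (α / 2) * |s - a| := by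
      intro a ha
      haveI : (𝓝[J] s).NeBot := mem_closure_iff_nhdsWithin_neBot.1 (hJ hs)
      refine le_of_tendsto_of_tendsto
        (((hU.tendsto_ext hα hJ hs hx).sub tendsto_const_nhds).sub
          (((tid s).sub_const a).const_mul (D a x))).abs
        ((cc.tendsto (s - a)).comp ((tid s).sub_const a)) ?_
      filter_upwards [self_mem_nhdsWithin] with b hb using key a ha b hb
    refine le_of_tendsto_of_tendsto
      ((tendsto_const_nhds.sub (hU.tendsto_ext hα hJ ht hx)).sub
          ((hD.tendsto_ext hα hJ ht hx).mul (tendsto_const_nhds.sub (tid t)))).abs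
        ((cc.tendsto (s - t)).comp (tendsto_const_nhds.sub (tid t))) ?_
    filter_upwards [self_mem_nhdsWithin] with a ha using step a ha

/-- Uniformly regular solutions extend to the closure of the time interval. -/
lemma QSol.closure {α l r T N B Hu Hp : ℝ} {A f Gl Gr : ℝ × ℝ × ℝ × ℝ → ℝ} {J J' : Set ℝ}
    {U D P Q : ℝ → ℝ → ℝ} (hα : α ∈ Ioo (0:ℝ) 1) (hlr : l ≤ r)
    (hA : ContinuousOn A (Dom T l r)) (hf : ContinuousOn f (Dom T l r))
    (hGl : ContinuousOn Gl (Dom T l r)) (hGr : ContinuousOn Gr (Dom T l r))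
    (hJc : Convex ℝ J) (hJ : J' ⊆ closure J) (hJT : J ⊆ Icc 0 T)
    (h : QSol α l r A f Gl Gr J U D P Q N) (hN : 0 ≤ N) (hB : 0 ≤ B)
    (hU : PH α J (Icc l r) U Hu) (hP : PH α J (Icc l r) P Hp)
    (hb : ∀ t ∈ J, ∀ x ∈ Icc l r, |Q t x| ≤ B) :
    QSol α l r A f Gl Gr J' (extT J U) (extT J D) (extT J P) (extT J Q) N := by
  have tid : ∀ t, Tendsto (fun s : ℝ => s) (𝓝[J] t) (𝓝 t) := fun t => nhdsWithin_le_nhds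
  have hJT' : J' ⊆ Icc 0 T := hJ.trans (closure_minimal hJT isClosed_Icc)
  have comp : ∀ {G : ℝ × ℝ × ℝ × ℝ → ℝ}, ContinuousOn G (Dom T l r) → ∀ t ∈ J', ∀ x ∈ Icc l r,
      Tendsto (fun s => G (s, x, U s x, P s x)) (𝓝[J] t)
        (𝓝 (G (t, x, extT J U t x, extT J P t x))) := by
    intro G hG t ht x hx
    refine (hG (t, x, extT J U t x, extT J P t x) ⟨hJT' ht, hx, trivial⟩).tendsto.comp
      (tendsto_nhdsWithin_iff.2 ⟨?_, ?_⟩)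
    · exact (tid t).prodMk_nhds (tendsto_const_nhds.prodMk_nhds
        ((hU.tendsto_ext hα hJ ht hx).prodMk_nhds (hP.tendsto_ext hα hJ ht hx)))
    · filter_upwards [self_mem_nhdsWithin] with s hs using ⟨hJT hs, hx, trivial⟩
  have ll : l ∈ Icc l r := ⟨le_rfl, hlr⟩
  have rr : r ∈ Icc l r := ⟨hlr, le_rfl⟩
  refine ⟨h.rel.closure hα hJc (convex_Icc l r) hJ hN hB hU hP h.hD h.hQ hb, h.hD.ext hα hJ,
    h.hQ.ext hα hJ, fun t ht x hx => ?_, fun t ht => ?_, fun t ht => ?_⟩ <;>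
    haveI : (𝓝[J] t).NeBot := mem_closure_iff_nhdsWithin_neBot.1 (hJ ht)
  · refine tendsto_nhds_unique_of_eventuallyEq (h.hD.tendsto_ext hα hJ ht hx)
      (((comp hA t ht x hx).mul (h.hQ.tendsto_ext hα hJ ht hx)).add (comp hf t ht x hx)) ?_
    filter_upwards [self_mem_nhdsWithin] with s hs using h.pde s hs x hx
  · refine tendsto_nhds_unique_of_eventuallyEq (h.hD.tendsto_ext hα hJ ht ll) (comp hGl t ht l ll) ?_
    filter_upwards [self_mem_nhdsWithin] with s hs using h.bl s hs
  · refine tendsto_nhds_unique_of_eventuallyEq (h.hD.tendsto_ext hα hJ ht rr) (comp hGr t ht r rr) ?_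
    filter_upwards [self_mem_nhdsWithin] with s hs using h.br s hs

/-- Hölder bounds on two adjacent time intervals combine. -/
lemma PH.glue {α N N' s : ℝ} {J J' I : Set ℝ} {w : ℝ → ℝ → ℝ} (hα : α ∈ Ioo (0:ℝ) 1) (hN : 0 ≤ N)
    (hN' : 0 ≤ N') (h : PH α J I w N) (h' : PH α J' I w N') (hs : s ∈ J) (hs' : s ∈ J')
    (hJ : ∀ t ∈ J, t ≤ s) (hJ' : ∀ t ∈ J', s ≤ t) : PH α (J ∪ J') I w (N + N') := by
  have hβ : 0 ≤ α / 2 := by linarith [hα.1]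
  have cross : ∀ t ∈ J, ∀ t' ∈ J', ∀ x ∈ I, ∀ x' ∈ I,
      |w t x - w t' x'| ≤ (N + N') * rho α t x t' x' := by
    intro t ht t' ht' x hx x' hx'
    have h1 := h t ht s hs x hx x hx
    have h2 := h' s hs' t' ht' x hx x' hx'
    have b1 := hJ t ht
    have b2 := hJ' t' ht'
    have e1 : |t - s| ^ (α / 2) ≤ |t - t'| ^ (α / 2) := by
      refine Real.rpow_le_rpow (abs_nonneg _) ?_ hβ
      rw [abs_of_nonpos (by linarith), abs_of_nonpos (by linarith)]; linarith
    have e2 : |s - t'| ^ (α / 2) ≤ |t - t'| ^ (α / 2) := by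
      refine Real.rpow_le_rpow (abs_nonneg _) ?_ hβ
      rw [abs_of_nonpos (by linarith), abs_of_nonpos (by linarith)]; linarith
    have r1 : rho α t x s x ≤ rho α t x t' x' := by
      rw [rho_time hα]; unfold rho
      linarith [Real.rpow_nonneg (abs_nonneg (x - x')) α]
    have r2 : rho α s x t' x' ≤ rho α t x t' x' := by unfold rho; linarith
    calc |w t x - w t' x'| ≤ |w t x - w s x| + |w s x - w t' x'| := abs_sub_le _ _ _
      _ ≤ N * rho α t x s x + N' * rho α s x t' x' := add_le_add h1 h2
      _ ≤ N * rho α t x t' x' + N' * rho α t x t' x' := by gcongr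
      _ = _ := by ring
  rintro t (ht | ht) t' (ht' | ht') x hx x' hx'
  · exact (h.mono (by linarith)) t ht t' ht' x hx x' hx'
  · exact cross t ht t' ht' x hx x' hx'
  · have := cross t' ht' t ht x' hx' x hx
    rw [abs_sub_comm] at this
    refine this.trans (le_of_eq ?_)
    unfold rho; rw [abs_sub_comm x' x, abs_sub_comm t' t]
  · exact (h'.mono (by linarith)) t ht t' ht' x hx x' hx'

/-! ### Extension to the lateral boundary -/

/-- A Hölder bound on the open interval extends to the closed one by continuity. -/
lemma PH.extend_space {α l r H : ℝ} {J : Set ℝ} {w : ℝ → ℝ → ℝ} (hα : α ∈ Ioo (0:ℝ) 1)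
    (hlr : l < r) (h : PH α J (Ioo l r) w H)
    (hc : ∀ t ∈ J, ∀ x ∈ Icc l r, Tendsto (w t) (𝓝[Ioo l r] x) (𝓝 (w t x))) :
    PH α J (Icc l r) w H := by
  intro t ht t' ht' x hx x' hx'
  have hcl : ∀ x ∈ Icc l r, (𝓝[Ioo l r] x).NeBot := fun x hx =>
    mem_closure_iff_nhdsWithin_neBot.1 (by rwa [closure_Ioo hlr.ne])
  have := hcl x hx
  have := hcl x' hx'
  have hr : Continuous fun p : ℝ × ℝ => H * rho α t p.1 t' p.2 := by
    unfold rho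
    exact continuous_const.mul (((continuous_fst.sub continuous_snd).abs.rpow_const
      fun _ => Or.inr hα.1.le).add continuous_const)
  have h1 : Tendsto (fun p : ℝ × ℝ => |w t p.1 - w t' p.2|)
      (𝓝[Ioo l r] x ×ˢ 𝓝[Ioo l r] x') (𝓝 |w t x - w t' x'|) :=
    (((hc t ht x hx).comp tendsto_fst).sub ((hc t' ht' x' hx').comp tendsto_snd)).abs
  have h2 : Tendsto (fun p : ℝ × ℝ => H * rho α t p.1 t' p.2)
      (𝓝[Ioo l r] x ×ˢ 𝓝[Ioo l r] x') (𝓝 (H * rho α t x t' x')) := by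
    refine (hr.tendsto (x, x')).mono_left ?_
    rw [nhds_prod_eq]
    exact prod_mono nhdsWithin_le_nhds nhdsWithin_le_nhds
  refine le_of_tendsto_of_tendsto h1 h2 ?_
  filter_upwards [prod_mem_prod self_mem_nhdsWithin self_mem_nhdsWithin] with p hp
  exact h t ht t' ht' p.1 hp.1 p.2 hp.2

/-- A derivative which is Hölder continuous on the open interval is continuous up to the ends. -/
lemma tendsto_deriv_end {l r C γ : ℝ} (hlr : l < r) (hC : 0 ≤ C) (hγ : 0 < γ) {f f' : ℝ → ℝ}
    (hf : ∀ x ∈ Icc l r, HasDerivWithinAt f (f' x) (Icc l r) x)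
    (hh : ∀ x ∈ Ioo l r, ∀ y ∈ Ioo l r, |f' x - f' y| ≤ C * |x - y| ^ γ) {x : ℝ}
    (hx : x ∈ Icc l r) : Tendsto f' (𝓝[Ioo l r] x) (𝓝 (f' x)) := by
  have hcl : x ∈ closure (Ioo l r) := by rwa [closure_Ioo hlr.ne]
  have : (𝓝[Ioo l r] x).NeBot := mem_closure_iff_nhdsWithin_neBot.1 hcl
  obtain ⟨L, hL⟩ := holder_limit hγ hh hcl
  have hd : HasDerivWithinAt f L (Ioo l r) x := by
    refine hasDeriv_of_taylor (C := C) hγ fun y hy => ?_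
    have tid : Tendsto (fun s : ℝ => s) (𝓝[Ioo l r] x) (𝓝 x) := nhdsWithin_le_nhds
    have cc : Continuous fun c : ℝ => C * |c| ^ γ * |c| :=
      (continuous_const.mul (continuous_abs.rpow_const fun _ => Or.inr hγ.le)).mul continuous_abs
    have hfc : Tendsto f (𝓝[Ioo l r] x) (𝓝 (f x)) :=
      (hf x hx).continuousWithinAt.tendsto.mono_left (nhdsWithin_mono _ Ioo_subset_Icc_self)
    refine le_of_tendsto_of_tendsto
      ((tendsto_const_nhds.sub hfc).sub (hL.mul (tendsto_const_nhds.sub tid))).abs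
      ((cc.tendsto (y - x)).comp (tendsto_const_nhds.sub tid)) ?_
    filter_upwards [self_mem_nhdsWithin] with z hz
    exact taylor_holder (convex_Ioo l r) hC hγ
      (fun w hw => (hf w (Ioo_subset_Icc_self hw)).mono Ioo_subset_Icc_self) hh z hz y hy
  have hu : UniqueDiffWithinAt ℝ (Ioo l r) x :=
    uniqueDiffWithinAt_convex (convex_Ioo l r) (by rw [interior_Ioo]; exact nonempty_Ioo.2 hlr) hcl
  rwa [hu.eq_deriv _ ((hf x hx).mono Ioo_subset_Icc_self) hd]

/-- Time derivatives which are Hölder continuous in the interior are continuous up to the ends. -/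
lemma tendsto_timeDeriv_end {α l r C : ℝ} {J : Set ℝ} {U D P : ℝ → ℝ → ℝ}
    (hα : α ∈ Ioo (0:ℝ) 1) (hlr : l < r) (hC : 0 ≤ C)
    (hJc : Convex ℝ J) (hJ : UniqueDiffOn ℝ J)
    (hx : ∀ t ∈ J, ∀ x ∈ Icc l r, HasDerivWithinAt (U t) (P t x) (Icc l r) x)
    (ht : ∀ t ∈ J, ∀ x ∈ Icc l r, HasDerivWithinAt (fun s => U s x) (D t x) J t)
    (hD : PH α J (Ioo l r) D C) {t x : ℝ} (htJ : t ∈ J) (hxI : x ∈ Icc l r) :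
    Tendsto (D t) (𝓝[Ioo l r] x) (𝓝 (D t x)) := by
  have hcl : x ∈ closure (Ioo l r) := by rwa [closure_Ioo hlr.ne]
  have : (𝓝[Ioo l r] x).NeBot := mem_closure_iff_nhdsWithin_neBot.1 hcl
  have hβ : 0 < α / 2 := by linarith [hα.1]
  obtain ⟨L, hL⟩ := holder_limit hα.1
    (fun a ha b hb => by simpa [rho_space hα] using hD t htJ t htJ a ha b hb) hcl
  have hUc : ∀ s ∈ J, Tendsto (U s) (𝓝[Ioo l r] x) (𝓝 (U s x)) := fun s hs =>
    (hx s hs x hxI).continuousWithinAt.tendsto.mono_left (nhdsWithin_mono _ Ioo_subset_Icc_self)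
  have hd : HasDerivWithinAt (fun s => U s x) L J t := by
    refine hasDeriv_of_taylor (C := C) hβ fun s hs => ?_
    refine taylor_limit (hUc s hs) (hUc t htJ) hL ?_
    filter_upwards [self_mem_nhdsWithin] with y hy
    exact taylor_holder hJc hC hβ (fun a ha => ht a ha y (Ioo_subset_Icc_self hy))
      (fun a ha b hb => by simpa [rho_time hα] using hD a ha b hb y hy y hy) t htJ s hs
  rwa [(hJ t htJ).eq_deriv _ (ht t htJ x hxI) hd]

/-- An equation between continuous coefficients extends from the open to the closed interval. -/
lemma pde_closed {l r T : ℝ} {A f : ℝ × ℝ × ℝ × ℝ → ℝ} {t : ℝ} {u d p q : ℝ → ℝ} (hlr : l < r)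
    (hA : ContinuousOn A (Dom T l r)) (hf : ContinuousOn f (Dom T l r)) (ht : t ∈ Icc 0 T)
    (hu : ∀ x ∈ Icc l r, Tendsto u (𝓝[Ioo l r] x) (𝓝 (u x)))
    (hd : ∀ x ∈ Icc l r, Tendsto d (𝓝[Ioo l r] x) (𝓝 (d x)))
    (hp : ∀ x ∈ Icc l r, Tendsto p (𝓝[Ioo l r] x) (𝓝 (p x)))
    (hq : ∀ x ∈ Icc l r, Tendsto q (𝓝[Ioo l r] x) (𝓝 (q x)))
    (h : ∀ x ∈ Ioo l r, d x = A (t, x, u x, p x) * q x + f (t, x, u x, p x)) :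
    ∀ x ∈ Icc l r, d x = A (t, x, u x, p x) * q x + f (t, x, u x, p x) := by
  intro x hx
  have : (𝓝[Ioo l r] x).NeBot :=
    mem_closure_iff_nhdsWithin_neBot.1 (by rwa [closure_Ioo hlr.ne])
  have comp : ∀ {G : ℝ × ℝ × ℝ × ℝ → ℝ}, ContinuousOn G (Dom T l r) →
      Tendsto (fun y => G (t, y, u y, p y)) (𝓝[Ioo l r] x) (𝓝 (G (t, x, u x, p x))) := by
    intro G hG
    refine (hG (t, x, u x, p x) ⟨ht, hx, trivial⟩).tendsto.comp (tendsto_nhdsWithin_iff.2 ⟨?_, ?_⟩)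
    · exact tendsto_const_nhds.prodMk_nhds ((tendsto_id.mono_left nhdsWithin_le_nhds).prodMk_nhds
        ((hu x hx).prodMk_nhds (hp x hx)))
    · filter_upwards [self_mem_nhdsWithin] with s hs using ⟨ht, Ioo_subset_Icc_self hs, trivial⟩
  refine tendsto_nhds_unique_of_eventuallyEq (hd x hx)
    (((comp hA).mul (hq x hx)).add (comp hf)) ?_
  filter_upwards [self_mem_nhdsWithin] with s hs using h s hs

/-! ### Regularity classes and the blow-up functional -/

/-- A coefficient as a function on `ℝ⁴`. -/
def coef (a : ℝ → ℝ → ℝ → ℝ → ℝ) (q : ℝ × ℝ × ℝ × ℝ) : ℝ := a q.1 q.2.1 q.2.2.1 q.2.2.2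

/-- The time derivative prescribed by the boundary condition at the end point `y`, where
`s = 1` on the left and `s = -1` on the right. -/
def bdry (s y : ℝ) (b g : ℝ → ℝ → ℝ → ℝ) (q : ℝ × ℝ × ℝ × ℝ) : ℝ :=
  g q.1 y q.2.2.1 + s * b q.1 y q.2.2.1 * q.2.2.2

/-- The dynamical boundary law, as a function on `ℝ⁴`, is `C²`: it is affine in the gradient. -/
lemma bdry_contDiff {T l r s y : ℝ} {b g : ℝ → ℝ → ℝ → ℝ}
    (hb : ContDiffOn ℝ 2 (fun q : ℝ × ℝ => b q.1 y q.2) (Icc (0:ℝ) T ×ˢ (univ : Set ℝ)))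
    (hg : ContDiffOn ℝ 2 (fun q : ℝ × ℝ => g q.1 y q.2) (Icc (0:ℝ) T ×ˢ (univ : Set ℝ))) :
    ContDiffOn ℝ 2 (bdry s y b g) (Dom T l r) := by
  have hπ : ContDiffOn ℝ 2 (fun q : ℝ × ℝ × ℝ × ℝ => (q.1, q.2.2.1)) (Dom T l r) :=
    ContDiff.contDiffOn (by fun_prop)
  have hm : MapsTo (fun q : ℝ × ℝ × ℝ × ℝ => (q.1, q.2.2.1)) (Dom T l r)
      (Icc (0:ℝ) T ×ˢ (univ : Set ℝ)) := fun q hq => ⟨hq.1, trivial⟩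
  have h4 : ContDiffOn ℝ 2 (fun q : ℝ × ℝ × ℝ × ℝ => q.2.2.2) (Dom T l r) :=
    ContDiff.contDiffOn (by fun_prop)
  exact (hg.comp hπ hm).add ((contDiffOn_const.mul (hb.comp hπ hm)).mul h4)

/-- Membership in the function space gives the derivative relations, up to the lateral boundary. -/
lemma MemP.rel {α τ ℓ : ℝ} {u : ℝ → ℝ → ℝ} (hl : 0 < ℓ) (h : MemP α τ (Ioo (-ℓ) ℓ) u) :
    HeatRel (Ioo 0 τ) (Icc (-ℓ) ℓ) u (timeDeriv u) (spaceDeriv u) (spaceDeriv2 u) := by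
  intro t ht x hx
  have hc : closure (Ioo (-ℓ) ℓ) = Icc (-ℓ) ℓ := closure_Ioo (by linarith)
  obtain ⟨h1, h2, h3⟩ := h.2.1 t ht x (by rwa [hc])
  exact ⟨h2.hasDerivAt.hasDerivWithinAt, h3.hasDerivAt.hasDerivWithinAt,
    h1.hasDerivAt.hasDerivWithinAt⟩

/-- A solution in the function space of the theorem satisfies the equation and the boundary
conditions in the form used for the estimates, on the closed spatial interval. -/
lemma MemP.qsol {α τ T ℓ : ℝ} {a f : ℝ → ℝ → ℝ → ℝ → ℝ} {b g : ℝ → ℝ → ℝ → ℝ} {u0 : ℝ → ℝ}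
    {u : ℝ → ℝ → ℝ} (hα : α ∈ Ioo (0:ℝ) 1) (hl : 0 < ℓ) (hT : τ ≤ T)
    (hA : ContinuousOn (coef a) (Dom T (-ℓ) ℓ)) (hf : ContinuousOn (coef f) (Dom T (-ℓ) ℓ))
    (h : MemP α τ (Ioo (-ℓ) ℓ) u) (hs : SolQ2a τ ℓ a f b g u0 u) :
    ∃ N, 0 ≤ N ∧ QSol α (-ℓ) ℓ (coef a) (coef f) (bdry 1 (-ℓ) b g) (bdry (-1) ℓ b g) (Ioo 0 τ)
      u (timeDeriv u) (spaceDeriv u) (spaceDeriv2 u) N := by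
  have hlr : -ℓ < ℓ := by linarith
  have hR := h.rel hl
  obtain ⟨-, -, C0, -, hD0, hQ0, -⟩ := h
  obtain ⟨-, hpde, hbc, -⟩ := hs
  obtain ⟨C, hC, hC0⟩ : ∃ C, 0 ≤ C ∧ C0 ≤ C := ⟨max C0 0, le_max_right _ _, le_max_left _ _⟩
  have mk : ∀ {w : ℝ → ℝ → ℝ}, PHolderBnd α τ (Ioo (-ℓ) ℓ) w C0 →
      PH α (Ioo 0 τ) (Ioo (-ℓ) ℓ) w C := fun hw =>
    (PH.of_sep (fun t ht x hx x' hx' => hw.2 t ht x hx x' hx')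
      (fun t ht t' ht' x hx => hw.1 x hx t ht t' ht')).mono hC0
  have hD := mk hD0
  have hQ := mk hQ0
  have eQ : ∀ t ∈ Ioo 0 τ, ∀ x ∈ Icc (-ℓ) ℓ,
      Tendsto (spaceDeriv2 u t) (𝓝[Ioo (-ℓ) ℓ] x) (𝓝 (spaceDeriv2 u t x)) := fun t ht x hx =>
    tendsto_deriv_end hlr hC hα.1 (fun x hx => (hR t ht x hx).2.1)
      (fun x hx y hy => by simpa [rho_space hα] using hQ t ht t ht x hx y hy) hx
  have eD : ∀ t ∈ Ioo 0 τ, ∀ x ∈ Icc (-ℓ) ℓ,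
      Tendsto (timeDeriv u t) (𝓝[Ioo (-ℓ) ℓ] x) (𝓝 (timeDeriv u t x)) := fun t ht x hx =>
    tendsto_timeDeriv_end hα hlr hC (convex_Ioo 0 τ) isOpen_Ioo.uniqueDiffOn
      (fun t ht x hx => (hR t ht x hx).1) (fun t ht x hx => (hR t ht x hx).2.2) hD ht hx
  refine ⟨C, hC, hR, hD.extend_space hα hlr eD, hQ.extend_space hα hlr eQ, fun t ht => ?_,
    fun t ht => ?_, fun t ht => ?_⟩
  · refine pde_closed (T := T) hlr hA hf ⟨ht.1.le, ht.2.le.trans hT⟩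
      (fun x hx => (hR t ht x hx).1.continuousWithinAt.tendsto.mono_left
        (nhdsWithin_mono _ Ioo_subset_Icc_self)) (eD t ht)
      (fun x hx => (hR t ht x hx).2.1.continuousWithinAt.tendsto.mono_left
        (nhdsWithin_mono _ Ioo_subset_Icc_self)) (eQ t ht) fun x hx => ?_
    have := hpde t ht x hx
    unfold coef
    linarith
  · have := (hbc t ht).2
    unfold bdry
    simp only
    linarith
  · have := (hbc t ht).1
    unfold bdry
    simp only
    linarith

lemma hSemi_le {β C : ℝ} {I : Set ℝ} {v : ℝ → ℝ} (hC : 0 ≤ C) (h : HolderBnd β I v C) :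
    hSemi β I v ≤ C := by
  refine Real.sSup_le ?_ hC
  rintro _ ⟨⟨s, s'⟩, ⟨hs, hs', hne⟩, rfl⟩
  exact (div_le_iff₀ (Real.rpow_pos_of_pos (abs_pos.2 (sub_ne_zero.2 hne)) _)).2 (h s hs s' hs')

lemma hSemi_nonneg (β : ℝ) (I : Set ℝ) (v : ℝ → ℝ) : 0 ≤ hSemi β I v := by
  refine Real.sSup_nonneg ?_
  rintro _ ⟨p, -, rfl⟩
  positivity

/-- A finite Hölder seminorm is a Hölder constant. -/
lemma HolderBnd.semi {β C : ℝ} {I : Set ℝ} {v : ℝ → ℝ} (hβ : 0 < β)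
    (h : HolderBnd β I v C) : HolderBnd β I v (hSemi β I v) := by
  intro s hs s' hs'
  rcases eq_or_ne s s' with rfl | hne
  · simp [Real.zero_rpow hβ.ne']
  · have hp := Real.rpow_pos_of_pos (abs_pos.2 (sub_ne_zero.2 hne)) β
    refine (div_le_iff₀ hp).1 (le_csSup ⟨C, ?_⟩ ⟨(s, s'), ⟨hs, hs', hne⟩, rfl⟩)
    rintro _ ⟨⟨s, s'⟩, ⟨hs, hs', hne⟩, rfl⟩
    exact (div_le_iff₀ (Real.rpow_pos_of_pos (abs_pos.2 (sub_ne_zero.2 hne)) _)).2 (h s hs s' hs')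

lemma abs_le_supN {τ C : ℝ} {Q : Set ℝ} {w : ℝ → ℝ → ℝ} (h : ∀ t ∈ Ioo 0 τ, ∀ x ∈ Q, |w t x| ≤ C)
    {t x : ℝ} (ht : t ∈ Ioo 0 τ) (hx : x ∈ Q) : |w t x| ≤ supN τ Q w := by
  refine le_csSup ⟨C, ?_⟩ ⟨(t, x), ⟨ht, hx⟩, rfl⟩
  rintro _ ⟨p, hp, rfl⟩
  exact h _ hp.1 _ hp.2

lemma supN_nonneg (τ : ℝ) (Q : Set ℝ) (w : ℝ → ℝ → ℝ) : 0 ≤ supN τ Q w := by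
  refine Real.sSup_nonneg ?_
  rintro _ ⟨p, -, rfl⟩
  positivity

lemma PHolderBnd.semi {β τ C : ℝ} {Q : Set ℝ} {w : ℝ → ℝ → ℝ} (hβ : 0 < β) (hC : 0 ≤ C)
    (h : PHolderBnd β τ Q w C) : 0 ≤ pSemi β τ Q w ∧ PHolderBnd β τ Q w (pSemi β τ Q w) := by
  have n1 : 0 ≤ sSup ((fun x => hSemi (β / 2) (Ioo 0 τ) (fun t => w t x)) '' Q) := by
    refine Real.sSup_nonneg ?_
    rintro _ ⟨p, -, rfl⟩
    exact hSemi_nonneg _ _ _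
  have n2 : 0 ≤ sSup ((fun t => hSemi β Q (fun x => w t x)) '' (Ioo 0 τ)) := by
    refine Real.sSup_nonneg ?_
    rintro _ ⟨p, -, rfl⟩
    exact hSemi_nonneg _ _ _
  refine ⟨add_nonneg n1 n2, fun x hx => ?_, fun t ht => ?_⟩
  · intro s hs s' hs'
    refine (HolderBnd.semi (by linarith) (h.1 x hx) s hs s' hs').trans
      (mul_le_mul_of_nonneg_right ?_ (by positivity))
    refine le_trans (le_csSup ⟨C, ?_⟩
      (mem_image_of_mem (fun x => hSemi (β / 2) (Ioo 0 τ) (fun t => w t x)) hx))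
      (le_add_of_nonneg_right n2)
    rintro _ ⟨y, hy, rfl⟩
    exact hSemi_le hC (h.1 y hy)
  · intro s hs s' hs'
    refine (HolderBnd.semi hβ (h.2 t ht) s hs s' hs').trans
      (mul_le_mul_of_nonneg_right ?_ (by positivity))
    refine le_trans (le_csSup ⟨C, ?_⟩
      (mem_image_of_mem (fun t => hSemi β Q (fun x => w t x)) ht)) (le_add_of_nonneg_left n1)
    rintro _ ⟨y, hy, rfl⟩
    exact hSemi_le hC (h.2 y hy)

/-- The blow-up functional controls `u`, `u_x` and the Hölder seminorms of `u_x`. -/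
lemma MemP.functional {α τ ℓ M : ℝ} {u : ℝ → ℝ → ℝ} (hα : α ∈ Ioo (0:ℝ) 1) (hl : 0 < ℓ)
    (h : MemP α τ (Ioo (-ℓ) ℓ) u)
    (hM : supN τ (Ioo (-ℓ) ℓ) u + supN τ (Ioo (-ℓ) ℓ) (spaceDeriv u) +
        pSemi α τ (Ioo (-ℓ) ℓ) (spaceDeriv u) ≤ M) :
    (∀ t ∈ Ioo 0 τ, ∀ x ∈ Icc (-ℓ) ℓ, |u t x| ≤ M ∧ |spaceDeriv u t x| ≤ M) ∧
      PH α (Ioo 0 τ) (Icc (-ℓ) ℓ) (spaceDeriv u) M := by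
  have hlr : -ℓ < ℓ := by linarith
  have hR := h.rel hl
  obtain ⟨-, -, C0, hb, -, -, hP⟩ := h
  obtain ⟨C, hC, hC0⟩ : ∃ C, 0 ≤ C ∧ C0 ≤ C := ⟨max C0 0, le_max_right _ _, le_max_left _ _⟩
  have hPb : PHolderBnd α τ (Ioo (-ℓ) ℓ) (spaceDeriv u)
      (C * τ ^ ((1:ℝ) / 2) + C * (2 * ℓ) ^ (1 - α)) := by
    refine ⟨fun x hx t ht t' ht' => ?_, fun t ht x hx x' hx' => ?_⟩
    · have hτ : 0 < τ := ht.1.trans ht.2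
      have h1 : |t - t'| ^ ((1 + α) / 2) ≤ τ ^ ((1:ℝ) / 2) * |t - t'| ^ (α / 2) := by
        rw [show (1 + α) / 2 = 1 / 2 + α / 2 by ring,
          Real.rpow_add_of_nonneg (abs_nonneg _) (by norm_num) (by linarith [hα.1])]
        refine mul_le_mul_of_nonneg_right (Real.rpow_le_rpow (abs_nonneg _) ?_ (by norm_num))
          (by positivity)
        exact abs_le.2 ⟨by linarith [ht.1, ht'.2], by linarith [ht.2, ht'.1]⟩
      calc |spaceDeriv u t x - spaceDeriv u t' x| ≤ C0 * |t - t'| ^ ((1 + α) / 2) :=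
            hP x hx t ht t' ht'
        _ ≤ C * (τ ^ ((1:ℝ) / 2) * |t - t'| ^ (α / 2)) := by gcongr
        _ ≤ _ := by
          rw [add_mul, mul_assoc]
          exact le_add_of_nonneg_right (by positivity)
    · have h1 := mvt_le (convex_Ioo (-ℓ) ℓ) (C := C)
        (fun x hx => ((hR t ht x (Ioo_subset_Icc_self hx)).2.1).mono Ioo_subset_Icc_self)
        (fun x hx => (hb t ht x hx).2.2.2.trans hC0) hx' hx
      have h2 : |x - x'| ≤ (2 * ℓ) ^ (1 - α) * |x - x'| ^ α :=
        abs_le_rpow_of_le hα (abs_nonneg _)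
          (abs_le.2 ⟨by linarith [hx.1, hx'.2], by linarith [hx.2, hx'.1]⟩)
      refine h1.trans ((mul_le_mul_of_nonneg_left h2 hC).trans ?_)
      rw [add_mul, mul_assoc C ((2 * ℓ) ^ (1 - α))]
      rcases le_or_gt τ 0 with h0 | h0
      · exact absurd ht (by simp [h0])
      · exact le_add_of_nonneg_left (by positivity)
  rcases le_or_gt τ 0 with h0 | h0
  · have : Ioo (0:ℝ) τ = ∅ := Ioo_eq_empty (by simpa using h0)
    simp [this, PH]
  obtain ⟨n3, hB⟩ := PHolderBnd.semi hα.1 (by positivity) hPb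
  have n1 := supN_nonneg τ (Ioo (-ℓ) ℓ) u
  have n2 := supN_nonneg τ (Ioo (-ℓ) ℓ) (spaceDeriv u)
  have ext : ∀ {w : ℝ → ℝ}, ContinuousOn w (Icc (-ℓ) ℓ) → (∀ x ∈ Ioo (-ℓ) ℓ, |w x| ≤ M) →
      ∀ x ∈ Icc (-ℓ) ℓ, |w x| ≤ M := by
    intro w hw hb x hx
    have : (𝓝[Ioo (-ℓ) ℓ] x).NeBot :=
      mem_closure_iff_nhdsWithin_neBot.1 (by rwa [closure_Ioo hlr.ne])
    refine le_of_tendsto ((hw x hx).tendsto.mono_left (nhdsWithin_mono _ Ioo_subset_Icc_self)).abs ?_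
    filter_upwards [self_mem_nhdsWithin] with y hy using hb y hy
  refine ⟨fun t ht x hx => ⟨?_, ?_⟩, ?_⟩
  · refine ext (fun x hx => (hR t ht x hx).1.continuousWithinAt) (fun y hy => ?_) x hx
    linarith [abs_le_supN (fun t ht x hx => (hb t ht x hx).1) ht hy]
  · refine ext (fun x hx => (hR t ht x hx).2.1.continuousWithinAt) (fun y hy => ?_) x hx
    linarith [abs_le_supN (fun t ht x hx => (hb t ht x hx).2.2.1) ht hy]
  · refine PH.extend_space hα hlr (PH.mono (PH.of_sep (fun t ht x hx x' hx' => hB.2 t ht x hx x' hx')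
      (fun t ht t' ht' x hx => hB.1 x hx t ht t' ht')) (by linarith)) fun t ht x hx =>
        (hR t ht x hx).2.1.continuousWithinAt.tendsto.mono_left
          (nhdsWithin_mono _ Ioo_subset_Icc_self)

/-- If the blow-up functional does not tend to infinity, then `u`, `u_x` and the Hölder seminorms
of `u_x` are bounded up to the final time. -/
lemma apriori {α ℓ τ : ℝ} {u : ℝ → ℝ → ℝ} (hα : α ∈ Ioo (0:ℝ) 1) (hl : 0 < ℓ) (hτ : 0 < τ)
    (h : ∀ s, 0 < s → s < τ → MemP α s (Ioo (-ℓ) ℓ) u)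
    (hn : ¬ Tendsto (fun τ => supN τ (Ioo (-ℓ) ℓ) u + supN τ (Ioo (-ℓ) ℓ) (spaceDeriv u) +
        pSemi α τ (Ioo (-ℓ) ℓ) (spaceDeriv u)) (𝓝[<] τ) atTop) :
    ∃ M, 0 ≤ M ∧
      (∀ t ∈ Ioo 0 τ, ∀ x ∈ Icc (-ℓ) ℓ, |u t x| ≤ M ∧ |spaceDeriv u t x| ≤ M) ∧
      PH α (Ioo 0 τ) (Icc (-ℓ) ℓ) (spaceDeriv u) M := by
  rw [tendsto_atTop] at hn
  push Not at hn
  obtain ⟨M, hM⟩ := hn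
  have key : ∀ t ∈ Ioo 0 τ, ∃ s, t < s ∧ 
      (∀ t ∈ Ioo 0 s, ∀ x ∈ Icc (-ℓ) ℓ, |u t x| ≤ M ∧ |spaceDeriv u t x| ≤ M) ∧
      PH α (Ioo 0 s) (Icc (-ℓ) ℓ) (spaceDeriv u) M := by
    intro t ht
    obtain ⟨s, hs, h2⟩ := (hM.and_eventually (Ioo_mem_nhdsLT ht.2)).exists
    exact ⟨s, h2.1, (h s (ht.1.trans h2.1) h2.2).functional hα hl hs.le⟩
  have hb : ∀ t ∈ Ioo 0 τ, ∀ x ∈ Icc (-ℓ) ℓ, |u t x| ≤ M ∧ |spaceDeriv u t x| ≤ M := by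
    intro t ht x hx
    obtain ⟨s, hs, h1, -⟩ := key t ht
    exact h1 t ⟨ht.1, hs⟩ x hx
  refine ⟨M, (abs_nonneg _).trans (hb (τ / 2) ⟨by linarith, by linarith⟩ 0
    ⟨by linarith, by linarith⟩).1, hb, fun t ht t' ht' x hx x' hx' => ?_⟩
  obtain ⟨s, hs, -, h2⟩ := key (max t t') ⟨lt_max_of_lt_left ht.1, max_lt ht.2 ht'.2⟩
  exact h2 t ⟨ht.1, (le_max_left _ _).trans_lt hs⟩ t' ⟨ht'.1, (le_max_right _ _).trans_lt hs⟩
    x hx x' hx'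

/-! ### Freezing the coefficient -/

/-- Freezing the coefficients of a linear equation: on a short time interval, on which the
coefficient `A` is nearly `a₀`, the Hölder constant of the solution is improved. -/
lemma half_step {α l r δ K N B E Kc h M Λ Bq Hq : ℝ} {a₀ b₀ qs : ℝ → ℝ}
    (hex : LinSolv α l r δ K a₀ b₀) (hα : α ∈ Ioo (0:ℝ) 1) (hlr : l < r) (hδ : 0 < δ) (hK : 0 ≤ K)
    (hN : 0 ≤ N) (hB : 0 ≤ B) (hE : 0 ≤ E) (hKc : 0 ≤ Kc) (hh : 0 ≤ h) (hM : 0 ≤ M) (hΛ : 0 ≤ Λ)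
    (hBq : 0 ≤ Bq) (hHq : 0 ≤ Hq)
    (ha : ∀ x ∈ Icc l r, 0 ≤ a₀ x)
    (ha₀ : ∀ x ∈ Icc l r, ∀ x' ∈ Icc l r, |a₀ x - a₀ x'| ≤ Kc * |x - x'| ^ α)
    (hb : ∀ x ∈ Icc l r, |b₀ x| ≤ Kc)
    (hb₀ : ∀ x ∈ Icc l r, ∀ x' ∈ Icc l r, |b₀ x - b₀ x'| ≤ Kc * |x - x'| ^ α)
    (hqs : ∀ x ∈ Icc l r, |qs x| ≤ Bq)
    (hqs' : ∀ x ∈ Icc l r, ∀ x' ∈ Icc l r, |qs x - qs x'| ≤ Hq * |x - x'| ^ α)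
    {v d p q A f : ℝ → ℝ → ℝ} (hR : HeatRel (Icc 0 δ) (Icc l r) v d p q)
    (hd : PH α (Icc 0 δ) (Icc l r) d N) (hq : PH α (Icc 0 δ) (Icc l r) q N)
    (hv : ∀ x ∈ Icc l r, v 0 x = 0) (hq0 : ∀ x ∈ Icc l r, q 0 x = 0)
    (hp : PH α (Icc 0 δ) (Icc l r) p h) (hpM : ∀ t ∈ Icc 0 δ, ∀ x ∈ Icc l r, |p t x| ≤ M)
    (hA : PH α (Icc 0 δ) (Icc l r) A B) (hf : PH α (Icc 0 δ) (Icc l r) f B)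
    (hAΛ : ∀ t ∈ Icc 0 δ, ∀ x ∈ Icc l r, |A t x| ≤ Λ)
    (hAE : ∀ t ∈ Icc 0 δ, ∀ x ∈ Icc l r, |A t x - a₀ x| ≤ E)
    (heq : ∀ t ∈ Icc 0 δ, ∀ x ∈ Icc l r, d t x = A t x * (q t x + qs x) + f t x)
    (hl : ∀ t ∈ Icc 0 δ, ∀ t' ∈ Icc 0 δ, |d t l - d t' l| ≤ B * |t - t'| ^ (α / 2))
    (hr : ∀ t ∈ Icc 0 δ, ∀ t' ∈ Icc 0 δ, |d t r - d t' r| ≤ B * |t - t'| ^ (α / 2))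
    (hsm : K * ((B + Kc) * δ ^ (α / 2) + E) ≤ 1 / 2) :
    PH α (Icc 0 δ) (Icc l r) d
      (N / 2 + K * (B + ((Kc * M + Kc * h) + ((B * Bq + Λ * Hq) + B)))) ∧
    PH α (Icc 0 δ) (Icc l r) q
      (N / 2 + K * (B + ((Kc * M + Kc * h) + ((B * Bq + Λ * Hq) + B)))) := by
  have h1 := (hA.sub (PH.of_space hKc ha₀)).mul hq hAE
    (fun t ht x hx => hq.abs_le_of_zero hα hN hq0 ht hx)
  have h2 := (PH.of_space (J := Icc 0 δ) hKc hb₀).mul hp (fun t _ x hx => hb x hx) hpM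
  have h3 := (hA.mul (PH.of_space (J := Icc 0 δ) hHq hqs') hAΛ (fun t _ x hx => hqs x hx)).add hf
  have hF := h1.add (h2.add h3)
  have hδβ : 0 ≤ δ ^ (α / 2) := by positivity
  obtain ⟨C1, hC1⟩ : ∃ C1, C1 = (Kc * M + Kc * h) + ((B * Bq + Λ * Hq) + B) := ⟨_, rfl⟩
  have hC0 : 0 ≤ C1 := by rw [hC1]; positivity
  rw [← hC1] at hF ⊢
  obtain ⟨Z, hZ⟩ : ∃ Z, Z = (B + Kc) * (N * δ ^ (α / 2)) + E * N := ⟨_, rfl⟩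
  have hZ0 : 0 ≤ Z := by rw [hZ]; positivity
  rw [← hZ] at hF
  have hKZ : K * Z ≤ N / 2 := by
    rw [hZ]
    calc _ = K * ((B + Kc) * δ ^ (α / 2) + E) * N := by ring
      _ ≤ 1 / 2 * N := by gcongr
      _ = _ := by ring
  have hle : ∀ s ∈ Icc 0 δ, ∀ s' ∈ Icc 0 δ, B * |s - s'| ^ (α / 2) ≤
      (Z + (B + C1)) * |s - s'| ^ (α / 2) := fun s _ s' _ =>
    mul_le_mul_of_nonneg_right (by linarith) (by positivity)
  obtain ⟨e1, e2⟩ := hex.est (H := Z + (B + C1)) hα hlr hδ hK (by positivity) hN ha hR hd hq hv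
    (hF.mono (by linarith)) (fun t ht x hx => by rw [heq t ht x hx]; ring)
    (fun t ht t' ht' => (hl t ht t' ht').trans (hle t ht t' ht'))
    (fun t ht t' ht' => (hr t ht t' ht').trans (hle t ht t' ht'))
  have : K * (Z + (B + C1)) ≤ N / 2 + K * (B + C1) := by rw [mul_add]; linarith
  exact ⟨e1.mono this, e2.mono this⟩

/-- Iterating an estimate which halves the constant up to `C` removes the initial constant. -/
lemma iterate_half {R : ℝ → Prop} {C N : ℝ} (hC : 0 ≤ C) (hN : 0 ≤ N)
    (hm : ∀ a b, a ≤ b → R a → R b)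
    (h : ∀ n, 0 ≤ n → R n → R (n / 2 + C)) (h0 : R N) : R (2 * C + 1) := by
  have key : ∀ k : ℕ, R (N * (1 / 2) ^ k + 2 * C) := by
    intro k
    induction k with
    | zero => exact hm _ _ (by simp; linarith) h0
    | succ k ih => exact hm _ _ (by rw [pow_succ]; linarith) (h _ (by positivity) ih)
  obtain ⟨k, hk⟩ := exists_pow_lt_of_lt_one (show (0:ℝ) < 1 / (N + 1) by positivity)
    (show (1:ℝ) / 2 < 1 by norm_num)
  refine hm _ _ ?_ (key k)
  have : N * (1 / 2) ^ k ≤ N * (1 / (N + 1)) := mul_le_mul_of_nonneg_left hk.le hN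
  have h2 : N * (1 / (N + 1)) ≤ 1 := by
    rw [mul_one_div, div_le_one (by positivity)]; linarith
  linarith

lemma PH.shift {α H t0 : ℝ} {J J' I : Set ℝ} {w : ℝ → ℝ → ℝ} (h : PH α J I w H)
    (hJ : ∀ t ∈ J', t0 + t ∈ J) : PH α J' I (fun t x => w (t0 + t) x) H := by
  intro t ht t' ht' x hx x' hx'
  have := h _ (hJ t ht) _ (hJ t' ht') x hx x' hx'
  unfold rho at this ⊢
  rwa [add_sub_add_left_eq_sub] at this

lemma PH.unshift {α H t0 s : ℝ} {I : Set ℝ} {w : ℝ → ℝ → ℝ}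
    (h : PH α (Icc 0 (s - t0)) I (fun t x => w (t0 + t) x) H) : PH α (Icc t0 s) I w H := by
  have := h.shift (t0 := -t0) (J' := Icc t0 s) fun t ht => ⟨by linarith [ht.1], by linarith [ht.2]⟩
  simpa using this

/-- Translation in time. -/
lemma HeatRel.shift {t0 : ℝ} {J J' I : Set ℝ} {U D P Q : ℝ → ℝ → ℝ} (h : HeatRel J I U D P Q)
    (hJ : ∀ t ∈ J', t0 + t ∈ J) :
    HeatRel J' I (fun t x => U (t0 + t) x) (fun t x => D (t0 + t) x) (fun t x => P (t0 + t) x)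
      (fun t x => Q (t0 + t) x) := by
  intro t ht x hx
  obtain ⟨h1, h2, h3⟩ := h _ (hJ t ht) x hx
  refine ⟨h1, h2, ?_⟩
  have := HasDerivWithinAt.comp (h₂ := fun s => U s x) (h := fun s => t0 + s) t h3
    ((hasDerivWithinAt_id t J').const_add t0) hJ
  simpa [Function.comp_def] using this

/-- Subtracting a fixed profile. -/
lemma HeatRel.sub_profile {J I : Set ℝ} {U D P Q : ℝ → ℝ → ℝ} {us ps qs : ℝ → ℝ}
    (h : HeatRel J I U D P Q) (hu : ∀ x ∈ I, HasDerivWithinAt us (ps x) I x)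
    (hp : ∀ x ∈ I, HasDerivWithinAt ps (qs x) I x) :
    HeatRel J I (fun t x => U t x - us x) D (fun t x => P t x - ps x) (fun t x => Q t x - qs x) := by
  intro t ht x hx
  obtain ⟨h1, h2, h3⟩ := h t ht x hx
  exact ⟨h1.sub (hu x hx), h2.sub (hp x hx), h3.sub_const _⟩

/-! ### A priori estimate for linear equations -/

/-- The data for the linear a priori estimate near the final time `τ`: a solution of
`D = A Q + f` on `[t1, τ)` whose coefficients are Hölder continuous up to `τ`. -/
structure LinData (α l r t1 τ B : ℝ) (A f U D P Q : ℝ → ℝ → ℝ) : Prop where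
  hA : PH α (Icc t1 τ) (Icc l r) A B
  hf : PH α (Icc t1 τ) (Icc l r) f B
  hAB : ∀ t ∈ Icc t1 τ, ∀ x ∈ Icc l r, |A t x| ≤ B
  pos : ∀ t ∈ Icc t1 τ, ∀ x ∈ Icc l r, 0 < A t x
  rel : HeatRel (Ico t1 τ) (Icc l r) U D P Q
  pde : ∀ t ∈ Ico t1 τ, ∀ x ∈ Icc l r, D t x = A t x * Q t x + f t x
  hP : PH α (Ico t1 τ) (Icc l r) P B
  hPB : ∀ t ∈ Ico t1 τ, ∀ x ∈ Icc l r, |P t x| ≤ B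
  hl : ∀ t ∈ Ico t1 τ, ∀ t' ∈ Ico t1 τ, |D t l - D t' l| ≤ B * |t - t'| ^ (α / 2)
  hr : ∀ t ∈ Ico t1 τ, ∀ t' ∈ Ico t1 τ, |D t r - D t' r| ≤ B * |t - t'| ^ (α / 2)
  loc : ∀ s ∈ Ico t1 τ, ∃ N, 0 ≤ N ∧ PH α (Icc t1 s) (Icc l r) D N ∧ PH α (Icc t1 s) (Icc l r) Q N

/-- A Hölder continuous function on a bounded interval is bounded. -/
lemma holder_bounded {α l r H : ℝ} (hα : 0 < α) (hlr : l ≤ r) (hH : 0 ≤ H) {c : ℝ → ℝ}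
    (hc : ∀ x ∈ Icc l r, ∀ x' ∈ Icc l r, |c x - c x'| ≤ H * |x - x'| ^ α) :
    ∃ B, 0 ≤ B ∧ ∀ x ∈ Icc l r, |c x| ≤ B := by
  refine ⟨|c l| + H * (r - l) ^ α, by have := sub_nonneg.2 hlr; positivity, fun x hx => ?_⟩
  have h1 := hc x hx l ⟨le_rfl, hlr⟩
  have h2 : H * |x - l| ^ α ≤ H * (r - l) ^ α := by
    refine mul_le_mul_of_nonneg_left (Real.rpow_le_rpow (abs_nonneg _) ?_ hα.le) hH
    rw [abs_of_nonneg (by linarith [hx.1])]; linarith [hx.2]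
  have h3 := abs_sub_abs_le_abs_sub (c x) (c l)
  linarith

/-- Once the frozen coefficients are good on `[t0, τ)`, the solution is uniformly Hölder there. -/
lemma LinData.from_t0 {α l r t1 τ B K E Kc t0 : ℝ} {A f U D P Q : ℝ → ℝ → ℝ} {a₀ b₀ : ℝ → ℝ}
    (L : LinData α l r t1 τ B A f U D P Q) (hα : α ∈ Ioo (0:ℝ) 1) (hlr : l < r)
    (ht0 : t0 ∈ Ico t1 τ) (hK : 0 ≤ K) (hB : 0 ≤ B) (hE : 0 ≤ E) (hKc : 0 ≤ Kc)
    (hex : ∀ δ, 0 < δ → δ ≤ τ - t0 → LinSolv α l r δ K a₀ b₀)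
    (ha : ∀ x ∈ Icc l r, 0 ≤ a₀ x)
    (ha₀ : ∀ x ∈ Icc l r, ∀ x' ∈ Icc l r, |a₀ x - a₀ x'| ≤ Kc * |x - x'| ^ α)
    (hb : ∀ x ∈ Icc l r, |b₀ x| ≤ Kc)
    (hb₀ : ∀ x ∈ Icc l r, ∀ x' ∈ Icc l r, |b₀ x - b₀ x'| ≤ Kc * |x - x'| ^ α)
    (hAE : ∀ t ∈ Ico t0 τ, ∀ x ∈ Icc l r, |A t x - a₀ x| ≤ E)
    (hsm : K * ((B + Kc) * (τ - t0) ^ (α / 2) + E) ≤ 1 / 2) :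
    ∃ N, 0 ≤ N ∧ PH α (Ico t0 τ) (Icc l r) D N ∧ PH α (Ico t0 τ) (Icc l r) Q N := by
  obtain ⟨Hq, hHq, -, hQ0⟩ := L.loc t0 ht0
  have mt0 : t0 ∈ Icc t1 t0 := ⟨ht0.1, le_rfl⟩
  have hqs' : ∀ x ∈ Icc l r, ∀ x' ∈ Icc l r, |Q t0 x - Q t0 x'| ≤ Hq * |x - x'| ^ α :=
    fun x hx x' hx' => by simpa [rho_space hα] using hQ0 t0 mt0 t0 mt0 x hx x' hx'
  obtain ⟨Bq, hBq, hqs⟩ := holder_bounded hα.1 hlr.le hHq hqs'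
  have hPs : ∀ x ∈ Icc l r, ∀ x' ∈ Icc l r, |P t0 x - P t0 x'| ≤ B * |x - x'| ^ α :=
    fun x hx x' hx' => by simpa [rho_space hα] using L.hP t0 ht0 t0 ht0 x hx x' hx'
  obtain ⟨C, hC⟩ : ∃ C, C = K * (B + ((Kc * (B + B) + Kc * (B + B)) + ((B * Bq + B * Hq) + B))) :=
    ⟨_, rfl⟩
  have hC0 : 0 ≤ C := by rw [hC]; positivity
  have key : ∀ s ∈ Ioo t0 τ, PH α (Icc t0 s) (Icc l r) D (2 * C + 1) ∧
      PH α (Icc t0 s) (Icc l r) Q (2 * C + 1 + Hq) := by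
    intro s hs
    have hδ : 0 < s - t0 := sub_pos.2 hs.1
    have sh : ∀ t ∈ Icc 0 (s - t0), t0 + t ∈ Icc t1 s := fun t ht =>
      ⟨by linarith [ht.1, ht0.1], by linarith [ht.2]⟩
    have sh2 : ∀ t ∈ Icc 0 (s - t0), t0 + t ∈ Ico t0 τ := fun t ht =>
      ⟨by linarith [ht.1], by linarith [ht.2, hs.2]⟩
    have sh3 : ∀ t ∈ Icc 0 (s - t0), t0 + t ∈ Ico t1 τ := fun t ht =>
      ⟨ht0.1.trans (sh2 t ht).1, (sh2 t ht).2⟩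
    have sh4 : ∀ t ∈ Icc 0 (s - t0), t0 + t ∈ Icc t1 τ := fun t ht => Ico_subset_Icc_self (sh3 t ht)
    obtain ⟨N, hN, hD, hQ⟩ := L.loc s ⟨ht0.1.trans hs.1.le, hs.2⟩
    have hprof := PH.of_space (J := Icc 0 (s - t0)) hHq hqs'
    have hR := (L.rel.shift sh3).sub_profile (fun x hx => (L.rel t0 ht0 x hx).1)
      (fun x hx => (L.rel t0 ht0 x hx).2.1)
    have hsm' : K * ((B + Kc) * (s - t0) ^ (α / 2) + E) ≤ 1 / 2 := by
      refine le_trans ?_ hsm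
      have := Real.rpow_le_rpow hδ.le (by linarith [hs.2] : s - t0 ≤ τ - t0)
        (by linarith [hα.1] : 0 ≤ α / 2)
      gcongr
    -- Each step halves the constant up to an additive term, so iteration removes the unknown start.
    have it := iterate_half (R := fun n => PH α (Icc 0 (s - t0)) (Icc l r)
        (fun t x => D (t0 + t) x) n ∧
        PH α (Icc 0 (s - t0)) (Icc l r) (fun t x => Q (t0 + t) x - Q t0 x) n) hC0
      (add_nonneg hN hHq) (fun a b hab h => ⟨h.1.mono hab, h.2.mono hab⟩) (fun n hn h => by
        rw [hC]
        refine half_step (A := fun t x => A (t0 + t) x) (f := fun t x => f (t0 + t) x)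
          (hex _ hδ (by linarith [hs.2])) hα hlr hδ hK hn hB hE hKc
          (add_nonneg hB hB) (add_nonneg hB hB) hB hBq hHq ha ha₀ hb hb₀ hqs hqs' hR h.1 h.2
          (fun x _ => by simp) (fun x _ => by simp) ((L.hP.shift sh3).sub (PH.of_space hB hPs))
          (fun t ht x hx => (abs_sub _ _).trans
            (add_le_add (L.hPB _ (sh3 t ht) x hx) (L.hPB t0 ht0 x hx)))
          (L.hA.shift sh4) (L.hf.shift sh4) (fun t ht x hx => L.hAB _ (sh4 t ht) x hx)
          (fun t ht x hx => hAE _ (sh2 t ht) x hx)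
          (fun t ht x hx => by rw [L.pde _ (sh3 t ht) x hx]; ring)
          (fun t ht t' ht' => by
            have := L.hl _ (sh3 t ht) _ (sh3 t' ht')
            rwa [add_sub_add_left_eq_sub] at this)
          (fun t ht t' ht' => by
            have := L.hr _ (sh3 t ht) _ (sh3 t' ht')
            rwa [add_sub_add_left_eq_sub] at this) hsm')
      ⟨(hD.shift sh).mono (by linarith), (hQ.shift sh).sub hprof⟩
    refine ⟨it.1.unshift, PH.unshift ((it.2.add hprof).congr fun t ht x hx => ?_)⟩
    simp
  refine ⟨2 * C + 1 + Hq, by positivity, ?_, ?_⟩ <;> intro t ht t' ht' x hx x' hx'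
  all_goals
    obtain ⟨s, hs1, hs2⟩ := exists_between (max_lt ht.2 ht'.2)
    have hs : s ∈ Ioo t0 τ := ⟨(ht.1.trans (le_max_left _ _)).trans_lt hs1, hs2⟩
    have m1 : t ∈ Icc t0 s := ⟨ht.1, (le_max_left _ _).trans hs1.le⟩
    have m2 : t' ∈ Icc t0 s := ⟨ht'.1, (le_max_right _ _).trans hs1.le⟩
  · exact ((key s hs).1.mono (by linarith)) t m1 t' m2 x hx x' hx'
  · exact (key s hs).2 t m1 t' m2 x hx x' hx'

/-- Hölder estimate up to the final time for linear equations with Hölder coefficients. -/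
theorem LinData.apriori {α l r t1 τ B : ℝ} {A f U D P Q : ℝ → ℝ → ℝ}
    (L : LinData α l r t1 τ B A f U D P Q) (hα : α ∈ Ioo (0:ℝ) 1) (hlr : l < r)
    (ht1 : t1 < τ) (hB : 0 ≤ B) :
    ∃ N, 0 ≤ N ∧ PH α (Ico t1 τ) (Icc l r) D N ∧ PH α (Ico t1 τ) (Icc l r) Q N := by
  have hβ : 0 < α / 2 := by linarith [hα.1]
  have mτ : τ ∈ Icc t1 τ := ⟨ht1.le, le_rfl⟩
  have hAc : ContinuousOn (A τ) (Icc l r) :=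
    (L.hA.continuousOn hα).comp (f := fun x => (τ, x)) (Continuous.prodMk_right τ).continuousOn
      fun x hx => ⟨mτ, hx⟩
  obtain ⟨lam, Lam, L0, hlam, hLam, hL0, happ⟩ := approx_coeff hlr hAc (L.pos τ mτ)
  obtain ⟨K, hK, hlin⟩ := linear_exists hα hlr hL0 hlam hLam
  have hε : 0 < 1 / (8 * (K + 1)) := by positivity
  obtain ⟨c, cc, cb, cint, capp⟩ := happ _ hε
  obtain ⟨δ1, hδ1, hex⟩ := hlin c cc cb cint
  obtain ⟨Kc, hKc, A0, B0, B1⟩ := frozen_coeff hα cc fun x hx => (hlam.trans_le (cb x hx).1).ne'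
  obtain ⟨δ2, hδ2, hs2⟩ := exists_small hβ (C := B + (B + Kc)) hε
  obtain ⟨t0, h0, h01, h02⟩ : ∃ t0, t0 ∈ Ico t1 τ ∧ τ - t0 ≤ δ1 ∧ τ - t0 ≤ δ2 := by
    refine ⟨max t1 (max (τ - δ1) (τ - δ2)), ⟨le_max_left _ _, max_lt ht1 (max_lt ?_ ?_)⟩, ?_, ?_⟩
    · linarith
    · linarith
    · linarith [(le_max_left (τ - δ1) (τ - δ2)).trans (le_max_right t1 _)]
    · linarith [(le_max_right (τ - δ1) (τ - δ2)).trans (le_max_right t1 _)]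
  have hpos : 0 < τ - t0 := sub_pos.2 h0.2
  have hsm := hs2 _ hpos.le h02
  have hb1 : B * (τ - t0) ^ (α / 2) ≤ 1 / (8 * (K + 1)) := by
    refine le_trans ?_ hsm
    have := Real.rpow_nonneg hpos.le (α / 2)
    gcongr; linarith
  have hb2 : (B + Kc) * (τ - t0) ^ (α / 2) ≤ 1 / (8 * (K + 1)) := by
    refine le_trans ?_ hsm
    have := Real.rpow_nonneg hpos.le (α / 2)
    gcongr; linarith
  have hKε : K * (1 / (8 * (K + 1)) + (1 / (8 * (K + 1)) + 1 / (8 * (K + 1)))) ≤ 1 / 2 := by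
    rw [show K * (1 / (8 * (K + 1)) + (1 / (8 * (K + 1)) + 1 / (8 * (K + 1))))
      = 3 * K / (8 * (K + 1)) by ring, div_le_div_iff₀ (by positivity) (by norm_num)]
    nlinarith
  obtain ⟨N, hN, hD, hQ⟩ := L.from_t0 hα hlr h0 hK hB
    (E := 1 / (8 * (K + 1)) + 1 / (8 * (K + 1))) (by positivity) hKc
    (fun δ hδ hle => hex δ hδ (hle.trans h01)) (fun x _ => by positivity) A0 B0 B1
    (fun t ht x hx => by
      have e1 : |A t x - A τ x| ≤ B * |t - τ| ^ (α / 2) := by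
        simpa [rho_time hα] using
          L.hA t ⟨h0.1.trans ht.1, ht.2.le⟩ τ mτ x hx x hx
      have e2 : B * |t - τ| ^ (α / 2) ≤ B * (τ - t0) ^ (α / 2) := by
        refine mul_le_mul_of_nonneg_left (Real.rpow_le_rpow (abs_nonneg _) ?_ hβ.le) hB
        rw [abs_of_nonpos (by linarith [ht.2])]; linarith [ht.1]
      exact (abs_sub_le _ (A τ x) _).trans (add_le_add (e1.trans (e2.trans hb1)) (capp x hx)))
    (le_trans (mul_le_mul_of_nonneg_left (by linarith) hK) hKε)
  obtain ⟨N', hN', hD', hQ'⟩ := L.loc t0 h0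
  have hun : Icc t1 t0 ∪ Ico t0 τ = Ico t1 τ := Icc_union_Ico_eq_Ico h0.1 h0.2
  refine ⟨N' + N, by positivity, ?_, ?_⟩ <;> rw [← hun]
  · exact hD'.glue hα hN' hN hD ⟨h0.1, le_rfl⟩ ⟨le_rfl, h0.2⟩ (fun t ht => ht.2) fun t ht => ht.1
  · exact hQ'.glue hα hN' hN hQ ⟨h0.1, le_rfl⟩ ⟨le_rfl, h0.2⟩ (fun t ht => ht.2) fun t ht => ht.1

/-! ### Uniform regularity of the maximal solution -/

/-- Limits in time inherit bounds. -/
lemma PH.ext_le {α H M : ℝ} {J I : Set ℝ} {w : ℝ → ℝ → ℝ} (hα : α ∈ Ioo (0:ℝ) 1)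
    (h : PH α J I w H) (hb : ∀ t ∈ J, ∀ x ∈ I, |w t x| ≤ M) {t x : ℝ} (ht : t ∈ closure J)
    (hx : x ∈ I) : |extT J w t x| ≤ M := by
  have : (𝓝[J] t).NeBot := mem_closure_iff_nhdsWithin_neBot.1 ht
  refine le_of_tendsto (h.tendsto_ext hα (J' := closure J) subset_rfl ht hx).abs ?_
  filter_upwards [self_mem_nhdsWithin] with s hs using hb s hs x hx

/-- A function whose space derivative is Hölder continuous in time and whose time derivative is
bounded at one boundary point is Hölder continuous. -/
lemma holder_of_trace {α l r τ M Λ : ℝ} {U D P Q : ℝ → ℝ → ℝ} (hα : α ∈ Ioo (0:ℝ) 1)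
    (hlr : l < r) (hτ : 0 < τ) (hM : 0 ≤ M) (hΛ : 0 ≤ Λ) (hR : HeatRel (Ioo 0 τ) (Icc l r) U D P Q)
    (hPM : ∀ t ∈ Ioo 0 τ, ∀ x ∈ Icc l r, |P t x| ≤ M) (hP : PH α (Ioo 0 τ) (Icc l r) P M)
    (hD : ∀ t ∈ Ioo 0 τ, |D t l| ≤ Λ) :
    PH α (Ioo 0 τ) (Icc l r) U
      (M * (r - l) ^ (1 - α) + (Λ * τ ^ (1 - α / 2) + M * (r - l))) := by
  have ll : l ∈ Icc l r := ⟨le_rfl, hlr.le⟩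
  have hrl : 0 < r - l := sub_pos.2 hlr
  refine PH.of_sep (fun t ht x hx x' hx' => ?_) (fun t ht t' ht' x hx => ?_)
  · refine (holder_of_deriv hα (fun x hx => (hR t ht x hx).1) (hPM t ht) x hx x' hx').trans
      (mul_le_mul_of_nonneg_right (le_add_of_nonneg_right (by positivity)) (by positivity))
  · have h1 : |U t l - U t' l| ≤ Λ * |t - t'| :=
      mvt_le (convex_Ioo 0 τ) (fun s hs => (hR s hs l ll).2.2) hD ht' ht
    have h2 : |t - t'| ≤ τ ^ (1 - α / 2) * |t - t'| ^ (α / 2) :=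
      abs_le_rpow_of_le (α := α / 2) ⟨by linarith [hα.1], by linarith [hα.2]⟩ (abs_nonneg _)
        (abs_le.2 ⟨by linarith [ht.1, ht'.2], by linarith [ht.2, ht'.1]⟩)
    have h3 := mvt_le (convex_Icc l r) (f := fun y => U t y - U t' y)
      (fun y hy => (hR t ht y hy).1.sub (hR t' ht' y hy).1)
      (fun y hy => by simpa [rho_time hα] using hP t ht t' ht' y hy y hy) ll hx
    have h4 : M * |t - t'| ^ (α / 2) * |x - l| ≤ M * (r - l) * |t - t'| ^ (α / 2) := by
      rw [show |x - l| = x - l from abs_of_nonneg (by linarith [hx.1])]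
      have : x - l ≤ r - l := by linarith [hx.2]
      have h0 : 0 ≤ M * |t - t'| ^ (α / 2) := by positivity
      nlinarith
    have h5 : |U t x - U t' x| ≤ |U t x - U t' x - (U t l - U t' l)| + |U t l - U t' l| := by
      have := abs_add_le (U t x - U t' x - (U t l - U t' l)) (U t l - U t' l)
      rwa [sub_add_cancel] at this
    have h6 : Λ * |t - t'| ≤ Λ * τ ^ (1 - α / 2) * |t - t'| ^ (α / 2) := by
      rw [mul_assoc]; exact mul_le_mul_of_nonneg_left h2 hΛ
    have h7 : 0 ≤ M * (r - l) ^ (1 - α) * |t - t'| ^ (α / 2) := by positivity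
    rw [add_mul, add_mul]
    linarith

section uniform
variable {α l r T τ M : ℝ} {A f Gl Gr : ℝ × ℝ × ℝ × ℝ → ℝ} {U D P Q : ℝ → ℝ → ℝ}
  (hloc : ∀ s ∈ Ioo 0 τ, ∃ N, 0 ≤ N ∧ QSol α l r A f Gl Gr (Ioo 0 s) U D P Q N)
include hloc

/-- Derivatives in open time intervals are local, so the relations on each `(0,s)`, `s < τ`, hold
on `(0,τ)`. -/
lemma loc_rel : HeatRel (Ioo 0 τ) (Icc l r) U D P Q := by
  intro t ht x hx
  obtain ⟨s, h1, h2⟩ := exists_between ht.2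
  obtain ⟨N, -, hS⟩ := hloc s ⟨ht.1.trans h1, h2⟩
  obtain ⟨e1, e2, e3⟩ := hS.rel t ⟨ht.1, h1⟩ x hx
  exact ⟨e1, e2, (e3.hasDerivAt (Ioo_mem_nhds ht.1 h1)).hasDerivWithinAt⟩

lemma loc_eqs : ∀ t ∈ Ioo 0 τ,
    (∀ x ∈ Icc l r, D t x = A (t, x, U t x, P t x) * Q t x + f (t, x, U t x, P t x)) ∧
      D t l = Gl (t, l, U t l, P t l) ∧ D t r = Gr (t, r, U t r, P t r) := by
  intro t ht
  obtain ⟨s, h1, h2⟩ := exists_between ht.2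
  obtain ⟨N, -, hS⟩ := hloc s ⟨ht.1.trans h1, h2⟩
  exact ⟨hS.pde t ⟨ht.1, h1⟩, hS.bl t ⟨ht.1, h1⟩, hS.br t ⟨ht.1, h1⟩⟩

/-- Uniform Hölder estimate up to the final time for the quasilinear problem: once `u`, `u_x` and
the Hölder seminorms of `u_x` are bounded, the equation is linear with Hölder coefficients. -/
lemma qsol_uniform (hα : α ∈ Ioo (0:ℝ) 1) (hlr : l < r) (hτ : 0 < τ) (hτT : τ ≤ T) (hM : 0 ≤ M)
    (hA : ContDiffOn ℝ 2 A (Dom T l r)) (hf : ContDiffOn ℝ 2 f (Dom T l r))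
    (hGl : ContDiffOn ℝ 2 Gl (Dom T l r)) (hGr : ContDiffOn ℝ 2 Gr (Dom T l r))
    (hpos : ∀ y ∈ Dom T l r, 0 < A y)
    (hb : ∀ t ∈ Ioo 0 τ, ∀ x ∈ Icc l r, |U t x| ≤ M ∧ |P t x| ≤ M)
    (hP : PH α (Ioo 0 τ) (Icc l r) P M) :
    ∃ N Hu, 0 ≤ N ∧ QSol α l r A f Gl Gr (Ioo 0 τ) U D P Q N ∧ PH α (Ioo 0 τ) (Icc l r) U Hu := by
  have hT : 0 < T := hτ.trans_le hτT
  have ll : l ∈ Icc l r := ⟨le_rfl, hlr.le⟩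
  have rr : r ∈ Icc l r := ⟨hlr.le, le_rfl⟩
  have hβ : 0 < α / 2 := by linarith [hα.1]
  obtain ⟨Λ1, n1, bA⟩ := nem_exists hT hlr hA M
  obtain ⟨Λ2, n2, bf⟩ := nem_exists hT hlr hf M
  obtain ⟨Λ3, n3, bGl⟩ := nem_exists hT hlr hGl M
  obtain ⟨Λ4, n4, bGr⟩ := nem_exists hT hlr hGr M
  have hR := loc_rel hloc
  have hE := loc_eqs hloc
  have box : ∀ t ∈ Ioo 0 τ, ∀ x ∈ Icc l r, (t, x, U t x, P t x) ∈ Box T l r M := fun t ht x hx =>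
    ⟨⟨ht.1.le, ht.2.le.trans hτT⟩, hx, abs_le.1 (hb t ht x hx).1, abs_le.1 (hb t ht x hx).2⟩
  have hU := holder_of_trace hα hlr hτ hM n3 hR (fun t ht x hx => (hb t ht x hx).2) hP
    (fun t ht => by rw [(hE t ht).2.1]; exact bGl.1 _ (box t ht l ll))
  obtain ⟨Hu, hHu⟩ : ∃ Hu, Hu = M * (r - l) ^ (1 - α) + (Λ3 * τ ^ (1 - α / 2) + M * (r - l)) :=
    ⟨_, rfl⟩
  have hrl : 0 < r - l := sub_pos.2 hlr
  have hHu0 : 0 ≤ Hu := by rw [hHu]; positivity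
  rw [← hHu] at hU
  obtain ⟨t1, h1, h2, h3⟩ : ∃ t1, 0 < t1 ∧ t1 < τ ∧ τ - t1 ≤ 1 :=
    ⟨max (τ / 2) (τ - 1), lt_max_of_lt_left (by linarith), max_lt (by linarith) (by linarith),
      by linarith [le_max_right (τ / 2) (τ - 1)]⟩
  have hJ : Ico t1 τ ⊆ Ioo 0 τ := fun t ht => ⟨h1.trans_le ht.1, ht.2⟩
  have hcl : Icc t1 τ ⊆ closure (Ico t1 τ) := by rw [closure_Ico h2.ne]
  obtain ⟨h, hh⟩ : ∃ h, h = Hu + M := ⟨_, rfl⟩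
  have hh0 : 0 ≤ h := by linarith
  have hU1 : PH α (Ico t1 τ) (Icc l r) U h := (hU.subset hJ subset_rfl).mono (by linarith)
  have hP1 : PH α (Ico t1 τ) (Icc l r) P h := (hP.subset hJ subset_rfl).mono (by linarith)
  have hU2 := hU1.ext hα hcl
  have hP2 := hP1.ext hα hcl
  have box2 : ∀ t ∈ Icc t1 τ, ∀ x ∈ Icc l r,
      (0 + t, x, extT (Ico t1 τ) U t x, extT (Ico t1 τ) P t x) ∈ Box T l r M := fun t ht x hx => by
    rw [zero_add]
    exact ⟨⟨h1.le.trans ht.1, ht.2.trans hτT⟩, hx,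
      abs_le.1 (hU1.ext_le hα (fun t ht x hx => (hb t (hJ ht) x hx).1) (hcl ht) hx),
      abs_le.1 (hP1.ext_le hα (fun t ht x hx => (hb t (hJ ht) x hx).2) (hcl ht) hx)⟩
  have hJ1 : ∀ t ∈ Icc t1 τ, ∀ t' ∈ Icc t1 τ, |t - t'| ≤ 1 := fun t ht t' ht' =>
    abs_le.2 ⟨by linarith [ht.1, ht'.2], by linarith [ht.2, ht'.1]⟩
  have cA := bA.comp (t0 := 0) hα hlr.le n1 hJ1 hh0 box2 hU2 hP2
  have cf := bf.comp (t0 := 0) hα hlr.le n2 hJ1 hh0 box2 hU2 hP2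
  have cl := bGl.comp (t0 := 0) hα hlr.le n3 hJ1 hh0 box2 hU2 hP2
  have cr := bGr.comp (t0 := 0) hα hlr.le n4 hJ1 hh0 box2 hU2 hP2
  have hk : 0 ≤ kap α l r := by unfold kap; positivity
  have hkh : 0 ≤ kap α l r + h := by positivity
  obtain ⟨B, hB⟩ : ∃ B, B = (Λ1 + Λ2 + Λ3 + Λ4) * (kap α l r + h) + Λ1 + M := ⟨_, rfl⟩
  have hB0 : 0 ≤ B := by rw [hB]; positivity
  have w1 : Λ1 * (kap α l r + h) ≤ B := by rw [hB]; nlinarith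
  have w2 : Λ2 * (kap α l r + h) ≤ B := by rw [hB]; nlinarith
  have w3 : Λ3 * (kap α l r + h) ≤ B := by rw [hB]; nlinarith
  have w4 : Λ4 * (kap α l r + h) ≤ B := by rw [hB]; nlinarith
  have w0 : 0 ≤ (Λ1 + Λ2 + Λ3 + Λ4) * (kap α l r + h) := by positivity
  have eqU : ∀ t ∈ Ico t1 τ, ∀ x ∈ Icc l r, extT (Ico t1 τ) U t x = U t x :=
    fun t ht x hx => hU1.ext_eq hα ht hx
  have eqP : ∀ t ∈ Ico t1 τ, ∀ x ∈ Icc l r, extT (Ico t1 τ) P t x = P t x :=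
    fun t ht x hx => hP1.ext_eq hα ht hx
  have L : LinData α l r t1 τ B
      (fun t x => A (0 + t, x, extT (Ico t1 τ) U t x, extT (Ico t1 τ) P t x))
      (fun t x => f (0 + t, x, extT (Ico t1 τ) U t x, extT (Ico t1 τ) P t x)) U D P Q := by
    refine ⟨cA.mono w1, cf.mono w2, fun t ht x hx => (bA.1 _ (box2 t ht x hx)).trans (by linarith),
      fun t ht x hx => hpos _ ⟨(box2 t ht x hx).1, hx, trivial⟩, fun t ht x hx => ?_,
      fun t ht x hx => ?_, (hP.subset hJ subset_rfl).mono (by linarith),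
      fun t ht x hx => (hb t (hJ ht) x hx).2.trans (by linarith), fun t ht t' ht' => ?_,
      fun t ht t' ht' => ?_, fun s hs => ?_⟩
    · obtain ⟨e1, e2, e3⟩ := hR t (hJ ht) x hx
      exact ⟨e1, e2, e3.mono hJ⟩
    · simp only [zero_add, eqU t ht x hx, eqP t ht x hx]
      exact (hE t (hJ ht)).1 x hx
    · have := (cl.mono w3) t (Ico_subset_Icc_self ht) t' (Ico_subset_Icc_self ht') l ll l ll
      simp only [zero_add, eqU t ht l ll, eqP t ht l ll, eqU t' ht' l ll, eqP t' ht' l ll,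
        rho_time hα] at this
      rwa [(hE t (hJ ht)).2.1, (hE t' (hJ ht')).2.1]
    · have := (cr.mono w4) t (Ico_subset_Icc_self ht) t' (Ico_subset_Icc_self ht') r rr r rr
      simp only [zero_add, eqU t ht r rr, eqP t ht r rr, eqU t' ht' r rr, eqP t' ht' r rr,
        rho_time hα] at this
      rwa [(hE t (hJ ht)).2.2, (hE t' (hJ ht')).2.2]
    · obtain ⟨s', e1, e2⟩ := exists_between hs.2
      obtain ⟨N, hN, hS⟩ := hloc s' ⟨(h1.trans_le hs.1).trans e1, e2⟩
      have hs' : Icc t1 s ⊆ Ioo 0 s' := fun t ht => ⟨h1.trans_le ht.1, ht.2.trans_lt e1⟩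
      exact ⟨N, hN, hS.hD.subset hs' subset_rfl, hS.hQ.subset hs' subset_rfl⟩
  obtain ⟨N, hN, hD', hQ'⟩ := L.apriori hα hlr h2 hB0
  obtain ⟨s', e1, e2⟩ := exists_between h2
  obtain ⟨N', hN', hS⟩ := hloc s' ⟨h1.trans e1, e2⟩
  have hs' : Ioc 0 t1 ⊆ Ioo 0 s' := fun t ht => ⟨ht.1, ht.2.trans_lt e1⟩
  have hun : Ioc 0 t1 ∪ Ico t1 τ = Ioo 0 τ := by
    ext t
    simp only [mem_union, mem_Ioc, mem_Ico, mem_Ioo]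
    constructor
    · rintro (h | h)
      · exact ⟨h.1, h.2.trans_lt h2⟩
      · exact ⟨h1.trans_le h.1, h.2⟩
    · intro h
      rcases le_total t t1 with h' | h'
      · exact Or.inl ⟨h.1, h'⟩
      · exact Or.inr ⟨h', h.2⟩
  have g : ∀ {w : ℝ → ℝ → ℝ}, PH α (Ioo 0 s') (Icc l r) w N' → PH α (Ico t1 τ) (Icc l r) w N →
      PH α (Ioo 0 τ) (Icc l r) w (N' + N) := by
    intro w hw hw'
    rw [← hun]
    exact (hw.subset hs' subset_rfl).glue hα hN' hN hw' ⟨h1, le_rfl⟩ ⟨le_rfl, h2⟩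
      (fun t ht => ht.2) fun t ht => ht.1
  exact ⟨N' + N, Hu, by positivity, ⟨hR, g hS.hD hD', g hS.hQ hQ', fun t ht => (hE t ht).1,
    fun t ht => (hE t ht).2.1, fun t ht => (hE t ht).2.2⟩, hU⟩

end uniform

/-! ### Continuation -/

lemma PH.bounded {α l r T H : ℝ} {J : Set ℝ} {w : ℝ → ℝ → ℝ} (hα : α ∈ Ioo (0:ℝ) 1) (hlr : l ≤ r)
    (hJ : J ⊆ Icc 0 T) (h : PH α J (Icc l r) w H) :
    ∃ B, 0 ≤ B ∧ ∀ t ∈ J, ∀ x ∈ Icc l r, |w t x| ≤ B := by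
  rcases J.eq_empty_or_nonempty with rfl | ⟨t1, h1⟩
  · exact ⟨0, le_rfl, fun t ht => absurd ht (notMem_empty t)⟩
  have hT : 0 ≤ T := (hJ h1).1.trans (hJ h1).2
  have hr : 0 ≤ r - l := sub_nonneg.2 hlr
  refine ⟨|H| * ((r - l) ^ α + T ^ (α / 2)) + |w t1 l|, by positivity, fun t ht x hx => ?_⟩
  have e1 := h t ht t1 h1 x hx l ⟨le_rfl, hlr⟩
  have e2 : rho α t x t1 l ≤ (r - l) ^ α + T ^ (α / 2) := by
    refine add_le_add ?_ ?_
    · refine Real.rpow_le_rpow (abs_nonneg _) (abs_le.2 ⟨?_, ?_⟩) hα.1.le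
      · linarith [hx.1]
      · linarith [hx.2]
    · refine Real.rpow_le_rpow (abs_nonneg _) (abs_le.2 ⟨?_, ?_⟩) (by linarith [hα.1])
      · linarith [(hJ ht).1, (hJ h1).2]
      · linarith [(hJ ht).2, (hJ h1).1]
  have e3 : H * rho α t x t1 l ≤ |H| * ((r - l) ^ α + T ^ (α / 2)) :=
    mul_le_mul (le_abs_self H) e2 (rho_nonneg _ _ _ _ _) (abs_nonneg _)
  have e4 : |w t x| ≤ |w t x - w t1 l| + |w t1 l| := by
    have := abs_add_le (w t x - w t1 l) (w t1 l)
    rwa [sub_add_cancel] at this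
  linarith

/-- A solution on an open time interval extends to the closed interval. -/
lemma QSol.to_Icc {α l r T τ N Hu Hp : ℝ} {A f Gl Gr : ℝ × ℝ × ℝ × ℝ → ℝ} {U D P Q : ℝ → ℝ → ℝ}
    (hα : α ∈ Ioo (0:ℝ) 1) (hlr : l < r) (hτ : 0 < τ) (hτT : τ ≤ T)
    (hA : ContinuousOn A (Dom T l r)) (hf : ContinuousOn f (Dom T l r))
    (hGl : ContinuousOn Gl (Dom T l r)) (hGr : ContinuousOn Gr (Dom T l r))
    (h : QSol α l r A f Gl Gr (Ioo 0 τ) U D P Q N) (hN : 0 ≤ N)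
    (hU : PH α (Ioo 0 τ) (Icc l r) U Hu) (hP : PH α (Ioo 0 τ) (Icc l r) P Hp) :
    QSol α l r A f Gl Gr (Icc 0 τ) (extT (Ioo 0 τ) U) (extT (Ioo 0 τ) D) (extT (Ioo 0 τ) P)
      (extT (Ioo 0 τ) Q) N := by
  have hJT : Ioo 0 τ ⊆ Icc 0 T := fun t ht => ⟨ht.1.le, ht.2.le.trans hτT⟩
  obtain ⟨B, hB, hb⟩ := h.hQ.bounded hα hlr.le hJT
  exact h.closure hα hlr.le hA hf hGl hGr (convex_Ioo 0 τ) (closure_Ioo hτ.ne).ge hJT hN hB hU hP hb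

/-- Being a solution only depends on the values on the space-time domain. -/
lemma QSol.congr {α l r N : ℝ} {A f Gl Gr : ℝ × ℝ × ℝ × ℝ → ℝ} {J : Set ℝ}
    {U D P Q U' D' P' Q' : ℝ → ℝ → ℝ} (hlr : l ≤ r) (h : QSol α l r A f Gl Gr J U D P Q N)
    (eU : ∀ t ∈ J, ∀ x ∈ Icc l r, U' t x = U t x) (eD : ∀ t ∈ J, ∀ x ∈ Icc l r, D' t x = D t x)
    (eP : ∀ t ∈ J, ∀ x ∈ Icc l r, P' t x = P t x) (eQ : ∀ t ∈ J, ∀ x ∈ Icc l r, Q' t x = Q t x) :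
    QSol α l r A f Gl Gr J U' D' P' Q' N := by
  have ll : l ∈ Icc l r := ⟨le_rfl, hlr⟩
  have rr : r ∈ Icc l r := ⟨hlr, le_rfl⟩
  refine ⟨fun t ht x hx => ?_, h.hD.congr eD, h.hQ.congr eQ, fun t ht x hx => ?_,
    fun t ht => ?_, fun t ht => ?_⟩
  · obtain ⟨a, b, c⟩ := h.rel t ht x hx
    rw [eP t ht x hx, eQ t ht x hx, eD t ht x hx]
    exact ⟨a.congr (eU t ht) (eU t ht x hx), b.congr (eP t ht) (eP t ht x hx),
      c.congr (fun s hs => eU s hs x hx) (eU t ht x hx)⟩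
  · rw [eU t ht x hx, eP t ht x hx, eQ t ht x hx, eD t ht x hx]; exact h.pde t ht x hx
  · rw [eU t ht l ll, eP t ht l ll, eD t ht l ll]; exact h.bl t ht
  · rw [eU t ht r rr, eP t ht r rr, eD t ht r rr]; exact h.br t ht

/-- Solutions on adjacent time intervals with common values form one solution. -/
lemma QSol.union {α l r s s' N N' : ℝ} {A f Gl Gr : ℝ × ℝ × ℝ × ℝ → ℝ}
    {U D P Q : ℝ → ℝ → ℝ} (hα : α ∈ Ioo (0:ℝ) 1) (h0 : 0 ≤ s) (hs : s ≤ s') (hN : 0 ≤ N)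
    (hN' : 0 ≤ N')
    (h : QSol α l r A f Gl Gr (Icc 0 s) U D P Q N)
    (h' : QSol α l r A f Gl Gr (Icc s s') U D P Q N') :
    QSol α l r A f Gl Gr (Icc 0 s') U D P Q (N + N') := by
  have m1 : s ∈ Icc 0 s := ⟨h0, le_rfl⟩
  have m2 : s ∈ Icc s s' := ⟨le_rfl, hs⟩
  have hu : Icc 0 s ∪ Icc s s' = Icc 0 s' := Icc_union_Icc_eq_Icc h0 hs
  rw [← hu]
  refine ⟨fun t ht x hx => ?_, h.hD.glue hα hN hN' h'.hD m1 m2 (fun t ht => ht.2) (fun t ht => ht.1),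
    h.hQ.glue hα hN hN' h'.hQ m1 m2 (fun t ht => ht.2) (fun t ht => ht.1), ?_, ?_, ?_⟩
  · rcases lt_trichotomy t s with hlt | rfl | hgt
    · have ht' : t ∈ Icc 0 s := ⟨by rcases ht with ht | ht; exacts [ht.1, h0.trans ht.1], hlt.le⟩
      obtain ⟨a, b, c⟩ := h.rel t ht' x hx
      refine ⟨a, b, c.mono_of_mem_nhdsWithin ?_⟩
      rw [hu]
      filter_upwards [self_mem_nhdsWithin, mem_nhdsWithin_of_mem_nhds (Iio_mem_nhds hlt)] with y hy hy'
      exact ⟨hy.1, le_of_lt hy'⟩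
    · obtain ⟨a, b, c⟩ := h.rel t m1 x hx
      exact ⟨a, b, c.union (h'.rel t m2 x hx).2.2⟩
    · have ht' : t ∈ Icc s s' :=
        ⟨hgt.le, by rcases ht with ht | ht; exacts [ht.2.trans hs, ht.2]⟩
      obtain ⟨a, b, c⟩ := h'.rel t ht' x hx
      refine ⟨a, b, c.mono_of_mem_nhdsWithin ?_⟩
      rw [hu]
      filter_upwards [self_mem_nhdsWithin, mem_nhdsWithin_of_mem_nhds (Ioi_mem_nhds hgt)] with y hy hy'
      exact ⟨le_of_lt hy', hy.2⟩
  · rintro t (ht | ht) x hx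
    exacts [h.pde t ht x hx, h'.pde t ht x hx]
  · rintro t (ht | ht)
    exacts [h.bl t ht, h'.bl t ht]
  · rintro t (ht | ht)
    exacts [h.br t ht, h'.br t ht]

/-- Concatenation of two functions in time. -/
def cat (s : ℝ) (w w' : ℝ → ℝ → ℝ) (t x : ℝ) : ℝ := if t ≤ s then w t x else w' t x

lemma cat_left {s t x : ℝ} {w w' : ℝ → ℝ → ℝ} (h : t ≤ s) : cat s w w' t x = w t x := if_pos h

lemma cat_right {s t x : ℝ} {w w' : ℝ → ℝ → ℝ} (h : s ≤ t) (he : w s x = w' s x) :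
    cat s w w' t x = w' t x := by
  rcases h.eq_or_lt with rfl | h
  · rw [cat_left le_rfl, he]
  · exact if_neg (not_le.2 h)

/-- A solution on `[0, s]` with `s < T` can be continued. -/
lemma QSol.continue {α l r T s N : ℝ} {A f Gl Gr : ℝ × ℝ × ℝ × ℝ → ℝ} {U D P Q : ℝ → ℝ → ℝ}
    (hα : α ∈ Ioo (0:ℝ) 1) (hlr : l < r) (hs : 0 < s) (hsT : s < T)
    (hA : ContDiffOn ℝ 2 A (Dom T l r)) (hf : ContDiffOn ℝ 2 f (Dom T l r))
    (hGl : ContDiffOn ℝ 2 Gl (Dom T l r)) (hGr : ContDiffOn ℝ 2 Gr (Dom T l r))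
    (hpos : ∀ y ∈ Dom T l r, 0 < A y) (hN : 0 ≤ N)
    (h : QSol α l r A f Gl Gr (Icc 0 s) U D P Q N) :
    ∃ δ, 0 < δ ∧ s + δ ≤ T ∧ ∃ N' U' D' P' Q', 0 ≤ N' ∧
      QSol α l r A f Gl Gr (Icc 0 (s + δ)) U' D' P' Q' N' ∧
      ∀ t ∈ Icc 0 s, ∀ x, U' t x = U t x := by
  have ll : l ∈ Icc l r := ⟨le_rfl, hlr.le⟩
  have rr : r ∈ Icc l r := ⟨hlr.le, le_rfl⟩
  have m1 : s ∈ Icc 0 s := ⟨hs.le, le_rfl⟩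
  obtain ⟨δ, hδ, hδT, N₁, V, E, R, S, hV, h0⟩ := local_exists hα hlr hA hf hGl hGr hpos hs.le hsT
    (us := U s) (ps := P s) (qs := Q s) (Hq := N)
    (fun x hx => (h.rel s m1 x hx).1) (fun x hx => (h.rel s m1 x hx).2.1) hN
    (fun x hx x' hx' => by simpa only [rho_space hα] using h.hQ s m1 s m1 x hx x' hx')
    ((h.pde s m1 l ll).symm.trans (h.bl s m1)) ((h.pde s m1 r rr).symm.trans (h.br s m1))
  have m2 : s ∈ Icc s (s + δ) := ⟨le_rfl, by linarith⟩
  have eU : ∀ x ∈ Icc l r, U s x = V s x := fun x hx => (h0 x hx).symm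
  have eP : ∀ x ∈ Icc l r, P s x = R s x := fun x hx =>
    (uniqueDiffOn_Icc hlr x hx).eq_deriv _ (h.rel s m1 x hx).1
      ((hV.rel s m2 x hx).1.congr eU (eU x hx))
  have eQ : ∀ x ∈ Icc l r, Q s x = S s x := fun x hx =>
    (uniqueDiffOn_Icc hlr x hx).eq_deriv _ (h.rel s m1 x hx).2.1
      ((hV.rel s m2 x hx).2.1.congr eP (eP x hx))
  have eD : ∀ x ∈ Icc l r, D s x = E s x := fun x hx => by
    rw [h.pde s m1 x hx, hV.pde s m2 x hx, eU x hx, eP x hx, eQ x hx]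
  have hV' : QSol α l r A f Gl Gr (Icc s (s + δ)) V E R S (max N₁ 0) :=
    ⟨hV.rel, hV.hD.mono (le_max_left _ _), hV.hQ.mono (le_max_left _ _), hV.pde, hV.bl, hV.br⟩
  refine ⟨δ, hδ, hδT, N + max N₁ 0, cat s U V, cat s D E, cat s P R, cat s Q S,
    add_nonneg hN (le_max_right _ _), ?_, fun t ht x => cat_left ht.2⟩
  refine QSol.union hα hs.le (by linarith) hN (le_max_right _ _) ?_ ?_
  · exact h.congr hlr.le (fun t ht x _ => cat_left ht.2) (fun t ht x _ => cat_left ht.2)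
      (fun t ht x _ => cat_left ht.2) (fun t ht x _ => cat_left ht.2)
  · exact hV'.congr hlr.le (fun t ht x hx => cat_right ht.1 (eU x hx))
      (fun t ht x hx => cat_right ht.1 (eD x hx)) (fun t ht x hx => cat_right ht.1 (eP x hx))
      (fun t ht x hx => cat_right ht.1 (eQ x hx))

/-! ### Taylor extension beyond the lateral boundary -/

/-- One-sided derivatives on three adjacent intervals that match give a two-sided derivative. -/
lemma glue_deriv {l r : ℝ} (hlr : l < r) {f f' : ℝ → ℝ}
    (hm : ∀ x ∈ Icc l r, HasDerivWithinAt f (f' x) (Icc l r) x)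
    (hl : ∀ x ≤ l, HasDerivWithinAt f (f' x) (Iic l) x)
    (hr : ∀ x, r ≤ x → HasDerivWithinAt f (f' x) (Ici r) x) (x : ℝ) : HasDerivAt f (f' x) x := by
  rcases lt_trichotomy x l with h | rfl | h
  · exact (hl x h.le).hasDerivAt (Iic_mem_nhds h)
  · refine ((hl x le_rfl).union (hm x ⟨le_rfl, hlr.le⟩)).hasDerivAt ?_
    rw [Iic_union_Icc_eq_Iic hlr.le]; exact Iic_mem_nhds hlr
  rcases lt_trichotomy x r with h' | rfl | h'
  · exact (hm x ⟨h.le, h'.le⟩).hasDerivAt (Icc_mem_nhds h h')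
  · refine ((hm x ⟨hlr.le, le_rfl⟩).union (hr x le_rfl)).hasDerivAt ?_
    rw [Icc_union_Ici_eq_Ici hlr.le]; exact Ici_mem_nhds hlr
  · exact (hr x h'.le).hasDerivAt (Ici_mem_nhds h')

lemma clamp_of_le {l r x : ℝ} (hlr : l ≤ r) (h : x ≤ l) : clamp l r x = l := by
  unfold clamp; rw [min_eq_right (h.trans hlr), max_eq_left h]

lemma clamp_of_ge {l r x : ℝ} (hlr : l ≤ r) (h : r ≤ x) : clamp l r x = r := by
  unfold clamp; rw [min_eq_left h, max_eq_right hlr]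

/-- The derivative of `tay`. -/
def tay1 (l r : ℝ) (p q : ℝ → ℝ) (x : ℝ) : ℝ :=
  p (clamp l r x) + q (clamp l r x) * (x - clamp l r x)

/-- Extension of a function from `[l, r]` to the line by its second order Taylor polynomials at
the end points; `p` and `q` stand for the first two derivatives. -/
def tay (l r : ℝ) (u p q : ℝ → ℝ) (x : ℝ) : ℝ :=
  u (clamp l r x) + p (clamp l r x) * (x - clamp l r x) +
    q (clamp l r x) * (x - clamp l r x) ^ 2 / 2

lemma tay_of_mem {l r x : ℝ} {u p q : ℝ → ℝ} (h : x ∈ Icc l r) : tay l r u p q x = u x := by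
  unfold tay; rw [clamp_of_mem h]; ring

lemma tay1_of_mem {l r x : ℝ} {p q : ℝ → ℝ} (h : x ∈ Icc l r) : tay1 l r p q x = p x := by
  unfold tay1; rw [clamp_of_mem h]; ring

lemma tay_deriv {l r : ℝ} (hlr : l < r) {u p q : ℝ → ℝ}
    (hu : ∀ x ∈ Icc l r, HasDerivWithinAt u (p x) (Icc l r) x) (x : ℝ) :
    HasDerivAt (tay l r u p q) (tay1 l r p q x) x := by
  have poly : ∀ A B C y x : ℝ, HasDerivAt (fun z => A + B * (z - y) + C * (z - y) ^ 2 / 2)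
      (B + C * (x - y)) x := by
    intro A B C y x
    have h1 : HasDerivAt (fun z : ℝ => z - y) 1 x := (hasDerivAt_id x).sub_const y
    refine (((h1.const_mul B).const_add A).add (((h1.pow 2).const_mul C).div_const 2)).congr_deriv ?_
    simp; ring
  refine glue_deriv hlr (fun x hx => ?_) (fun x hx => ?_) (fun x hx => ?_) x
  · rw [tay1_of_mem hx]
    exact (hu x hx).congr (fun y hy => tay_of_mem hy) (tay_of_mem hx)
  · have e : ∀ y ∈ Iic l, tay l r u p q y = u l + p l * (y - l) + q l * (y - l) ^ 2 / 2 := by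
      intro y hy; unfold tay; rw [clamp_of_le hlr.le hy]
    refine (((poly (u l) (p l) (q l) l x).hasDerivWithinAt).congr e (e x hx)).congr_deriv ?_
    unfold tay1; rw [clamp_of_le hlr.le hx]
  · have e : ∀ y ∈ Ici r, tay l r u p q y = u r + p r * (y - r) + q r * (y - r) ^ 2 / 2 := by
      intro y hy; unfold tay; rw [clamp_of_ge hlr.le hy]
    refine (((poly (u r) (p r) (q r) r x).hasDerivWithinAt).congr e (e x hx)).congr_deriv ?_
    unfold tay1; rw [clamp_of_ge hlr.le hx]

lemma tay1_deriv {l r : ℝ} (hlr : l < r) {p q : ℝ → ℝ}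
    (hp : ∀ x ∈ Icc l r, HasDerivWithinAt p (q x) (Icc l r) x) (x : ℝ) :
    HasDerivAt (tay1 l r p q) (q (clamp l r x)) x := by
  have poly : ∀ B C y x : ℝ, HasDerivAt (fun z => B + C * (z - y)) C x := by
    intro B C y x
    have h1 : HasDerivAt (fun z : ℝ => z - y) 1 x := (hasDerivAt_id x).sub_const y
    exact ((h1.const_mul C).const_add B).congr_deriv (mul_one C)
  refine glue_deriv (f' := fun x => q (clamp l r x)) hlr
    (fun x hx => ?_) (fun x hx => ?_) (fun x hx => ?_) x
  · rw [clamp_of_mem hx]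
    exact (hp x hx).congr (fun y hy => tay1_of_mem hy) (tay1_of_mem hx)
  · have e : ∀ y ∈ Iic l, tay1 l r p q y = p l + q l * (y - l) := by
      intro y hy; unfold tay1; rw [clamp_of_le hlr.le hy]
    rw [clamp_of_le hlr.le hx]
    exact ((poly (p l) (q l) l x).hasDerivWithinAt).congr e (e x hx)
  · have e : ∀ y ∈ Ici r, tay1 l r p q y = p r + q r * (y - r) := by
      intro y hy; unfold tay1; rw [clamp_of_ge hlr.le hy]
    rw [clamp_of_ge hlr.le hx]
    exact ((poly (p r) (q r) r x).hasDerivWithinAt).congr e (e x hx)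

/-- A bound on the gradient from bounds on the function and its second derivative. -/
lemma grad_bound {l r B B' : ℝ} (hlr : l < r) {u p q : ℝ → ℝ}
    (hu : ∀ x ∈ Icc l r, HasDerivWithinAt u (p x) (Icc l r) x)
    (hp : ∀ x ∈ Icc l r, HasDerivWithinAt p (q x) (Icc l r) x)
    (hB : ∀ x ∈ Icc l r, |u x| ≤ B) (hB' : ∀ x ∈ Icc l r, |q x| ≤ B') {x : ℝ} (hx : x ∈ Icc l r) :
    |p x| ≤ 2 * B / (r - l) + B' * (r - l) := by
  have ll : l ∈ Icc l r := ⟨le_rfl, hlr.le⟩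
  have rr : r ∈ Icc l r := ⟨hlr.le, le_rfl⟩
  have hrl : 0 < r - l := sub_pos.2 hlr
  have h0 : 0 ≤ B' := (abs_nonneg _).trans (hB' l ll)
  have h1 : ∀ y ∈ Icc l r, |p y - p x| ≤ B' * (r - l) := by
    intro y hy
    refine (mvt_le (convex_Icc l r) hp hB' hx hy).trans (mul_le_mul_of_nonneg_left ?_ h0)
    exact abs_le.2 ⟨by linarith [hx.2, hy.1], by linarith [hx.1, hy.2]⟩
  have h2 := mvt_le (convex_Icc l r) (f := fun y => u y - p x * (y - x)) (f' := fun y => p y - p x)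
    (fun y hy => ((hu y hy).sub (((hasDerivAt_id y).sub_const x).const_mul
      (p x)).hasDerivWithinAt).congr_deriv (by simp)) h1 ll rr
  rw [show |r - l| = r - l from abs_of_pos hrl] at h2
  have h3 : |p x| * (r - l) ≤ 2 * B + B' * (r - l) * (r - l) := by
    rw [← abs_of_pos hrl, ← abs_mul, abs_of_pos hrl]
    have a1 := abs_le.1 h2
    have a2 := abs_le.1 (hB l ll)
    have a3 := abs_le.1 (hB r rr)
    refine abs_le.2 ⟨?_, ?_⟩
    · linarith [a1.2]
    · linarith [a1.1]
  rw [show 2 * B / (r - l) + B' * (r - l) = (2 * B + B' * (r - l) * (r - l)) / (r - l) by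
    field_simp, le_div_iff₀ hrl]
  exact h3

/-- The space-time function obtained by extending in space. -/
def tayT (l r : ℝ) (U P Q : ℝ → ℝ → ℝ) (t x : ℝ) : ℝ := tay l r (U t) (P t) (Q t) x

section fin
variable {α l r τ N : ℝ} {U D P Q : ℝ → ℝ → ℝ} (hlr : l < r)
  (hR : HeatRel (Icc 0 τ) (Icc l r) U D P Q)

lemma tayT_of_mem {t x : ℝ} (hx : x ∈ Icc l r) : tayT l r U P Q t x = U t x := tay_of_mem hx

include hlr hR

lemma tayT_hasDeriv {t : ℝ} (ht : t ∈ Icc 0 τ) (x : ℝ) :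
    HasDerivAt (fun y => tayT l r U P Q t y) (tay1 l r (P t) (Q t) x) x :=
  tay_deriv hlr (fun x hx => (hR t ht x hx).1) x

lemma tayT_space {t : ℝ} (ht : t ∈ Icc 0 τ) :
    spaceDeriv (tayT l r U P Q) t = tay1 l r (P t) (Q t) :=
  funext fun x => (tayT_hasDeriv hlr hR ht x).deriv

lemma tayT_hasDeriv2 {t : ℝ} (ht : t ∈ Icc 0 τ) (x : ℝ) :
    HasDerivAt (fun y => spaceDeriv (tayT l r U P Q) t y) (Q t (clamp l r x)) x := by
  rw [show (fun y => spaceDeriv (tayT l r U P Q) t y) = tay1 l r (P t) (Q t) from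
    tayT_space hlr hR ht]
  exact tay1_deriv hlr (fun x hx => (hR t ht x hx).2.1) x

lemma tayT_hasDerivT {t x : ℝ} (ht : t ∈ Ioo 0 τ) (hx : x ∈ Icc l r) :
    HasDerivAt (fun s => tayT l r U P Q s x) (D t x) t := by
  rw [show (fun s => tayT l r U P Q s x) = fun s => U s x from funext fun s => tayT_of_mem hx]
  exact (hR t ⟨ht.1.le, ht.2.le⟩ x hx).2.2.hasDerivAt (Icc_mem_nhds ht.1 ht.2)

lemma tayT_time {t x : ℝ} (ht : t ∈ Ioo 0 τ) (hx : x ∈ Icc l r) :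
    timeDeriv (tayT l r U P Q) t x = D t x := (tayT_hasDerivT hlr hR ht hx).deriv

lemma tayT_space_eq {t x : ℝ} (ht : t ∈ Icc 0 τ) (hx : x ∈ Icc l r) :
    spaceDeriv (tayT l r U P Q) t x = P t x := by
  rw [tayT_space hlr hR ht, tay1_of_mem hx]

lemma tayT_space2_eq {t x : ℝ} (ht : t ∈ Icc 0 τ) (hx : x ∈ Icc l r) :
    spaceDeriv2 (tayT l r U P Q) t x = Q t x := by
  have := (tayT_hasDeriv2 hlr hR ht x).deriv
  rwa [clamp_of_mem hx] at this

lemma tayT_reg {t x : ℝ} (ht : t ∈ Ioo 0 τ) (hx : x ∈ Icc l r) :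
    DifferentiableAt ℝ (fun s => tayT l r U P Q s x) t ∧
      DifferentiableAt ℝ (fun y => tayT l r U P Q t y) x ∧
        DifferentiableAt ℝ (fun y => spaceDeriv (tayT l r U P Q) t y) x :=
  ⟨(tayT_hasDerivT hlr hR ht hx).differentiableAt,
    (tayT_hasDeriv hlr hR ⟨ht.1.le, ht.2.le⟩ x).differentiableAt,
    (tayT_hasDeriv2 hlr hR ⟨ht.1.le, ht.2.le⟩ x).differentiableAt⟩

/-- `(1+α)/2`-Hölder continuity of `u_x` in time, for arbitrary time differences. -/
lemma grad_time {B : ℝ} (hα : α ∈ Ioo (0:ℝ) 1) (hN : 0 ≤ N) (hB : 0 ≤ B)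
    (hD : PH α (Icc 0 τ) (Icc l r) D N)
    (hQ : PH α (Icc 0 τ) (Icc l r) Q N) (hP : ∀ t ∈ Icc 0 τ, ∀ x ∈ Icc l r, |P t x| ≤ B) :
    ∃ C, 0 ≤ C ∧ ∀ t ∈ Icc 0 τ, ∀ s ∈ Icc 0 τ, ∀ x ∈ Icc l r,
      |P t x - P s x| ≤ C * |t - s| ^ ((1 + α) / 2) := by
  have hγ : 0 ≤ (1 + α) / 2 := by linarith [hα.1]
  have hd : 0 < ((r - l) / 2) ^ 2 := by
    have := sub_pos.2 hlr
    positivity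
  obtain ⟨d, hd'⟩ : ∃ d, d = (((r - l) / 2) ^ 2) ^ ((1 + α) / 2) := ⟨_, rfl⟩
  have hd0 : 0 < d := hd' ▸ Real.rpow_pos_of_pos hd _
  refine ⟨2 * N + 2 * B / d, by positivity, fun t ht s hs x hx => ?_⟩
  rw [add_mul]
  rcases le_total |t - s| (((r - l) / 2) ^ 2) with h | h
  · have := lower_order hα hlr hN hR hD hQ ht hs h hx
    have h2 : 0 ≤ 2 * B / d * |t - s| ^ ((1 + α) / 2) := by positivity
    linarith
  · have h1 : d ≤ |t - s| ^ ((1 + α) / 2) := hd' ▸ Real.rpow_le_rpow hd.le h hγ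
    have h2 : 2 * B / d * d ≤ 2 * B / d * |t - s| ^ ((1 + α) / 2) :=
      mul_le_mul_of_nonneg_left h1 (by positivity)
    rw [div_mul_cancel₀ _ hd0.ne'] at h2
    have h3 := abs_sub (P t x) (P s x)
    have h4 : 0 ≤ 2 * N * |t - s| ^ ((1 + α) / 2) := by positivity
    linarith [hP t ht x hx, hP s hs x hx]
end fin

/-- The extension of a solution belongs to the parabolic Hölder space. -/
lemma tayT_memP {α l r τ N : ℝ} {U D P Q : ℝ → ℝ → ℝ} (hα : α ∈ Ioo (0:ℝ) 1) (hlr : l < r)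
    (hN : 0 ≤ N) (hR : HeatRel (Icc 0 τ) (Icc l r) U D P Q)
    (hD : PH α (Icc 0 τ) (Icc l r) D N) (hQ : PH α (Icc 0 τ) (Icc l r) Q N) :
    MemP α τ (Ioo l r) (tayT l r U P Q) := by
  have hc : closure (Ioo l r) = Icc l r := closure_Ioo hlr.ne
  have hrl : 0 < r - l := sub_pos.2 hlr
  obtain ⟨BD, hBD, bD⟩ := hD.bounded hα hlr.le subset_rfl
  obtain ⟨BQ, hBQ, bQ⟩ := hQ.bounded hα hlr.le subset_rfl
  have hU : ContinuousOn (fun p : ℝ × ℝ => U p.1 p.2) (Icc 0 τ ×ˢ Icc l r) :=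
    hR.continuousOn (convex_Icc 0 τ) bD
  obtain ⟨BU', bU'⟩ := (isCompact_Icc.prod isCompact_Icc).exists_bound_of_continuousOn hU
  obtain ⟨BU, hBU, bU⟩ : ∃ B, 0 ≤ B ∧ ∀ t ∈ Icc 0 τ, ∀ x ∈ Icc l r, |U t x| ≤ B :=
    ⟨max BU' 0, le_max_right _ _, fun t ht x hx => (bU' (t, x) ⟨ht, hx⟩).trans (le_max_left _ _)⟩
  obtain ⟨BP, hBP, bP⟩ : ∃ B, 0 ≤ B ∧ ∀ t ∈ Icc 0 τ, ∀ x ∈ Icc l r, |P t x| ≤ B :=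
    ⟨2 * BU / (r - l) + BQ * (r - l), by positivity, fun t ht x hx =>
      grad_bound hlr (fun x hx => (hR t ht x hx).1) (fun x hx => (hR t ht x hx).2.1) (bU t ht)
        (bQ t ht) hx⟩
  obtain ⟨CP, hCP, bCP⟩ := grad_time hlr hR hα hN hBP hD hQ bP
  have hJ : ∀ {t : ℝ}, t ∈ Ioo 0 τ → t ∈ Icc 0 τ := fun h => ⟨h.1.le, h.2.le⟩
  have hI : ∀ {x : ℝ}, x ∈ Ioo l r → x ∈ Icc l r := fun h => ⟨h.1.le, h.2.le⟩
  refine ⟨?_, ?_, BU + BD + BP + BQ + N + CP, ?_, ⟨?_, ?_⟩, ⟨?_, ?_⟩, ?_⟩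
  · rw [hc]
    exact hU.congr fun p hp => tayT_of_mem hp.2
  · rw [hc]
    exact fun t ht x hx => tayT_reg hlr hR ht hx
  · intro t ht x hx
    rw [tayT_of_mem (hI hx), tayT_time hlr hR ht (hI hx), tayT_space_eq hlr hR (hJ ht) (hI hx),
      tayT_space2_eq hlr hR (hJ ht) (hI hx)]
    have h1 := bU t (hJ ht) x (hI hx)
    have h2 := bD t (hJ ht) x (hI hx)
    have h3 := bP t (hJ ht) x (hI hx)
    have h4 := bQ t (hJ ht) x (hI hx)
    refine ⟨?_, ?_, ?_, ?_⟩ <;> linarith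
  · intro x hx t ht s hs
    simp only
    rw [tayT_time hlr hR ht (hI hx), tayT_time hlr hR hs (hI hx)]
    refine le_trans (by simpa [rho_time hα] using hD t (hJ ht) s (hJ hs) x (hI hx) x (hI hx))
      (mul_le_mul_of_nonneg_right ?_ (by positivity))
    linarith
  · intro t ht x hx y hy
    simp only
    rw [tayT_time hlr hR ht (hI hx), tayT_time hlr hR ht (hI hy)]
    refine le_trans (by simpa [rho_space hα] using hD t (hJ ht) t (hJ ht) x (hI hx) y (hI hy))
      (mul_le_mul_of_nonneg_right ?_ (by positivity))
    linarith
  · intro x hx t ht s hs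
    simp only
    rw [tayT_space2_eq hlr hR (hJ ht) (hI hx), tayT_space2_eq hlr hR (hJ hs) (hI hx)]
    refine le_trans (by simpa [rho_time hα] using hQ t (hJ ht) s (hJ hs) x (hI hx) x (hI hx))
      (mul_le_mul_of_nonneg_right ?_ (by positivity))
    linarith
  · intro t ht x hx y hy
    simp only
    rw [tayT_space2_eq hlr hR (hJ ht) (hI hx), tayT_space2_eq hlr hR (hJ ht) (hI hy)]
    refine le_trans (by simpa [rho_space hα] using hQ t (hJ ht) t (hJ ht) x (hI hx) y (hI hy))
      (mul_le_mul_of_nonneg_right ?_ (by positivity))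
    linarith
  · intro x hx t ht s hs
    simp only
    rw [tayT_space_eq hlr hR (hJ ht) (hI hx), tayT_space_eq hlr hR (hJ hs) (hI hx)]
    refine (bCP t (hJ ht) s (hJ hs) x (hI hx)).trans
      (mul_le_mul_of_nonneg_right ?_ (by positivity))
    linarith

/-- The extension of a solution solves the problem of the theorem. -/
lemma tayT_sol {α ℓ τ N : ℝ} {a f : ℝ → ℝ → ℝ → ℝ → ℝ} {b g : ℝ → ℝ → ℝ → ℝ} {u0 : ℝ → ℝ}
    {U D P Q : ℝ → ℝ → ℝ} (hα : α ∈ Ioo (0:ℝ) 1) (hl : 0 < ℓ) (hN : 0 ≤ N)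
    (h : QSol α (-ℓ) ℓ (coef a) (coef f) (bdry 1 (-ℓ) b g) (bdry (-1) ℓ b g) (Icc 0 τ) U D P Q N)
    (h0 : ∀ x ∈ Icc (-ℓ) ℓ, U 0 x = u0 x) :
    MemP α τ (Ioo (-ℓ) ℓ) (tayT (-ℓ) ℓ U P Q) ∧
      SolQ2a τ ℓ a f b g u0 (tayT (-ℓ) ℓ U P Q) := by
  have hlr : -ℓ < ℓ := by linarith
  have hR := h.rel
  have hM := tayT_memP hα hlr hN hR h.hD h.hQ
  have hc : closure (Ioo (-ℓ) ℓ) = Icc (-ℓ) ℓ := closure_Ioo hlr.ne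
  have ll : -ℓ ∈ Icc (-ℓ) ℓ := ⟨le_rfl, hlr.le⟩
  have rr : ℓ ∈ Icc (-ℓ) ℓ := ⟨hlr.le, le_rfl⟩
  have hJ : ∀ {t : ℝ}, t ∈ Ioo 0 τ → t ∈ Icc 0 τ := fun h => ⟨h.1.le, h.2.le⟩
  have hI : ∀ {x : ℝ}, x ∈ Ioo (-ℓ) ℓ → x ∈ Icc (-ℓ) ℓ := fun h => ⟨h.1.le, h.2.le⟩
  refine ⟨hM, ⟨by rw [← hc]; exact hM.1, fun t ht x hx => tayT_reg hlr hR ht (hI hx),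
    fun t ht => ?_⟩, fun t ht x hx => ?_, fun t ht => ⟨?_, ?_⟩, fun x hx => ?_⟩
  · obtain ⟨r1, r2, -⟩ := tayT_reg hlr hR ht rr
    obtain ⟨l1, l2, -⟩ := tayT_reg hlr hR ht ll
    exact ⟨r1, r2, l1, l2⟩
  · rw [tayT_time hlr hR ht (hI hx), tayT_space_eq hlr hR (hJ ht) (hI hx),
      tayT_space2_eq hlr hR (hJ ht) (hI hx), tayT_of_mem (hI hx), h.pde t (hJ ht) x (hI hx)]
    simp only [coef]; ring
  · rw [tayT_time hlr hR ht rr, tayT_space_eq hlr hR (hJ ht) rr, tayT_of_mem rr, h.br t (hJ ht)]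
    simp only [bdry]; ring
  · rw [tayT_time hlr hR ht ll, tayT_space_eq hlr hR (hJ ht) ll, tayT_of_mem ll, h.bl t (hJ ht)]
    simp only [bdry]; ring
  · rw [tayT_of_mem hx]; exact h0 x hx

/-! ### The dichotomy -/

/-- The extension in time takes the initial value of a continuous function. -/
lemma ext_initial {α ℓ τ H : ℝ} {u : ℝ → ℝ → ℝ} (hα : α ∈ Ioo (0:ℝ) 1) (hl : 0 < ℓ) (hτ : 0 < τ)
    (hm : ∀ s, 0 < s → s < τ → MemP α s (Ioo (-ℓ) ℓ) u)
    (hU : PH α (Ioo 0 τ) (Icc (-ℓ) ℓ) u H) {x : ℝ} (hx : x ∈ Icc (-ℓ) ℓ) :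
    extT (Ioo 0 τ) u 0 x = u 0 x := by
  have hc : closure (Ioo (-ℓ) ℓ) = Icc (-ℓ) ℓ := closure_Ioo (by linarith)
  have h0 : (0:ℝ) ∈ closure (Ioo 0 τ) := by rw [closure_Ioo hτ.ne]; exact ⟨le_rfl, hτ.le⟩
  haveI : (𝓝[Ioo 0 τ] (0:ℝ)).NeBot := mem_closure_iff_nhdsWithin_neBot.1 h0
  have hcont := (hm (τ / 2) (by linarith) (by linarith)).1
  rw [hc] at hcont
  refine tendsto_nhds_unique (hU.tendsto_ext hα (J' := closure (Ioo 0 τ)) subset_rfl h0 hx) ?_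
  refine (hcont (0, x) ⟨⟨le_rfl, by linarith⟩, hx⟩).tendsto.comp (tendsto_nhdsWithin_iff.2
    ⟨(show Tendsto (fun s : ℝ => s) (𝓝[Ioo 0 τ] 0) (𝓝 0) from nhdsWithin_le_nhds).prodMk_nhds
      tendsto_const_nhds, ?_⟩)
  filter_upwards [self_mem_nhdsWithin,
    mem_nhdsWithin_of_mem_nhds (Iio_mem_nhds (show (0:ℝ) < τ / 2 by linarith))] with s hs hs'
  exact ⟨⟨hs.1.le, le_of_lt hs'⟩, hx⟩

/-- Theorem 2.2, second part: for the gradient-independent boundary condition (2a), the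
maximal solution either blows up in `sup |u| + sup |u_x| + ⟨u_x⟩^{(α/2,α)}` as `τ ↗ τ_∞`,
or it belongs to `C^{1+α/2,2+α}(Ω_T)`. -/
theorem dichotomy_gradient_independent_bc
    (α T ℓ τinf : ℝ) (hα : α ∈ Ioo (0:ℝ) 1) (hT : 0 < T) (hl : 0 < ℓ)
    (a f : ℝ → ℝ → ℝ → ℝ → ℝ) (b g : ℝ → ℝ → ℝ → ℝ) (u0 : ℝ → ℝ) (u : ℝ → ℝ → ℝ)
    (ha : ContDiffOn ℝ 2 (fun q : ℝ × ℝ × ℝ × ℝ => a q.1 q.2.1 q.2.2.1 q.2.2.2)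
      (Icc (0:ℝ) T ×ˢ Icc (-ℓ) ℓ ×ˢ (univ : Set (ℝ × ℝ))))
    (hf : ContDiffOn ℝ 2 (fun q : ℝ × ℝ × ℝ × ℝ => f q.1 q.2.1 q.2.2.1 q.2.2.2)
      (Icc (0:ℝ) T ×ˢ Icc (-ℓ) ℓ ×ˢ (univ : Set (ℝ × ℝ))))
    (hb : ContDiffOn ℝ 2 (fun q : ℝ × ℝ => b q.1 ℓ q.2) (Icc (0:ℝ) T ×ˢ (univ : Set ℝ)) ∧
      ContDiffOn ℝ 2 (fun q : ℝ × ℝ => b q.1 (-ℓ) q.2) (Icc (0:ℝ) T ×ˢ (univ : Set ℝ)))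
    (hg : ContDiffOn ℝ 2 (fun q : ℝ × ℝ => g q.1 ℓ q.2) (Icc (0:ℝ) T ×ˢ (univ : Set ℝ)) ∧
      ContDiffOn ℝ 2 (fun q : ℝ × ℝ => g q.1 (-ℓ) q.2) (Icc (0:ℝ) T ×ˢ (univ : Set ℝ)))
    (hpara : ∀ t ∈ Icc (0:ℝ) T, ∀ x ∈ Icc (-ℓ) ℓ, ∀ z p : ℝ, 0 < a t x z p)
    (hbpos : ∀ t ∈ Icc (0:ℝ) T, ∀ z : ℝ, 0 < b t ℓ z ∧ 0 < b t (-ℓ) z)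
    (hu0 : MemC2 α ℓ u0)
    (hcompat_r : -(b 0 ℓ (u0 ℓ)) * deriv u0 ℓ + g 0 ℓ (u0 ℓ)
      = a 0 ℓ (u0 ℓ) (deriv u0 ℓ) * deriv (deriv u0) ℓ + f 0 ℓ (u0 ℓ) (deriv u0 ℓ))
    (hcompat_l : b 0 (-ℓ) (u0 (-ℓ)) * deriv u0 (-ℓ) + g 0 (-ℓ) (u0 (-ℓ))
      = a 0 (-ℓ) (u0 (-ℓ)) (deriv u0 (-ℓ)) * deriv (deriv u0) (-ℓ)
        + f 0 (-ℓ) (u0 (-ℓ)) (deriv u0 (-ℓ)))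
    (hτ : 0 < τinf) (hτT : τinf ≤ T)
    (hsol : ∀ τ : ℝ, 0 < τ → τ < τinf →
      MemP α τ (Ioo (-ℓ) ℓ) u ∧ SolQ2a τ ℓ a f b g u0 u)
    (hmax : ∀ (v : ℝ → ℝ → ℝ) (τ' : ℝ), τinf < τ' → τ' ≤ T →
      (∀ t ∈ Ico (0:ℝ) τinf, ∀ x ∈ Icc (-ℓ) ℓ, v t x = u t x) →
      ¬(MemP α τ' (Ioo (-ℓ) ℓ) v ∧ SolQ2a τ' ℓ a f b g u0 v)) :
    Tendsto (fun τ => supN τ (Ioo (-ℓ) ℓ) u + supN τ (Ioo (-ℓ) ℓ) (spaceDeriv u) +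
        pSemi α τ (Ioo (-ℓ) ℓ) (spaceDeriv u)) (𝓝[<] τinf) atTop ∨
      ∃ v : ℝ → ℝ → ℝ, (∀ t ∈ Ico (0:ℝ) τinf, ∀ x ∈ Icc (-ℓ) ℓ, v t x = u t x) ∧
        MemP α T (Ioo (-ℓ) ℓ) v ∧ SolQ2a T ℓ a f b g u0 v := by
  by_cases hn : Tendsto (fun τ => supN τ (Ioo (-ℓ) ℓ) u + supN τ (Ioo (-ℓ) ℓ) (spaceDeriv u) +
        pSemi α τ (Ioo (-ℓ) ℓ) (spaceDeriv u)) (𝓝[<] τinf) atTop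
  · exact Or.inl hn
  right
  have hlr : -ℓ < ℓ := by linarith
  have hA : ContDiffOn ℝ 2 (coef a) (Dom T (-ℓ) ℓ) := ha
  have hF : ContDiffOn ℝ 2 (coef f) (Dom T (-ℓ) ℓ) := hf
  have hGl : ContDiffOn ℝ 2 (bdry 1 (-ℓ) b g) (Dom T (-ℓ) ℓ) := bdry_contDiff hb.2 hg.2
  have hGr : ContDiffOn ℝ 2 (bdry (-1) ℓ b g) (Dom T (-ℓ) ℓ) := bdry_contDiff hb.1 hg.1
  have hpos : ∀ y ∈ Dom T (-ℓ) ℓ, 0 < coef a y := fun y hy => hpara _ hy.1 _ hy.2.1 _ _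
  have hm : ∀ s, 0 < s → s < τinf → MemP α s (Ioo (-ℓ) ℓ) u := fun s h1 h2 => (hsol s h1 h2).1
  obtain ⟨M, hM, hbd, hP⟩ := apriori hα hl hτ hm hn
  obtain ⟨N, Hu, hN, hS, hU⟩ := qsol_uniform (A := coef a) (f := coef f)
    (Gl := bdry 1 (-ℓ) b g) (Gr := bdry (-1) ℓ b g)
    (fun s hs => MemP.qsol hα hl (hs.2.le.trans hτT) hA.continuousOn hF.continuousOn
      (hm s hs.1 hs.2) (hsol s hs.1 hs.2).2)
    hα hlr hτ hτT hM hA hF hGl hGr hpos hbd hP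
  have hE := hS.to_Icc hα hlr hτ hτT hA.continuousOn hF.continuousOn hGl.continuousOn
    hGr.continuousOn hN hU hP
  have e0 : ∀ x ∈ Icc (-ℓ) ℓ, extT (Ioo 0 τinf) u 0 x = u 0 x := fun x hx =>
    ext_initial hα hl hτ hm hU hx
  have eu : ∀ t ∈ Ico (0:ℝ) τinf, ∀ x ∈ Icc (-ℓ) ℓ, extT (Ioo 0 τinf) u t x = u t x := by
    intro t ht x hx
    rcases ht.1.eq_or_lt with rfl | h
    · exact e0 x hx
    · exact hU.ext_eq hα ⟨h, ht.2⟩ hx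
  have ei : ∀ x ∈ Icc (-ℓ) ℓ, u 0 x = u0 x :=
    (hsol (τinf / 2) (by linarith) (by linarith)).2.2.2.2
  rcases hτT.eq_or_lt with h | h
  · rw [h] at hE hτ eu e0
    rw [h]
    exact ⟨_, fun t ht x hx => (tayT_of_mem hx).trans (eu t ht x hx),
      tayT_sol hα hl hN hE fun x hx => (e0 x hx).trans (ei x hx)⟩
  · obtain ⟨δ, hδ, hδT, N', V, D, P, Q, hN', hV, hVe⟩ :=
      hE.continue hα hlr hτ h hA hF hGl hGr hpos hN
    refine absurd (tayT_sol (u0 := u0) hα hl hN' hV fun x hx => ?_)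
      (hmax _ (τinf + δ) (by linarith) hδT fun t ht x hx => ?_)
    · rw [hVe 0 ⟨le_rfl, hτ.le⟩ x, e0 x hx, ei x hx]
    · rw [tayT_of_mem hx, hVe t ⟨ht.1, ht.2.le⟩ x, eu t ht x hx]
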